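/- Let E be a nonempty reduced minimal cone of dimension 2 in ℝⁿ centered at the origin, and set K = E ∩ ∂B(0,1). Then there is a finite family (C_j)_{j∈J} of subsets of ∂B(0,1) such that K = ⋃_{j∈J} C_j, where each C_j is either a great circle (the intersection of ∂B(0,1) with a 2-dimensional linear plane) or a compact nondegenerate arc of a great circle with two distinct endpoints; two distinct sets C_i, C_j can meet only at points that are endpoints of both; every point of ∂B(0,1) which is an endpoint of some arc C_j is a common endpoint of exactly three of the arcs, and the tangent half-lines at that point to these three arcs make pairwise 120° angles; moreover there is a constant l₀ > 0, depending only on n, such that H¹(C_j) ≥ l₀ for every j ∈ J. -/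

import Mathlib

/-!
Write `K = E ∩ ∂B(0,1)` for the link of the cone. Every argument is a comparison of `E` with the
image of an explicit Lipschitz deformation, and the link is measured by `lam E`, the normalised area
of the part of the cone lying over a subset of `K`; this plays the role of `H¹` on `K` and avoids
rectifiability theory.

*Competitors.* A Lipschitz map `f` of the link gives a competitor of the cone: the cone over `f(K)`
in the unit ball and an interpolation layer just outside (`cone_comp`). When `f` moves points by
`O(r)` and the layer has width `r`, the layer costs only `O(r)` times the mass involved. This allows
a small piece of `K` to be replaced by any network with the same boundary (`surgery`), up to a
relative error `O(r)`. A first consequence is that a small piece of `K` has at least two boundary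
points (`collapse`).

*Density.* For almost every radius `ρ`, the sphere of radius `ρ` about `x ∈ K` meets `K` in at most
`h'(ρ)` points, `h` being the mass of the ball (`count_ae`, from the fact that the spherical
distance does not increase length). Comparison with a star gives `ρ h'(ρ) ≥ (1 - O(ρ)) h(ρ)`. If
there are four or more points, two branches make an angle well below `120°` and joining them at an
interior point improves this inequality by a definite factor; as the mass is bounded, this cannot
persist over many scales. Hence some radius of definite size yields at most three points
(`good_radius`).

*Regular points.* If a small sphere about `x` meets `K` in only two points `a, b`, then `K` is a
geodesic arc inside (`rigid`). The mass inside is at least the length of any broken geodesic `a y b`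
with `y` in `K`, while comparison with the nearest-point projection on the planar sector spanned by
`a` and `b`, which increases areas in the layer only to second order, gives the reverse inequality.

*Singular points.* At all other points, every good sphere meets `K` in at least three points, the
density is at most `3 + ε` at a uniform scale (`sing_upper`), and two singular points cannot be
close to one another (`sing_sep`). Near a singular point, outgoing geodesics show that the number of
points of `K` on spheres does not decrease with the radius; so it is three, the link is nowhere
tangent to spheres, and it consists of three radial geodesics. Joining two of them shows that all
angles are `120°` (`y_structure`).

*Uniformity.* The separation of singular points depends on the total mass of `K`, which is bounded
in terms of `n` (`mass_bound`): map the link by a coordinatewise staircase of mesh `1/m` into the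
edges of a lattice. After averaging over translations of the staircase, the exceptional part of the
image and the layer have area at most a small multiple of the mass if `m` is large, and the lattice
edges have a length depending only on `n` and `m`.

*Assembly.* A geodesic of `K` can be continued until it meets a singular point (`continuation`). The
segments between singular points are the arcs, and the geodesics which never meet one are the great
circles. Arcs have length bounded below by the separation of singular points.
-/


open MeasureTheory Metric Set Filter Bornology
open scoped ENNReal NNReal Topology InnerProductSpace

noncomputable section

/-- `ℝⁿ` as a Euclidean space. -/
abbrev Euc (n : ℕ) : Type := EuclideanSpace ℝ (Fin n)

/-- `E` is reduced: `H^d(E ∩ B(x,r)) > 0` for every `x ∈ E` and `r > 0`. -/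
def IsReducedSet (n d : ℕ) (E : Set (Euc n)) : Prop :=
  ∀ x ∈ E, ∀ r : ℝ, 0 < r → 0 < μH[(d:ℝ)] (E ∩ ball x r)

/-- A (globally) minimal set of dimension `d` in `ℝⁿ` : a closed set with locally finite
`H^d`-measure such that `H^d(F ∖ φ(F)) ≤ H^d(φ(F) ∖ F)` for every Lipschitz map
`φ : ℝⁿ → ℝⁿ` which differs from the identity only on a bounded set. -/
def IsMinimalSet (n d : ℕ) (F : Set (Euc n)) : Prop :=
  IsClosed F ∧
  (∀ R : ℝ, 0 < R → μH[(d:ℝ)] (F ∩ ball 0 R) < ⊤) ∧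
  ∀ φ : Euc n → Euc n, (∃ K : ℝ≥0, LipschitzWith K φ) →
    IsBounded {x | φ x ≠ x} →
    μH[(d:ℝ)] (F \ φ '' F) ≤ μH[(d:ℝ)] (φ '' F \ F)

/-- A cone centered at the origin. -/
def IsConeAt0 {n : ℕ} (F : Set (Euc n)) : Prop :=
  ∀ x ∈ F, ∀ l : ℝ, 0 < l → l • x ∈ F

/-- A compact nondegenerate arc of a great circle of the unit sphere: the image of
`[0, ang]`, `0 < ang < 2π`, under `t ↦ cos t • u + sin t • w` with `u, w` orthonormal. -/
structure GreatArc (n : ℕ) where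
  u : Euc n
  w : Euc n
  ang : ℝ
  norm_u : ‖u‖ = 1
  norm_w : ‖w‖ = 1
  orth : ⟪u, w⟫_ℝ = 0
  ang_pos : 0 < ang
  ang_lt : ang < 2 * Real.pi

namespace GreatArc

/-- The underlying set of the arc. -/
def carrier {n : ℕ} (A : GreatArc n) : Set (Euc n) :=
  (fun t : ℝ => Real.cos t • A.u + Real.sin t • A.w) '' Icc 0 A.ang

/-- The first endpoint of the arc. -/
def ep0 {n : ℕ} (A : GreatArc n) : Euc n := A.u

/-- The second endpoint of the arc. -/
def ep1 {n : ℕ} (A : GreatArc n) : Euc n :=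
  Real.cos A.ang • A.u + Real.sin A.ang • A.w

/-- `x` is an endpoint of the arc `A`. -/
def IsEndpoint {n : ℕ} (A : GreatArc n) (x : Euc n) : Prop := x = A.ep0 ∨ x = A.ep1

/-- `τ` is the (unit) direction of the tangent half-line of the arc `A` at its
endpoint `x`, pointing into the arc. -/
def TangentAt {n : ℕ} (A : GreatArc n) (x τ : Euc n) : Prop :=
  (x = A.ep0 ∧ τ = A.w) ∨
  (x = A.ep1 ∧ τ = Real.sin A.ang • A.u - Real.cos A.ang • A.w)

end GreatArc

/-! ### Normalised area, Lipschitz images and competitors -/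

/-- `F` is Lipschitz on `S` with the real constant `L`. -/
def LipOn {X Y : Type*} [NormedAddCommGroup X] [NormedAddCommGroup Y] (L : ℝ) (F : X → Y)
    (S : Set X) : Prop :=
  ∀ v ∈ S, ∀ w ∈ S, ‖F v - F w‖ ≤ L * ‖v - w‖

theorem LipOn.lipschitzOnWith {X Y : Type*} [NormedAddCommGroup X] [NormedAddCommGroup Y] {L : ℝ}
    {F : X → Y} {S : Set X} (h : LipOn L F S) : LipschitzOnWith L.toNNReal F S := by
  apply LipschitzOnWith.of_dist_le_mul
  intro v hv w hw
  rw [dist_eq_norm, dist_eq_norm]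
  exact (h v hv w hw).trans (mul_le_mul_of_nonneg_right (Real.le_coe_toNNReal L) (norm_nonneg _))


theorem haus_complex_isAddHaar : (μH[(2:ℝ)] : Measure ℂ).IsAddHaarMeasure := by
  have := @isAddHaarMeasure_hausdorffMeasure ℂ _ _ _ _ _
  rw [Complex.finrank_real_complex] at this
  exact_mod_cast this

theorem haus_complex : ∃ c : ℝ≥0∞, c ≠ 0 ∧ c ≠ ⊤ ∧
    (μH[(2:ℝ)] : Measure ℂ) = c • (volume : Measure ℂ) := by
  have := haus_complex_isAddHaar
  have h2 := Measure.isAddLeftInvariant_eq_smul (μH[(2:ℝ)] : Measure ℂ) volume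
  refine ⟨_, ?_, ENNReal.coe_ne_top, h2⟩
  intro h
  have h0 : (μH[(2:ℝ)] : Measure ℂ) (ball 0 1) ≠ 0 := (measure_ball_pos _ _ one_pos).ne'
  rw [h2] at h0
  apply h0
  have h3 : (Measure.addHaarScalarFactor (μH[(2:ℝ)] : Measure ℂ) volume) = 0 := by
    simpa using h
  rw [h3, zero_smul]
  rfl

/-- The ratio between the two-dimensional Hausdorff measure and the Lebesgue measure of `ℂ`. -/
def kap : ℝ≥0∞ := haus_complex.choose

theorem kap_ne_zero : kap ≠ 0 := haus_complex.choose_spec.1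
theorem kap_ne_top : kap ≠ ⊤ := haus_complex.choose_spec.2.1
theorem haus_eq_kap : (μH[(2:ℝ)] : Measure ℂ) = kap • (volume : Measure ℂ) :=
  haus_complex.choose_spec.2.2

/-- Twice the two-dimensional area: the Hausdorff measure normalised so that planar sets have
twice their Lebesgue measure. With this choice a unit circular sector of angle `θ` has
measure `θ`. -/
def ar (n : ℕ) : Measure (Euc n) := (2 * kap⁻¹) • μH[(2:ℝ)]

theorem ar_apply {n : ℕ} (S : Set (Euc n)) : ar n S = 2 * kap⁻¹ * μH[(2:ℝ)] S := rfl

theorem arc_ne_zero : (2 * kap⁻¹ : ℝ≥0∞) ≠ 0 :=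
  mul_ne_zero two_ne_zero (ENNReal.inv_ne_zero.2 kap_ne_top)

theorem arc_ne_top : (2 * kap⁻¹ : ℝ≥0∞) ≠ ⊤ :=
  ENNReal.mul_ne_top ENNReal.ofNat_ne_top (ENNReal.inv_ne_top.2 kap_ne_zero)

theorem haus_image_le {X Y : Type*} [NormedAddCommGroup X] [NormedAddCommGroup Y]
    [MeasurableSpace X] [BorelSpace X] [MeasurableSpace Y] [BorelSpace Y] {L : ℝ} {F : X → Y}
    {S : Set X} (h : LipOn L F S) (hL : 0 ≤ L) :
    μH[(2:ℝ)] (F '' S) ≤ ENNReal.ofReal (L ^ 2) * μH[(2:ℝ)] S := by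
  have := h.lipschitzOnWith.hausdorffMeasure_image_le (d := 2) (by norm_num)
  refine this.trans_eq ?_
  congr 1
  rw [← ENNReal.ofReal, ENNReal.ofReal_rpow_of_nonneg hL (by norm_num)]
  norm_num

theorem ar_image_le {n : ℕ} {L : ℝ} {F : Euc n → Euc n} {S : Set (Euc n)} (h : LipOn L F S)
    (hL : 0 ≤ L) : ar n (F '' S) ≤ ENNReal.ofReal (L ^ 2) * ar n S := by
  rw [ar_apply, ar_apply, mul_left_comm]
  gcongr
  exact haus_image_le h hL

theorem kap_cancel (V : ℝ≥0∞) : 2 * kap⁻¹ * (kap * V) = 2 * V := by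
  rw [mul_assoc, ← mul_assoc kap⁻¹, ENNReal.inv_mul_cancel kap_ne_zero kap_ne_top, one_mul]

theorem ar_image_complex_le {n : ℕ} {F : ℂ → Euc n} {S : Set ℂ} (h : LipOn 1 F S) :
    ar n (F '' S) ≤ 2 * volume S := by
  have := haus_image_le h zero_le_one
  rw [haus_eq_kap] at this
  rw [ar_apply, ← kap_cancel (volume _)]
  exact mul_le_mul' le_rfl (by simpa using this)

theorem two_vol_image_le {n : ℕ} {F : Euc n → ℂ} {S : Set (Euc n)} (h : LipOn 1 F S) :
    2 * volume (F '' S) ≤ ar n S := by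
  have := haus_image_le h zero_le_one
  rw [haus_eq_kap] at this
  rw [ar_apply, ← kap_cancel (volume _)]
  exact mul_le_mul' le_rfl (by simpa using this)

theorem ar_smul {n : ℕ} (S : Set (Euc n)) {t : ℝ} (ht : 0 < t) :
    ar n ((fun v => t • v) '' S) = ENNReal.ofReal (t ^ 2) * ar n S := by
  apply le_antisymm
  · apply ar_image_le _ ht.le
    intro v _ w _
    rw [← smul_sub, norm_smul, Real.norm_of_nonneg ht.le]
  · have h : ar n ((fun v => t⁻¹ • v) '' ((fun v => t • v) '' S)) ≤ _ :=
      ar_image_le (L := t⁻¹) (fun v _ w _ => by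
        rw [← smul_sub, norm_smul, Real.norm_of_nonneg (inv_pos.2 ht).le]) (inv_pos.2 ht).le
    rw [image_image] at h
    simp only [smul_smul, inv_mul_cancel₀ ht.ne', one_smul, image_id'] at h
    calc ENNReal.ofReal (t ^ 2) * ar n S ≤ ENNReal.ofReal (t ^ 2) *
          (ENNReal.ofReal (t⁻¹ ^ 2) * ar n ((fun v => t • v) '' S)) := by gcongr
      _ = _ := by
        rw [← mul_assoc, ← ENNReal.ofReal_mul (by positivity)]
        have : t ^ 2 * t⁻¹ ^ 2 = 1 := by field_simp
        rw [this]; simp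

/-- The hypotheses on the cone, bundled. -/
def IsMC (n : ℕ) (E : Set (Euc n)) : Prop :=
  IsMinimalSet n 2 E ∧ IsReducedSet n 2 E ∧ IsConeAt0 E

theorem IsMC.closed {n : ℕ} {E : Set (Euc n)} (h : IsMC n E) : IsClosed E := h.1.1

theorem IsMC.smul_mem {n : ℕ} {E : Set (Euc n)} (h : IsMC n E) {v : Euc n} (hv : v ∈ E) {t : ℝ}
    (ht : 0 < t) : t • v ∈ E := h.2.2 v hv t ht

/-- A compactly supported modification: multiplying the displacement by a radial cutoff
turns a Lipschitz map into an admissible competitor map. -/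
theorem lip_cutoff {n : ℕ} {C : ℝ≥0} {H : Euc n → Euc n} (hH : LipschitzWith C H) {R : ℝ} :
    ∃ L : ℝ≥0, LipschitzWith L
      (fun v => v + (max 0 (min 1 (R + 1 - ‖v‖))) • H v) := by
  set χ : Euc n → ℝ := fun v => max 0 (min 1 (R + 1 - ‖v‖)) with hχ
  have hχ1 : ∀ v w, |χ v - χ w| ≤ ‖v - w‖ := by
    intro v w
    calc |χ v - χ w| ≤ |min 1 (R + 1 - ‖v‖) - min 1 (R + 1 - ‖w‖)| := by
          have := abs_max_sub_max_le_abs (min 1 (R + 1 - ‖v‖)) (min 1 (R + 1 - ‖w‖)) 0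
          simpa [hχ, max_comm] using this
      _ ≤ |(R + 1 - ‖v‖) - (R + 1 - ‖w‖)| := by
          have := abs_min_sub_min_le_max 1 (R + 1 - ‖v‖) 1 (R + 1 - ‖w‖)
          simpa using this
      _ ≤ ‖v - w‖ := by
          rw [show (R + 1 - ‖v‖) - (R + 1 - ‖w‖) = -(‖v‖ - ‖w‖) by ring, abs_neg]
          exact abs_norm_sub_norm_le v w
  have hχ0 : ∀ v, 0 ≤ χ v := fun v => le_max_left _ _
  have hχle : ∀ v, χ v ≤ 1 := fun v => max_le zero_le_one (min_le_left _ _)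
  have hχz : ∀ v, R + 1 ≤ ‖v‖ → χ v = 0 := by
    intro v hv
    apply max_eq_left
    exact (min_le_right _ _).trans (by linarith)
  set B : ℝ := ‖H 0‖ + C * |R + 1| with hB
  have hB0 : 0 ≤ B := by positivity
  have key : ∀ v w, ‖v‖ ≤ R + 1 → ‖χ v • H v - χ w • H w‖ ≤ (B + C) * ‖v - w‖ := by
    intro v w hv
    have h1 : ‖H v‖ ≤ B := by
      have h2 := hH.dist_le_mul v 0
      rw [dist_eq_norm, dist_zero_right] at h2
      have h3 : ‖H v‖ ≤ ‖H v - H 0‖ + ‖H 0‖ := by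
        simpa using norm_add_le (H v - H 0) (H 0)
      have : (C:ℝ) * ‖v‖ ≤ C * |R + 1| := by
        gcongr
        exact hv.trans (le_abs_self _)
      linarith
    have h2 := hH.dist_le_mul v w
    rw [dist_eq_norm, dist_eq_norm] at h2
    have : χ v • H v - χ w • H w = (χ v - χ w) • H v + χ w • (H v - H w) := by module
    rw [this]
    refine (norm_add_le _ _).trans ?_
    rw [norm_smul, norm_smul, Real.norm_eq_abs, Real.norm_of_nonneg (hχ0 w), add_mul]
    have a1 : |χ v - χ w| * ‖H v‖ ≤ ‖v - w‖ * B :=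
      mul_le_mul (hχ1 v w) h1 (norm_nonneg _) (norm_nonneg _)
    have a2 : χ w * ‖H v - H w‖ ≤ 1 * (C * ‖v - w‖) :=
      mul_le_mul (hχle w) h2 (norm_nonneg _) zero_le_one
    linarith
  have key2 : ∀ v w, ‖χ v • H v - χ w • H w‖ ≤ (B + C) * ‖v - w‖ := by
    intro v w
    by_cases hv : ‖v‖ ≤ R + 1
    · exact key v w hv
    by_cases hw : ‖w‖ ≤ R + 1
    · rw [norm_sub_rev, norm_sub_rev v w]; exact key w v hw
    rw [hχz v (not_le.1 hv).le, hχz w (not_le.1 hw).le]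
    simp only [zero_smul, sub_zero, norm_zero]
    positivity
  refine ⟨(1 + (B + C)).toNNReal, LipschitzWith.of_dist_le_mul fun v w => ?_⟩
  rw [Real.coe_toNNReal _ (by positivity), dist_eq_norm, dist_eq_norm]
  have : v + χ v • H v - (w + χ w • H w) = (v - w) + (χ v • H v - χ w • H w) := by module
  rw [this, add_mul, one_mul]
  exact (norm_add_le _ _).trans (by linarith [key2 v w])

/-- The comparison principle: a Lipschitz deformation of `E` supported in the bounded Borel
subset `W` cannot decrease the area of `W`. -/
theorem comp_le {n : ℕ} {E W : Set (Euc n)} (hE : IsMC n E) (hW : MeasurableSet W) (hWE : W ⊆ E)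
    {R : ℝ} (hR : ∀ v ∈ W, ‖v‖ ≤ R) {F : Euc n → Euc n} {L : ℝ} (hF : LipOn L F E)
    (hid : ∀ v ∈ E, v ∉ W → F v = v) : ar n W ≤ ar n (F '' W) := by
  obtain ⟨G, hG, hFG⟩ := hF.lipschitzOnWith.extend_finite_dimension
  obtain ⟨L', hL'⟩ := lip_cutoff (hG.sub LipschitzWith.id) (R := R)
  set φ : Euc n → Euc n := fun v => v + (max 0 (min 1 (R + 1 - ‖v‖))) • (G v - id v) with hφ
  have hφF : ∀ v ∈ E, φ v = F v := by
    intro v hv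
    by_cases hvW : v ∈ W
    · have : max 0 (min 1 (R + 1 - ‖v‖)) = 1 := by
        rw [min_eq_left (by linarith [hR v hvW])]; simp
      simp [hφ, this, hFG hv]
    · simp [hφ, ← hFG hv, hid v hv hvW]
  have hmin := hE.1.2.2 φ ⟨L', hL'⟩ (by
    apply (Metric.isBounded_closedBall (x := (0 : Euc n)) (r := R + 1)).subset
    intro v hv
    by_contra h
    apply hv
    have : max 0 (min 1 (R + 1 - ‖v‖)) = 0 := by
      apply max_eq_left
      refine (min_le_right _ _).trans ?_
      simp only [mem_closedBall, dist_zero_right, not_le] at h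
      linarith
    simp [hφ, this])
  have h1 : W \ F '' W ⊆ E \ φ '' E := by
    rintro v ⟨hv, hv2⟩
    refine ⟨hWE hv, ?_⟩
    rintro ⟨w, hw, rfl⟩
    rw [hφF w hw] at hv hv2
    by_cases hwW : w ∈ W
    · exact hv2 ⟨w, hwW, rfl⟩
    · rw [hid w hw hwW] at hv; exact hwW hv
  have h2 : φ '' E \ E ⊆ F '' W \ W := by
    rintro _ ⟨⟨w, hw, rfl⟩, hv⟩
    rw [hφF w hw] at hv ⊢
    by_cases hwW : w ∈ W
    · exact ⟨⟨w, hwW, rfl⟩, fun h => hv (hWE h)⟩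
    · rw [hid w hw hwW] at hv; exact absurd hw hv
  have h3 : μH[(2:ℝ)] (W \ F '' W) ≤ μH[(2:ℝ)] (F '' W \ W) := by
    have := (measure_mono h1).trans (hmin.trans (measure_mono h2))
    simpa using this
  rw [ar_apply, ar_apply]
  refine mul_le_mul' le_rfl ?_
  calc μH[(2:ℝ)] W ≤ μH[(2:ℝ)] (W ∩ F '' W) + μH[(2:ℝ)] (W \ F '' W) := by
        conv_lhs => rw [← inter_union_sdiff W (F '' W)]
        exact measure_union_le _ _
    _ ≤ μH[(2:ℝ)] (F '' W ∩ W) + μH[(2:ℝ)] (F '' W \ W) := by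
        rw [inter_comm]; gcongr
    _ = _ := measure_inter_add_sdiff _ hW

/-! ### The length measure of the link -/

/-- Radial projection to the unit sphere (with value `0` at `0`). -/
def nz {n : ℕ} (v : Euc n) : Euc n := ‖v‖⁻¹ • v

/-- The link of the cone `E`: its trace on the unit sphere. -/
def KK {n : ℕ} (E : Set (Euc n)) : Set (Euc n) := E ∩ sphere (0 : Euc n) 1

/-- The part of `E` lying over `A` at distance in `(a, b]` from the origin. -/
def trunc {n : ℕ} (E : Set (Euc n)) (a b : ℝ) (A : Set (Euc n)) : Set (Euc n) :=
  {v | v ∈ E ∧ a < ‖v‖ ∧ ‖v‖ ≤ b ∧ nz v ∈ A}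

/-- The length measure of the link, defined through areas: `lam E A` is the normalised area
of the part of the cone over `A` inside the unit ball. -/
def lam {n : ℕ} (E : Set (Euc n)) : Measure (Euc n) :=
  ((ar n).restrict {v | v ∈ E ∧ 0 < ‖v‖ ∧ ‖v‖ ≤ 1}).map nz

section
variable {n : ℕ} {E A : Set (Euc n)}

theorem measurable_nz : Measurable (nz : Euc n → Euc n) := by
  unfold nz; fun_prop

theorem norm_smul_nz (v : Euc n) : ‖v‖ • nz v = v := by
  by_cases h : v = 0
  · simp [h, nz]
  · simp [nz, smul_smul, h]

theorem norm_nz_le (v : Euc n) : ‖nz v‖ ≤ 1 := by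
  by_cases h : v = 0
  · simp [h, nz]
  · simp [nz, norm_smul, h]

theorem norm_nz {v : Euc n} (h : 0 < ‖v‖) : ‖nz v‖ = 1 := by
  simp [nz, norm_smul, h.ne']

theorem nz_smul {t : ℝ} (ht : 0 < t) (v : Euc n) : nz (t • v) = nz v := by
  simp only [nz, norm_smul, Real.norm_of_nonneg ht.le, smul_smul]
  congr 1
  field_simp

theorem nz_of_norm {v : Euc n} (h : ‖v‖ = 1) : nz v = v := by simp [nz, h]

theorem nz_lip (v w : Euc n) : ‖v‖ * ‖nz v - nz w‖ ≤ 2 * ‖v - w‖ := by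
  have h : ‖v‖ • (nz v - nz w) = (v - w) - (‖v‖ - ‖w‖) • nz w := by
    rw [smul_sub, sub_smul, norm_smul_nz, norm_smul_nz]; abel
  calc ‖v‖ * ‖nz v - nz w‖ = ‖‖v‖ • (nz v - nz w)‖ := by rw [norm_smul, norm_norm]
    _ ≤ ‖v - w‖ + ‖(‖v‖ - ‖w‖) • nz w‖ := by rw [h]; exact norm_sub_le _ _
    _ ≤ ‖v - w‖ + ‖v - w‖ * 1 := by
        rw [norm_smul]
        gcongr
        · exact abs_norm_sub_norm_le v w
        · exact norm_nz_le w
    _ = _ := by ring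

theorem IsMC.nz_mem (hE : IsMC n E) {v : Euc n} (hv : v ∈ E) (h : 0 < ‖v‖) : nz v ∈ KK E :=
  ⟨hE.smul_mem hv (inv_pos.2 h), by simp [norm_nz h]⟩

theorem IsMC.smul_mem_iff (hE : IsMC n E) {v : Euc n} {t : ℝ} (ht : 0 < t) : t • v ∈ E ↔ v ∈ E :=
  ⟨fun h => by simpa [smul_smul, ht.ne'] using hE.smul_mem h (inv_pos.2 ht), fun h => hE.smul_mem h ht⟩

theorem IsMC.compactK (hE : IsMC n E) : IsCompact (KK E) :=
  (isCompact_sphere (0 : Euc n) 1).inter_left hE.closed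

theorem norm_of_mem_KK {z : Euc n} (h : z ∈ KK E) : ‖z‖ = 1 := by simpa using h.2

theorem measurableSet_trunc (hE : IsMC n E) (hA : MeasurableSet A) (a b : ℝ) :
    MeasurableSet (trunc E a b A) := by
  have h1 : MeasurableSet {v : Euc n | a < ‖v‖} := measurableSet_lt measurable_const measurable_norm
  have h2 : MeasurableSet {v : Euc n | ‖v‖ ≤ b} := measurableSet_le measurable_norm measurable_const
  exact hE.closed.measurableSet.inter (h1.inter (h2.inter (measurable_nz hA)))

theorem lam_apply (hA : MeasurableSet A) : lam E A = ar n (trunc E 0 1 A) := by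
  rw [lam, Measure.map_apply measurable_nz hA, Measure.restrict_apply (measurable_nz hA)]
  congr 1
  ext v
  simp only [trunc, mem_inter_iff, mem_preimage, mem_ofPred_eq]
  tauto

theorem ar_trunc_zero (hE : IsMC n E) (hA : MeasurableSet A) {t : ℝ} (ht : 0 < t) :
    ar n (trunc E 0 t A) = ENNReal.ofReal (t ^ 2) * lam E A := by
  rw [lam_apply hA, ← ar_smul _ ht]
  congr 1
  ext v
  constructor
  · rintro ⟨h1, h2, h3, h4⟩
    refine ⟨t⁻¹ • v, ⟨hE.smul_mem h1 (inv_pos.2 ht), ?_, ?_, ?_⟩, ?_⟩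
    · rw [norm_smul, Real.norm_of_nonneg (inv_pos.2 ht).le]; exact mul_pos (inv_pos.2 ht) h2
    · rw [norm_smul, Real.norm_of_nonneg (inv_pos.2 ht).le]
      rw [inv_mul_le_iff₀ ht]; linarith
    · rwa [nz_smul (inv_pos.2 ht)]
    · simp [smul_smul, ht.ne']
  · rintro ⟨w, ⟨h1, h2, h3, h4⟩, rfl⟩
    refine ⟨hE.smul_mem h1 ht, ?_, ?_, ?_⟩
    · rw [norm_smul, Real.norm_of_nonneg ht.le]; exact mul_pos ht h2
    · rw [norm_smul, Real.norm_of_nonneg ht.le]; nlinarith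
    · rwa [nz_smul ht]

theorem ar_bounded_lt_top (hE : IsMC n E) (R : ℝ) : ar n {v | v ∈ E ∧ ‖v‖ ≤ R} < ⊤ := by
  rw [ar_apply]
  apply ENNReal.mul_lt_top arc_ne_top.lt_top
  have h := hE.1.2.1 (|R| + 1) (by positivity)
  refine lt_of_le_of_lt (measure_mono ?_) (by exact_mod_cast h)
  rintro v ⟨h1, h2⟩
  refine ⟨h1, ?_⟩
  simp only [mem_ball, dist_zero_right]
  linarith [le_abs_self R]

theorem lam_finite (hE : IsMC n E) : IsFiniteMeasure (lam E) := by
  constructor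
  rw [lam_apply MeasurableSet.univ]
  refine lt_of_le_of_lt (measure_mono ?_) (ar_bounded_lt_top hE 1)
  rintro v ⟨h1, _, h3, _⟩
  exact ⟨h1, h3⟩

theorem ar_trunc (hE : IsMC n E) (hA : MeasurableSet A) {a b : ℝ} (ha : 0 < a) (hab : a ≤ b) :
    ar n (trunc E a b A) = ENNReal.ofReal (b ^ 2 - a ^ 2) * lam E A := by
  have := lam_finite hE
  have h : trunc E a b A = trunc E 0 b A \ trunc E 0 a A := by
    ext v
    simp only [trunc, mem_ofPred_eq, Set.mem_sdiff, not_and]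
    constructor
    · rintro ⟨h1, h2, h3, h4⟩
      exact ⟨⟨h1, by linarith, h3, h4⟩, fun _ _ h => absurd h (not_le.2 h2)⟩
    · rintro ⟨⟨h1, h2, h3, h4⟩, h5⟩
      refine ⟨h1, ?_, h3, h4⟩
      by_contra hc
      exact h5 h1 h2 (not_lt.1 hc) h4
  rw [h, measure_sdiff _ (measurableSet_trunc hE hA _ _).nullMeasurableSet, ar_trunc_zero hE hA ha,
    ar_trunc_zero hE hA (ha.trans_le hab), ENNReal.ofReal_sub _ (by positivity),
    ENNReal.sub_mul (fun _ _ => measure_ne_top _ _)]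
  · rw [ar_trunc_zero hE hA ha]
    exact ENNReal.mul_ne_top ENNReal.ofReal_ne_top (measure_ne_top _ _)
  · rintro v ⟨h1, h2, h3, h4⟩
    exact ⟨h1, h2, h3.trans hab, h4⟩

theorem measurableSet_KK (hE : IsMC n E) : MeasurableSet (KK E) := hE.compactK.measurableSet

theorem lam_compl (hE : IsMC n E) : lam E (KK E)ᶜ = 0 := by
  rw [lam_apply (measurableSet_KK hE).compl]
  convert measure_empty (μ := ar n)
  ext v
  simp only [mem_empty_iff_false, iff_false]
  rintro ⟨h1, h2, _, h4⟩
  exact h4 (hE.nz_mem h1 h2)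

theorem lam_inter_K (hE : IsMC n E) (A : Set (Euc n)) : lam E (KK E ∩ A) = lam E A := by
  rw [inter_comm]
  exact measure_inter_conull (lam_compl hE)

theorem lam_pos (hE : IsMC n E) {x : Euc n} (hx : x ∈ KK E) {U : Set (Euc n)} (hU : IsOpen U)
    (hxU : x ∈ U) : 0 < lam E U := by
  have hx1 := norm_of_mem_KK hx
  have hc : ContinuousAt (nz : Euc n → Euc n) x := by
    unfold nz
    refine ContinuousAt.smul (continuousAt_id.norm.inv₀ (by simp [hx1])) continuousAt_id
  have hU' : U ∈ 𝓝 (nz x) := hU.mem_nhds (by rwa [nz_of_norm hx1])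
  obtain ⟨ρ, hρ, hb⟩ := Metric.mem_nhds_iff.1 (hc hU')
  set σ := min ρ 1
  have hσ : 0 < σ := lt_min hρ one_pos
  have h1 := hE.2.1 x hx.1 σ hσ
  have h2 : E ∩ ball x σ ⊆ trunc E 0 2 U := by
    rintro v ⟨hv, hvb⟩
    have hv1 : ‖v - x‖ < 1 := by
      rw [← dist_eq_norm]; exact (mem_ball.1 hvb).trans_le (min_le_right _ _)
    have h3 : ‖x‖ - ‖v‖ ≤ ‖v - x‖ := by rw [norm_sub_rev]; exact norm_sub_norm_le x v
    have h4 : ‖v‖ - ‖x‖ ≤ ‖v - x‖ := norm_sub_norm_le v x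
    exact ⟨hv, by linarith, by linarith, hb (ball_subset_ball (min_le_left _ _) hvb)⟩
  have h3 : 0 < ar n (trunc E 0 2 U) := by
    refine lt_of_lt_of_le ?_ (measure_mono h2)
    rw [ar_apply]
    exact ENNReal.mul_pos arc_ne_zero (by exact_mod_cast h1.ne')
  rw [ar_trunc_zero hE hU.measurableSet two_pos] at h3
  by_contra h
  simp [nonpos_iff_eq_zero.1 (not_lt.1 h)] at h3

/-- Anisotropic area bound: a map which is `α`-Lipschitz in the radial variable and
`α M`-Lipschitz along the link has area at most `27 α² M` times length times mass. The radial
variable is reparametrised at speed `M`, so that the map becomes isotropically Lipschitz on a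
thin truncated cone. -/
theorem aniso (hE : IsMC n E) (hA : MeasurableSet A) {Φ : ℝ → Euc n → Euc n}
    {α M s0 l : ℝ} (hα : 0 ≤ α) (hM : 1 ≤ M) (hl : 0 ≤ l) (hl1 : l ≤ 1)
    (hΦ : ∀ s ∈ Ioc s0 (s0 + l), ∀ s' ∈ Ioc s0 (s0 + l), ∀ z ∈ KK E ∩ A, ∀ z' ∈ KK E ∩ A,
      ‖Φ s z - Φ s' z'‖ ≤ α * |s - s'| + α * M * ‖z - z'‖) :
    ar n {w | ∃ s ∈ Ioc s0 (s0 + l), ∃ z ∈ KK E ∩ A, w = Φ s z} ≤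
      ENNReal.ofReal (27 * α ^ 2 * M * l) * lam E A := by
  have hM0 : 0 < M := by linarith
  set T := trunc E 1 (1 + l / M) A with hT
  have hmem : ∀ v ∈ T, s0 + M * (‖v‖ - 1) ∈ Ioc s0 (s0 + l) ∧ nz v ∈ KK E ∩ A := by
    rintro v ⟨h1, h2, h3, h4⟩
    have h5 : M * (‖v‖ - 1) ≤ l := by
      have : ‖v‖ - 1 ≤ l / M := by linarith
      rwa [le_div_iff₀ hM0, mul_comm] at this
    exact ⟨⟨by nlinarith, by linarith⟩, hE.nz_mem h1 (by linarith), h4⟩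
  have hlip : LipOn (3 * α * M) (fun v => Φ (s0 + M * (‖v‖ - 1)) (nz v)) T := by
    intro v hv w hw
    refine (hΦ _ (hmem v hv).1 _ (hmem w hw).1 _ (hmem v hv).2 _ (hmem w hw).2).trans ?_
    have h1 : |s0 + M * (‖v‖ - 1) - (s0 + M * (‖w‖ - 1))| ≤ M * ‖v - w‖ := by
      rw [show s0 + M * (‖v‖ - 1) - (s0 + M * (‖w‖ - 1)) = M * (‖v‖ - ‖w‖) by ring, abs_mul,
        abs_of_pos hM0]
      gcongr
      exact abs_norm_sub_norm_le v w
    have h2 : ‖nz v - nz w‖ ≤ 2 * ‖v - w‖ := by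
      refine le_trans ?_ (nz_lip v w)
      nlinarith [norm_nonneg (nz v - nz w), hv.2.1]
    calc _ ≤ α * (M * ‖v - w‖) + α * M * (2 * ‖v - w‖) := by gcongr
      _ = _ := by ring
  have hsub : {w | ∃ s ∈ Ioc s0 (s0 + l), ∃ z ∈ KK E ∩ A, w = Φ s z} ⊆
      (fun v => Φ (s0 + M * (‖v‖ - 1)) (nz v)) '' T := by
    rintro w ⟨s, hs, z, hz, rfl⟩
    have hz1 := norm_of_mem_KK hz.1
    have ht : 0 < 1 + (s - s0) / M := by
      have : 0 ≤ (s - s0) / M := div_nonneg (by linarith [hs.1]) hM0.le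
      linarith
    have hn : ‖(1 + (s - s0) / M) • z‖ = 1 + (s - s0) / M := by
      rw [norm_smul, hz1, mul_one, Real.norm_of_nonneg ht.le]
    refine ⟨(1 + (s - s0) / M) • z, ⟨hE.smul_mem hz.1.1 ht, ?_, ?_, ?_⟩, ?_⟩
    · rw [hn]
      have : 0 < (s - s0) / M := div_pos (by linarith [hs.1]) hM0
      linarith
    · rw [hn]
      have : (s - s0) / M ≤ l / M := by gcongr; linarith [hs.2]
      linarith
    · rw [nz_smul ht, nz_of_norm hz1]; exact hz.2
    · simp only [hn, nz_smul ht, nz_of_norm hz1]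
      congr 1
      field_simp
      ring
  refine (measure_mono hsub).trans ((ar_image_le hlip (by positivity)).trans ?_)
  have hlM : 0 ≤ l / M := by positivity
  rw [hT, ar_trunc hE hA one_pos (by linarith), ← mul_assoc,
    ← ENNReal.ofReal_mul (by positivity)]
  refine mul_le_mul' (ENNReal.ofReal_le_ofReal ?_) le_rfl
  have : (3 * α * M) ^ 2 * ((1 + l / M) ^ 2 - 1 ^ 2) = 9 * α ^ 2 * (2 * M * l + l ^ 2) := by
    field_simp
    ring
  rw [this]
  have h1 : l ^ 2 ≤ M * l := by nlinarith
  nlinarith [mul_le_mul_of_nonneg_left h1 (sq_nonneg α)]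

end

/-! ### Planar areas -/

/-- The unit circular sector of the complex plane with arguments in `S`. -/
def Sec (S : Set ℝ) : Set ℂ := {w | 0 < ‖w‖ ∧ ‖w‖ ≤ 1 ∧ w.arg ∈ S}

theorem measurableSet_Sec {S : Set ℝ} (hS : MeasurableSet S) : MeasurableSet (Sec S) := by
  have h1 : MeasurableSet {v : ℂ | 0 < ‖v‖} := measurableSet_lt measurable_const measurable_norm
  have h2 : MeasurableSet {v : ℂ | ‖v‖ ≤ 1} := measurableSet_le measurable_norm measurable_const
  exact h1.inter (h2.inter (Complex.measurable_arg hS))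

theorem lintegral_id_unit : ∫⁻ r in Ioc (0:ℝ) 1, ENNReal.ofReal r = 2⁻¹ := by
  rw [← ofReal_integral_eq_lintegral_ofReal]
  · rw [← intervalIntegral.integral_of_le zero_le_one, integral_id,
      show ((1:ℝ) ^ 2 - 0 ^ 2) / 2 = 2⁻¹ by norm_num, ENNReal.ofReal_inv_of_pos two_pos]
    norm_num
  · exact (continuous_id.integrableOn_Icc).mono_set Ioc_subset_Icc_self
  · filter_upwards [ae_restrict_mem measurableSet_Ioc] with r hr using hr.1.le

theorem volume_Sec {S : Set ℝ} (hS : MeasurableSet S) (hS2 : S ⊆ Ioo (-Real.pi) Real.pi) :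
    2 * volume (Sec S) = volume S := by
  have h : volume (Sec S) = 2⁻¹ * volume S := by
    rw [← lintegral_indicator_one (measurableSet_Sec hS), ← Complex.lintegral_comp_polarCoord_symm,
      polarCoord_target]
    have e1 : ∀ p ∈ (Ioi (0:ℝ) ×ˢ Ioo (-Real.pi) Real.pi),
        ENNReal.ofReal p.1 • (Sec S).indicator (1 : ℂ → ℝ≥0∞) (Complex.polarCoord.symm p) =
        (Ioc (0:ℝ) 1 ×ˢ S).indicator (fun p : ℝ × ℝ => ENNReal.ofReal p.1) p := by
      rintro ⟨r, φ⟩ ⟨hr, hφ⟩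
      simp only [mem_Ioi] at hr hφ
      have ha : (Complex.polarCoord.symm (r, φ)).arg = φ := by
        rw [Complex.polarCoord_symm_apply]
        simpa using Complex.arg_mul_cos_add_sin_mul_I hr ⟨hφ.1, hφ.2.le⟩
      have hiff : Complex.polarCoord.symm (r, φ) ∈ Sec S ↔ (r, φ) ∈ Ioc (0:ℝ) 1 ×ˢ S := by
        simp only [Sec, mem_ofPred_eq, ha, Complex.norm_polarCoord_symm, abs_of_pos hr, mem_prod,
          mem_Ioc, and_assoc]
      by_cases hm : (r, φ) ∈ Ioc (0:ℝ) 1 ×ˢ S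
      · rw [indicator_of_mem hm, indicator_of_mem (hiff.2 hm)]; simp
      · rw [indicator_of_notMem hm, indicator_of_notMem (fun h => hm (hiff.1 h))]; simp
    rw [setLIntegral_congr_fun (measurableSet_Ioi.prod measurableSet_Ioo) e1,
      setLIntegral_indicator (measurableSet_Ioc.prod hS)]
    have e2 : (Ioc (0:ℝ) 1 ×ˢ S) ∩ (Ioi (0:ℝ) ×ˢ Ioo (-Real.pi) Real.pi) = Ioc (0:ℝ) 1 ×ˢ S := by
      apply inter_eq_left.2
      rintro ⟨r, φ⟩ ⟨hr, hφ⟩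
      exact ⟨hr.1, hS2 hφ⟩
    rw [e2, Measure.volume_eq_prod, ← Measure.prod_restrict]
    have := lintegral_prod_mul (μ := volume.restrict (Ioc (0:ℝ) 1)) (ν := volume.restrict S)
      (f := fun r => ENNReal.ofReal r) (g := fun _ => 1) (by fun_prop) (by fun_prop)
    simp only [mul_one, lintegral_one, Measure.restrict_apply_univ] at this
    rw [this, lintegral_id_unit]
  rw [h, ← mul_assoc, ENNReal.mul_inv_cancel two_ne_zero ENNReal.ofNat_ne_top, one_mul]

/-- The solid triangle with vertices `0, a, b`. -/
def Tri {n : ℕ} (a b : Euc n) : Set (Euc n) :=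
  {w | ∃ s t : ℝ, 0 ≤ s ∧ 0 ≤ t ∧ s + t ≤ 1 ∧ w = s • a + t • b}

theorem volume_std_triangle :
    2 * volume {w : ℂ | 0 ≤ w.re ∧ 0 ≤ w.im ∧ w.re + w.im ≤ 1} ≤ 1 := by
  have hm : MeasurableSet {p : ℝ × ℝ | 0 ≤ p.1 ∧ 0 ≤ p.2 ∧ p.1 + p.2 ≤ 1} := by
    apply IsClosed.measurableSet
    exact (isClosed_le continuous_const continuous_fst).inter
      ((isClosed_le continuous_const continuous_snd).inter
        (isClosed_le (continuous_fst.add continuous_snd) continuous_const))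
  have e : {w : ℂ | 0 ≤ w.re ∧ 0 ≤ w.im ∧ w.re + w.im ≤ 1} =
      Complex.measurableEquivRealProd ⁻¹' {p : ℝ × ℝ | 0 ≤ p.1 ∧ 0 ≤ p.2 ∧ p.1 + p.2 ≤ 1} := by
    ext w; simp [Complex.measurableEquivRealProd]
  rw [e, Complex.volume_preserving_equiv_real_prod.measure_preimage hm.nullMeasurableSet,
    Measure.volume_eq_prod, Measure.prod_apply hm]
  have h2 : ∀ x : ℝ, volume (Prod.mk x ⁻¹' {p : ℝ × ℝ | 0 ≤ p.1 ∧ 0 ≤ p.2 ∧ p.1 + p.2 ≤ 1}) ≤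
      (Icc (0:ℝ) 1).indicator (fun x => ENNReal.ofReal (1 - x)) x := by
    intro x
    by_cases hx : x ∈ Icc (0:ℝ) 1
    · rw [indicator_of_mem hx]
      refine (measure_mono (t := Icc 0 (1 - x)) ?_).trans (by simp)
      rintro y ⟨_, h2, h3⟩
      exact ⟨h2, by simp only at h3; linarith⟩
    · rw [indicator_of_notMem hx]
      apply le_of_eq
      convert measure_empty (μ := (volume : Measure ℝ))
      ext y
      simp only [mem_preimage, mem_ofPred_eq, mem_empty_iff_false, iff_false]
      rintro ⟨h1, h2, h3⟩
      exact hx ⟨h1, by linarith⟩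
  have h3 : ∫⁻ x in Icc (0:ℝ) 1, ENNReal.ofReal (1 - x) = 2⁻¹ := by
    rw [← ofReal_integral_eq_lintegral_ofReal]
    · rw [integral_Icc_eq_integral_Ioc, ← intervalIntegral.integral_of_le zero_le_one,
        intervalIntegral.integral_sub (by simp) (by simp), integral_id, integral_one,
        show (1:ℝ) - 0 - (1 ^ 2 - 0 ^ 2) / 2 = 2⁻¹ by norm_num, ENNReal.ofReal_inv_of_pos two_pos]
      norm_num
    · exact (continuous_const.sub continuous_id).integrableOn_Icc
    · filter_upwards [ae_restrict_mem measurableSet_Icc] with r hr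
      simp only [mem_Icc] at hr
      simp [hr.2]
  calc _ ≤ 2 * ∫⁻ x, (Icc (0:ℝ) 1).indicator (fun x => ENNReal.ofReal (1 - x)) x := by
        gcongr with x; exact h2 x
    _ = 2 * 2⁻¹ := by rw [lintegral_indicator measurableSet_Icc, h3]
    _ ≤ 1 := by rw [ENNReal.mul_inv_cancel two_ne_zero ENNReal.ofNat_ne_top]

theorem volume_triangle (A : ℝ) (B : ℂ) :
    2 * volume ((fun w : ℂ => (w.re * A : ℂ) + w.im * B) ''
      {w : ℂ | 0 ≤ w.re ∧ 0 ≤ w.im ∧ w.re + w.im ≤ 1}) ≤ ENNReal.ofReal (|A * B.im|) := by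
  set f : ℂ →ₗ[ℝ] ℂ := Matrix.toLin Complex.basisOneI Complex.basisOneI !![A, B.re; 0, B.im] with hf
  have hfe : (fun w : ℂ => (w.re * A : ℂ) + w.im * B) = f := by
    ext w
    rw [hf, Matrix.toLin_apply]
    apply Complex.ext <;>
    simp [Matrix.mulVec, dotProduct, Fin.sum_univ_two] <;> ring
  rw [hfe, Measure.addHaar_image_linearMap]
  have hdet : LinearMap.det f = A * B.im := by
    rw [hf, LinearMap.det_toLin, Matrix.det_fin_two_of]; ring
  rw [hdet, mul_left_comm]
  calc _ ≤ ENNReal.ofReal |A * B.im| * 1 := by gcongr; exact volume_std_triangle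
    _ = _ := mul_one _

/-- A map of the complex plane into `ℝⁿ` given by two orthogonal vectors of length at most one
is `1`-Lipschitz. -/
theorem plane_lip {n : ℕ} {e f : Euc n} (he : ‖e‖ ≤ 1) (hf : ‖f‖ ≤ 1) (hef : ⟪e, f⟫_ℝ = 0)
    (S : Set ℂ) : LipOn 1 (fun w : ℂ => w.re • e + w.im • f) S := by
  intro v _ w _
  have h1 : v.re • e + v.im • f - (w.re • e + w.im • f) = (v - w).re • e + (v - w).im • f := by
    simp only [Complex.sub_re, Complex.sub_im]; module
  rw [h1, one_mul]
  apply le_of_sq_le_sq _ (norm_nonneg _)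
  rw [Complex.sq_norm, Complex.normSq_apply, norm_add_sq_real, norm_smul, norm_smul,
    inner_smul_left, inner_smul_right, hef]
  simp only [Real.norm_eq_abs, mul_zero, add_zero, mul_pow, sq_abs]
  have h2 : ‖e‖ ^ 2 ≤ 1 := pow_le_one₀ (norm_nonneg _) he
  have h3 : ‖f‖ ^ 2 ≤ 1 := pow_le_one₀ (norm_nonneg _) hf
  nlinarith [sq_nonneg (v - w).re, sq_nonneg (v - w).im]

theorem ar_Tri_le {n : ℕ} (a b : Euc n) : ar n (Tri a b) ≤ ENNReal.ofReal (‖a‖ * ‖b - a‖) := by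
  set e : Euc n := nz a with he
  set b' : Euc n := b - ⟪e, b⟫_ℝ • e with hb'
  set f : Euc n := nz b' with hf
  have hae : a = ‖a‖ • e := (norm_smul_nz a).symm
  have hbe : b = ⟪e, b⟫_ℝ • e + ‖b'‖ • f := by rw [hf, norm_smul_nz, hb']; abel
  have heb' : ‖a‖ • ⟪e, b'⟫_ℝ = 0 := by
    by_cases h : a = 0
    · simp [h]
    · have : ⟪e, e⟫_ℝ = 1 := by
        rw [real_inner_self_eq_norm_sq, he, norm_nz (norm_pos_iff.2 h)]; norm_num
      rw [hb', inner_sub_right, inner_smul_right, this]; simp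
  have hef : ⟪e, f⟫_ℝ = 0 := by
    by_cases h : a = 0
    · simp [he, h, nz]
    · have h0 : ⟪e, b'⟫_ℝ = 0 := by simpa [h] using heb'
      rw [hf, nz, inner_smul_right, h0, mul_zero]
  set T : Set ℂ := (fun w : ℂ => (w.re * (‖a‖ : ℝ) : ℂ) + w.im * (⟪e, b⟫_ℝ + ‖b'‖ * Complex.I)) ''
      {w : ℂ | 0 ≤ w.re ∧ 0 ≤ w.im ∧ w.re + w.im ≤ 1} with hT
  have hsub : Tri a b ⊆ (fun w : ℂ => w.re • e + w.im • f) '' T := by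
    rintro w ⟨s, t, hs, ht, hst, rfl⟩
    refine ⟨_, ⟨⟨s, t⟩, ⟨hs, ht, hst⟩, rfl⟩, ?_⟩
    conv_rhs => rw [hae, hbe]
    simp
    module
  refine (measure_mono hsub).trans ((ar_image_complex_le (plane_lip (norm_nz_le _) (norm_nz_le _)
    hef _)).trans ((volume_triangle _ _).trans ?_))
  apply ENNReal.ofReal_le_ofReal
  simp only [Complex.add_im, Complex.ofReal_im, Complex.mul_im, Complex.ofReal_re, Complex.I_im,
    mul_one, Complex.I_re, mul_zero, add_zero, zero_add]
  rw [abs_of_nonneg (by positivity)]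
  gcongr
  by_cases h : a = 0
  · have : e = 0 := by simp [he, h, nz]
    simp [hb', this, h]
  apply le_of_sq_le_sq _ (norm_nonneg _)
  have h0 : ⟪e, b'⟫_ℝ = 0 := by simpa [h] using heb'
  have h1 : b - a = (⟪e, b⟫_ℝ - ‖a‖) • e + b' := by
    rw [hb', sub_smul, ← hae]; abel
  rw [h1, norm_add_sq_real, inner_smul_left, h0]
  simp only [mul_zero, add_zero]
  nlinarith [sq_nonneg ‖(⟪e, b⟫_ℝ - ‖a‖) • e‖]

/-- A planar sector of opening `θ` has normalised area at most `θ`. -/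
theorem ar_sector_le {n : ℕ} {e f : Euc n} (he : ‖e‖ = 1) (hf : ‖f‖ = 1) (hef : ⟪e, f⟫_ℝ = 0)
    {h : ℝ} (hpi : h < Real.pi) :
    ar n {w | ∃ s ∈ Ioc (0:ℝ) 1, ∃ φ ∈ Icc (-h) h, w = s • (Real.cos φ • e + Real.sin φ • f)} ≤
      ENNReal.ofReal (2 * h) := by
  have hsub : {w | ∃ s ∈ Ioc (0:ℝ) 1, ∃ φ ∈ Icc (-h) h,
      w = s • (Real.cos φ • e + Real.sin φ • f)} ⊆
      (fun w : ℂ => w.re • e + w.im • f) '' Sec (Icc (-h) h) := by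
    rintro w ⟨s, hs, φ, hφ, rfl⟩
    have ha := Complex.arg_mul_cos_add_sin_mul_I (r := s) (θ := φ) hs.1
      ⟨by linarith [hφ.1], by linarith [hφ.2]⟩
    have hn : ‖(s : ℂ) * (Complex.cos φ + Complex.sin φ * Complex.I)‖ = s := by
      rw [norm_mul, Complex.norm_cos_add_sin_mul_I, mul_one, Complex.norm_real,
        Real.norm_of_nonneg hs.1.le]
    refine ⟨s * (Complex.cos φ + Complex.sin φ * Complex.I), ⟨?_, ?_, ?_⟩, ?_⟩
    · rw [hn]; exact hs.1
    · rw [hn]; exact hs.2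
    · rw [ha]; exact hφ
    · simp [← Complex.ofReal_cos, ← Complex.ofReal_sin, smul_smul]
  refine (measure_mono hsub).trans ((ar_image_complex_le (plane_lip he.le hf.le hef _)).trans ?_)
  rw [volume_Sec measurableSet_Icc]
  · rw [Real.volume_Icc]; apply ENNReal.ofReal_le_ofReal; linarith
  · rintro φ hφ; exact ⟨by linarith [hφ.1], by linarith [hφ.2]⟩

/-! ### Spherical distance -/

/-- The spherical distance between unit vectors. -/
def ang {n : ℕ} (x z : Euc n) : ℝ := Real.arccos ⟪x, z⟫_ℝ

section
variable {n : ℕ} {E : Set (Euc n)}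

theorem continuous_ang (x : Euc n) : Continuous (ang x) := by unfold ang; fun_prop

theorem continuous_ang₂ : Continuous (fun p : Euc n × Euc n => ang p.1 p.2) := by
  unfold ang; fun_prop

theorem ang_comm (x z : Euc n) : ang x z = ang z x := by rw [ang, real_inner_comm, ang]

theorem ang_nonneg (x z : Euc n) : 0 ≤ ang x z := Real.arccos_nonneg _

theorem ang_le_pi (x z : Euc n) : ang x z ≤ Real.pi := Real.arccos_le_pi _

theorem ang_eq {x z : Euc n} (hx : ‖x‖ = 1) (hz : ‖z‖ = 1) :
    ang x z = InnerProductGeometry.angle x z := by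
  simp [ang, InnerProductGeometry.angle, hx, hz]

theorem cos_ang {x z : Euc n} (hx : ‖x‖ = 1) (hz : ‖z‖ = 1) : Real.cos (ang x z) = ⟪x, z⟫_ℝ := by
  have := abs_real_inner_le_norm x z
  rw [hx, hz, mul_one, abs_le] at this
  exact Real.cos_arccos this.1 this.2

theorem ang_triangle {x y z : Euc n} (hx : ‖x‖ = 1) (hy : ‖y‖ = 1) (hz : ‖z‖ = 1) :
    ang x z ≤ ang x y + ang y z := by
  rw [ang_eq hx hz, ang_eq hx hy, ang_eq hy hz]
  exact InnerProductGeometry.angle_le_angle_add_angle _ _ _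

theorem ang_self {x : Euc n} (hx : ‖x‖ = 1) : ang x x = 0 := by
  simp [ang, hx]

theorem chord_sq {x z : Euc n} (hx : ‖x‖ = 1) (hz : ‖z‖ = 1) :
    ‖x - z‖ = 2 * Real.sin (ang x z / 2) := by
  have h0 : 0 ≤ Real.sin (ang x z / 2) :=
    Real.sin_nonneg_of_nonneg_of_le_pi (by linarith [ang_nonneg x z])
      (by linarith [ang_le_pi x z, ang_nonneg x z, Real.pi_pos])
  rw [← sq_eq_sq₀ (norm_nonneg _) (by linarith), norm_sub_sq_real, hx, hz, ← cos_ang hx hz, mul_pow,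
    Real.sin_sq_eq_half_sub]
  ring_nf

theorem norm_sub_le_ang {x z : Euc n} (hx : ‖x‖ = 1) (hz : ‖z‖ = 1) : ‖x - z‖ ≤ ang x z := by
  rw [chord_sq hx hz]
  have := Real.sin_le (x := ang x z / 2) (by linarith [ang_nonneg x z])
  linarith

theorem ang_le_two_norm_sub {x z : Euc n} (hx : ‖x‖ = 1) (hz : ‖z‖ = 1) :
    ang x z ≤ 2 * ‖x - z‖ := by
  rw [chord_sq hx hz]
  have := Real.mul_le_sin (x := ang x z / 2) (by linarith [ang_nonneg x z])
    (by linarith [ang_le_pi x z])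
  have hpi := Real.pi_le_four
  have h2 : (1:ℝ) / 2 ≤ 2 / Real.pi := by
    rw [div_le_div_iff₀ two_pos Real.pi_pos]; linarith
  have h3 := mul_le_mul_of_nonneg_right h2 (by linarith [ang_nonneg x z] : (0:ℝ) ≤ ang x z / 2)
  linarith

theorem ang_eq_zero {x z : Euc n} (hx : ‖x‖ = 1) (hz : ‖z‖ = 1) (h : ang x z = 0) : x = z := by
  have := norm_sub_le_ang hx hz
  rw [h] at this
  exact sub_eq_zero.1 (norm_le_zero_iff.1 this)

theorem ang_pos {x z : Euc n} (hx : ‖x‖ = 1) (hz : ‖z‖ = 1) (h : x ≠ z) : 0 < ang x z :=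
  lt_of_le_of_ne (ang_nonneg _ _) fun h' => h (ang_eq_zero hx hz h'.symm)

theorem ang_lip {x y z : Euc n} (hx : ‖x‖ = 1) (hy : ‖y‖ = 1) (hz : ‖z‖ = 1) :
    |ang x y - ang x z| ≤ 2 * ‖y - z‖ := by
  have h1 := ang_triangle hx hy hz
  have h2 := ang_triangle hx hz hy
  have h3 := ang_le_two_norm_sub hy hz
  rw [ang_comm z y] at h2
  rw [abs_le]; constructor <;> linarith

/-! ### Distance functions on the link: length lower bounds and counting -/

/-- Folding the space onto a half plane with edge the line of `x` does not increase distances. -/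
theorem fold_lip {x : Euc n} (hx : ‖x‖ = 1) (S : Set (Euc n)) :
    LipOn 1 (fun v : Euc n => (⟪x, v⟫_ℝ : ℂ) + (‖v - ⟪x, v⟫_ℝ • x‖ : ℝ) * Complex.I) S := by
  intro v _ w _
  have key : ∀ u : Euc n, ‖u‖ ^ 2 = ⟪x, u⟫_ℝ ^ 2 + ‖u - ⟪x, u⟫_ℝ • x‖ ^ 2 := by
    intro u
    rw [norm_sub_sq_real, inner_smul_right, norm_smul, hx, mul_one, real_inner_comm,
      Real.norm_eq_abs, sq_abs]
    ring
  rw [one_mul]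
  apply le_of_sq_le_sq _ (norm_nonneg _)
  rw [Complex.sq_norm, Complex.normSq_apply, key (v - w)]
  simp only [Complex.sub_re, Complex.add_re, Complex.ofReal_re, Complex.mul_re, Complex.I_re,
    mul_zero, Complex.ofReal_im, Complex.I_im, mul_one, sub_zero, add_zero, Complex.sub_im,
    Complex.add_im, Complex.mul_im, zero_add, inner_sub_right]
  have h1 : v - w - (⟪x, v⟫_ℝ - ⟪x, w⟫_ℝ) • x = (v - ⟪x, v⟫_ℝ • x) - (w - ⟪x, w⟫_ℝ • x) := by module
  have h2 := abs_norm_sub_norm_le (v - ⟪x, v⟫_ℝ • x) (w - ⟪x, w⟫_ℝ • x)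
  rw [h1]
  nlinarith [sq_le_sq' (neg_le_of_abs_le h2) (le_of_abs_le h2)]

/-- The mass of a piece of the link is at least the length of its image under the spherical distance
to `x`, because folding the cone onto a half plane does not increase areas. -/
theorem volume_ang_image_le (hE : IsMC n E) {x : Euc n} (hx : ‖x‖ = 1) {A : Set (Euc n)}
    (hA : MeasurableSet A) {S : Set ℝ} (hS : MeasurableSet S) (hSA : S ⊆ ang x '' (KK E ∩ A)) :
    volume S ≤ lam E A := by
  have h1 : volume S = volume (S ∩ Ioo (-Real.pi) Real.pi) := by
    refine le_antisymm ?_ (measure_mono inter_subset_left)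
    rw [← measure_inter_add_sdiff S (measurableSet_Ioo (a := -Real.pi) (b := Real.pi))]
    have h0 : volume (S \ Ioo (-Real.pi) Real.pi) = 0 := by
      refine measure_mono_null (t := {Real.pi}) ?_ (by simp)
      rintro t ⟨ht, ht'⟩
      obtain ⟨z, -, rfl⟩ := hSA ht
      by_contra h
      exact ht' ⟨by linarith [Real.pi_pos, ang_nonneg x z], lt_of_le_of_ne (ang_le_pi x z) h⟩
    rw [h0, add_zero]
  rw [h1, ← volume_Sec (hS.inter measurableSet_Ioo) inter_subset_right, lam_apply hA]
  refine le_trans ?_ (two_vol_image_le (fold_lip hx _))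
  refine mul_le_mul' le_rfl (measure_mono ?_)
  rintro w ⟨hw0, hw1, hwS, hw2⟩
  obtain ⟨z, ⟨hzK, hzA⟩, hz⟩ := hSA hwS
  have hz1 := norm_of_mem_KK hzK
  have hn : ‖‖w‖ • z‖ = ‖w‖ := by rw [norm_smul, hz1, norm_norm, mul_one]
  refine ⟨‖w‖ • z, ⟨hE.smul_mem hzK.1 hw0, by rwa [hn], by rwa [hn],
    by rwa [nz_smul hw0, nz_of_norm hz1]⟩, ?_⟩
  have hc : ⟪x, z⟫_ℝ = Real.cos w.arg := by rw [← hz, cos_ang hx hz1]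
  have hs : ‖z - ⟪x, z⟫_ℝ • x‖ = Real.sin w.arg := by
    have h0 : 0 ≤ Real.sin w.arg := by
      rw [← hz]; exact Real.sin_nonneg_of_nonneg_of_le_pi (ang_nonneg _ _) (ang_le_pi _ _)
    rw [← sq_eq_sq₀ (norm_nonneg _) h0, norm_sub_sq_real, inner_smul_right, norm_smul, hx, mul_one,
      real_inner_comm x z, Real.norm_eq_abs, sq_abs, hz1, hc]
    nlinarith [Real.sin_sq_add_cos_sq w.arg]
  have h3 : ‖w‖ • z - ⟪x, ‖w‖ • z⟫_ℝ • x = ‖w‖ • (z - ⟪x, z⟫_ℝ • x) := by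
    rw [inner_smul_right]; module
  simp only [h3]
  rw [inner_smul_right, norm_smul, norm_norm, hs, hc]
  conv_rhs => rw [← Complex.norm_mul_cos_add_sin_mul_I w]
  push_cast
  ring

theorem mono_integral {g : ℝ → ℝ} (hg : Monotone g) {a b : ℝ} (hab : a < b) {c : ℝ → ℝ}
    (hc : IntegrableOn c (Ioo a b)) (h : ∀ᵐ ρ : ℝ, ρ ∈ Ioo a b → c ρ ≤ deriv g ρ) :
    ∫ ρ in Ioo a b, c ρ ≤ g b - g a := by
  set μ := hg.stieltjesFunction.measure with hμ
  have hfin : μ (Ioo a b) ≠ ⊤ := by rw [hμ, StieltjesFunction.measure_Ioo]; exact ENNReal.ofReal_ne_top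
  have hle : ∫⁻ ρ in Ioo a b, μ.rnDeriv volume ρ ≤ μ (Ioo a b) := Measure.setLIntegral_rnDeriv_le _
  have hInt : IntegrableOn (fun ρ => (μ.rnDeriv volume ρ).toReal) (Ioo a b) := by
    apply integrable_toReal_of_lintegral_ne_top (Measure.measurable_rnDeriv _ _).aemeasurable
    exact (hle.trans_lt hfin.lt_top).ne
  have h1 : ∫ ρ in Ioo a b, c ρ ≤ ∫ ρ in Ioo a b, (μ.rnDeriv volume ρ).toReal := by
    apply integral_mono_ae hc hInt
    filter_upwards [ae_restrict_of_ae h, ae_restrict_of_ae hg.ae_hasDerivAt,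
      ae_restrict_mem measurableSet_Ioo] with ρ h1 h2 h3
    rw [← h2.deriv]; exact h1 h3
  refine h1.trans ?_
  rw [integral_toReal (Measure.measurable_rnDeriv _ _).aemeasurable
    (ae_restrict_of_ae (Measure.rnDeriv_lt_top μ volume))]
  have h2 : (μ (Ioo a b)).toReal ≤ g b - g a := by
    rw [hμ, StieltjesFunction.measure_Ioo]
    have hmono := hg.stieltjesFunction.mono
    have h3 : Function.leftLim hg.stieltjesFunction b ≤ g b := by
      refine le_of_tendsto (hmono.tendsto_leftLim b) ?_
      filter_upwards [self_mem_nhdsWithin] with y hy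
      rw [hg.stieltjesFunction_eq]
      exact hg.rightLim_le hy
    have h4 : g a ≤ hg.stieltjesFunction a := by
      rw [hg.stieltjesFunction_eq]; exact hg.le_rightLim le_rfl
    have h5 : hg.stieltjesFunction a ≤ Function.leftLim hg.stieltjesFunction b := hmono.le_leftLim hab
    rw [ENNReal.toReal_ofReal (by linarith)]
    linarith
  exact (ENNReal.toReal_mono hfin hle).trans h2

/-- The mass of the part of `A` at spherical distance less than `ρ` from `x`. -/
def gm (E : Set (Euc n)) (x : Euc n) (A : Set (Euc n)) (ρ : ℝ) : ℝ :=
  (lam E).real (A ∩ {z | ang x z < ρ})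

theorem measurableSet_ang_lt (x : Euc n) (ρ : ℝ) : MeasurableSet {z : Euc n | ang x z < ρ} :=
  (isOpen_lt (continuous_ang x) continuous_const).measurableSet

theorem measurableSet_ang_Ico (x : Euc n) (ρ ρ' : ℝ) :
    MeasurableSet {z : Euc n | ρ ≤ ang x z ∧ ang x z < ρ'} :=
  (isClosed_le continuous_const (continuous_ang x)).measurableSet.inter (measurableSet_ang_lt x ρ')

theorem gm_sub (hE : IsMC n E) (x : Euc n) (A : Set (Euc n)) {ρ ρ' : ℝ} (h : ρ ≤ ρ') :
    gm E x A ρ' - gm E x A ρ = (lam E).real (A ∩ {z | ρ ≤ ang x z ∧ ang x z < ρ'}) := by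
  have := lam_finite hE
  unfold gm
  rw [← measureReal_inter_add_sdiff (s := A ∩ {z | ang x z < ρ'}) (measurableSet_ang_lt x ρ)]
  have h1 : A ∩ {z | ang x z < ρ'} ∩ {z | ang x z < ρ} = A ∩ {z | ang x z < ρ} := by
    ext z; simp only [mem_inter_iff, mem_ofPred_eq]
    constructor
    · rintro ⟨⟨h1, h2⟩, h3⟩; exact ⟨h1, h3⟩
    · rintro ⟨h1, h3⟩; exact ⟨⟨h1, by linarith⟩, h3⟩
  have h2 : (A ∩ {z | ang x z < ρ'}) \ {z | ang x z < ρ} =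
      A ∩ {z | ρ ≤ ang x z ∧ ang x z < ρ'} := by
    ext z; simp only [mem_inter_iff, mem_ofPred_eq, Set.mem_sdiff, not_lt]; tauto
  rw [h1, h2]; ring

theorem gm_mono (hE : IsMC n E) (x : Euc n) (A : Set (Euc n)) : Monotone (gm E x A) := by
  intro ρ ρ' h
  have := gm_sub hE x A h
  have h2 : 0 ≤ (lam E).real (A ∩ {z | ρ ≤ ang x z ∧ ang x z < ρ'}) := measureReal_nonneg
  linarith

/-- For almost every radius, the sphere of centre `x` meets the link in a finite set, with at most
as many points as the derivative of the mass of the ball. -/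
theorem count_ae (hE : IsMC n E) {x : Euc n} (hx : ‖x‖ = 1) {U : Set (Euc n)} (hU : IsOpen U) :
    ∀ᵐ ρ : ℝ, ∃ q, HasDerivAt (gm E x U) q ρ ∧ (KK E ∩ U ∩ {z | ang x z = ρ}).Finite ∧
      ((KK E ∩ U ∩ {z | ang x z = ρ}).ncard : ℝ) ≤ q := by
  have hfin := lam_finite hE
  have hne : Nonempty (Euc n) := ⟨0⟩
  set C : ℕ × ℕ → Set (Euc n) := fun k =>
    closedBall (TopologicalSpace.denseSeq (Euc n) k.1) (1 / ((k.2 : ℝ) + 1)) with hC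
  set S : ℕ × ℕ → Set ℝ := fun k => ang x '' (KK E ∩ C k) with hS
  have hSc : ∀ k, IsCompact (S k) := fun k =>
    (hE.compactK.inter_right isClosed_closedBall).image (continuous_ang x)
  have hSm : ∀ k, MeasurableSet (S k) := fun k => (hSc k).isClosed.measurableSet
  have hCm : ∀ k, MeasurableSet (C k) := fun k => isClosed_closedBall.measurableSet
  set G : ℕ × ℕ → ℝ → ℝ := fun k ρ => ∫ t in (0:ℝ)..ρ, (S k).indicator (fun _ => (1:ℝ)) t with hG
  have hli : ∀ k, LocallyIntegrable ((S k).indicator (fun _ => (1:ℝ))) volume := fun k =>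
    (((integrable_indicator_iff (hSm k)).2 (integrableOn_const (hSc k).measure_lt_top.ne
      (by simp)))).locallyIntegrable
  have hGd : ∀ᵐ ρ : ℝ, ∀ k, ρ ∈ S k → HasDerivAt (G k) 1 ρ := by
    rw [ae_all_iff]
    intro k
    filter_upwards [_root_.LocallyIntegrable.ae_hasDerivAt_integral (hli k)] with ρ hρ hk
    have := hρ 0
    rwa [indicator_of_mem hk] at this
  have hGs : ∀ k ρ ρ', ρ ≤ ρ' → G k ρ' - G k ρ ≤
      (lam E).real (C k ∩ {z | ρ ≤ ang x z ∧ ang x z < ρ'}) := by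
    intro k ρ ρ' h
    have hii : ∀ a b, IntervalIntegrable ((S k).indicator (fun _ => (1:ℝ))) volume a b := fun a b =>
      (((integrable_indicator_iff (hSm k)).2 (integrableOn_const (hSc k).measure_lt_top.ne
      (by simp)))).intervalIntegrable
    simp only [hG]
    rw [intervalIntegral.integral_interval_sub_left (hii _ _) (hii _ _),
      intervalIntegral.integral_of_le h, ← integral_Ico_eq_integral_Ioc,
      integral_indicator (hSm k), Measure.restrict_restrict (hSm k)]
    simp only [integral_const, smul_eq_mul, mul_one, MeasurableSet.univ, measureReal_restrict_apply,
      univ_inter]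
    refine ENNReal.toReal_mono (measure_ne_top _ _) ?_
    refine volume_ang_image_le hE hx ((hCm k).inter (measurableSet_ang_Ico _ _ _))
      ((hSm k).inter measurableSet_Ico) ?_
    rintro t ⟨⟨z, ⟨hz, hz'⟩, rfl⟩, ht⟩
    exact ⟨z, ⟨hz, hz', ht⟩, rfl⟩
  have hmain : ∀ T : Finset (ℕ × ℕ), (∀ k ∈ T, C k ⊆ U) → (T : Set (ℕ × ℕ)).PairwiseDisjoint C →
      Monotone (fun ρ => gm E x U ρ - ∑ k ∈ T, G k ρ) := by
    intro T hTU hTd ρ ρ' h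
    have h1 := gm_sub hE x U h
    have h2 : ∑ k ∈ T, (lam E).real (C k ∩ {z | ρ ≤ ang x z ∧ ang x z < ρ'}) ≤
        (lam E).real (U ∩ {z | ρ ≤ ang x z ∧ ang x z < ρ'}) := by
      rw [← measureReal_biUnion_finset]
      · refine measureReal_mono ?_ 
        refine iUnion₂_subset fun k hk => inter_subset_inter_left _ (hTU k hk)
      · intro i hi j hj hij
        exact (hTd hi hj hij).mono inter_subset_left inter_subset_left
      · intro k _; exact (hCm k).inter (measurableSet_ang_Ico _ _ _)
    have h3 := Finset.sum_le_sum fun k (_ : k ∈ T) => hGs k ρ ρ' h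
    rw [Finset.sum_sub_distrib] at h3
    simp only
    linarith
  filter_upwards [hGd, (gm_mono hE x U).ae_differentiableAt] with ρ hρ hd
  refine ⟨_, hd.hasDerivAt, ?_⟩
  have key : ∀ F : Finset (Euc n), (F : Set (Euc n)) ⊆ KK E ∩ U ∩ {z | ang x z = ρ} →
      (F.card : ℝ) ≤ deriv (gm E x U) ρ := by
    intro F hF
    -- a common scale at which the points of `F` are separated and stay inside `U`
    have hev : ∀ᶠ m : ℕ in atTop, (∀ z ∈ F, closedBall z (2 * (1 / ((m : ℝ) + 1))) ⊆ U) ∧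
        ∀ z ∈ F, ∀ w ∈ F, z ≠ w → 4 * (1 / ((m : ℝ) + 1)) < dist z w := by
      have ht := tendsto_one_div_add_atTop_nhds_zero_nat (𝕜 := ℝ)
      refine Eventually.and ?_ ?_
      · rw [Finset.eventually_all]
        intro z hz
        obtain ⟨ε, hε, hεU⟩ := Metric.isOpen_iff.1 hU z (hF hz).1.2
        have := (ht.const_mul 2)
        rw [mul_zero] at this
        filter_upwards [this.eventually (gt_mem_nhds hε)] with m hm
        exact (closedBall_subset_ball hm).trans hεU
      · rw [Finset.eventually_all]
        intro z hz
        rw [Finset.eventually_all]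
        intro w hw
        by_cases h : z = w
        · exact Eventually.of_forall fun m hm => absurd h hm
        have := (ht.const_mul 4)
        rw [mul_zero] at this
        filter_upwards [this.eventually (gt_mem_nhds (dist_pos.2 h))] with m hm _
        exact hm
    obtain ⟨m, hm1, hm2⟩ := hev.exists
    have hmp : (0:ℝ) < 1 / ((m : ℝ) + 1) := by positivity
    have hex : ∀ z : Euc n, ∃ i : ℕ, dist z (TopologicalSpace.denseSeq (Euc n) i) <
        1 / ((m : ℝ) + 1) := fun z =>
      (TopologicalSpace.denseRange_denseSeq (Euc n)).exists_dist_lt z hmp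
    choose ι hι using hex
    have hCsub : ∀ z, C (ι z, m) ⊆ closedBall z (2 * (1 / ((m : ℝ) + 1))) := by
      intro z y hy
      have h1 : dist y (TopologicalSpace.denseSeq (Euc n) (ι z)) ≤ 1 / ((m : ℝ) + 1) := hy
      have h2 := hι z
      rw [mem_closedBall]
      linarith [dist_triangle_right y z (TopologicalSpace.denseSeq (Euc n) (ι z))]
    have hdis : ∀ z ∈ F, ∀ w ∈ F, z ≠ w → Disjoint (C (ι z, m)) (C (ι w, m)) := by
      intro z hz w hw hzw
      rw [Set.disjoint_left]
      intro y hy hy'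
      have h1 := hCsub z hy
      have h2 := hCsub w hy'
      rw [mem_closedBall] at h1 h2
      linarith [dist_triangle_left z w y, hm2 z hz w hw hzw]
    have hmemC : ∀ z, z ∈ C (ι z, m) := fun z => (hι z).le
    have hinj : Set.InjOn (fun z => (ι z, m)) (F : Set (Euc n)) := by
      intro z hz w hw hzw
      by_contra hne
      have h1 := hdis z hz w hw hne
      have h2 : C (ι z, m) = C (ι w, m) := congrArg C hzw
      rw [h2] at h1
      have h3 := hmemC z
      rw [h2] at h3
      exact Set.disjoint_left.1 h1 h3 h3
    have hmo := hmain (F.image fun z => (ι z, m)) (by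
        intro k hk
        obtain ⟨z, hz, rfl⟩ := Finset.mem_image.1 hk
        exact (hCsub z).trans (hm1 z hz)) (by
        intro k hk l hl hkl
        obtain ⟨z, hz, rfl⟩ := Finset.mem_image.1 (Finset.mem_coe.1 hk)
        obtain ⟨w, hw, rfl⟩ := Finset.mem_image.1 (Finset.mem_coe.1 hl)
        exact hdis z hz w hw fun h => hkl (by rw [h]))
    have hder := (hd.hasDerivAt.sub (HasDerivAt.fun_sum (u := F.image fun z => (ι z, m))
      (A' := fun _ => (1:ℝ)) (fun k hk => by
        obtain ⟨z, hz, rfl⟩ := Finset.mem_image.1 hk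
        exact hρ _ ⟨z, ⟨(hF hz).1.1, hmemC z⟩, (hF hz).2⟩))).nonneg_of_monotone hmo
    rw [Finset.sum_const, Finset.card_image_of_injOn hinj, nsmul_eq_mul, mul_one] at hder
    linarith
  have hfi : (KK E ∩ U ∩ {z | ang x z = ρ}).Finite := by
    by_contra hinf
    obtain ⟨F, hF, hcard⟩ := Set.Infinite.exists_subset_card_eq hinf
      (⌊deriv (gm E x U) ρ⌋₊ + 1)
    have h1 := key F hF
    have h2 := Nat.lt_floor_add_one (deriv (gm E x U) ρ)
    rw [hcard] at h1
    push_cast at h1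
    linarith
  refine ⟨hfi, ?_⟩
  have := key hfi.toFinset (by simp)
  rwa [← Set.ncard_eq_toFinset_card _ hfi] at this
end

/-! ### Competitors built from a map of the link -/

section
variable {n : ℕ} {E : Set (Euc n)}

/-- The map of the cone which equals `v ↦ |v| f(v/|v|)` where `χ |v| = 1` and the identity
where `χ |v| = 0`. -/
def cmap (χ : ℝ → ℝ) (f : Euc n → Euc n) (v : Euc n) : Euc n :=
  v + (‖v‖ * χ ‖v‖) • (f (nz v) - nz v)

theorem cmap_smul (χ : ℝ → ℝ) (f : Euc n → Euc n) {s : ℝ} (hs : 0 < s) {z : Euc n} (hz : ‖z‖ = 1) :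
    cmap χ f (s • z) = s • (z + χ s • (f z - z)) := by
  unfold cmap
  rw [nz_smul hs, nz_of_norm hz, norm_smul, hz, Real.norm_of_nonneg hs.le, mul_one]
  module

theorem cmap_lip (hE : IsMC n E) {f : Euc n → Euc n} {L B r Lχ : ℝ} {χ : ℝ → ℝ}
    (hf : LipOn L f (KK E)) (hB : ∀ z ∈ KK E, ‖f z - z‖ ≤ B) (hL : 0 ≤ L) (hLχ : 0 ≤ Lχ)
    (hχ : ∀ s s', |χ s - χ s'| ≤ Lχ * |s - s'|) (hχ01 : ∀ s, 0 ≤ χ s ∧ χ s ≤ 1) (hr : 0 < r)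
    (hχ0 : ∀ s, 1 + r ≤ s → χ s = 0) :
    LipOn (1 + (1 + (1 + r) * Lχ) * |B| + 2 * (L + 1)) (cmap χ f) E := by
  have hω : ∀ s s', 0 ≤ s → 0 ≤ s' →
      |s * χ s - s' * χ s'| ≤ (1 + (1 + r) * Lχ) * |s - s'| := by
    have main : ∀ s s', 0 ≤ s → 0 ≤ s' → s ≤ 1 + r →
        |s * χ s - s' * χ s'| ≤ (1 + (1 + r) * Lχ) * |s - s'| := by
      intro s s' h h' hs
      have e : s * χ s - s' * χ s' = (s - s') * χ s' + s * (χ s - χ s') := by ring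
      rw [e]
      refine (abs_add_le _ _).trans ?_
      rw [abs_mul, abs_mul, abs_of_nonneg h, abs_of_nonneg (hχ01 s').1]
      have h1 := mul_le_mul_of_nonneg_left (hχ01 s').2 (abs_nonneg (s - s'))
      have h2 := mul_le_mul hs (hχ s s') (abs_nonneg _) (by linarith)
      linarith
    intro s s' h h'
    by_cases hs : s ≤ 1 + r
    · exact main s s' h h' hs
    by_cases hs' : s' ≤ 1 + r
    · have := main s' s h' h hs'
      rwa [abs_sub_comm, abs_sub_comm s' s] at this
    · rw [hχ0 s (by linarith), hχ0 s' (by linarith)]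
      simp only [mul_zero, sub_zero, abs_zero]
      positivity
  have key : ∀ v ∈ E, ∀ w ∈ E, 0 < ‖v‖ →
      ‖cmap χ f v - cmap χ f w‖ ≤ (1 + (1 + (1 + r) * Lχ) * |B| + 2 * (L + 1)) * ‖v - w‖ := by
    intro v hv w hw h0
    have hn := abs_norm_sub_norm_le v w
    have hc : 0 ≤ 1 + (1 + r) * Lχ := by positivity
    have hvK := hE.nz_mem hv h0
    have hBv : ‖f (nz v) - nz v‖ ≤ |B| := (hB _ hvK).trans (le_abs_self _)
    rcases (norm_nonneg w).eq_or_lt with hw0 | hw0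
    · have hw' : w = 0 := norm_eq_zero.1 hw0.symm
      subst hw'
      simp only [cmap, norm_zero, zero_mul, zero_smul, add_zero, sub_zero]
      refine (norm_add_le _ _).trans ?_
      rw [norm_smul, norm_mul, norm_norm, Real.norm_of_nonneg (hχ01 _).1]
      have h1 : ‖v‖ * χ ‖v‖ * ‖f (nz v) - nz v‖ ≤ ‖v‖ * 1 * |B| := by
        gcongr
        exact (hχ01 _).2
      have h2 : 0 ≤ (1 + r) * Lχ * |B| * ‖v‖ := by positivity
      have h3 : 0 ≤ 2 * (L + 1) * ‖v‖ := by positivity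
      nlinarith
    have hwK := hE.nz_mem hw hw0
    have e : cmap χ f v - cmap χ f w = (v - w) +
        ((‖v‖ * χ ‖v‖ - ‖w‖ * χ ‖w‖) • (f (nz v) - nz v) +
          (‖w‖ * χ ‖w‖) • ((f (nz v) - f (nz w)) - (nz v - nz w))) := by
      unfold cmap; module
    rw [e]
    refine (norm_add_le _ _).trans ?_
    have h1 : ‖(‖v‖ * χ ‖v‖ - ‖w‖ * χ ‖w‖) • (f (nz v) - nz v)‖ ≤
        (1 + (1 + r) * Lχ) * ‖v - w‖ * |B| := by
      rw [norm_smul, Real.norm_eq_abs]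
      refine mul_le_mul ((hω _ _ h0.le hw0.le).trans ?_) hBv (norm_nonneg _) (by positivity)
      gcongr
    have h2 : ‖(‖w‖ * χ ‖w‖) • ((f (nz v) - f (nz w)) - (nz v - nz w))‖ ≤
        2 * (L + 1) * ‖v - w‖ := by
      rw [norm_smul, norm_mul, norm_norm, Real.norm_of_nonneg (hχ01 _).1]
      have h3 : ‖(f (nz v) - f (nz w)) - (nz v - nz w)‖ ≤ (L + 1) * ‖nz v - nz w‖ := by
        refine (norm_sub_le _ _).trans ?_
        have := hf _ hvK _ hwK
        linarith
      have h4 : ‖w‖ * ‖nz v - nz w‖ ≤ 2 * ‖v - w‖ := by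
        have := nz_lip w v
        rwa [norm_sub_rev (nz w), norm_sub_rev w] at this
      calc ‖w‖ * χ ‖w‖ * ‖(f (nz v) - f (nz w)) - (nz v - nz w)‖
          ≤ ‖w‖ * 1 * ((L + 1) * ‖nz v - nz w‖) := by
            gcongr
            exact (hχ01 _).2
        _ = (L + 1) * (‖w‖ * ‖nz v - nz w‖) := by ring
        _ ≤ (L + 1) * (2 * ‖v - w‖) := by gcongr
        _ = _ := by ring
    have := norm_add_le ((‖v‖ * χ ‖v‖ - ‖w‖ * χ ‖w‖) • (f (nz v) - nz v))
      ((‖w‖ * χ ‖w‖) • ((f (nz v) - f (nz w)) - (nz v - nz w)))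
    nlinarith
  intro v hv w hw
  rcases (norm_nonneg v).eq_or_lt with h0 | h0
  · rcases (norm_nonneg w).eq_or_lt with h1 | h1
    · have hv' : v = 0 := norm_eq_zero.1 h0.symm
      have hw' : w = 0 := norm_eq_zero.1 h1.symm
      simp [hv', hw']
    · have := key w hw v hv h1
      rwa [norm_sub_rev, norm_sub_rev w] at this
  · exact key v hv w hw h0

/-- Minimality tested on the competitor of a map `f` of the link: the inner part is the cone over
the image of `f`, the outer part is an interpolation layer. -/
theorem cone_comp (hE : IsMC n E) {A : Set (Euc n)} (hA : MeasurableSet A) {f : Euc n → Euc n}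
    {L B r Lχ : ℝ} {χ : ℝ → ℝ} (hf : LipOn L f (KK E)) (hB : ∀ z ∈ KK E, ‖f z - z‖ ≤ B)
    (hL : 0 ≤ L) (hLχ : 0 ≤ Lχ)
    (hχ : ∀ s s', |χ s - χ s'| ≤ Lχ * |s - s'|) (hχ01 : ∀ s, 0 ≤ χ s ∧ χ s ≤ 1) (hr : 0 < r)
    (hχ0 : ∀ s, 1 + r ≤ s → χ s = 0) (hχ1 : ∀ s, s ≤ 1 → χ s = 1)
    (hid : ∀ z ∈ KK E, z ∉ A → f z = z) :
    ENNReal.ofReal ((1 + r) ^ 2) * lam E A ≤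
      ar n {w | ∃ s ∈ Ioc (0:ℝ) 1, ∃ z ∈ KK E ∩ A, w = s • f z} +
      ar n {w | ∃ s ∈ Ioc (1:ℝ) (1 + r), ∃ z ∈ KK E ∩ A, w = s • (z + χ s • (f z - z))} := by
  have h1 : ar n (trunc E 0 (1 + r) A) = ENNReal.ofReal ((1 + r) ^ 2) * lam E A := by
    rw [ar_trunc_zero hE hA (by linarith)]
  rw [← h1]
  refine (comp_le hE (measurableSet_trunc hE hA 0 (1 + r)) (fun v hv => hv.1)
    (fun v hv => hv.2.2.1) (cmap_lip hE hf hB hL hLχ hχ hχ01 hr hχ0) ?_).trans ?_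
  · intro v hv hvW
    rcases (norm_nonneg v).eq_or_lt with h0 | h0
    · simp [cmap, ← h0]
    by_cases hs : ‖v‖ ≤ 1 + r
    · have hz : nz v ∉ A := fun h => hvW ⟨hv, h0, hs, h⟩
      simp [cmap, hid _ (hE.nz_mem hv h0) hz]
    · simp [cmap, hχ0 _ (not_le.1 hs).le]
  · refine (measure_mono ?_).trans (measure_union_le _ _)
    rintro _ ⟨v, ⟨hv, h0, hs, hz⟩, rfl⟩
    have hK := hE.nz_mem hv h0
    have e : cmap χ f v = ‖v‖ • (nz v + χ ‖v‖ • (f (nz v) - nz v)) := by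
      rw [← cmap_smul χ f h0 (norm_nz h0), norm_smul_nz]
    by_cases h1 : ‖v‖ ≤ 1
    · refine Or.inl ⟨‖v‖, ⟨h0, h1⟩, nz v, ⟨hK, hz⟩, ?_⟩
      rw [e, hχ1 _ h1]; module
    · exact Or.inr ⟨‖v‖, ⟨not_le.1 h1, hs⟩, nz v, ⟨hK, hz⟩, e⟩

/-- The linear cutoff, `1` up to `1` and `0` from `1 + r` on. -/
def chi (r s : ℝ) : ℝ := max 0 (min 1 ((1 + r - s) / r))

theorem chi_01 (r s : ℝ) : 0 ≤ chi r s ∧ chi r s ≤ 1 :=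
  ⟨le_max_left _ _, max_le zero_le_one (min_le_left _ _)⟩

theorem clamp_lip (a b : ℝ) : |max 0 (min 1 a) - max 0 (min 1 b)| ≤ |a - b| := by
  refine (abs_max_sub_max_le_max _ _ _ _).trans ?_
  rw [sub_self, abs_zero, max_eq_right (abs_nonneg _)]
  refine (abs_min_sub_min_le_max _ _ _ _).trans ?_
  rw [sub_self, abs_zero, max_eq_right (abs_nonneg _)]

theorem chi_lip {r : ℝ} (hr : 0 < r) (s s' : ℝ) : |chi r s - chi r s'| ≤ r⁻¹ * |s - s'| := by
  refine (clamp_lip _ _).trans ?_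
  rw [← sub_div, abs_div, abs_of_pos hr, inv_mul_eq_div, abs_sub_comm s s']
  refine le_of_eq ?_
  congr 2; ring

theorem chi_one {r : ℝ} (hr : 0 < r) {s : ℝ} (h : s ≤ 1) : chi r s = 1 := by
  have : 1 ≤ (1 + r - s) / r := by rw [le_div_iff₀ hr]; linarith
  simp [chi, min_eq_left this]

theorem chi_zero {r : ℝ} (hr : 0 < r) {s : ℝ} (h : 1 + r ≤ s) : chi r s = 0 := by
  have : (1 + r - s) / r ≤ 0 := div_nonpos_of_nonpos_of_nonneg (by linarith) hr.le
  rw [chi, max_eq_left]; exact (min_le_right _ _).trans this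

/-- Area of the interpolation layer over a piece `A` of the link on which `f` is `M`-Lipschitz and
`C r`-close to the identity. -/
theorem layer_le (hE : IsMC n E) {A : Set (Euc n)} (hA : MeasurableSet A) {f : Euc n → Euc n}
    {C M r : ℝ} (hr : 0 < r) (hr1 : r ≤ 1) (hC : 1 ≤ C) (hM : 1 ≤ M)
    (hf : LipOn M f (KK E ∩ A)) (hB : ∀ z ∈ KK E ∩ A, ‖f z - z‖ ≤ C * r) :
    ar n {w | ∃ s ∈ Ioc (1:ℝ) (1 + r), ∃ z ∈ KK E ∩ A, w = s • (z + chi r s • (f z - z))} ≤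
      ENNReal.ofReal (27 * (4 * C) ^ 2 * M * r) * lam E A := by
  refine aniso hE hA (Φ := fun s z => s • (z + chi r s • (f z - z))) (by linarith) hM hr.le hr1 ?_
  intro s hs s' hs' z hz z' hz'
  have e : s • (z + chi r s • (f z - z)) - s' • (z' + chi r s' • (f z' - z')) =
      (s - s') • (z + chi r s • (f z - z)) + (s' * (chi r s - chi r s')) • (f z - z) +
      s' • ((1 - chi r s') • (z - z') + chi r s' • (f z - f z')) := by module
  rw [e]
  have hχ := chi_01 r s
  have hχ' := chi_01 r s'
  have hs2 : 0 < s' ∧ s' ≤ 2 := ⟨by linarith [hs'.1], by linarith [hs'.2]⟩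
  have hCr : C * r ≤ C := by nlinarith
  have h1 : ‖(s - s') • (z + chi r s • (f z - z))‖ ≤ |s - s'| * (1 + C) := by
    rw [norm_smul, Real.norm_eq_abs]
    refine mul_le_mul_of_nonneg_left ((norm_add_le _ _).trans ?_) (abs_nonneg _)
    rw [norm_of_mem_KK hz.1, norm_smul, Real.norm_of_nonneg hχ.1]
    have := mul_le_mul hχ.2 (hB z hz) (norm_nonneg _) zero_le_one
    linarith
  have h2 : ‖(s' * (chi r s - chi r s')) • (f z - z)‖ ≤ |s - s'| * (2 * C) := by
    rw [norm_smul, norm_mul, Real.norm_of_nonneg hs2.1.le, Real.norm_eq_abs]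
    calc s' * |chi r s - chi r s'| * ‖f z - z‖ ≤ 2 * (r⁻¹ * |s - s'|) * (C * r) := by
          refine mul_le_mul (mul_le_mul hs2.2 (chi_lip hr _ _) (abs_nonneg _) two_pos.le) (hB z hz)
            (norm_nonneg _) (by positivity)
      _ = _ := by field_simp
  have h3 : ‖s' • ((1 - chi r s') • (z - z') + chi r s' • (f z - f z'))‖ ≤ 2 * M * ‖z - z'‖ := by
    rw [norm_smul, Real.norm_of_nonneg hs2.1.le, mul_assoc]
    refine mul_le_mul hs2.2 ((norm_add_le _ _).trans ?_) (norm_nonneg _) two_pos.le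
    rw [norm_smul, norm_smul, Real.norm_of_nonneg hχ'.1, Real.norm_of_nonneg (by linarith)]
    have h4 := mul_le_mul_of_nonneg_left (hf z hz z' hz') hχ'.1
    have h5 : (1 - chi r s') * ‖z - z'‖ ≤ (1 - chi r s') * (M * ‖z - z'‖) :=
      mul_le_mul_of_nonneg_left (by nlinarith [norm_nonneg (z - z')]) (by linarith)
    linarith
  refine (norm_add₃_le).trans ?_
  have h6 : 2 * M * ‖z - z'‖ ≤ 4 * C * M * ‖z - z'‖ := by
    refine mul_le_mul_of_nonneg_right ?_ (norm_nonneg _)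
    nlinarith
  nlinarith [abs_nonneg (s - s')]
end

/-! ### Replacing a piece of the link by a network -/

/-- Clamping to `[0, 1]`. -/
def cl (t : ℝ) : ℝ := max 0 (min 1 t)

theorem cl_01 (t : ℝ) : 0 ≤ cl t ∧ cl t ≤ 1 :=
  ⟨le_max_left _ _, max_le zero_le_one (min_le_left _ _)⟩

theorem cl_mem (t : ℝ) : cl t ∈ Icc (0:ℝ) 1 := cl_01 t

theorem cl_of_nonpos {t : ℝ} (h : t ≤ 0) : cl t = 0 := by
  rw [cl, max_eq_left]; exact (min_le_right _ _).trans h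

theorem cl_of_one_le {t : ℝ} (h : 1 ≤ t) : cl t = 1 := by simp [cl, min_eq_left h]

theorem cl_lip (a b : ℝ) : |cl a - cl b| ≤ |a - b| := clamp_lip a b

section
variable {n : ℕ} {E : Set (Euc n)}

/-- The local model of the surgery map near a boundary point `a`: over `-δ < u < -δ/2` the path
`γ a` is run through, over `-δ/2 < u < 0` the map opens up from the constant `a` to the identity. -/
def gs (γ : Euc n → ℝ → Euc n) (u : Euc n → ℝ) (δ : ℝ) (a z : Euc n) : Euc n :=
  γ a (cl (2 * (u z + δ) / δ)) + cl (1 + 2 * u z / δ) • (z - a)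

theorem gs_core {γ : Euc n → ℝ → Euc n} {u : Euc n → ℝ} {δ : ℝ} (hδ : 0 < δ) {a z p : Euc n}
    (h0 : γ a 0 = p) (hz : u z ≤ -δ) : gs γ u δ a z = p := by
  have h1 : 2 * (u z + δ) / δ ≤ 0 := div_nonpos_of_nonpos_of_nonneg (by linarith) hδ.le
  have h2 : 1 + 2 * u z / δ ≤ 0 := by
    have : 2 * u z / δ ≤ -1 := by rw [div_le_iff₀ hδ]; linarith
    linarith
  rw [gs, cl_of_nonpos h1, cl_of_nonpos h2, h0, zero_smul, add_zero]

theorem gs_out {γ : Euc n → ℝ → Euc n} {u : Euc n → ℝ} {δ : ℝ} (hδ : 0 < δ) {a z : Euc n}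
    (h1 : γ a 1 = a) (hz : 0 ≤ u z) : gs γ u δ a z = z := by
  have h2 : 1 ≤ 2 * (u z + δ) / δ := by rw [le_div_iff₀ hδ]; linarith
  have h3 : 1 ≤ 1 + 2 * u z / δ := by
    have : 0 ≤ 2 * u z / δ := by positivity
    linarith
  rw [gs, cl_of_one_le h2, cl_of_one_le h3, h1, one_smul, add_sub_cancel]

theorem gs_first {γ : Euc n → ℝ → Euc n} {u : Euc n → ℝ} {δ : ℝ} (hδ : 0 < δ) {a z : Euc n}
    (hz : u z ≤ -(δ / 2)) : gs γ u δ a z = γ a (cl (2 * (u z + δ) / δ)) := by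
  have h2 : 1 + 2 * u z / δ ≤ 0 := by
    have : 2 * u z / δ ≤ -1 := by rw [div_le_iff₀ hδ]; linarith
    linarith
  rw [gs, cl_of_nonpos h2, zero_smul, add_zero]

theorem gs_second {γ : Euc n → ℝ → Euc n} {u : Euc n → ℝ} {δ : ℝ} (hδ : 0 < δ) {a z : Euc n}
    (h1 : γ a 1 = a) (hz : -(δ / 2) ≤ u z) :
    gs γ u δ a z = a + cl (1 + 2 * u z / δ) • (z - a) := by
  have h2 : 1 ≤ 2 * (u z + δ) / δ := by rw [le_div_iff₀ hδ]; linarith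
  rw [gs, cl_of_one_le h2, h1]

theorem open_lip {u : Euc n → ℝ} {δ σ : ℝ} (hδ : 0 < δ) {a z z' : Euc n}
    (hu : |u z - u z'| ≤ 2 * ‖z - z'‖) (hz' : ‖z' - a‖ ≤ σ) :
    ‖cl (1 + 2 * u z / δ) • (z - a) - cl (1 + 2 * u z' / δ) • (z' - a)‖ ≤
      (1 + 4 * σ / δ) * ‖z - z'‖ := by
  have e : cl (1 + 2 * u z / δ) • (z - a) - cl (1 + 2 * u z' / δ) • (z' - a) =
      cl (1 + 2 * u z / δ) • (z - z') +
      (cl (1 + 2 * u z / δ) - cl (1 + 2 * u z' / δ)) • (z' - a) := by module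
  rw [e]
  refine (norm_add_le _ _).trans ?_
  rw [norm_smul, norm_smul, Real.norm_of_nonneg (cl_01 _).1, Real.norm_eq_abs]
  have h1 := mul_le_mul_of_nonneg_right (cl_01 (1 + 2 * u z / δ)).2 (norm_nonneg (z - z'))
  have h2 : |cl (1 + 2 * u z / δ) - cl (1 + 2 * u z' / δ)| ≤ 4 / δ * ‖z - z'‖ := by
    refine (cl_lip _ _).trans ?_
    have e2 : 1 + 2 * u z / δ - (1 + 2 * u z' / δ) = 2 / δ * (u z - u z') := by field_simp; ring
    rw [e2, abs_mul, abs_of_pos (by positivity)]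
    calc 2 / δ * |u z - u z'| ≤ 2 / δ * (2 * ‖z - z'‖) := by gcongr
      _ = _ := by ring
  have h3 := mul_le_mul h2 hz' (norm_nonneg _) (by positivity)
  calc _ ≤ 1 * ‖z - z'‖ + 4 / δ * ‖z - z'‖ * σ := add_le_add h1 h3
    _ = _ := by ring

theorem gs_lip {γ : Euc n → ℝ → Euc n} {u : Euc n → ℝ} {δ σ G : ℝ} (hδ : 0 < δ)
    (hG : 0 ≤ G) {a z z' : Euc n}
    (hγ : ∀ s ∈ Icc (0:ℝ) 1, ∀ s' ∈ Icc (0:ℝ) 1, ‖γ a s - γ a s'‖ ≤ G * |s - s'|)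
    (hu : |u z - u z'| ≤ 2 * ‖z - z'‖) (hz' : ‖z' - a‖ ≤ σ) :
    ‖gs γ u δ a z - gs γ u δ a z'‖ ≤ (1 + (4 * G + 4 * σ) / δ) * ‖z - z'‖ := by
  have h1 := open_lip hδ hu hz'
  have h2 : ‖γ a (cl (2 * (u z + δ) / δ)) - γ a (cl (2 * (u z' + δ) / δ))‖ ≤
      4 * G / δ * ‖z - z'‖ := by
    refine (hγ _ (cl_mem _) _ (cl_mem _)).trans ?_
    have h3 := cl_lip (2 * (u z + δ) / δ) (2 * (u z' + δ) / δ)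
    have e2 : 2 * (u z + δ) / δ - (2 * (u z' + δ) / δ) = 2 / δ * (u z - u z') := by
      field_simp; ring
    rw [e2, abs_mul, abs_of_pos (by positivity : (0:ℝ) < 2 / δ)] at h3
    calc _ ≤ G * (2 / δ * (2 * ‖z - z'‖)) := by
          refine mul_le_mul_of_nonneg_left (h3.trans ?_) hG
          gcongr
      _ = _ := by ring
  have e : gs γ u δ a z - gs γ u δ a z' =
      (γ a (cl (2 * (u z + δ) / δ)) - γ a (cl (2 * (u z' + δ) / δ))) +
      (cl (1 + 2 * u z / δ) • (z - a) - cl (1 + 2 * u z' / δ) • (z' - a)) := by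
    unfold gs; abel
  rw [e]
  refine (norm_add_le _ _).trans ((add_le_add h2 h1).trans (le_of_eq ?_))
  ring

theorem band_close (hE : IsMC n E) {u : Euc n → ℝ} (huc : Continuous u) {P : Finset (Euc n)}
    (hP : ∀ z ∈ KK E, u z = 0 → z ∈ P) {σ : ℝ} (hσ : 0 < σ) :
    ∃ δ > 0, ∀ z ∈ KK E, |u z| < δ → ∃ a ∈ P, ‖z - a‖ < σ := by
  set Q : Set (Euc n) := KK E \ ⋃ a ∈ P, ball a σ with hQ
  have hQc : IsCompact Q := hE.compactK.diff (isOpen_biUnion fun _ _ => isOpen_ball)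
  have hpos : ∀ z ∈ Q, 0 < |u z| := by
    intro z hz
    rw [abs_pos]
    intro h0
    exact hz.2 (mem_biUnion (hP z hz.1 h0) (mem_ball_self hσ))
  obtain ⟨δ, hδ, hδQ⟩ : ∃ δ > 0, ∀ z ∈ Q, δ ≤ |u z| := by
    rcases Q.eq_empty_or_nonempty with h | h
    · exact ⟨1, one_pos, by simp [h]⟩
    · obtain ⟨z, hz, hmin⟩ := hQc.exists_isMinOn h (huc.abs.continuousOn)
      exact ⟨|u z|, hpos z hz, fun w hw => hmin hw⟩
  refine ⟨δ, hδ, fun z hz huz => ?_⟩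
  by_contra hcon
  push Not at hcon
  have : z ∈ Q := by
    refine ⟨hz, fun h => ?_⟩
    simp only [mem_iUnion, exists_prop] at h
    obtain ⟨a, ha, hza⟩ := h
    rw [mem_ball_iff_norm] at hza
    exact absurd hza (not_lt.2 (hcon a ha))
  linarith [hδQ z this]

theorem ar_ray (p : Euc n) (S : Set (Euc n)) (hS : ∀ w ∈ S, ∃ s ∈ Ioc (0:ℝ) 1, w = s • p) :
    ar n S = 0 := by
  have h := ar_Tri_le p p
  simp only [sub_self, norm_zero, mul_zero, ENNReal.ofReal_zero, nonpos_iff_eq_zero] at h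
  refine measure_mono_null ?_ h
  intro w hw
  obtain ⟨s, hs, rfl⟩ := hS w hw
  exact ⟨s, 0, hs.1.le, le_rfl, by linarith [hs.2], by simp⟩

/-- The quantitative form of the surgery at fixed scales `σ, δ`. -/
theorem surgery_aux (hE : IsMC n E) {u : Euc n → ℝ} (huc : Continuous u)
    (hu : ∀ z ∈ KK E, ∀ z' ∈ KK E, |u z - u z'| ≤ 2 * ‖z - z'‖)
    {P : Finset (Euc n)} (hPK : ∀ a ∈ P, a ∈ KK E)
    {p : Euc n} {γ : Euc n → ℝ → Euc n} {G C r D σ δ : ℝ}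
    (hγ0 : ∀ a ∈ P, γ a 0 = p) (hγ1 : ∀ a ∈ P, γ a 1 = a) (hG : 0 ≤ G)
    (hγ : ∀ a ∈ P, ∀ s ∈ Icc (0:ℝ) 1, ∀ s' ∈ Icc (0:ℝ) 1, ‖γ a s - γ a s'‖ ≤ G * |s - s'|)
    (hp : ∀ z ∈ KK E, u z ≤ 0 → ‖p - z‖ ≤ C * r)
    (hγn : ∀ a ∈ P, ∀ s ∈ Icc (0:ℝ) 1, ‖γ a s - a‖ ≤ C * r)
    (hr : 0 < r) (hr1 : r ≤ 1) (hC : 1 ≤ C) (hD0 : 0 ≤ D) (hδ : 0 < δ) (hσ : 0 < σ)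
    (hD : lam E {z | -δ < u z ∧ u z < 0} ≤ ENNReal.ofReal (D * δ)) (hσr : σ ≤ r)
    (hsep : ∀ a ∈ P, ∀ b ∈ P, a ≠ b → 2 * σ ≤ ‖a - b‖) (hδσ : δ ≤ σ)
    (hband : ∀ z ∈ KK E, |u z| ≤ δ → ∃ a ∈ P, ‖z - a‖ < σ / 2) :
    lam E {z | u z < 0} ≤
      ar n {w | ∃ s ∈ Ioc (0:ℝ) 1, ∃ a ∈ P, ∃ t ∈ Icc (0:ℝ) 1, w = s • γ a t} +
      ENNReal.ofReal (27 * (8 * C) ^ 2 * r) * (lam E {z | u z < 0} + ENNReal.ofReal (4 * G * D)) +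
      ENNReal.ofReal ((27 * (8 * C) ^ 2 * r + 108) * (5 * D) * σ) := by
  classical
  have huniq : ∀ z, ∀ a ∈ P, ∀ b ∈ P, ‖z - a‖ < σ → ‖z - b‖ < σ → a = b := by
    intro z a ha b hb h1 h2
    by_contra h
    have h3 := hsep a ha b hb h
    have h4 := norm_sub_le_norm_sub_add_norm_sub a z b
    rw [norm_sub_rev a z] at h4
    linarith
  set f : Euc n → Euc n := fun z => if h : ∃ a ∈ P, ‖z - a‖ < σ then gs γ u δ h.choose z
    else if 0 ≤ u z then z else p with hf
  have hfa : ∀ a ∈ P, ∀ z, ‖z - a‖ < σ → f z = gs γ u δ a z := by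
    intro a ha z hz
    have h : ∃ a ∈ P, ‖z - a‖ < σ := ⟨a, ha, hz⟩
    have h2 := h.choose_spec
    rw [hf]; simp only [dif_pos h]
    rw [huniq z _ h2.1 a ha h2.2 hz]
  have hf_out : ∀ z, 0 ≤ u z → f z = z := by
    intro z hz
    by_cases h : ∃ a ∈ P, ‖z - a‖ < σ
    · obtain ⟨a, ha, hza⟩ := h
      rw [hfa a ha z hza, gs_out hδ (hγ1 a ha) hz]
    · simp only [hf, dif_neg h, if_pos hz]
  have hf_core : ∀ z, u z ≤ -δ → f z = p := by
    intro z hz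
    by_cases h : ∃ a ∈ P, ‖z - a‖ < σ
    · obtain ⟨a, ha, hza⟩ := h
      rw [hfa a ha z hza, gs_core hδ (hγ0 a ha) hz]
    · simp only [hf, dif_neg h, if_neg (by linarith : ¬ 0 ≤ u z)]
  have hCr : 0 < C * r := by positivity
  have hB : ∀ z ∈ KK E, ‖f z - z‖ ≤ 2 * C * r := by
    intro z hz
    rcases le_or_gt 0 (u z) with h0 | h0
    · rw [hf_out z h0, sub_self, norm_zero]; linarith
    rcases le_or_gt (u z) (-δ) with h1 | h1
    · rw [hf_core z h1]; linarith [hp z hz h0.le]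
    obtain ⟨a, ha, hza⟩ := hband z hz (by rw [abs_le]; constructor <;> linarith)
    rw [hfa a ha z (by linarith)]
    have e : gs γ u δ a z - z = (γ a (cl (2 * (u z + δ) / δ)) - a) +
        (cl (1 + 2 * u z / δ) - 1) • (z - a) := by unfold gs; module
    rw [e]
    refine (norm_add_le _ _).trans ?_
    have h2 := hγn a ha _ (cl_mem (2 * (u z + δ) / δ))
    have h3 := cl_01 (1 + 2 * u z / δ)
    have h4 : ‖(cl (1 + 2 * u z / δ) - 1) • (z - a)‖ ≤ 1 * ‖z - a‖ := by
      rw [norm_smul]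
      refine mul_le_mul_of_nonneg_right ?_ (norm_nonneg _)
      rw [Real.norm_eq_abs, abs_le]; constructor <;> linarith
    nlinarith
  set M : ℝ := 1 + (4 * G + 4 * σ) / δ with hM
  have hM1 : 1 ≤ M := by
    have : 0 ≤ (4 * G + 4 * σ) / δ := by positivity
    linarith
  have hloc : ∀ a ∈ P, ∀ z ∈ KK E, ∀ z' ∈ KK E, ‖z - a‖ < σ → ‖z' - a‖ < σ →
      ‖f z - f z'‖ ≤ M * ‖z - z'‖ := by
    intro a ha z hz z' hz' h1 h2
    rw [hfa a ha z h1, hfa a ha z' h2]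
    exact gs_lip hδ hG (hγ a ha) (hu z hz z' hz') h2.le
  set η := δ / 4 with hη
  have hη0 : 0 < η := by positivity
  have hfL : LipOn (M + (4 * C + 2) / η) f (KK E) := by
    intro z hz z' hz'
    rcases lt_or_ge ‖z - z'‖ η with hc | hc
    · have hmain : ‖f z - f z'‖ ≤ M * ‖z - z'‖ := by
        by_cases hza : |u z| ≤ δ
        · obtain ⟨a, ha, h1⟩ := hband z hz hza
          refine hloc a ha z hz z' hz' (by linarith) ?_
          have := norm_sub_le_norm_sub_add_norm_sub z' z a
          rw [norm_sub_rev z' z] at this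
          linarith
        by_cases hza' : |u z'| ≤ δ
        · obtain ⟨a, ha, h1⟩ := hband z' hz' hza'
          refine hloc a ha z hz z' hz' ?_ (by linarith)
          have := norm_sub_le_norm_sub_add_norm_sub z z' a
          linarith
        have hd := hu z hz z' hz'
        have hd' := abs_le.1 hd
        rw [not_le, lt_abs] at hza hza'
        have h5 : ‖z - z'‖ ≤ M * ‖z - z'‖ := le_mul_of_one_le_left (norm_nonneg _) hM1
        rcases hza with h1 | h1 <;> rcases hza' with h2 | h2
        · rw [hf_out z (by linarith), hf_out z' (by linarith)]; exact h5
        · linarith [hd'.2]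
        · linarith [hd'.1]
        · rw [hf_core z (by linarith), hf_core z' (by linarith), sub_self, norm_zero]
          linarith [norm_nonneg (z - z')]
      refine hmain.trans (mul_le_mul_of_nonneg_right ?_ (norm_nonneg _))
      have : 0 ≤ (4 * C + 2) / η := by positivity
      linarith
    · have h1 : ‖f z - f z'‖ ≤ 4 * C + 2 := by
        have e : f z - f z' = (f z - z) - (f z' - z') + (z - z') := by abel
        rw [e]
        have h2 := norm_add_le ((f z - z) - (f z' - z')) (z - z')
        have h3 := norm_sub_le (f z - z) (f z' - z')
        have h4 := norm_sub_le z z'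
        rw [norm_of_mem_KK hz, norm_of_mem_KK hz'] at h4
        nlinarith [hB z hz, hB z' hz']
      have h2 : 4 * C + 2 ≤ (4 * C + 2) / η * ‖z - z'‖ := by
        rw [div_mul_eq_mul_div, le_div_iff₀ hη0]
        exact mul_le_mul_of_nonneg_left hc (by linarith)
      nlinarith [norm_nonneg (z - z')]
  have hO : MeasurableSet {z : Euc n | u z < 0} := (isOpen_lt huc continuous_const).measurableSet
  have hCo : MeasurableSet {z : Euc n | u z ≤ -δ} :=
    (isClosed_le huc continuous_const).measurableSet
  have hAn : MeasurableSet {z : Euc n | -δ < u z ∧ u z < 0} :=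
    ((isOpen_lt continuous_const huc).inter (isOpen_lt huc continuous_const)).measurableSet
  set A : Euc n → Set (Euc n) := fun a => {z | -δ < u z ∧ u z < 0} ∩ ball a σ with hA
  have hAm : ∀ a, MeasurableSet (A a) := fun a => hAn.inter measurableSet_ball
  have hAsum : ∑ a ∈ P, lam E (A a) ≤ ENNReal.ofReal (D * δ) := by
    rw [← measure_biUnion_finset]
    · refine (measure_mono ?_).trans hD
      exact iUnion₂_subset fun a _ => inter_subset_left
    · intro a ha b hb hab
      refine Set.disjoint_left.2 fun z hz hz' => hab (huniq z a ha b hb ?_ ?_)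
      · exact mem_ball_iff_norm.1 hz.2
      · exact mem_ball_iff_norm.1 hz'.2
    · intro a _; exact hAm a
  have hcov : ∀ z ∈ KK E, u z < 0 → u z ≤ -δ ∨ ∃ a ∈ P, z ∈ A a := by
    intro z hz h0
    rcases le_or_gt (u z) (-δ) with h1 | h1
    · exact Or.inl h1
    obtain ⟨a, ha, hza⟩ := hband z hz (by rw [abs_le]; constructor <;> linarith)
    exact Or.inr ⟨a, ha, ⟨h1, h0⟩, mem_ball_iff_norm.2 (by linarith)⟩
  have hcomp := cone_comp hE hO hfL hB (by positivity) (by positivity) (chi_lip hr) (chi_01 r) hr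
    (fun s h => chi_zero hr h) (fun s h => chi_one hr h) (fun z _ hz => hf_out z (not_lt.1 hz))
  -- only the band `-δ < u < 0` contributes besides the network, and its mass is small
  have hinner : ar n {w | ∃ s ∈ Ioc (0:ℝ) 1, ∃ z ∈ KK E ∩ {z | u z < 0}, w = s • f z} ≤
      ar n {w | ∃ s ∈ Ioc (0:ℝ) 1, ∃ a ∈ P, ∃ t ∈ Icc (0:ℝ) 1, w = s • γ a t} +
      ENNReal.ofReal (108 * (5 * D) * σ) := by
    have hsub : {w | ∃ s ∈ Ioc (0:ℝ) 1, ∃ z ∈ KK E ∩ {z | u z < 0}, w = s • f z} ⊆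
        ({w | ∃ s ∈ Ioc (0:ℝ) 1, w = s • p} ∪
          {w | ∃ s ∈ Ioc (0:ℝ) 1, ∃ a ∈ P, ∃ t ∈ Icc (0:ℝ) 1, w = s • γ a t}) ∪
        ⋃ a ∈ P, {w | ∃ s ∈ Ioc (0:ℝ) (0 + 1), ∃ z ∈ KK E ∩ (A a), w =
          s • (a + cl (1 + 2 * u z / δ) • (z - a))} := by
      rintro w ⟨s, hs, z, ⟨hz, h0⟩, rfl⟩
      rcases hcov z hz h0 with h1 | ⟨a, ha, hza⟩
      · exact Or.inl (Or.inl ⟨s, hs, by rw [hf_core z h1]⟩)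
      have hza' := mem_ball_iff_norm.1 hza.2
      rcases le_or_gt (u z) (-(δ / 2)) with h2 | h2
      · refine Or.inl (Or.inr ⟨s, hs, a, ha, _, cl_mem (2 * (u z + δ) / δ), ?_⟩)
        rw [hfa a ha z hza', gs_first hδ h2]
      · refine Or.inr (mem_biUnion ha ⟨s, by simpa using hs, z, ⟨hz, hza⟩, ?_⟩)
        rw [hfa a ha z hza', gs_second hδ (hγ1 a ha) h2.le]
    refine (measure_mono hsub).trans ((measure_union_le _ _).trans (add_le_add
      ((measure_union_le _ _).trans ?_) ((measure_biUnion_finset_le _ _).trans ?_)))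
    · rw [ar_ray p {w | ∃ s ∈ Ioc (0:ℝ) 1, w = s • p} (fun w hw => hw), zero_add]
    · have hpiece : ∀ a ∈ P, ar n {w | ∃ s ∈ Ioc (0:ℝ) (0 + 1), ∃ z ∈ KK E ∩ (A a), w =
          s • (a + cl (1 + 2 * u z / δ) • (z - a))} ≤
          ENNReal.ofReal (27 * 2 ^ 2 * (1 + 4 * σ / δ) * 1) * lam E (A a) := by
        intro a ha
        refine aniso hE (hAm a) (Φ := fun s z => s • (a + cl (1 + 2 * u z / δ) • (z - a)))
          two_pos.le (by have : 0 ≤ 4 * σ / δ := by positivity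
                         linarith) zero_le_one le_rfl ?_
        intro s hs s' hs' z hz z' hz'
        have hz1 := mem_ball_iff_norm.1 hz.2.2
        have hz1' := mem_ball_iff_norm.1 hz'.2.2
        have e : s • (a + cl (1 + 2 * u z / δ) • (z - a)) -
            s' • (a + cl (1 + 2 * u z' / δ) • (z' - a)) =
            (s - s') • (a + cl (1 + 2 * u z / δ) • (z - a)) +
            s' • (cl (1 + 2 * u z / δ) • (z - a) - cl (1 + 2 * u z' / δ) • (z' - a)) := by module
        rw [e]
        refine (norm_add_le _ _).trans ?_
        rw [norm_smul, norm_smul, Real.norm_eq_abs, Real.norm_of_nonneg hs'.1.le]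
        have h1 := open_lip (a := a) hδ (hu z hz.1 z' hz'.1) hz1'.le
        have h2 : ‖a + cl (1 + 2 * u z / δ) • (z - a)‖ ≤ 2 := by
          refine (norm_add_le _ _).trans ?_
          rw [norm_smul, Real.norm_of_nonneg (cl_01 _).1, norm_of_mem_KK (hPK a ha)]
          have := mul_le_mul (cl_01 (1 + 2 * u z / δ)).2 hz1.le (norm_nonneg _) zero_le_one
          linarith
        have h3 := mul_le_mul_of_nonneg_left h2 (abs_nonneg (s - s'))
        have hs2 : s' ≤ 1 := by linarith [hs'.2]
        have h4 := mul_le_mul hs2 h1 (norm_nonneg _) zero_le_one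
        have h5 : 0 ≤ (1 + 4 * σ / δ) * ‖z - z'‖ := by positivity
        linarith
      refine (Finset.sum_le_sum hpiece).trans ?_
      rw [← Finset.mul_sum]
      refine (mul_le_mul' le_rfl hAsum).trans ?_
      rw [← ENNReal.ofReal_mul (by positivity)]
      refine ENNReal.ofReal_le_ofReal ?_
      have e : 27 * 2 ^ 2 * (1 + 4 * σ / δ) * 1 * (D * δ) = 108 * D * (δ + 4 * σ) := by
        field_simp; ring
      rw [e]
      nlinarith
  have hlayer : ar n {w | ∃ s ∈ Ioc (1:ℝ) (1 + r), ∃ z ∈ KK E ∩ {z | u z < 0},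
      w = s • (z + chi r s • (f z - z))} ≤
      ENNReal.ofReal (27 * (8 * C) ^ 2 * r) * (lam E {z | u z < 0} + ENNReal.ofReal (4 * G * D)) +
      ENNReal.ofReal (27 * (8 * C) ^ 2 * r * (5 * D) * σ) := by
    have hsub : {w | ∃ s ∈ Ioc (1:ℝ) (1 + r), ∃ z ∈ KK E ∩ {z | u z < 0},
        w = s • (z + chi r s • (f z - z))} ⊆
        {w | ∃ s ∈ Ioc (1:ℝ) (1 + r), ∃ z ∈ KK E ∩ {z | u z ≤ -δ},
          w = s • (z + chi r s • (f z - z))} ∪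
        ⋃ a ∈ P, {w | ∃ s ∈ Ioc (1:ℝ) (1 + r), ∃ z ∈ KK E ∩ A a,
          w = s • (z + chi r s • (f z - z))} := by
      rintro w ⟨s, hs, z, ⟨hz, h0⟩, rfl⟩
      rcases hcov z hz h0 with h1 | ⟨a, ha, hza⟩
      · exact Or.inl ⟨s, hs, z, ⟨hz, h1⟩, rfl⟩
      · exact Or.inr (mem_biUnion ha ⟨s, hs, z, ⟨hz, hza⟩, rfl⟩)
    have h1 : ar n {w | ∃ s ∈ Ioc (1:ℝ) (1 + r), ∃ z ∈ KK E ∩ {z | u z ≤ -δ},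
          w = s • (z + chi r s • (f z - z))} ≤
        ENNReal.ofReal (27 * (8 * C) ^ 2 * r) * lam E {z | u z < 0} := by
      refine (layer_le hE hCo (C := 2 * C) (M := 1) hr hr1 (by linarith) le_rfl ?_
        fun z hz => hB z hz.1).trans ?_
      · intro z hz z' hz'
        rw [hf_core z hz.2, hf_core z' hz'.2, sub_self, norm_zero]
        positivity
      · refine mul_le_mul' (ENNReal.ofReal_le_ofReal (le_of_eq (by ring))) (measure_mono ?_)
        intro z hz
        have : u z ≤ -δ := hz
        show u z < 0
        linarith
    have h2 : ∀ a ∈ P, ar n {w | ∃ s ∈ Ioc (1:ℝ) (1 + r), ∃ z ∈ KK E ∩ A a,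
          w = s • (z + chi r s • (f z - z))} ≤
        ENNReal.ofReal (27 * (4 * (2 * C)) ^ 2 * M * r) * lam E (A a) := by
      intro a ha
      refine layer_le hE (hAm a) hr hr1 (by linarith) hM1 ?_ fun z hz => hB z hz.1
      intro z hz z' hz'
      exact hloc a ha z hz.1 z' hz'.1 (mem_ball_iff_norm.1 hz.2.2) (mem_ball_iff_norm.1 hz'.2.2)
    refine (measure_mono hsub).trans ((measure_union_le _ _).trans ?_)
    refine (add_le_add h1 ((measure_biUnion_finset_le _ _).trans (Finset.sum_le_sum h2))).trans ?_
    rw [← Finset.mul_sum, mul_add (ENNReal.ofReal (27 * (8 * C) ^ 2 * r)), add_assoc]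
    refine add_le_add le_rfl ((mul_le_mul' le_rfl hAsum).trans ?_)
    rw [← ENNReal.ofReal_mul (by positivity), ← ENNReal.ofReal_mul (by positivity),
      ← ENNReal.ofReal_add (by positivity) (by positivity)]
    refine ENNReal.ofReal_le_ofReal ?_
    have e : 27 * (4 * (2 * C)) ^ 2 * M * r * (D * δ) =
        27 * (8 * C) ^ 2 * r * (D * (δ + 4 * G + 4 * σ)) := by
      rw [hM]; field_simp; ring
    rw [e]
    have h3 : D * (δ + 4 * G + 4 * σ) ≤ 4 * G * D + 5 * D * σ := by nlinarith
    calc _ ≤ 27 * (8 * C) ^ 2 * r * (4 * G * D + 5 * D * σ) :=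
          mul_le_mul_of_nonneg_left h3 (by positivity)
      _ = _ := by ring
  have h1 : lam E {z | u z < 0} ≤ ENNReal.ofReal ((1 + r) ^ 2) * lam E {z | u z < 0} := by
    refine le_mul_of_one_le_left (zero_le) ?_
    rw [ENNReal.one_le_ofReal]; nlinarith
  refine h1.trans (hcomp.trans ((add_le_add hinner hlayer).trans (le_of_eq ?_)))
  rw [show (27 * (8 * C) ^ 2 * r + 108) * (5 * D) * σ =
    108 * (5 * D) * σ + 27 * (8 * C) ^ 2 * r * (5 * D) * σ by ring,
    ENNReal.ofReal_add (by positivity) (by positivity)]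
  ring

/-- Minimality tested on the competitor which replaces the part `{u < 0}` of the link by a network
of paths `γ a` joining `p` to the boundary points `a`. -/
theorem surgery (hE : IsMC n E) {u : Euc n → ℝ} (huc : Continuous u)
    (hu : ∀ z ∈ KK E, ∀ z' ∈ KK E, |u z - u z'| ≤ 2 * ‖z - z'‖)
    {P : Finset (Euc n)} (hPK : ∀ a ∈ P, a ∈ KK E) (hP : ∀ z ∈ KK E, u z = 0 → z ∈ P)
    {p : Euc n} {γ : Euc n → ℝ → Euc n} {G C r D : ℝ}
    (hγ0 : ∀ a ∈ P, γ a 0 = p) (hγ1 : ∀ a ∈ P, γ a 1 = a) (hG : 0 ≤ G)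
    (hγ : ∀ a ∈ P, ∀ s ∈ Icc (0:ℝ) 1, ∀ s' ∈ Icc (0:ℝ) 1, ‖γ a s - γ a s'‖ ≤ G * |s - s'|)
    (hp : ∀ z ∈ KK E, u z ≤ 0 → ‖p - z‖ ≤ C * r)
    (hγn : ∀ a ∈ P, ∀ s ∈ Icc (0:ℝ) 1, ‖γ a s - a‖ ≤ C * r)
    (hr : 0 < r) (hr1 : r ≤ 1) (hC : 1 ≤ C) (hD0 : 0 ≤ D)
    (hD : ∀ᶠ δ in 𝓝[>] (0:ℝ), lam E {z | -δ < u z ∧ u z < 0} ≤ ENNReal.ofReal (D * δ)) :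
    lam E {z | u z < 0} ≤
      ar n {w | ∃ s ∈ Ioc (0:ℝ) 1, ∃ a ∈ P, ∃ t ∈ Icc (0:ℝ) 1, w = s • γ a t} +
      ENNReal.ofReal (27 * (8 * C) ^ 2 * r) *
        (lam E {z | u z < 0} + ENNReal.ofReal (4 * G * D)) := by
  have hsep : ∀ᶠ σ in 𝓝[>] (0:ℝ), ∀ a ∈ P, ∀ b ∈ P, a ≠ b → 2 * σ ≤ ‖a - b‖ := by
    rw [Finset.eventually_all]
    intro a _
    rw [Finset.eventually_all]
    intro b _
    by_cases h : a = b
    · exact Eventually.of_forall fun σ hσ => absurd h hσ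
    have h0 : 0 < ‖a - b‖ / 2 := half_pos (norm_pos_iff.2 (sub_ne_zero.2 h))
    filter_upwards [mem_nhdsWithin_of_mem_nhds (gt_mem_nhds h0)] with σ hσ _
    have : σ < ‖a - b‖ / 2 := hσ
    linarith
  have hev : ∀ᶠ σ in 𝓝[>] (0:ℝ), lam E {z | u z < 0} ≤
      ar n {w | ∃ s ∈ Ioc (0:ℝ) 1, ∃ a ∈ P, ∃ t ∈ Icc (0:ℝ) 1, w = s • γ a t} +
      ENNReal.ofReal (27 * (8 * C) ^ 2 * r) * (lam E {z | u z < 0} + ENNReal.ofReal (4 * G * D)) +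
      ENNReal.ofReal ((27 * (8 * C) ^ 2 * r + 108) * (5 * D) * σ) := by
    filter_upwards [hsep, self_mem_nhdsWithin, mem_nhdsWithin_of_mem_nhds (gt_mem_nhds hr)]
      with σ h1 h2 h3
    have h2' : 0 < σ := h2
    obtain ⟨δ0, hδ0, hband⟩ := band_close hE huc hP (half_pos h2')
    have e1 : ∀ᶠ δ in 𝓝[>] (0:ℝ), δ < σ := mem_nhdsWithin_of_mem_nhds (gt_mem_nhds h2')
    have e2 : ∀ᶠ δ in 𝓝[>] (0:ℝ), δ < δ0 := mem_nhdsWithin_of_mem_nhds (gt_mem_nhds hδ0)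
    have e3 : ∀ᶠ δ in 𝓝[>] (0:ℝ), 0 < δ := self_mem_nhdsWithin
    obtain ⟨δ, hδ1, hδ2', hδ3', hδ4⟩ := (hD.and (e1.and (e2.and e3))).exists
    have h3' : σ < r := h3
    exact surgery_aux hE huc hu hPK hγ0 hγ1 hG hγ hp hγn hr hr1 hC hD0 hδ4 h2' hδ1 h3'.le h1
      hδ2'.le fun z hz hz' => hband z hz (lt_of_le_of_lt hz' hδ3')
  have hlim : Tendsto (fun σ : ℝ =>
      ar n {w | ∃ s ∈ Ioc (0:ℝ) 1, ∃ a ∈ P, ∃ t ∈ Icc (0:ℝ) 1, w = s • γ a t} +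
      ENNReal.ofReal (27 * (8 * C) ^ 2 * r) * (lam E {z | u z < 0} + ENNReal.ofReal (4 * G * D)) +
      ENNReal.ofReal ((27 * (8 * C) ^ 2 * r + 108) * (5 * D) * σ)) (𝓝[>] 0)
      (𝓝 (ar n {w | ∃ s ∈ Ioc (0:ℝ) 1, ∃ a ∈ P, ∃ t ∈ Icc (0:ℝ) 1, w = s • γ a t} +
      ENNReal.ofReal (27 * (8 * C) ^ 2 * r) *
        (lam E {z | u z < 0} + ENNReal.ofReal (4 * G * D)) + 0)) := by
    refine Tendsto.add tendsto_const_nhds ?_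
    rw [← ENNReal.ofReal_zero]
    refine ENNReal.tendsto_ofReal ?_
    have : Tendsto (fun σ : ℝ => (27 * (8 * C) ^ 2 * r + 108) * (5 * D) * σ) (𝓝 0)
        (𝓝 ((27 * (8 * C) ^ 2 * r + 108) * (5 * D) * 0)) := tendsto_id.const_mul _
    rw [mul_zero] at this
    exact this.mono_left nhdsWithin_le_nhds
  rw [add_zero] at hlim
  exact ge_of_tendsto hlim hev
end

/-! ### Collapsing, stars, and splitting a pair of branches -/

section
variable {n : ℕ} {E : Set (Euc n)}

theorem deriv_band (hE : IsMC n E) {x : Euc n} {U : Set (Euc n)} {q ρ D : ℝ}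
    (h : HasDerivAt (gm E x U) q ρ) (hqD : q < D) :
    ∀ᶠ δ in 𝓝[>] (0:ℝ), lam E (U ∩ {z | ρ - δ ≤ ang x z ∧ ang x z < ρ}) ≤
      ENNReal.ofReal (D * δ) := by
  have := lam_finite hE
  have h1 : ∀ᶠ y in 𝓝[<] ρ, slope (gm E x U) ρ y < D :=
    ((hasDerivAt_iff_tendsto_slope.1 h).eventually (gt_mem_nhds hqD)).filter_mono
      (nhdsWithin_mono _ fun y (hy : y < ρ) => hy.ne)
  have ht : Tendsto (fun δ : ℝ => ρ - δ) (𝓝[>] 0) (𝓝[<] ρ) := by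
    refine tendsto_nhdsWithin_iff.2 ⟨?_, ?_⟩
    · have : Tendsto (fun δ : ℝ => ρ - δ) (𝓝 0) (𝓝 (ρ - 0)) := by
        exact (continuous_const.sub continuous_id).tendsto 0
      rw [sub_zero] at this
      exact this.mono_left nhdsWithin_le_nhds
    · filter_upwards [self_mem_nhdsWithin] with δ hδ
      have : 0 < δ := hδ
      show ρ - δ < ρ
      linarith
  filter_upwards [ht.eventually h1, self_mem_nhdsWithin] with δ h2 hδ
  have hδ' : 0 < δ := hδ
  rw [slope_def_field, div_lt_iff_of_neg (by linarith)] at h2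
  have h3 := gm_sub hE x U (by linarith : ρ - δ ≤ ρ)
  have h4 : (lam E).real (U ∩ {z | ρ - δ ≤ ang x z ∧ ang x z < ρ}) ≤ D * δ := by
    rw [← h3]; linarith
  rw [← ENNReal.ofReal_toReal (measure_ne_top (lam E) _)]
  exact ENNReal.ofReal_le_ofReal h4

theorem deriv_nonneg_gm (hE : IsMC n E) {x : Euc n} {U : Set (Euc n)} {q ρ : ℝ}
    (h : HasDerivAt (gm E x U) q ρ) : 0 ≤ q := h.nonneg_of_monotone (gm_mono hE x U)

/-- A nonempty small piece `{u < 0}` of the link has at least two boundary points: otherwise it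
could be collapsed to a point. -/
theorem collapse (hE : IsMC n E) {u : Euc n → ℝ} (huc : Continuous u)
    (hu : ∀ z ∈ KK E, ∀ z' ∈ KK E, |u z - u z'| ≤ 2 * ‖z - z'‖) {x : Euc n} (hx : ‖x‖ = 1) {r D : ℝ}
    (hr : 0 < r) (hr0 : r ≤ 1 / 10000) (hux : ∀ z ∈ KK E, u z ≤ 0 → ang x z ≤ r)
    (hfin : (KK E ∩ {z | u z = 0}).Finite) (hD0 : 0 ≤ D)
    (hD : ∀ᶠ δ in 𝓝[>] (0:ℝ), lam E {z | -δ < u z ∧ u z < 0} ≤ ENNReal.ofReal (D * δ))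
    {z₀ : Euc n} (hz₀ : z₀ ∈ KK E) (huz₀ : u z₀ < 0) : 2 ≤ (KK E ∩ {z | u z = 0}).ncard := by
  by_contra hcon
  have := lam_finite hE
  have hle : (KK E ∩ {z | u z = 0}).ncard ≤ 1 := by omega
  obtain ⟨p, hp, hpr⟩ : ∃ p : Euc n, (∀ a ∈ KK E ∩ {z | u z = 0}, a = p) ∧
      ∀ z ∈ KK E, u z ≤ 0 → ‖p - z‖ ≤ 2 * r := by
    rcases (KK E ∩ {z | u z = 0}).eq_empty_or_nonempty with h | ⟨a, ha⟩
    · refine ⟨x, by simp [h], fun z hz h0 => ?_⟩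
      have := norm_sub_le_ang hx (norm_of_mem_KK hz)
      linarith [hux z hz h0]
    · refine ⟨a, fun b hb => (Set.ncard_le_one hfin).1 hle b hb a ha, fun z hz h0 => ?_⟩
      have h1 := norm_sub_le_ang hx (norm_of_mem_KK hz)
      have h2 := norm_sub_le_ang hx (norm_of_mem_KK ha.1)
      have h3 := hux z hz h0
      have h4 := hux a ha.1 (le_of_eq ha.2)
      have h5 := norm_sub_le_norm_sub_add_norm_sub a x z
      rw [norm_sub_rev a x] at h5
      linarith
  have hs := surgery hE huc hu (P := hfin.toFinset) (p := p) (γ := fun a _ => p) (G := 0) (C := 2)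
    (r := r) (D := D) (fun a ha => ((hfin.mem_toFinset).1 ha).1)
    (fun z hz h0 => hfin.mem_toFinset.2 ⟨hz, h0⟩) (fun a _ => rfl)
    (fun a ha => (hp a (hfin.mem_toFinset.1 ha)).symm) le_rfl (fun a _ s _ s' _ => by simp)
    hpr (fun a ha s _ => by
      rw [hp a (hfin.mem_toFinset.1 ha), sub_self, norm_zero]; linarith) hr (by linarith)
    one_le_two hD0 hD
  rw [ar_ray p {w | ∃ s ∈ Ioc (0:ℝ) 1, ∃ a ∈ hfin.toFinset, ∃ t ∈ Icc (0:ℝ) 1, w = s • p}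
    (fun w ⟨s, hs, _, _, _, _, h⟩ => ⟨s, hs, h⟩), zero_add] at hs
  simp only [mul_zero, zero_mul, ENNReal.ofReal_zero, add_zero] at hs
  have hpos := lam_pos hE hz₀ (isOpen_lt huc continuous_const) huz₀
  have hlt : ENNReal.ofReal (27 * (8 * 2) ^ 2 * r) * lam E {z | u z < 0} < 1 * lam E {z | u z < 0} := by
    refine (ENNReal.mul_lt_mul_iff_left hpos.ne' (measure_ne_top _ _)).2 ?_
    rw [ENNReal.ofReal_lt_one]; linarith
  rw [one_mul] at hlt
  exact absurd hs (not_le.2 hlt)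

/-- The path from `x` to `a` through `p`. -/
def brk (x p a : Euc n) (t : ℝ) : Euc n := x + cl (2 * t) • (p - x) + cl (2 * t - 1) • (a - p)

theorem brk_lip (x p a : Euc n) {G : ℝ} (h : ‖p - x‖ + ‖a - p‖ ≤ G) (s s' : ℝ) :
    ‖brk x p a s - brk x p a s'‖ ≤ 2 * G * |s - s'| := by
  have e : brk x p a s - brk x p a s' = (cl (2 * s) - cl (2 * s')) • (p - x) +
      (cl (2 * s - 1) - cl (2 * s' - 1)) • (a - p) := by unfold brk; module
  rw [e]
  refine (norm_add_le _ _).trans ?_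
  rw [norm_smul, norm_smul, Real.norm_eq_abs, Real.norm_eq_abs]
  have h1 := cl_lip (2 * s) (2 * s')
  have h2 := cl_lip (2 * s - 1) (2 * s' - 1)
  rw [show 2 * s - 2 * s' = 2 * (s - s') by ring, abs_mul, abs_two] at h1
  rw [show 2 * s - 1 - (2 * s' - 1) = 2 * (s - s') by ring, abs_mul, abs_two] at h2
  have h3 := mul_le_mul_of_nonneg_right h1 (norm_nonneg (p - x))
  have h4 := mul_le_mul_of_nonneg_right h2 (norm_nonneg (a - p))
  nlinarith [abs_nonneg (s - s')]

theorem brk_zero (x p a : Euc n) : brk x p a 0 = x := by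
  simp [brk, cl]

theorem brk_one (x p a : Euc n) : brk x p a 1 = a := by
  norm_num [brk, cl]

theorem brk_mem (x p a : Euc n) {s t : ℝ} (hs : s ∈ Ioc (0:ℝ) 1) :
    s • brk x p a t ∈ Tri x p ∪ Tri a p := by
  rcases le_total t (1/2) with h | h
  · left
    have h1 := cl_01 (2 * t)
    refine ⟨s * (1 - cl (2 * t)), s * cl (2 * t), mul_nonneg hs.1.le (by linarith),
      mul_nonneg hs.1.le h1.1, by nlinarith [hs.2], ?_⟩
    rw [brk, cl_of_nonpos (by linarith : 2 * t - 1 ≤ 0)]; module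
  · right
    have h1 := cl_01 (2 * t - 1)
    refine ⟨s * cl (2 * t - 1), s * (1 - cl (2 * t - 1)), mul_nonneg hs.1.le h1.1,
      mul_nonneg hs.1.le (by linarith), by nlinarith [hs.2], ?_⟩
    rw [brk, cl_of_one_le (by linarith : 1 ≤ 2 * t)]; module

/-- Length saved when two branches of a star are joined at an interior point. -/
theorem split_len {w₁ w₂ : Euc n} {R κ m : ℝ} (h1 : ‖w₁‖ = R) (h2 : ‖w₂‖ = R) (hR : 0 < R)
    (hm : ‖w₁ + w₂‖ = m * R) (hκ : 0 ≤ κ) (hκ1 : κ ≤ 1) :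
    ‖w₁ - κ • (w₁ + w₂)‖ ≤ R * (1 - κ * (1 - κ) * m ^ 2 / 2) := by
  have hm2 : ‖w₁ + w₂‖ ^ 2 = m ^ 2 * R ^ 2 := by rw [hm]; ring
  have hin : ⟪w₁, w₁ + w₂⟫_ℝ = m ^ 2 * R ^ 2 / 2 := by
    rw [norm_add_sq_real, h1, h2] at hm2
    rw [inner_add_right, real_inner_self_eq_norm_sq, h1]; linarith
  have hsq : ‖w₁ - κ • (w₁ + w₂)‖ ^ 2 = R ^ 2 * (1 - κ * (1 - κ) * m ^ 2) := by
    rw [norm_sub_sq_real, inner_smul_right, norm_smul, mul_pow, hm2, hin, h1, Real.norm_eq_abs,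
      sq_abs]
    ring
  have hm4 : m ^ 2 ≤ 4 := by
    have h3 := norm_add_le w₁ w₂
    rw [hm, h1, h2] at h3
    have h4 : 0 ≤ m * R := hm ▸ norm_nonneg _
    have h5 : 0 ≤ m := nonneg_of_mul_nonneg_left h4 hR
    have h6 : m ≤ 2 := by nlinarith
    nlinarith
  have hk : κ * (1 - κ) ≤ 1 / 4 := by nlinarith [sq_nonneg (κ - 1 / 2)]
  have hk0 : 0 ≤ κ * (1 - κ) := mul_nonneg hκ (by linarith)
  have hkm : κ * (1 - κ) * m ^ 2 ≤ 1 := by nlinarith [sq_nonneg m]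
  apply le_of_sq_le_sq _ (by apply mul_nonneg hR.le; linarith)
  rw [hsq, mul_pow]
  refine mul_le_mul_of_nonneg_left ?_ (sq_nonneg R)
  nlinarith [sq_nonneg (κ * (1 - κ) * m ^ 2)]

/-- Comparison of the link in a ball with a star whose branches `a, b` are joined. -/
theorem star_split (hE : IsMC n E) {x : Euc n} (hx : ‖x‖ = 1) {ρ q : ℝ} (hρ : 0 < ρ) (hρ1 : ρ ≤ 1)
    (hq : HasDerivAt (gm E x univ) q ρ) (hfin : (KK E ∩ {z | ang x z = ρ}).Finite)
    {a b : Euc n} (ha : a ∈ KK E ∩ {z | ang x z = ρ}) (hb : b ∈ KK E ∩ {z | ang x z = ρ})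
    (hab : a ≠ b) {κ m : ℝ} (hκ : 0 ≤ κ) (hκ1 : κ ≤ 1 / 2)
    (hm : ‖(a - x) + (b - x)‖ = m * (2 * Real.sin (ρ / 2))) :
    gm E x univ ρ ≤ 2 * Real.sin (ρ / 2) *
        ((KK E ∩ {z | ang x z = ρ}).ncard - κ * m * ((1 - κ) * m - 1)) +
      30000 * ρ * (gm E x univ ρ + 20 * ρ * q) := by
  classical
  have := lam_finite hE
  set R := 2 * Real.sin (ρ / 2) with hR
  set S := KK E ∩ {z | ang x z = ρ} with hS
  have hpi := Real.pi_gt_three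
  have hR0 : 0 < R := by
    have := Real.sin_pos_of_pos_of_lt_pi (x := ρ / 2) (by linarith) (by linarith)
    linarith
  have hRρ : R ≤ ρ := by
    have := Real.sin_le (x := ρ / 2) (by linarith)
    linarith
  have hch : ∀ z ∈ S, ‖z - x‖ = R := by
    intro z hz
    rw [norm_sub_rev, chord_sq hx (norm_of_mem_KK hz.1), show ang x z = ρ from hz.2]
  have hq0 := deriv_nonneg_gm hE hq
  set p := x + κ • ((a - x) + (b - x)) with hp
  have hpx : ‖p - x‖ = κ * (m * R) := by
    rw [hp, add_sub_cancel_left, norm_smul, hm, Real.norm_of_nonneg hκ]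
  have hm2 : m * R ≤ 2 * R := by
    rw [← hm]; refine (norm_add_le _ _).trans ?_
    rw [hch a ha, hch b hb]; linarith
  have hm0 : 0 ≤ m * R := by rw [← hm]; exact norm_nonneg _
  have hpx' : ‖p - x‖ ≤ R := by rw [hpx]; nlinarith
  have hap : ‖a - p‖ ≤ R * (1 - κ * (1 - κ) * m ^ 2 / 2) := by
    have e : a - p = (a - x) - κ • ((a - x) + (b - x)) := by rw [hp]; abel
    rw [e]; exact split_len (hch a ha) (hch b hb) hR0 hm hκ (by linarith)
  have hbp : ‖b - p‖ ≤ R * (1 - κ * (1 - κ) * m ^ 2 / 2) := by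
    have e : b - p = (b - x) - κ • ((b - x) + (a - x)) := by rw [hp, add_comm (b - x)]; abel
    rw [e]; exact split_len (hch b hb) (hch a ha) hR0 (by rw [add_comm, hm]) hκ (by linarith)
  set γ : Euc n → ℝ → Euc n := fun c => brk x (if c = a ∨ c = b then p else x) c with hγ
  have hlen : ∀ c ∈ S, ‖(if c = a ∨ c = b then p else x) - x‖ +
      ‖c - (if c = a ∨ c = b then p else x)‖ ≤ 2 * R := by
    intro c hc
    have hkk : 0 ≤ R * (κ * (1 - κ) * m ^ 2 / 2) := by
      have : 0 ≤ 1 - κ := by linarith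
      positivity
    split_ifs with h
    · rcases h with rfl | rfl <;> nlinarith
    · rw [sub_self, norm_zero, hch c hc]; linarith
  have hlast : ∀ c ∈ S, ∀ s ∈ Icc (0:ℝ) 1, ‖γ c s - c‖ ≤ 4 * ρ := by
    intro c hc s hs
    have h1 := brk_lip x (if c = a ∨ c = b then p else x) c (hlen c hc) s 1
    rw [brk_one] at h1
    refine h1.trans ?_
    have : |s - 1| ≤ 1 := by rw [abs_le]; constructor <;> linarith [hs.1, hs.2]
    nlinarith [abs_nonneg (s - 1)]
  set P := hfin.toFinset with hP
  have hPS : ∀ c ∈ P, c ∈ S := fun c hc => hfin.mem_toFinset.1 hc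
  have haP : a ∈ P := hfin.mem_toFinset.2 ha
  have hbP : b ∈ P := hfin.mem_toFinset.2 hb
  set T := {w | ∃ s ∈ Ioc (0:ℝ) 1, ∃ c ∈ P, ∃ t ∈ Icc (0:ℝ) 1, w = s • γ c t} with hT
  set e : ℝ := R * (κ * (1 - κ) * m ^ 2 / 2) with he
  have he0 : 0 ≤ e := by
    have : 0 ≤ 1 - κ := by linarith
    positivity
  have heR : e ≤ R := by
    have := (norm_nonneg (a - p)).trans hap
    have h2 : R * (1 - κ * (1 - κ) * m ^ 2 / 2) = R - e := by rw [he]; ring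
    linarith
  have hcone : ar n T ≤ ENNReal.ofReal (R * (S.ncard - κ * m * ((1 - κ) * m - 1))) := by
    have hsub : T ⊆ (⋃ c ∈ P, Tri c (if c = a ∨ c = b then p else x)) ∪ (Tri x p ∪ Tri x x) := by
      rintro w ⟨s, hs, c, hc, t, -, rfl⟩
      rcases brk_mem x (if c = a ∨ c = b then p else x) c (t := t) hs with h | h
      · right
        split_ifs at h with h'
        · left; simpa only [hγ, if_pos h'] using h
        · right; simpa only [hγ, if_neg h'] using h
      · left; exact mem_biUnion hc h
    have hc1 : ∀ c ∈ P, ar n (Tri c (if c = a ∨ c = b then p else x)) ≤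
        ENNReal.ofReal (R - ((if c = a then e else 0) + if c = b then e else 0)) := by
      intro c hc
      refine (ar_Tri_le _ _).trans (ENNReal.ofReal_le_ofReal ?_)
      rw [norm_of_mem_KK (hPS c hc).1, one_mul]
      by_cases h1 : c = a
      · subst h1
        rw [if_pos (Or.inl rfl), if_pos rfl, if_neg hab, norm_sub_rev]
        linarith
      · by_cases h2 : c = b
        · subst h2
          rw [if_pos (Or.inr rfl), if_pos rfl, if_neg h1, norm_sub_rev]
          linarith
        · rw [if_neg (by tauto), if_neg h1, if_neg h2, norm_sub_rev, hch c (hPS c hc)]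
          linarith
    have hc2 : ar n (Tri x p) ≤ ENNReal.ofReal (κ * (m * R)) := by
      refine (ar_Tri_le _ _).trans (ENNReal.ofReal_le_ofReal ?_)
      rw [hx, hpx, one_mul]
    have hc3 : ar n (Tri x x) = 0 := by
      refine le_antisymm ((ar_Tri_le _ _).trans ?_) bot_le
      simp
    calc ar n T ≤ _ := measure_mono hsub
      _ ≤ (∑ c ∈ P, ENNReal.ofReal (R - ((if c = a then e else 0) + if c = b then e else 0))) +
          (ENNReal.ofReal (κ * (m * R)) + 0) := by
          refine (measure_union_le _ _).trans (add_le_add ?_ ?_)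
          · exact (measure_biUnion_finset_le _ _).trans (Finset.sum_le_sum hc1)
          · exact (measure_union_le _ _).trans (add_le_add hc2 hc3.le)
      _ = _ := by
          rw [add_zero, ← ENNReal.ofReal_sum_of_nonneg, ← ENNReal.ofReal_add]
          · congr 1
            rw [Finset.sum_sub_distrib, Finset.sum_add_distrib, Finset.sum_ite_eq' P a,
              Finset.sum_ite_eq' P b, if_pos haP, if_pos hbP, Finset.sum_const, nsmul_eq_mul,
              ncard_eq_toFinset_card S hfin, he]
            ring
          · apply Finset.sum_nonneg
            intro c _
            by_cases h1 : c = a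
            · subst h1; rw [if_pos rfl, if_neg hab]; linarith
            · rw [if_neg h1]; split_ifs <;> linarith
          · positivity
          · intro c _
            by_cases h1 : c = a
            · subst h1; rw [if_pos rfl, if_neg hab]; linarith
            · rw [if_neg h1]; split_ifs <;> linarith
  have hX0 : 0 ≤ R * (S.ncard - κ * m * ((1 - κ) * m - 1)) := by
    have h2 : ((2:ℕ):ℝ) ≤ S.ncard := by
      have : ({a, b} : Set (Euc n)).ncard ≤ S.ncard :=
        ncard_le_ncard (by rintro z (rfl | rfl) <;> assumption) hfin
      rw [ncard_pair hab] at this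
      exact_mod_cast this
    push_cast at h2
    have e2 : R * (S.ncard - κ * m * ((1 - κ) * m - 1)) = R * S.ncard - 2 * e + κ * (m * R) := by
      rw [he]; ring
    rw [e2]
    nlinarith [mul_nonneg hκ hm0]
  refine le_of_forall_pos_le_add fun ε hε => ?_
  have hD : ∀ᶠ δ in 𝓝[>] (0:ℝ), lam E {z | -δ < ang x z - ρ ∧ ang x z - ρ < 0} ≤
      ENNReal.ofReal ((q + ε / 480000) * δ) := by
    filter_upwards [deriv_band hE hq (by linarith [div_pos hε (by norm_num : (0:ℝ) < 480000)] :
      q < q + ε / 480000)] with δ hδ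
    refine (measure_mono ?_).trans hδ
    rintro z ⟨h1, h2⟩
    exact ⟨trivial, by linarith, by linarith⟩
  have hs := surgery hE (u := fun z => ang x z - ρ) ((continuous_ang x).sub continuous_const)
    (fun z hz z' hz' => by
      rw [sub_sub_sub_cancel_right]
      exact ang_lip hx (norm_of_mem_KK hz) (norm_of_mem_KK hz'))
    (P := P) (p := x) (γ := γ) (G := 4 * ρ) (C := 4) (r := ρ) (D := q + ε / 480000)
    (fun c hc => (hPS c hc).1) (fun z hz h0 => hfin.mem_toFinset.2 ⟨hz, by
      show ang x z = ρ
      linarith⟩) (fun c _ => brk_zero _ _ _) (fun c _ => brk_one _ _ _) (by linarith)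
    (fun c hc s _ s' _ => by
      refine (brk_lip _ _ _ (hlen c (hPS c hc)) s s').trans ?_
      exact mul_le_mul_of_nonneg_right (by linarith) (abs_nonneg _))
    (fun z hz h0 => by
      have := norm_sub_le_ang hx (norm_of_mem_KK hz)
      have h1 : ang x z - ρ ≤ 0 := h0
      linarith) (fun c hc s hs => hlast c (hPS c hc) s hs) hρ hρ1 (by norm_num)
    (by positivity) hD
  have hset : {z | ang x z - ρ < 0} = univ ∩ {z | ang x z < ρ} := by
    ext z; simp [sub_neg]
  rw [hset] at hs
  have hg : lam E (univ ∩ {z | ang x z < ρ}) = ENNReal.ofReal (gm E x univ ρ) := by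
    rw [gm, ofReal_measureReal]
  have hg0 : 0 ≤ gm E x univ ρ := measureReal_nonneg
  have hq1 : 0 ≤ 4 * (4 * ρ) * (q + ε / 480000) := by positivity
  rw [hg, ← ENNReal.ofReal_add hg0 hq1, ← ENNReal.ofReal_mul (by positivity)] at hs
  have hs2 := hs.trans (add_le_add hcone le_rfl)
  rw [← ENNReal.ofReal_add hX0 (by positivity), ENNReal.ofReal_le_ofReal_iff (by positivity)] at hs2
  have h5 : ρ * ρ ≤ 1 := by nlinarith
  have h6 : 0 ≤ ρ * ρ * q := by positivity
  have h7 : 0 ≤ ρ * gm E x univ ρ := by positivity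
  nlinarith [mul_le_mul_of_nonneg_right h5 hε.le]
end

/-! ### Growth of the mass of small spherical balls -/

section
variable {n : ℕ} {E : Set (Euc n)}

/-- `ρ` is a radius at which the mass of the ball about `x` has derivative `q`, and the link meets
the sphere of radius `ρ` in finitely many, at least two and at most `q`, points. -/
structure GoodRad (E : Set (Euc n)) (x : Euc n) (ρ q : ℝ) : Prop where
  der : HasDerivAt (gm E x univ) q ρ
  fin : (KK E ∩ {z | ang x z = ρ}).Finite
  two : 2 ≤ (KK E ∩ {z | ang x z = ρ}).ncard
  le : ((KK E ∩ {z | ang x z = ρ}).ncard : ℝ) ≤ q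

theorem goodRad_ae (hE : IsMC n E) {x : Euc n} (hx : x ∈ KK E) :
    ∀ᵐ ρ : ℝ, ρ ∈ Ioc (0:ℝ) (1 / 10000) → ∃ q, GoodRad E x ρ q := by
  have hx1 := norm_of_mem_KK hx
  filter_upwards [count_ae hE hx1 (U := univ) isOpen_univ] with ρ hρ hρ0
  obtain ⟨q, h1, h2, h3⟩ := hρ
  rw [inter_univ] at h2 h3
  refine ⟨q, h1, h2, ?_, h3⟩
  have hc := collapse hE (u := fun z => ang x z - ρ) ((continuous_ang x).sub continuous_const)
    (fun z hz z' hz' => by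
      rw [sub_sub_sub_cancel_right]
      exact ang_lip hx1 (norm_of_mem_KK hz) (norm_of_mem_KK hz')) hx1 (r := ρ) (D := q + 1) hρ0.1
    hρ0.2 (fun z _ h => by have : ang x z - ρ ≤ 0 := h; linarith)
    (by simpa only [sub_eq_zero] using h2) (by linarith [deriv_nonneg_gm hE h1])
    (by
      filter_upwards [deriv_band hE h1 (by linarith : q < q + 1)] with δ hδ
      refine (measure_mono ?_).trans hδ
      rintro z ⟨h1, h2⟩
      exact ⟨trivial, by linarith, by linarith⟩) hx (by
      show ang x x - ρ < 0
      rw [ang_self hx1]; linarith [hρ0.1])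
  simpa only [sub_eq_zero] using hc

theorem gm_pos (hE : IsMC n E) {x : Euc n} (hx : x ∈ KK E) {ρ : ℝ} (hρ : 0 < ρ) :
    0 < gm E x univ ρ := by
  have := lam_finite hE
  rw [gm, univ_inter]
  refine ENNReal.toReal_pos (lam_pos hE hx (isOpen_lt (continuous_ang x) continuous_const) ?_).ne'
    (measure_ne_top _ _)
  show ang x x < ρ
  rwa [ang_self (norm_of_mem_KK hx)]

/-- Among four vectors of length `R`, two have inner product at least `-R²/3`. -/
theorem four_vec {x : Euc n} {S : Set (Euc n)} {R : ℝ} (h4 : 4 ≤ S.ncard)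
    (hS : ∀ z ∈ S, ‖z - x‖ = R) :
    ∃ a ∈ S, ∃ b ∈ S, a ≠ b ∧ -R ^ 2 / 3 ≤ ⟪a - x, b - x⟫_ℝ := by
  by_contra! hcon
  obtain ⟨T, hTS, hT⟩ := Set.exists_subset_card_eq h4
  have hfin : T.Finite := finite_of_ncard_ne_zero (by omega)
  classical
  have hc : hfin.toFinset.card = 4 := by rw [← ncard_eq_toFinset_card T hfin]; exact hT
  have h0 : 0 ≤ ⟪∑ a ∈ hfin.toFinset, (a - x), ∑ b ∈ hfin.toFinset, (b - x)⟫_ℝ :=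
    real_inner_self_nonneg
  rw [sum_inner] at h0
  have h1 : ∀ a ∈ hfin.toFinset, ⟪a - x, ∑ b ∈ hfin.toFinset, (b - x)⟫_ℝ < 0 := by
    intro a ha
    rw [inner_sum, ← Finset.add_sum_erase _ _ ha, real_inner_self_eq_norm_sq,
      hS a (hTS (hfin.mem_toFinset.1 ha))]
    have h2 : ∑ b ∈ hfin.toFinset.erase a, ⟪a - x, b - x⟫_ℝ <
        ∑ b ∈ hfin.toFinset.erase a, (-R ^ 2 / 3) := by
      refine Finset.sum_lt_sum_of_nonempty ?_ fun b hb => ?_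
      · rw [← Finset.card_pos, Finset.card_erase_of_mem ha, hc]; norm_num
      · exact hcon a (hTS (hfin.mem_toFinset.1 ha)) b
          (hTS (hfin.mem_toFinset.1 (Finset.mem_of_mem_erase hb))) (Finset.ne_of_mem_erase hb).symm
    rw [Finset.sum_const, Finset.card_erase_of_mem ha, hc] at h2
    norm_num at h2
    linarith
  have h2 := Finset.sum_lt_sum_of_nonempty (Finset.card_pos.1 (by omega)) h1
  rw [Finset.sum_const_zero] at h2
  linarith

theorem chord_mem {x : Euc n} (hx : ‖x‖ = 1) {ρ : ℝ} :
    ∀ z ∈ KK E ∩ {z | ang x z = ρ}, ‖z - x‖ = 2 * Real.sin (ρ / 2) := by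
  intro z hz
  rw [norm_sub_rev, chord_sq hx (norm_of_mem_KK hz.1), show ang x z = ρ from hz.2]

theorem chord_bounds {ρ : ℝ} (hρ : 0 < ρ) (hρ1 : ρ ≤ 1) :
    ρ / 2 ≤ 2 * Real.sin (ρ / 2) ∧ 2 * Real.sin (ρ / 2) ≤ ρ := by
  have h1 := Real.sin_le (x := ρ / 2) (by linarith)
  have h2 := Real.mul_le_sin (x := ρ / 2) (by linarith) (by linarith [Real.pi_gt_three])
  have h3 : 1 / 2 ≤ 2 / Real.pi := by
    rw [div_le_div_iff₀ (by norm_num) Real.pi_pos]; linarith [Real.pi_le_four]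
  constructor <;> nlinarith

theorem star_plain (hE : IsMC n E) {x : Euc n} (hx : ‖x‖ = 1) {ρ q : ℝ} (hρ : 0 < ρ) (hρ1 : ρ ≤ 1)
    (hg : GoodRad E x ρ q) :
    gm E x univ ρ ≤ ρ * (KK E ∩ {z | ang x z = ρ}).ncard +
      30000 * ρ * (gm E x univ ρ + 20 * ρ * q) := by
  obtain ⟨a, ha, b, hb, hab⟩ := (one_lt_ncard hg.fin).1 hg.two
  have hb2 := chord_bounds hρ hρ1
  have h := star_split hE hx hρ hρ1 hg.der hg.fin ha hb hab (κ := 0)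
    (m := ‖(a - x) + (b - x)‖ / (2 * Real.sin (ρ / 2))) le_rfl (by norm_num)
    (by rw [div_mul_cancel₀]; linarith)
  have : 2 * Real.sin (ρ / 2) * ((KK E ∩ {z | ang x z = ρ}).ncard : ℝ) ≤
    ρ * (KK E ∩ {z | ang x z = ρ}).ncard := mul_le_mul_of_nonneg_right hb2.2 (Nat.cast_nonneg _)
  simp only [zero_mul, sub_zero] at h
  linarith

/-- If two points of the sphere of radius `ρ` make an angle well below 120°, joining the
corresponding branches saves a definite amount. -/
theorem star_save (hE : IsMC n E) {x : Euc n} (hx : ‖x‖ = 1) {ρ q : ℝ} (hρ : 0 < ρ) (hρ1 : ρ ≤ 1)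
    (hg : GoodRad E x ρ q) {a b : Euc n} (ha : a ∈ KK E ∩ {z | ang x z = ρ})
    (hb : b ∈ KK E ∩ {z | ang x z = ρ}) (hab : a ≠ b)
    (hin : -(2 * Real.sin (ρ / 2)) ^ 2 / 3 ≤ ⟪a - x, b - x⟫_ℝ) :
    gm E x univ ρ ≤ ρ * ((KK E ∩ {z | ang x z = ρ}).ncard - 1 / 400) +
      30000 * ρ * (gm E x univ ρ + 20 * ρ * q) := by
  obtain ⟨hb1, hb2⟩ := chord_bounds hρ hρ1
  set R := 2 * Real.sin (ρ / 2) with hR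
  have hR0 : 0 < R := by linarith
  set m := ‖(a - x) + (b - x)‖ / R with hm
  have h := star_split hE hx hρ hρ1 hg.der hg.fin ha hb hab (κ := 1 / 20) (m := m)
    (by norm_num) (by norm_num) (by rw [hm, div_mul_cancel₀]; exact hR0.ne')
  have hmR : m * R = ‖(a - x) + (b - x)‖ := by rw [hm, div_mul_cancel₀]; exact hR0.ne'
  have hm2 : m ^ 2 * R ^ 2 = 2 * R ^ 2 + 2 * ⟪a - x, b - x⟫_ℝ := by
    rw [← mul_pow, hmR, norm_add_sq_real, chord_mem hx a ha, chord_mem hx b hb, ← hR]; ring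
  have hm3 : 4 / 3 ≤ m ^ 2 := by
    have : 4 / 3 * R ^ 2 ≤ m ^ 2 * R ^ 2 := by linarith
    exact le_of_mul_le_mul_right this (by positivity)
  have hm0 : 0 ≤ m := by positivity
  have hm4 : 23 / 20 ≤ m := by
    by_contra! hc
    nlinarith
  have hsave : 1 / 200 ≤ 1 / 20 * m * ((1 - 1 / 20) * m - 1) := by nlinarith
  have hN : (2:ℝ) ≤ (KK E ∩ {z | ang x z = ρ}).ncard := by exact_mod_cast hg.two
  rw [← hR] at h
  set N : ℝ := ((KK E ∩ {z | ang x z = ρ}).ncard : ℝ)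
  have : R * (N - 1 / 20 * m * ((1 - 1 / 20) * m - 1)) ≤ ρ * (N - 1 / 400) := by
    have h1 : R * (N - 1 / 20 * m * ((1 - 1 / 20) * m - 1)) ≤ R * (N - 1 / 200) :=
      mul_le_mul_of_nonneg_left (by linarith) hR0.le
    nlinarith
  linarith

/-- Integration of the differential inequality `h' ≥ ((1 + c) / ρ - B) h`. -/
theorem ode_int (hE : IsMC n E) {x : Euc n} (hx : x ∈ KK E) {s t c B : ℝ} (hs : 0 < s) (hst : s < t)
    (h : ∀ᵐ ρ : ℝ, ρ ∈ Ioo s t → ∃ q, HasDerivAt (gm E x univ) q ρ ∧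
      ((1 + c) / ρ - B) * gm E x univ ρ ≤ q) :
    (1 + c) * (Real.log t - Real.log s) - B * (t - s) ≤
      Real.log (gm E x univ t) - Real.log (gm E x univ s) := by
  set g : ℝ → ℝ := fun ρ => Real.log (gm E x univ (max ρ s)) with hg
  have hmono : Monotone g := fun a b hab =>
    Real.log_le_log (gm_pos hE hx (lt_of_lt_of_le hs (le_max_right _ _)))
      (gm_mono hE x univ (max_le_max_right s hab))
  have hcont : ContinuousOn (fun ρ : ℝ => (1 + c) / ρ - B) (uIcc s t) := by
    refine ContinuousOn.sub (continuousOn_const.div continuousOn_id ?_) continuousOn_const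
    intro ρ hρ
    rw [uIcc_of_le hst.le] at hρ
    exact (hs.trans_le hρ.1).ne'
  have hInt : IntervalIntegrable (fun ρ : ℝ => (1 + c) / ρ - B) volume s t :=
    hcont.intervalIntegrable
  have hI : IntegrableOn (fun ρ : ℝ => (1 + c) / ρ - B) (Ioo s t) :=
    ((intervalIntegrable_iff_integrableOn_Ioo_of_le hst.le).1 hInt)
  have key := mono_integral hmono hst hI (by
    filter_upwards [h] with ρ hρ hρ'
    obtain ⟨q, hq, hle⟩ := hρ hρ'
    have hpos := gm_pos hE hx (hs.trans hρ'.1)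
    have hd : HasDerivAt g (q / gm E x univ ρ) ρ := by
      refine (hq.log hpos.ne').congr_of_eventuallyEq ?_
      filter_upwards [lt_mem_nhds hρ'.1] with y hy
      simp only [hg, max_eq_left hy.le]
    rw [hd.deriv, le_div_iff₀ hpos]
    exact hle)
  simp only [hg, max_self, max_eq_left hst.le] at key
  refine le_trans (le_of_eq ?_) key
  rw [← integral_Ioc_eq_integral_Ioo, ← intervalIntegral.integral_of_le hst.le]
  have : ∀ ρ ∈ uIcc s t, HasDerivAt (fun ρ => (1 + c) * Real.log ρ - B * ρ) ((1 + c) / ρ - B) ρ := by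
    intro ρ hρ
    rw [uIcc_of_le hst.le] at hρ
    have h1 := ((Real.hasDerivAt_log (hs.trans_le hρ.1).ne').const_mul (1 + c)).sub
      ((hasDerivAt_id ρ).const_mul B)
    rw [mul_one, ← div_eq_mul_inv] at h1
    exact h1
  rw [intervalIntegral.integral_eq_sub_of_hasDerivAt this hInt]
  ring


theorem diff_ineq (hE : IsMC n E) {x : Euc n} (hx : x ∈ KK E) {ρ q : ℝ} (hρ : 0 < ρ) (hρ1 : ρ ≤ 1)
    (hg : GoodRad E x ρ q) : ((1 + 0) / ρ - 1200000) * gm E x univ ρ ≤ q := by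
  have h := star_plain hE (norm_of_mem_KK hx) hρ hρ1 hg
  have h0 := gm_pos hE hx hρ
  have hq := hg.le
  have hN : (2:ℝ) ≤ (KK E ∩ {z | ang x z = ρ}).ncard := by exact_mod_cast hg.two
  set N : ℝ := ((KK E ∩ {z | ang x z = ρ}).ncard : ℝ)
  set H := gm E x univ ρ
  have h1 : (1 - 600000 * ρ) * H ≤ ρ * q * (1 + 600000 * ρ) := by nlinarith [mul_pos hρ h0]
  have h2 : (1 - 1200000 * ρ) * H * (1 + 600000 * ρ) ≤ ρ * q * (1 + 600000 * ρ) := by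
    nlinarith [mul_pos hρ h0, mul_pos (mul_pos hρ hρ) h0]
  have h3 := le_of_mul_le_mul_right h2 (by positivity)
  have e : ((1 + 0) / ρ - 1200000) * H = (1 - 1200000 * ρ) * H / ρ := by field_simp; ring
  rw [e, div_le_iff₀ hρ]
  linarith

theorem gm_ratio (hE : IsMC n E) {x : Euc n} (hx : x ∈ KK E) {s t : ℝ} (hs : 0 < s) (hst : s ≤ t)
    (ht : t ≤ 1 / 10000) :
    gm E x univ s * t ≤ Real.exp (1200000 * t) * gm E x univ t * s := by
  rcases eq_or_lt_of_le hst with rfl | hlt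
  · have h1 : 1 ≤ Real.exp (1200000 * s) := Real.one_le_exp (by positivity)
    have h2 := mul_pos (gm_pos hE hx hs) hs
    nlinarith
  have ht0 := hs.trans hlt
  have h := ode_int hE hx (c := 0) (B := 1200000) hs hlt (by
    filter_upwards [goodRad_ae hE hx] with ρ hρ hρ'
    have h0 : 0 < ρ := hs.trans hρ'.1
    obtain ⟨q, hq⟩ := hρ ⟨h0, by linarith [hρ'.2]⟩
    exact ⟨q, hq.der, diff_ineq hE hx h0 (by linarith [hρ'.2]) hq⟩)
  have h1 : Real.log (gm E x univ s * t) ≤ Real.log (Real.exp (1200000 * t) * gm E x univ t * s) := by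
    have ps := (gm_pos hE hx hs).ne'
    have pt := (gm_pos hE hx ht0).ne'
    rw [Real.log_mul ps ht0.ne', Real.log_mul (mul_ne_zero (Real.exp_ne_zero _) pt) hs.ne',
      Real.log_mul (Real.exp_ne_zero _) pt, Real.log_exp]
    linarith
  have pt := gm_pos hE hx ht0
  exact (Real.log_le_log_iff (mul_pos (gm_pos hE hx hs) ht0) (by positivity)).1 h1

theorem gm_lower (hE : IsMC n E) {x : Euc n} {U : Set (Euc n)} {s t k : ℝ} (ht : s < t)
    (h : ∀ᵐ ρ : ℝ, ρ ∈ Ioo s t → ∃ q, HasDerivAt (gm E x U) q ρ ∧ k ≤ q) :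
    k * (t - s) ≤ gm E x U t - gm E x U s := by
  have key := mono_integral (gm_mono hE x U) ht (c := fun _ => k)
    (integrableOn_const (by simp)) (by
      filter_upwards [h] with ρ hρ hρ'
      obtain ⟨q, hq, hk⟩ := hρ hρ'
      rw [hq.deriv]; exact hk)
  rw [setIntegral_const, Real.volume_real_Ioo_of_le ht.le, smul_eq_mul] at key
  linarith

/-- Every point of the link is the centre of a sphere of definite radius meeting the link in two or
three points. -/
theorem good_radius (n : ℕ) (Λ : ℝ) : ∃ M > 0, ∀ r₂ > 0, ∃ ρ₀ > 0, ∀ E : Set (Euc n), IsMC n E →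
    (lam E).real univ ≤ Λ → ∀ x ∈ KK E, ∃ ρ, ρ₀ ≤ ρ ∧ ρ ≤ r₂ ∧ ∃ q ≤ M, GoodRad E x ρ q ∧
      (KK E ∩ {z | ang x z = ρ}).ncard ≤ 3 := by
  set M₀ : ℝ := max 1 (Real.exp 120 * Λ * 10000) with hM₀
  have hM1 : 1 ≤ M₀ := le_max_left _ _
  refine ⟨2 * M₀, by linarith, fun r₂' hr₂' => ?_⟩
  set r₂ := min r₂' (1 / 10000) with hr₂
  have hr0 : 0 < r₂ := lt_min hr₂' (by norm_num)
  have hr1 : r₂ ≤ 1 / 10000 := min_le_right _ _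
  set c : ℝ := 1 / (400 * M₀) with hc
  have hc0 : 0 < c := by positivity
  have hc1 : c ≤ 1 := by rw [hc, div_le_one (by positivity)]; linarith
  have hlM : 0 ≤ Real.log M₀ := Real.log_nonneg hM1
  set L : ℝ := (1800000 * r₂ + Real.log M₀) / c + 1 with hL
  have hL0 : 0 < L := by positivity
  have hcL : c * L = 1800000 * r₂ + Real.log M₀ + c := by rw [hL]; field_simp
  have hρ0 : 0 < r₂ * Real.exp (-L) := by positivity
  have hlt : r₂ * Real.exp (-L) < r₂ := by
    have : Real.exp (-L) < 1 := by rw [Real.exp_lt_one_iff]; linarith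
    nlinarith
  refine ⟨r₂ * Real.exp (-L), hρ0, fun E hE hΛ x hx => ?_⟩
  have hfin := lam_finite hE
  have hM : ∀ ρ, 0 < ρ → ρ ≤ 1 / 10000 → gm E x univ ρ ≤ M₀ * ρ := by
    intro ρ h1 h2
    have h := gm_ratio hE hx h1 h2 le_rfl
    have h3 : gm E x univ (1 / 10000) ≤ Λ := (measureReal_mono (subset_univ _)).trans hΛ
    have h4 : Real.exp 120 * gm E x univ (1 / 10000) ≤ Real.exp 120 * Λ :=
      mul_le_mul_of_nonneg_left h3 (Real.exp_pos _).le
    norm_num at h h4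
    have h5 : Real.exp 120 * Λ * 10000 ≤ M₀ := le_max_right _ _
    nlinarith
  by_contra! hcon
  have hode := ode_int hE hx (c := c) (B := 1800000) hρ0 hlt (by
    filter_upwards [goodRad_ae hE hx] with ρ hρ hρ'
    have h0 : 0 < ρ := hρ0.trans hρ'.1
    obtain ⟨q, hq⟩ := hρ ⟨h0, by linarith [hρ'.2]⟩
    refine ⟨q, hq.der, ?_⟩
    have hbad := hcon ρ hρ'.1.le (hρ'.2.le.trans (min_le_left _ _)) q
    have hH := hM ρ h0 (by linarith [hρ'.2])
    have hH0 := gm_pos hE hx h0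
    have hN := hq.le
    have hx1 := norm_of_mem_KK hx
    set H := gm E x univ ρ
    have e : ((1 + c) / ρ - 1800000) * H = (1 + c - 1800000 * ρ) * H / ρ := by field_simp
    rw [e, div_le_iff₀ h0]
    by_cases hqM : q ≤ 2 * M₀
    · have h4 := hbad hqM hq
      obtain ⟨a, ha, b, hb, hab, hin⟩ := four_vec (x := x) (S := KK E ∩ {z | ang x z = ρ})
        (by omega) (chord_mem hx1)
      have h := star_save hE hx1 h0 (by linarith [hρ'.2]) hq ha hb hab hin
      set N : ℝ := ((KK E ∩ {z | ang x z = ρ}).ncard : ℝ)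
      have hcH : c * H ≤ ρ / 400 := by
        calc c * H ≤ c * (M₀ * ρ) := mul_le_mul_of_nonneg_left hH hc0.le
          _ = ρ / 400 := by rw [hc]; field_simp
      have h1 : (1 - 600000 * ρ + c) * H ≤ ρ * q * (1 + 600000 * ρ) := by
        nlinarith [mul_pos h0 hH0]
      have h2 : (1 + c - 1800000 * ρ) * H * (1 + 600000 * ρ) ≤ ρ * q * (1 + 600000 * ρ) := by
        refine le_trans ?_ h1
        have : (1 + c - 1800000 * ρ) * (1 + 600000 * ρ) ≤ 1 - 600000 * ρ + c := by nlinarith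
        nlinarith
      have h3 := le_of_mul_le_mul_right h2 (by positivity)
      linarith
    · push Not at hqM
      nlinarith [mul_pos h0 hH0])
  have h2 := gm_lower hE (x := x) (U := univ) (k := 2) hρ0 (by
    filter_upwards [goodRad_ae hE hx] with ρ hρ hρ'
    obtain ⟨q, hq⟩ := hρ ⟨hρ'.1, by linarith [hρ'.2]⟩
    have hN : (2:ℝ) ≤ (KK E ∩ {z | ang x z = ρ}).ncard := by exact_mod_cast hq.two
    exact ⟨q, hq.der, hN.trans hq.le⟩)
  have h0 : 0 ≤ gm E x univ 0 := measureReal_nonneg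
  have hl1 : Real.log (r₂ * Real.exp (-L)) ≤ Real.log (gm E x univ (r₂ * Real.exp (-L))) :=
    Real.log_le_log hρ0 (by linarith)
  have hl2 : Real.log (gm E x univ r₂) ≤ Real.log (M₀ * r₂) :=
    Real.log_le_log (gm_pos hE hx hr0) (hM _ hr0 hr1)
  rw [Real.log_mul (by positivity) hr0.ne'] at hl2
  rw [Real.log_mul hr0.ne' (Real.exp_ne_zero _), Real.log_exp] at hl1 hode
  nlinarith

end

/-! ### Projection on a planar sector -/

section
variable {n : ℕ} {E : Set (Euc n)}

/-- Orthonormal frame adapted to the geodesic arc between two points of the sphere. -/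
theorem mid_frame {a b : Euc n} (ha : ‖a‖ = 1) (hb : ‖b‖ = 1) (hab : a ≠ b)
    (hpi : ang a b < Real.pi) :
    ∃ (e f : Euc n), ‖e‖ = 1 ∧ ‖f‖ = 1 ∧ ⟪e, f⟫_ℝ = 0 ∧
      a = Real.cos (ang a b / 2) • e - Real.sin (ang a b / 2) • f ∧
      b = Real.cos (ang a b / 2) • e + Real.sin (ang a b / 2) • f := by
  have h0 := ang_pos ha hb hab
  set h := ang a b / 2 with hh
  have hc : 0 < Real.cos h := Real.cos_pos_of_mem_Ioo ⟨by linarith, by linarith⟩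
  have hs : 0 < Real.sin h := Real.sin_pos_of_pos_of_lt_pi (by linarith) (by linarith)
  have hin : ⟪a, b⟫_ℝ = Real.cos (2 * h) := by
    rw [← cos_ang ha hb, hh]; ring_nf
  have h1 : ‖a + b‖ = 2 * Real.cos h := by
    rw [← sq_eq_sq₀ (norm_nonneg _) (by positivity), norm_add_sq_real, ha, hb, hin, Real.cos_two_mul]
    ring
  have h2 : ‖b - a‖ = 2 * Real.sin h := by
    rw [← sq_eq_sq₀ (norm_nonneg _) (by positivity), norm_sub_sq_real, ha, hb, real_inner_comm, hin,
      Real.cos_two_mul, mul_pow, Real.sin_sq]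
    ring
  refine ⟨(2 * Real.cos h)⁻¹ • (a + b), (2 * Real.sin h)⁻¹ • (b - a), ?_, ?_, ?_, ?_, ?_⟩
  · rw [norm_smul, h1, norm_inv, Real.norm_of_nonneg (by positivity)]
    field_simp
  · rw [norm_smul, h2, norm_inv, Real.norm_of_nonneg (by positivity)]
    field_simp
  · rw [inner_smul_left, inner_smul_right, inner_add_left, inner_sub_right, inner_sub_right,
      real_inner_self_eq_norm_sq, real_inner_self_eq_norm_sq, ha, hb, real_inner_comm a b]
    ring
  · rw [smul_smul, smul_smul]
    have e1 : Real.cos h * (2 * Real.cos h)⁻¹ = 1 / 2 := by field_simp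
    have e2 : Real.sin h * (2 * Real.sin h)⁻¹ = 1 / 2 := by field_simp
    rw [e1, e2]; module
  · rw [smul_smul, smul_smul]
    have e1 : Real.cos h * (2 * Real.cos h)⁻¹ = 1 / 2 := by field_simp
    have e2 : Real.sin h * (2 * Real.sin h)⁻¹ = 1 / 2 := by field_simp
    rw [e1, e2]; module

/-- The planar sector of half-angle `h` about `e` in the plane of `e, f`. -/
def Qc (e f : Euc n) (h : ℝ) : Set (Euc n) :=
  {v | v = ⟪v, e⟫_ℝ • e + ⟪v, f⟫_ℝ • f ∧ |⟪v, f⟫_ℝ| * Real.cos h ≤ ⟪v, e⟫_ℝ * Real.sin h}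

theorem Qc_closed (e f : Euc n) (h : ℝ) : IsClosed (Qc e f h) := by
  have c1 : Continuous fun v : Euc n => ⟪v, e⟫_ℝ := by fun_prop
  have c2 : Continuous fun v : Euc n => ⟪v, f⟫_ℝ := by fun_prop
  exact (isClosed_eq continuous_id ((c1.smul continuous_const).add (c2.smul continuous_const))).inter
    (isClosed_le (c2.abs.mul continuous_const) (c1.mul continuous_const))

theorem Qc_add {e f : Euc n} {h : ℝ} (hc : 0 ≤ Real.cos h) {v w : Euc n} (hv : v ∈ Qc e f h)
    (hw : w ∈ Qc e f h) : v + w ∈ Qc e f h := by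
  refine ⟨?_, ?_⟩
  · rw [inner_add_left, inner_add_left]
    conv_lhs => rw [hv.1, hw.1]
    module
  · rw [inner_add_left, inner_add_left]
    have := mul_le_mul_of_nonneg_right (abs_add_le ⟪v, f⟫_ℝ ⟪w, f⟫_ℝ) hc
    linarith [hv.2, hw.2]

theorem Qc_smul {e f : Euc n} {h : ℝ} {v : Euc n} (hv : v ∈ Qc e f h) {s : ℝ} (hs : 0 ≤ s) :
    s • v ∈ Qc e f h := by
  refine ⟨?_, ?_⟩
  · rw [real_inner_smul_left, real_inner_smul_left]
    conv_lhs => rw [hv.1]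
    module
  · rw [real_inner_smul_left, real_inner_smul_left, abs_mul, abs_of_nonneg hs]
    have := mul_le_mul_of_nonneg_left hv.2 hs
    linarith

theorem mem_Qc {e f : Euc n} (he : ‖e‖ = 1) (hf : ‖f‖ = 1) (hef : ⟪e, f⟫_ℝ = 0) {h A B : ℝ}
    (hAB : |B| * Real.cos h ≤ A * Real.sin h) : A • e + B • f ∈ Qc e f h := by
  have h1 : ⟪A • e + B • f, e⟫_ℝ = A := by
    rw [inner_add_left, real_inner_smul_left, real_inner_smul_left, real_inner_self_eq_norm_sq, he,
      real_inner_comm, hef]; ring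
  have h2 : ⟪A • e + B • f, f⟫_ℝ = B := by
    rw [inner_add_left, real_inner_smul_left, real_inner_smul_left, real_inner_self_eq_norm_sq, hf,
      hef]; ring
  refine ⟨by rw [h1, h2], by rw [h1, h2]; exact hAB⟩

theorem norm_frame {e f : Euc n} (he : ‖e‖ = 1) (hf : ‖f‖ = 1) (hef : ⟪e, f⟫_ℝ = 0) (A B : ℝ) :
    ‖A • e + B • f‖ ^ 2 = A ^ 2 + B ^ 2 := by
  rw [norm_add_sq_real, norm_smul, norm_smul, he, hf, inner_smul_left, inner_smul_right, hef]
  simp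

theorem Qc_unit {e f : Euc n} (he : ‖e‖ = 1) (hf : ‖f‖ = 1) (hef : ⟪e, f⟫_ℝ = 0) {h : ℝ}
    (h0 : 0 < h) (h1 : h < Real.pi / 2) {v : Euc n} (hv : v ∈ Qc e f h) (hn : ‖v‖ = 1) :
    ∃ φ ∈ Icc (-h) h, v = Real.cos φ • e + Real.sin φ • f := by
  have hc : 0 < Real.cos h := Real.cos_pos_of_mem_Ioo ⟨by linarith, by linarith⟩
  have hs : 0 < Real.sin h := Real.sin_pos_of_pos_of_lt_pi (by linarith) (by linarith)
  obtain ⟨hv1, hv2⟩ := hv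
  set A := ⟪v, e⟫_ℝ
  set B := ⟪v, f⟫_ℝ
  have hAB : A ^ 2 + B ^ 2 = 1 := by
    rw [← norm_frame he hf hef, ← hv1, hn]; norm_num
  have hA : 0 ≤ A := by
    have : 0 ≤ A * Real.sin h := le_trans (by positivity) hv2
    exact nonneg_of_mul_nonneg_left this hs
  have hB : |B| ≤ 1 := by
    rw [← sq_le_one_iff_abs_le_one]; nlinarith
  rw [abs_le] at hB
  have hcos : Real.cos (Real.arcsin B) = A := by
    rw [Real.cos_arcsin, show 1 - B ^ 2 = A ^ 2 by linarith, Real.sqrt_sq hA]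
  have hsin : Real.sin (Real.arcsin B) = B := Real.sin_arcsin hB.1 hB.2
  refine ⟨Real.arcsin B, ?_, by rw [hcos, hsin, ← hv1]⟩
  have h3 := Real.neg_pi_div_two_le_arcsin B
  have h4 := Real.arcsin_le_pi_div_two B
  have hv2' : |Real.sin (Real.arcsin B)| * Real.cos h ≤ Real.cos (Real.arcsin B) * Real.sin h := by
    rw [hcos, hsin]; exact hv2
  set φ := Real.arcsin B
  constructor
  · by_contra! hlt
    have : 0 < Real.sin (-φ - h) := Real.sin_pos_of_pos_of_lt_pi (by linarith) (by linarith)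
    rw [Real.sin_sub, Real.sin_neg, Real.cos_neg] at this
    nlinarith [neg_abs_le (Real.sin φ)]
  · by_contra! hlt
    have : 0 < Real.sin (φ - h) := Real.sin_pos_of_pos_of_lt_pi (by linarith) (by linarith)
    rw [Real.sin_sub] at this
    nlinarith [le_abs_self (Real.sin φ)]

/-- `P` is the nearest-point projection on the sector. -/
structure IsProj (e f : Euc n) (h : ℝ) (P : Euc n → Euc n) : Prop where
  mem : ∀ v, P v ∈ Qc e f h
  orth : ∀ v, ⟪P v, v - P v⟫_ℝ = 0
  nonpos : ∀ v, ∀ w ∈ Qc e f h, ⟪w, v - P v⟫_ℝ ≤ 0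

theorem exists_proj (e f : Euc n) {h : ℝ} (hc : 0 ≤ Real.cos h) :
    ∃ P : Euc n → Euc n, IsProj e f h P := by
  have h0 : (0 : Euc n) ∈ Qc e f h := by simp [Qc]
  have hconv : Convex ℝ (Qc e f h) := fun v hv w hw s t hs ht _ =>
    Qc_add hc (Qc_smul hv hs) (Qc_smul hw ht)
  have hex := fun v => exists_norm_eq_iInf_of_complete_convex ⟨0, h0⟩
    (Qc_closed e f h).isComplete hconv v
  choose P hP hPn using hex
  have key := fun v => (norm_eq_iInf_iff_real_inner_le_zero hconv (hP v)).1 (hPn v)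
  have horth : ∀ v, ⟪P v, v - P v⟫_ℝ = 0 := by
    intro v
    have h1 := key v 0 h0
    have h2 := key v ((2:ℝ) • P v) (Qc_smul (hP v) two_pos.le)
    rw [zero_sub, inner_neg_right, real_inner_comm] at h1
    rw [two_smul, add_sub_cancel_right, real_inner_comm] at h2
    linarith
  refine ⟨P, hP, horth, fun v w hw => ?_⟩
  have h1 := key v w hw
  rw [inner_sub_right, real_inner_comm, real_inner_comm (P v), horth] at h1
  linarith

/-- The stretching estimate: interpolating between a point and its projection on a convex cone
expands distances only to second order. -/
theorem stretch_est {P D P' D' : Euc n} {η η' X : ℝ} (h1 : ⟪P, D⟫_ℝ = 0) (h2 : ⟪P', D'⟫_ℝ = 0)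
    (h3 : ⟪P', D⟫_ℝ ≤ 0) (h4 : ⟪P, D'⟫_ℝ ≤ 0) (h0 : 0 ≤ η') (hη : η' ≤ η) (hη1 : η ≤ 1)
    (hX0 : 0 ≤ X) (hX : (η - η') ^ 2 * ‖D‖ ^ 2 ≤ (1 - η' ^ 2) * X) :
    ‖(P + η • D) - (P' + η' • D')‖ ^ 2 ≤ ‖(P + D) - (P' + D')‖ ^ 2 + X := by
  have e1 : (P + η • D) - (P' + η' • D') = (P - P') + (η' • (D - D') + (η - η') • D) := by module
  have e2 : (P + D) - (P' + D') = (P - P') + (D - D') := by abel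
  rw [e1, e2, norm_add_sq_real, norm_add_sq_real (P - P') (D - D'), inner_add_right,
    inner_smul_right, inner_smul_right]
  have i1 : ⟪P - P', D - D'⟫_ℝ = -⟪P', D⟫_ℝ - ⟪P, D'⟫_ℝ := by
    rw [inner_sub_left, inner_sub_right, inner_sub_right, h1, h2]; ring
  have i2 : ⟪P - P', D⟫_ℝ = -⟪P', D⟫_ℝ := by rw [inner_sub_left, h1]; ring
  rw [i1, i2]
  have h5 : ‖η' • (D - D') + (η - η') • D‖ ≤ η' * ‖D - D'‖ + (η - η') * ‖D‖ := by
    refine (norm_add_le _ _).trans (le_of_eq ?_)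
    rw [norm_smul, norm_smul, Real.norm_of_nonneg h0, Real.norm_of_nonneg (by linarith)]
  have h6 : ‖η' • (D - D') + (η - η') • D‖ ^ 2 ≤ ‖D - D'‖ ^ 2 + X := by
    refine (pow_le_pow_left₀ (norm_nonneg _) h5 2).trans ?_
    set p := ‖D - D'‖
    rcases eq_or_lt_of_le (hη.trans hη1) with hη'1 | hlt
    · have : η - η' = 0 := by linarith
      rw [this, hη'1]; nlinarith
    · have hk : 0 < 1 - η' ^ 2 := by nlinarith
      set d := (η - η') * ‖D‖ with hd
      have hd2 : d ^ 2 ≤ (1 - η' ^ 2) * X := by rw [hd, mul_pow]; exact hX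
      have : (1 - η' ^ 2) * (η' * p + d) ^ 2 ≤ (1 - η' ^ 2) * (p ^ 2 + X) := by
        nlinarith [sq_nonneg ((1 - η' ^ 2) * p - η' * d)]
      exact le_of_mul_le_mul_left this hk
  nlinarith [mul_nonneg h0 (neg_nonneg.2 h4), mul_nonneg (sub_nonneg.2 hη1) (neg_nonneg.2 h3)]

variable {e f : Euc n} {h : ℝ} {P : Euc n → Euc n}

theorem IsProj.lip (hP : IsProj e f h P) (v w : Euc n) : ‖P v - P w‖ ≤ ‖v - w‖ := by
  have := stretch_est (P := P v) (D := v - P v) (P' := P w) (D' := w - P w) (η := 0) (η' := 0)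
    (X := 0) (hP.orth v) (hP.orth w) (hP.nonpos v _ (hP.mem w)) (hP.nonpos w _ (hP.mem v)) le_rfl
    le_rfl zero_le_one le_rfl (by simp)
  simp only [zero_smul, add_zero, add_sub_cancel] at this
  exact le_of_sq_le_sq this (norm_nonneg _)

theorem IsProj.pyth (hP : IsProj e f h P) (v : Euc n) : ‖P v‖ ^ 2 + ‖v - P v‖ ^ 2 = ‖v‖ ^ 2 := by
  conv_rhs => rw [← add_sub_cancel (P v) v, norm_add_sq_real, hP.orth]
  ring

theorem IsProj.norm_le (hP : IsProj e f h P) {v : Euc n} (hv : ‖v‖ = 1) :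
    ‖P v‖ ≤ 1 ∧ ‖v - P v‖ ≤ 1 := by
  have := hP.pyth v
  rw [hv] at this
  constructor <;> nlinarith [norm_nonneg (P v), norm_nonneg (v - P v)]

theorem IsProj.fix (hP : IsProj e f h P) {v : Euc n} (hv : v ∈ Qc e f h) : v - P v = 0 := by
  have h1 := hP.nonpos v v hv
  have h2 := hP.orth v
  have h3 : ⟪v - P v, v - P v⟫_ℝ ≤ 0 := by rw [inner_sub_left, h2]; linarith
  rw [real_inner_self_eq_norm_sq] at h3
  exact norm_eq_zero.1 (pow_eq_zero_iff two_ne_zero |>.1 (le_antisymm h3 (sq_nonneg _)))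

end

/-! ### Spheres meeting the link in two points -/

section
variable {n : ℕ} {E : Set (Euc n)}

/-- A radial cutoff, equal to `1` on `s ≤ 1` and to `0` on `s ≥ 2`, with `(χ')² ≤ 4χ`. -/
def chq (s : ℝ) : ℝ := cl (2 - s) ^ 2

theorem chq_01 (s : ℝ) : 0 ≤ chq s ∧ chq s ≤ 1 :=
  ⟨sq_nonneg _, pow_le_one₀ (cl_01 _).1 (cl_01 _).2⟩

theorem chq_lip (s s' : ℝ) : |chq s - chq s'| ≤ 2 * |s - s'| := by
  have e : chq s - chq s' = (cl (2 - s) + cl (2 - s')) * (cl (2 - s) - cl (2 - s')) := by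
    unfold chq; ring
  have h1 := cl_lip (2 - s) (2 - s')
  rw [show 2 - s - (2 - s') = -(s - s') by ring, abs_neg] at h1
  have h2 := cl_01 (2 - s)
  have h3 := cl_01 (2 - s')
  rw [e, abs_mul, abs_of_nonneg (by linarith : 0 ≤ cl (2 - s) + cl (2 - s'))]
  exact mul_le_mul (by linarith) h1 (abs_nonneg _) (by norm_num)

theorem chq_one {s : ℝ} (h : s ≤ 1) : chq s = 1 := by
  rw [chq, cl_of_one_le (by linarith)]; norm_num

theorem chq_zero {s : ℝ} (h : 2 ≤ s) : chq s = 0 := by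
  rw [chq, cl_of_nonpos (by linarith)]; norm_num

theorem chq_sq {s s' : ℝ} (h : s' ≤ s) : (chq s' - chq s) ^ 2 ≤ 4 * (s - s') ^ 2 * chq s' := by
  have e : chq s' - chq s = (cl (2 - s') + cl (2 - s)) * (cl (2 - s') - cl (2 - s)) := by
    unfold chq; ring
  have hmono : cl (2 - s) ≤ cl (2 - s') := by
    unfold cl; exact max_le_max le_rfl (min_le_min le_rfl (by linarith))
  have h1 := cl_lip (2 - s') (2 - s)
  rw [show 2 - s' - (2 - s) = s - s' by ring, abs_of_nonneg (by linarith),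
    abs_of_nonneg (by linarith : (0:ℝ) ≤ s - s')] at h1
  have h2 := cl_01 (2 - s)
  have h3 := cl_01 (2 - s')
  rw [e, mul_pow, chq]
  have h4 : (cl (2 - s') + cl (2 - s)) ^ 2 ≤ (2 * cl (2 - s')) ^ 2 :=
    pow_le_pow_left₀ (by linarith) (by linarith) 2
  have h5 : (cl (2 - s') - cl (2 - s)) ^ 2 ≤ (s - s') ^ 2 :=
    pow_le_pow_left₀ (by linarith) h1 2
  calc _ ≤ (2 * cl (2 - s')) ^ 2 * (s - s') ^ 2 := mul_le_mul h4 h5 (sq_nonneg _) (sq_nonneg _)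
    _ = _ := by ring

variable {e f : Euc n} {h : ℝ} {P : Euc n → Euc n}

theorem IsProj.stretch (hP : IsProj e f h P) {z z' : Euc n} (hz : ‖z‖ = 1) (hz' : ‖z'‖ = 1)
    {s s' σ : ℝ} (hs : 0 < s) (hs' : 0 < s') (hs2 : s ≤ 2) (hss : s' ≤ s)
    (hσ : ‖z - P z‖ ≤ σ) :
    ‖s • (z + chq s • (P z - z)) - s' • (z' + chq s' • (P z' - z'))‖ ^ 2 ≤
      (1 + 16 * σ ^ 2) * ‖s • z - s' • z'‖ ^ 2 := by
  have hc := chq_01 s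
  have hc' := chq_01 s'
  have hsq := chq_sq hss
  have hσ0 := (norm_nonneg _).trans hσ
  have hmono : chq s ≤ chq s' := by
    unfold chq cl
    exact pow_le_pow_left₀ (le_max_left _ _) (max_le_max le_rfl (min_le_min le_rfl (by linarith))) 2
  have hds : (s - s') ^ 2 ≤ ‖s • z - s' • z'‖ ^ 2 := by
    have := abs_norm_sub_norm_le (s • z) (s' • z')
    rw [norm_smul, norm_smul, hz, hz', Real.norm_of_nonneg hs.le, Real.norm_of_nonneg hs'.le,
      mul_one, mul_one] at this
    exact sq_le_sq' (by linarith [neg_abs_le (s - s')]) (by linarith [le_abs_self (s - s')])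
  set V := ‖s • z - s' • z'‖ ^ 2 with hV
  have hV0 : 0 ≤ V := sq_nonneg _
  have key := stretch_est (P := s • P z) (D := s • (z - P z)) (P' := s' • P z')
    (D' := s' • (z' - P z')) (η := 1 - chq s) (η' := 1 - chq s') (X := 16 * σ ^ 2 * V)
    (by rw [inner_smul_left, inner_smul_right, hP.orth]; simp)
    (by rw [inner_smul_left, inner_smul_right, hP.orth]; simp)
    (by
      rw [real_inner_smul_left, inner_smul_right]
      exact mul_nonpos_of_nonneg_of_nonpos hs'.le
        (mul_nonpos_of_nonneg_of_nonpos hs.le (hP.nonpos z _ (hP.mem z'))))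
    (by
      rw [real_inner_smul_left, inner_smul_right]
      exact mul_nonpos_of_nonneg_of_nonpos hs.le
        (mul_nonpos_of_nonneg_of_nonpos hs'.le (hP.nonpos z' _ (hP.mem z))))
    (by linarith) (by linarith) (by linarith) (by positivity) (by
      rw [norm_smul, Real.norm_of_nonneg hs.le, mul_pow,
        show (1 - chq s - (1 - chq s')) ^ 2 = (chq s' - chq s) ^ 2 by ring]
      have h1 : s ^ 2 * ‖z - P z‖ ^ 2 ≤ 4 * σ ^ 2 := by
        have := pow_le_pow_left₀ (norm_nonneg _) hσ 2
        have hs4 : s ^ 2 ≤ 4 := by nlinarith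
        exact mul_le_mul hs4 this (sq_nonneg _) (by norm_num)
      have h2 : chq s' ≤ 1 - (1 - chq s') ^ 2 := by nlinarith
      calc (chq s' - chq s) ^ 2 * (s ^ 2 * ‖z - P z‖ ^ 2)
          ≤ (4 * (s - s') ^ 2 * chq s') * (4 * σ ^ 2) :=
            mul_le_mul hsq h1 (by positivity) (mul_nonneg (by positivity) hc'.1)
        _ = chq s' * (16 * σ ^ 2 * (s - s') ^ 2) := by ring
        _ ≤ (1 - (1 - chq s') ^ 2) * (16 * σ ^ 2 * V) :=
            mul_le_mul h2 (by gcongr) (by positivity) (by linarith [hc'.1]))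
  have e1 : s • (z + chq s • (P z - z)) = s • P z + (1 - chq s) • s • (z - P z) := by module
  have e2 : s' • (z' + chq s' • (P z' - z')) = s' • P z' + (1 - chq s') • s' • (z' - P z') := by
    module
  have e3 : s • P z + s • (z - P z) = s • z := by module
  have e4 : s' • P z' + s' • (z' - P z') = s' • z' := by module
  rw [e1, e2]
  rw [e3, e4] at key
  linarith

/-- The projection, cut off laterally on `-δ < u < 0`. -/
def lat (P : Euc n → Euc n) (u : Euc n → ℝ) (δ : ℝ) (z : Euc n) : Euc n :=
  P z + cl (1 + u z / δ) • (z - P z)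

theorem lat_lip (hP : IsProj e f h P) {u : Euc n → ℝ} {δ ε : ℝ} (hδ : 0 < δ) {z z' : Euc n}
    (hu : |u z - u z'| ≤ 2 * ‖z - z'‖) (hε : ‖z - P z‖ ≤ ε) :
    ‖lat P u δ z - lat P u δ z'‖ ≤ (3 + 2 * ε / δ) * ‖z - z'‖ := by
  have e1 : lat P u δ z - lat P u δ z' = (P z - P z') +
      cl (1 + u z' / δ) • ((z - z') - (P z - P z')) +
      (cl (1 + u z / δ) - cl (1 + u z' / δ)) • (z - P z) := by unfold lat; module
  have h1 := hP.lip z z'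
  have h2 := cl_01 (1 + u z' / δ)
  have h3 : |cl (1 + u z / δ) - cl (1 + u z' / δ)| ≤ 2 / δ * ‖z - z'‖ := by
    refine (cl_lip _ _).trans ?_
    rw [show 1 + u z / δ - (1 + u z' / δ) = (u z - u z') / δ by ring, abs_div, abs_of_pos hδ,
      div_mul_eq_mul_div, div_le_div_iff_of_pos_right hδ]
    exact hu
  rw [e1]
  refine (norm_add₃_le).trans ?_
  rw [norm_smul, norm_smul, Real.norm_of_nonneg h2.1, Real.norm_eq_abs]
  have h4 : ‖(z - z') - (P z - P z')‖ ≤ 2 * ‖z - z'‖ := (norm_sub_le _ _).trans (by linarith)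
  have h5 := mul_le_mul h2.2 h4 (norm_nonneg _) zero_le_one
  have h6 := mul_le_mul h3 hε (norm_nonneg _) (by positivity)
  have e2 : 2 / δ * ‖z - z'‖ * ε = 2 * ε / δ * ‖z - z'‖ := by ring
  rw [e2] at h6
  linarith

theorem lat_sub (P : Euc n → Euc n) (u : Euc n → ℝ) (δ : ℝ) (z : Euc n) :
    ‖lat P u δ z - z‖ ≤ ‖z - P z‖ := by
  have e1 : lat P u δ z - z = -((1 - cl (1 + u z / δ)) • (z - P z)) := by unfold lat; module
  have h2 := cl_01 (1 + u z / δ)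
  rw [e1, norm_neg, norm_smul, Real.norm_of_nonneg (by linarith)]
  nlinarith [norm_nonneg (z - P z)]

/-- Area of the inner cone over a narrow set, for an anisotropically Lipschitz map. -/
theorem inner_band (hE : IsMC n E) {A : Set (Euc n)} (hA : MeasurableSet A) {F : Euc n → Euc n}
    {M : ℝ} (hM : 1 ≤ M) (hF : LipOn M F (KK E ∩ A)) (hn : ∀ z ∈ KK E ∩ A, ‖F z - z‖ ≤ 1) :
    ar n {w | ∃ s ∈ Ioc (0:ℝ) 1, ∃ z ∈ KK E ∩ A, w = s • F z} ≤
      ENNReal.ofReal (108 * M) * lam E A := by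
  have := aniso hE hA (Φ := fun s z => s • F z) (α := 2) (M := M) (s0 := 0) (l := 1) (by norm_num) hM
    (by norm_num) le_rfl (by
      intro s hs s' hs' z hz z' hz'
      have e1 : s • F z - s' • F z' = (s - s') • F z + s' • (F z - F z') := by module
      rw [e1]
      refine (norm_add_le _ _).trans ?_
      rw [norm_smul, norm_smul, Real.norm_eq_abs, Real.norm_of_nonneg hs'.1.le]
      have h1 : ‖F z‖ ≤ 2 := by
        have := norm_add_le (F z - z) z
        rw [sub_add_cancel, norm_of_mem_KK hz.1] at this
        linarith [hn z hz]
      have h2 := hF z hz z' hz'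
      have hs2 : s' ≤ 1 := by linarith [hs'.2]
      have h3 := mul_le_mul hs2 h2 (norm_nonneg _) zero_le_one
      have h4 : 0 ≤ M * ‖z - z'‖ := (norm_nonneg _).trans h2
      nlinarith [abs_nonneg (s - s')])
  rw [zero_add] at this
  refine this.trans (le_of_eq ?_)
  congr 2; ring

theorem layer_band (hE : IsMC n E) {A : Set (Euc n)} (hA : MeasurableSet A) {F : Euc n → Euc n}
    {M : ℝ} (hM : 1 ≤ M) (hF : LipOn M F (KK E ∩ A)) (hn : ∀ z ∈ KK E ∩ A, ‖F z - z‖ ≤ 1) :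
    ar n {w | ∃ s ∈ Ioc (1:ℝ) (1 + 1), ∃ z ∈ KK E ∩ A, w = s • (z + chq s • (F z - z))} ≤
      ENNReal.ofReal (972 * M) * lam E A := by
  have := aniso hE hA (Φ := fun s z => s • (z + chq s • (F z - z))) (α := 6) (M := M) (s0 := 1)
    (l := 1) (by norm_num) hM (by norm_num) le_rfl (by
      intro s hs s' hs' z hz z' hz'
      have e1 : s • (z + chq s • (F z - z)) - s' • (z' + chq s' • (F z' - z')) =
        (s - s') • (z + chq s • (F z - z)) + (s' * (chq s - chq s')) • (F z - z) +
        s' • ((1 - chq s') • (z - z') + chq s' • (F z - F z')) := by module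
      have hχ := chq_01 s
      have hχ' := chq_01 s'
      have hs2 : 0 < s' ∧ s' ≤ 2 := ⟨by linarith [hs'.1], by linarith [hs'.2]⟩
      rw [e1]
      refine (norm_add₃_le).trans ?_
      have h1 : ‖(s - s') • (z + chq s • (F z - z))‖ ≤ |s - s'| * 2 := by
        rw [norm_smul, Real.norm_eq_abs]
        refine mul_le_mul_of_nonneg_left ((norm_add_le _ _).trans ?_) (abs_nonneg _)
        rw [norm_of_mem_KK hz.1, norm_smul, Real.norm_of_nonneg hχ.1]
        have := mul_le_mul hχ.2 (hn z hz) (norm_nonneg _) zero_le_one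
        linarith
      have h2 : ‖(s' * (chq s - chq s')) • (F z - z)‖ ≤ |s - s'| * 4 := by
        rw [norm_smul, norm_mul, Real.norm_of_nonneg hs2.1.le, Real.norm_eq_abs]
        calc s' * |chq s - chq s'| * ‖F z - z‖ ≤ 2 * (2 * |s - s'|) * 1 := by
              refine mul_le_mul (mul_le_mul hs2.2 (chq_lip _ _) (abs_nonneg _) two_pos.le) (hn z hz)
                (norm_nonneg _) (by positivity)
          _ = _ := by ring
      have h3 : ‖s' • ((1 - chq s') • (z - z') + chq s' • (F z - F z'))‖ ≤ 2 * (M * ‖z - z'‖) := by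
        rw [norm_smul, Real.norm_of_nonneg hs2.1.le]
        refine mul_le_mul hs2.2 ((norm_add_le _ _).trans ?_) (norm_nonneg _) two_pos.le
        rw [norm_smul, norm_smul, Real.norm_of_nonneg hχ'.1, Real.norm_of_nonneg (by linarith)]
        have h4 := hF z hz z' hz'
        have h5 : ‖z - z'‖ ≤ M * ‖z - z'‖ := by nlinarith [norm_nonneg (z - z')]
        nlinarith
      have h4 : 0 ≤ M * ‖z - z'‖ := by positivity
      linarith)
  refine this.trans (le_of_eq ?_)
  congr 2; ring

/-- Comparison with the planar sector spanned by the two boundary points. -/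
theorem rigid_upper (hE : IsMC n E) {x : Euc n} (hx : ‖x‖ = 1) {r q : ℝ}
    (hq : HasDerivAt (gm E x univ) q r) {a b : Euc n}
    (hS : ∀ z ∈ KK E, ang x z = r → z = a ∨ z = b) (he : ‖e‖ = 1) (hf : ‖f‖ = 1)
    (hef : ⟪e, f⟫_ℝ = 0) (h0 : 0 < h) (h1 : h < Real.pi / 2) (haQ : a ∈ Qc e f h)
    (hbQ : b ∈ Qc e f h) (hP : IsProj e f h P) {σ : ℝ} (hσ0 : 0 ≤ σ)
    (hσ : ∀ z ∈ KK E, ang x z < r → ‖z - P z‖ ≤ σ) :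
    gm E x univ r * (1 - 48 * σ ^ 2) ≤ 2 * h := by
  classical
  have hfin := lam_finite hE
  have hq0 := deriv_nonneg_gm hE hq
  refine le_of_forall_pos_le_add fun ε hε => ?_
  set D := q + 1 with hD
  have hD1 : 0 < D := by linarith
  set ε' := ε / (4320 * D) with hε'
  have hε'0 : 0 < ε' := by positivity
  set u : Euc n → ℝ := fun z => ang x z - r with hu
  have huc : Continuous u := (continuous_ang x).sub continuous_const
  have hul : ∀ z ∈ KK E, ∀ z' ∈ KK E, |u z - u z'| ≤ 2 * ‖z - z'‖ := fun z hz z' hz' => by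
    simp only [hu]; rw [sub_sub_sub_cancel_right]
    exact ang_lip hx (norm_of_mem_KK hz) (norm_of_mem_KK hz')
  obtain ⟨δ₀, hδ₀, hclose⟩ := band_close hE huc (P := {a, b})
    (fun z hz h => by
      have := hS z hz (by simp only [hu] at h; linarith)
      simpa using this) (σ := ε' / 2) (by positivity)
  have ev1 : ∀ᶠ δ in 𝓝[>] (0:ℝ), δ < δ₀ := mem_nhdsWithin_of_mem_nhds (gt_mem_nhds hδ₀)
  have ev2 : ∀ᶠ δ in 𝓝[>] (0:ℝ), δ < ε / (6480 * D) :=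
    mem_nhdsWithin_of_mem_nhds (gt_mem_nhds (by positivity))
  have ev3 : ∀ᶠ δ in 𝓝[>] (0:ℝ), δ ∈ Ioi (0:ℝ) := self_mem_nhdsWithin
  obtain ⟨δ, ⟨⟨hband, hδ1⟩, hδ2⟩, hδ3⟩ :=
    (((deriv_band hE hq (by linarith : q < D)).and ev1).and ev2 |>.and ev3).exists
  have hδ : 0 < δ := hδ3
  set F := lat P u δ with hF
  set A : Set (Euc n) := {z | u z < 0} with hA
  set A₁ : Set (Euc n) := {z | u z ≤ -δ} with hA₁
  set A₂ : Set (Euc n) := {z | -δ < u z ∧ u z < 0} with hA₂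
  have hAm : MeasurableSet A := (isOpen_lt huc continuous_const).measurableSet
  have hA₁m : MeasurableSet A₁ := (isClosed_le huc continuous_const).measurableSet
  have hA₂m : MeasurableSet A₂ := ((isOpen_lt continuous_const huc).inter
    (isOpen_lt huc continuous_const)).measurableSet
  have hA₁A : A₁ ⊆ A := fun z (hz : u z ≤ -δ) => show u z < 0 by linarith
  have hsplit : ∀ z ∈ KK E ∩ A, z ∈ KK E ∩ A₁ ∨ z ∈ KK E ∩ A₂ := fun z hz => by
    rcases le_or_gt (u z) (-δ) with h | h
    · exact Or.inl ⟨hz.1, h⟩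
    · exact Or.inr ⟨hz.1, h, hz.2⟩
  have hF₁ : ∀ z ∈ A₁, F z = P z := fun z (hz : u z ≤ -δ) => by
    rw [hF, lat, cl_of_nonpos, zero_smul, add_zero]
    have : u z / δ ≤ -1 := by rw [div_le_iff₀ hδ]; linarith
    linarith
  have hn1 : ∀ z ∈ KK E, ‖F z - z‖ ≤ 1 := fun z hz =>
    (lat_sub P u δ z).trans (hP.norm_le (norm_of_mem_KK hz)).2
  have hFlip : LipOn (3 + 2 * 1 / δ) F (KK E) := fun z hz z' hz' =>
    lat_lip hP hδ (hul z hz z' hz') (hP.norm_le (norm_of_mem_KK hz)).2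
  have hsm : ∀ z ∈ KK E ∩ A₂, ‖z - P z‖ ≤ ε' := by
    intro z hz
    obtain ⟨c, hc, hzc⟩ := hclose z hz.1 (by
      rw [abs_lt]; constructor <;> linarith [hz.2.1, hz.2.2])
    have hcQ : c ∈ Qc e f h := by
      rcases Finset.mem_insert.1 hc with rfl | hc
      · exact haQ
      · rwa [Finset.mem_singleton.1 hc]
    have e1 : z - P z = (z - c) - (P z - P c) := by
      have := hP.fix hcQ
      rw [sub_eq_zero] at this
      rw [← this]; abel
    rw [e1]
    refine (norm_sub_le _ _).trans ?_
    linarith [hP.lip z c]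
  have hFlip₂ : LipOn (3 + 2 * ε' / δ) F (KK E ∩ A₂) := fun z hz z' hz' =>
    lat_lip hP hδ (hul z hz.1 z' hz'.1) (hsm z hz)
  have hM : 1 ≤ 3 + 2 * ε' / δ := by
    have : 0 ≤ 2 * ε' / δ := by positivity
    linarith
  have hcmp := cone_comp hE hAm (χ := chq) (Lχ := 2) (r := 1) hFlip hn1 (by positivity)
    (by norm_num) chq_lip chq_01 one_pos (fun s hs => chq_zero (by linarith)) (fun s hs => chq_one hs)
    (fun z hz hzA => by
      have : 0 ≤ u z := not_lt.1 hzA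
      rw [hF, lat, cl_of_one_le, one_smul, add_sub_cancel]
      have : 0 ≤ u z / δ := by positivity
      linarith)
  have hb2 : lam E A₂ ≤ ENNReal.ofReal (D * δ) := by
    refine (measure_mono ?_).trans hband
    rintro z ⟨h1, h2⟩
    exact ⟨trivial, by simp only [hu] at h1; linarith, by simp only [hu] at h2; linarith⟩
  -- away from the lateral band `A₂`, the image lies in the planar sector
  have hin : ar n {w | ∃ s ∈ Ioc (0:ℝ) 1, ∃ z ∈ KK E ∩ A, w = s • F z} ≤
      ENNReal.ofReal (2 * h) + ENNReal.ofReal (108 * (3 + 2 * ε' / δ)) * lam E A₂ := by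
    have hsub : {w | ∃ s ∈ Ioc (0:ℝ) 1, ∃ z ∈ KK E ∩ A, w = s • F z} ⊆
        ({w | ∃ s ∈ Ioc (0:ℝ) 1, ∃ φ ∈ Icc (-h) h, w = s • (Real.cos φ • e + Real.sin φ • f)} ∪ {0}) ∪
        {w | ∃ s ∈ Ioc (0:ℝ) 1, ∃ z ∈ KK E ∩ A₂, w = s • F z} := by
      rintro w ⟨s, hs, z, hz, rfl⟩
      rcases hsplit z hz with hz1 | hz2
      · left
        rw [hF₁ z hz1.2]
        by_cases hz0 : P z = 0
        · right; rw [hz0, smul_zero]; rfl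
        · left
          have hpos : 0 < ‖P z‖ := norm_pos_iff.2 hz0
          obtain ⟨φ, hφ, hφe⟩ := Qc_unit he hf hef h0 h1
            (Qc_smul (hP.mem z) (inv_nonneg.2 hpos.le)) (norm_nz hpos)
          refine ⟨s * ‖P z‖, ⟨mul_pos hs.1 hpos, ?_⟩, φ, hφ, ?_⟩
          · have := (hP.norm_le (norm_of_mem_KK hz1.1)).1
            nlinarith [hs.1, hs.2]
          · rw [← hφe, smul_smul, mul_assoc, mul_inv_cancel₀ hpos.ne', mul_one]
      · right; exact ⟨s, hs, z, hz2, rfl⟩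
    refine (measure_mono hsub).trans ((measure_union_le _ _).trans (add_le_add ?_ ?_))
    · refine (measure_union_le _ _).trans ?_
      rw [ar_ray (0 : Euc n) {0} (fun w hw => ⟨1, by norm_num, by
        rw [smul_zero]; exact hw⟩), add_zero]
      exact ar_sector_le he hf hef (by linarith [Real.pi_pos])
    · exact inner_band hE hA₂m hM hFlip₂ fun z hz => hn1 z hz.1
  -- away from `A₂` the layer is stretched only to second order, by `IsProj.stretch`
  have hlay : ar n {w | ∃ s ∈ Ioc (1:ℝ) (1 + 1), ∃ z ∈ KK E ∩ A, w = s • (z + chq s • (F z - z))} ≤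
      ENNReal.ofReal ((1 + 16 * σ ^ 2) * 3) * lam E A +
        ENNReal.ofReal (972 * (3 + 2 * ε' / δ)) * lam E A₂ := by
    set G : Euc n → Euc n := fun v => ‖v‖ • (nz v + chq ‖v‖ • (P (nz v) - nz v)) with hG
    have hsub : {w | ∃ s ∈ Ioc (1:ℝ) (1 + 1), ∃ z ∈ KK E ∩ A, w = s • (z + chq s • (F z - z))} ⊆
        G '' trunc E 1 2 A₁ ∪
        {w | ∃ s ∈ Ioc (1:ℝ) (1 + 1), ∃ z ∈ KK E ∩ A₂, w = s • (z + chq s • (F z - z))} := by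
      rintro w ⟨s, hs, z, hz, rfl⟩
      rcases hsplit z hz with hz1 | hz2
      · left
        have hs0 : 0 < s := by linarith [hs.1]
        have hz' := norm_of_mem_KK hz1.1
        have hns : ‖s • z‖ = s := by rw [norm_smul, hz', mul_one, Real.norm_of_nonneg hs0.le]
        have hnz : nz (s • z) = z := by rw [nz_smul hs0, nz_of_norm hz']
        refine ⟨s • z, ⟨hE.smul_mem hz1.1.1 hs0, by rw [hns]; exact hs.1, by
          rw [hns]; linarith [hs.2], by rw [hnz]; exact hz1.2⟩, ?_⟩
        simp only [hG]
        rw [hns, hnz, hF₁ z hz1.2]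
      · right; exact ⟨s, hs, z, hz2, rfl⟩
    have hGl : LipOn (Real.sqrt (1 + 16 * σ ^ 2)) G (trunc E 1 2 A₁) := by
      have half : ∀ v ∈ trunc E 1 2 A₁, ∀ w ∈ trunc E 1 2 A₁, ‖w‖ ≤ ‖v‖ →
          ‖G v - G w‖ ≤ Real.sqrt (1 + 16 * σ ^ 2) * ‖v - w‖ := by
        intro v hv w hw hvw
        have hv0 : 0 < ‖v‖ := by linarith [hv.2.1]
        have hw0 : 0 < ‖w‖ := by linarith [hw.2.1]
        have hvn : ‖nz v‖ = 1 := norm_nz hv0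
        have hwn : ‖nz w‖ = 1 := norm_nz hw0
        have hvK : nz v ∈ KK E := hE.nz_mem hv.1 hv0
        have key := hP.stretch hvn hwn hv0 hw0 hv.2.2.1 hvw (σ := σ) (hσ _ hvK (by
          have : u (nz v) ≤ -δ := hv.2.2.2
          simp only [hu] at this; linarith))
        rw [norm_smul_nz, norm_smul_nz] at key
        apply le_of_sq_le_sq _ (by positivity)
        rw [mul_pow, Real.sq_sqrt (by positivity)]
        exact key
      intro v hv w hw
      rcases le_total ‖w‖ ‖v‖ with hvw | hvw
      · exact half v hv w hw hvw
      · rw [norm_sub_rev, norm_sub_rev v w]; exact half w hw v hv hvw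
    refine (measure_mono hsub).trans ((measure_union_le _ _).trans (add_le_add ?_ ?_))
    · refine (ar_image_le hGl (Real.sqrt_nonneg _)).trans ?_
      rw [ar_trunc hE hA₁m one_pos one_le_two, Real.sq_sqrt (by positivity), ← mul_assoc,
        ← ENNReal.ofReal_mul (by positivity)]
      refine mul_le_mul' (le_of_eq ?_) (measure_mono hA₁A)
      norm_num
    · exact layer_band hE hA₂m hM hFlip₂ fun z hz => hn1 z hz.1
  have hset : A = univ ∩ {z | ang x z < r} := by
    ext z; simp [hA, hu, sub_neg]
  have hg : lam E A = ENNReal.ofReal (gm E x univ r) := by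
    rw [gm, ofReal_measureReal, hset]
  have hg0 : 0 ≤ gm E x univ r := measureReal_nonneg
  set H := gm E x univ r
  have hM0 : 0 ≤ 3 + 2 * ε' / δ := by linarith
  have htot : ENNReal.ofReal ((1 + 1) ^ 2 * H) ≤ ENNReal.ofReal
      ((2 * h + 108 * (3 + 2 * ε' / δ) * (D * δ)) +
        ((1 + 16 * σ ^ 2) * 3 * H + 972 * (3 + 2 * ε' / δ) * (D * δ))) := by
    rw [ENNReal.ofReal_add (by positivity) (by positivity), ENNReal.ofReal_add (by positivity)
      (by positivity), ENNReal.ofReal_add (by positivity) (by positivity),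
      ENNReal.ofReal_mul (by positivity), ENNReal.ofReal_mul (q := D * δ) (by positivity),
      ENNReal.ofReal_mul (q := H) (by positivity), ENNReal.ofReal_mul (q := D * δ) (by positivity),
      ← hg]
    refine hcmp.trans (add_le_add (hin.trans (add_le_add le_rfl ?_))
      (hlay.trans (add_le_add le_rfl ?_)))
    · exact mul_le_mul' le_rfl hb2
    · exact mul_le_mul' le_rfl hb2
  rw [ENNReal.ofReal_le_ofReal_iff (by positivity)] at htot
  have e1 : (3 + 2 * ε' / δ) * (D * δ) = 3 * (D * δ) + 2 * (ε' * D) := by field_simp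
  have e2 : ε' * D = ε / 4320 := by rw [hε']; field_simp
  have e3 : D * δ ≤ ε / 6480 := by
    calc D * δ ≤ D * (ε / (6480 * D)) := mul_le_mul_of_nonneg_left hδ2.le hD1.le
      _ = _ := by field_simp
  nlinarith

end

/-! ### Rigidity at points whose small spheres meet the link twice -/

section
variable {n : ℕ} {E : Set (Euc n)}

/-- Almost every sphere about an interior point `y` of a cap meets the part of the link inside the
cap; together with the boundary points of the cap it encloses, it has at least two points. -/
theorem count_cap (hE : IsMC n E) {x : Euc n} (hx : ‖x‖ = 1) {r q : ℝ} (hr : 0 < r)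
    (hr1 : r ≤ 1 / 10000) (hq : HasDerivAt (gm E x univ) q r) {a b : Euc n}
    (hS : ∀ z ∈ KK E, ang x z = r → z = a ∨ z = b) {y : Euc n} (hy : y ∈ KK E)
    (hyr : ang x y < r) :
    ∀ᵐ ρ : ℝ, 0 < ρ → ∃ q', HasDerivAt (gm E y {z | ang x z < r}) q' ρ ∧
      (ρ < ang y a → ρ < ang y b → 2 ≤ q') ∧ (ρ < ang y b → 1 ≤ q') := by
  have hU : IsOpen {z | ang x z < r} := isOpen_lt (continuous_ang x) continuous_const
  have hy1 := norm_of_mem_KK hy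
  filter_upwards [count_ae hE hy1 hU] with ρ hρ hρ0
  obtain ⟨q', hd, hfin, hle⟩ := hρ
  refine ⟨q', hd, ?_⟩
  set T := KK E ∩ {z | ang x z < r} ∩ {z | ang y z = ρ} with hT
  set u : Euc n → ℝ := fun z => max (ang x z - r) (ang y z - ρ) with hu
  have hsub : KK E ∩ {z | u z = 0} ⊆
      T ∪ {z | (z = a ∧ ang y a ≤ ρ) ∨ (z = b ∧ ang y b ≤ ρ)} := by
    rintro z ⟨hz, h0⟩
    have h0' : max (ang x z - r) (ang y z - ρ) = 0 := h0
    have h1 : ang x z ≤ r := by linarith [le_max_left (ang x z - r) (ang y z - ρ)]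
    have h2 : ang y z ≤ ρ := by linarith [le_max_right (ang x z - r) (ang y z - ρ)]
    rcases h1.lt_or_eq with h | h
    · left
      refine ⟨⟨hz, h⟩, ?_⟩
      show ang y z = ρ
      rcases max_choice (ang x z - r) (ang y z - ρ) with h3 | h3 <;> rw [h3] at h0' <;> linarith
    · right
      rcases hS z hz h with rfl | rfl
      · left; exact ⟨rfl, h2⟩
      · right; exact ⟨rfl, h2⟩
  have hfin2 : ({z | (z = a ∧ ang y a ≤ ρ) ∨ (z = b ∧ ang y b ≤ ρ)} : Set (Euc n)).Finite :=
    (Set.toFinite ({a, b} : Set (Euc n))).subset (by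
      rintro z (⟨rfl, -⟩ | ⟨rfl, -⟩) <;> simp)
  have h2 : 2 ≤ (KK E ∩ {z | u z = 0}).ncard := by
    have hq0 := deriv_nonneg_gm hE hq
    have hq0' := deriv_nonneg_gm hE hd
    refine collapse hE (u := u) (D := (q + 1) + (q' + 1))
      (((continuous_ang x).sub continuous_const).max ((continuous_ang y).sub continuous_const))
      (fun z hz z' hz' => ?_) hx hr hr1 (fun z hz h => ?_)
      ((hfin.union hfin2).subset hsub) (by linarith) ?_ hy ?_
    · have h1 := ang_lip hx (norm_of_mem_KK hz) (norm_of_mem_KK hz')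
      have h2 := ang_lip hy1 (norm_of_mem_KK hz) (norm_of_mem_KK hz')
      refine (abs_max_sub_max_le_max _ _ _ _).trans (max_le ?_ ?_)
      · rwa [sub_sub_sub_cancel_right]
      · rwa [sub_sub_sub_cancel_right]
    · have := (le_max_left (ang x z - r) (ang y z - ρ)).trans h
      linarith
    · filter_upwards [deriv_band hE hq (D := q + 1) (by linarith),
        deriv_band hE hd (D := q' + 1) (by linarith), self_mem_nhdsWithin] with δ h1 h2 hδ
      have hδ' : (0:ℝ) < δ := hδ
      rw [add_mul, ENNReal.ofReal_add (by positivity) (by positivity)]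
      refine (measure_mono ?_).trans ((measure_union_le _ _).trans (add_le_add h1 h2))
      rintro z ⟨hz1, hz2⟩
      have hz1' : -δ < max (ang x z - r) (ang y z - ρ) := hz1
      have hz2' : max (ang x z - r) (ang y z - ρ) < 0 := hz2
      obtain ⟨h3, h4⟩ := max_lt_iff.1 hz2'
      rcases lt_max_iff.1 hz1' with h | h
      · left; exact ⟨mem_univ _, by linarith, by linarith⟩
      · right; exact ⟨show ang x z < r by linarith, by linarith, by linarith⟩
    · show max (ang x y - r) (ang y y - ρ) < 0
      rw [ang_self hy1]
      exact max_lt (by linarith) (by linarith)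
  have h3 := (ncard_le_ncard hsub (hfin.union hfin2)).trans (ncard_union_le _ _)
  constructor
  · intro ha hb
    have : ({z | (z = a ∧ ang y a ≤ ρ) ∨ (z = b ∧ ang y b ≤ ρ)} : Set (Euc n)) = ∅ := by
      ext z; simp [ha, hb]
    rw [this, ncard_empty] at h3
    have : (2:ℝ) ≤ T.ncard := by exact_mod_cast h2.trans h3
    linarith
  · intro hb
    have h4 : ({z | (z = a ∧ ang y a ≤ ρ) ∨ (z = b ∧ ang y b ≤ ρ)} : Set (Euc n)).ncard ≤ 1 := by
      rw [← ncard_singleton a]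
      refine ncard_le_ncard ?_ (finite_singleton a)
      rintro z (⟨rfl, -⟩ | ⟨rfl, h⟩)
      · simp
      · linarith
    have : (1:ℝ) ≤ T.ncard := by exact_mod_cast (by omega : 1 ≤ T.ncard)
    linarith

/-- The mass of a cap whose boundary meets the link in `a, b` is at least the length of any broken
geodesic `a y b` with `y` in the link. -/
theorem rigid_lower (hE : IsMC n E) {x : Euc n} (hx : ‖x‖ = 1) {r q : ℝ} (hr : 0 < r)
    (hr1 : r ≤ 1 / 10000) (hq : HasDerivAt (gm E x univ) q r) {a b : Euc n}
    (hS : ∀ z ∈ KK E, ang x z = r → z = a ∨ z = b) {y : Euc n} (hy : y ∈ KK E)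
    (hyr : ang x y < r) (ha : ‖a‖ = 1) (hxa : ang x a = r) :
    ang y a + ang y b ≤ gm E x univ r := by
  have := lam_finite hE
  have key : ∀ a b : Euc n, (∀ z ∈ KK E, ang x z = r → z = a ∨ z = b) → 0 < ang y a →
      ang y a ≤ ang y b → ang y a + ang y b ≤ gm E x univ r := by
    intro a b hS h0 hab
    have hc := count_cap hE hx hr hr1 hq hS hy hyr
    set U := {z | ang x z < r} with hU
    have h1 := gm_lower hE (x := y) (U := U) (k := 2) h0 (by
      filter_upwards [hc] with ρ hρ hρ'
      obtain ⟨q', h1, h2, -⟩ := hρ hρ'.1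
      exact ⟨q', h1, h2 hρ'.2 (hρ'.2.trans_le hab)⟩)
    have h2 : 1 * (ang y b - ang y a) ≤ gm E y U (ang y b) - gm E y U (ang y a) := by
      rcases hab.eq_or_lt with h | h
      · rw [h]; simp
      · refine gm_lower hE h ?_
        filter_upwards [hc] with ρ hρ hρ'
        obtain ⟨q', h1, -, h2⟩ := hρ (h0.trans hρ'.1)
        exact ⟨q', h1, h2 hρ'.2⟩
    have h3 : 0 ≤ gm E y U 0 := measureReal_nonneg
    have h4 : gm E y U (ang y b) ≤ gm E x univ r := by
      refine measureReal_mono ?_ (measure_ne_top _ _)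
      rw [univ_inter]; exact inter_subset_left
    linarith
  rcases le_total (ang y a) (ang y b) with h | h
  · refine key a b hS (ang_pos (norm_of_mem_KK hy) ha ?_) h
    rintro rfl; exact hyr.ne hxa
  · rcases (ang_nonneg y b).eq_or_lt with h0 | h0
    · have : ang y a ≤ ang y a + ang y b := by linarith
      have hyb : ∀ z ∈ KK E, ang x z = r → z = a ∨ z = a := by
        intro z hz hzr
        rcases hS z hz hzr with h1 | h1
        · exact Or.inl h1
        · exfalso
          subst h1
          have := ang_eq_zero (norm_of_mem_KK hy) (norm_of_mem_KK hz) h0.symm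
          subst this; exact hyr.ne hzr
      have h5 := key a a hyb (ang_pos (norm_of_mem_KK hy) ha (by rintro rfl; exact hyr.ne hxa)) le_rfl
      linarith [ang_nonneg y a]
    · rw [add_comm]
      exact key b a (fun z hz hzr => (hS z hz hzr).symm) h0 h
end

section
variable {n : ℕ} {E : Set (Euc n)}

/-- The point at parameter `t` of the great circle through `x` with unit tangent `τ`. -/
def gc (x τ : Euc n) (t : ℝ) : Euc n := Real.cos t • x + Real.sin t • τ

theorem gc_zero (x τ : Euc n) : gc x τ 0 = x := by simp [gc]

theorem continuous_gc (x τ : Euc n) : Continuous (gc x τ) := by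
  unfold gc; fun_prop

theorem norm_gc {x τ : Euc n} (hx : ‖x‖ = 1) (hτ : ‖τ‖ = 1) (h : ⟪x, τ⟫_ℝ = 0) (t : ℝ) :
    ‖gc x τ t‖ = 1 := by
  have := norm_frame hx hτ h (Real.cos t) (Real.sin t)
  rw [Real.cos_sq_add_sin_sq] at this
  rw [gc]
  nlinarith [norm_nonneg (Real.cos t • x + Real.sin t • τ)]

theorem inner_gc {x τ : Euc n} (hx : ‖x‖ = 1) (hτ : ‖τ‖ = 1) (h : ⟪x, τ⟫_ℝ = 0) (s t : ℝ) :
    ⟪gc x τ s, gc x τ t⟫_ℝ = Real.cos (s - t) := by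
  have h1 : ⟪τ, x⟫_ℝ = 0 := by rw [real_inner_comm]; exact h
  simp only [gc, inner_add_left, inner_add_right, real_inner_smul_left, inner_smul_right,
    real_inner_self_eq_norm_sq, hx, hτ, h, h1, Real.cos_sub]
  ring

theorem ang_gc {x τ : Euc n} (hx : ‖x‖ = 1) (hτ : ‖τ‖ = 1) (h : ⟪x, τ⟫_ℝ = 0) {s t : ℝ}
    (hst : |s - t| ≤ Real.pi) : ang (gc x τ s) (gc x τ t) = |s - t| := by
  rw [ang, inner_gc hx hτ h, ← Real.cos_abs]
  exact Real.arccos_cos (abs_nonneg _) hst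

/-- The link is a geodesic arc, with tangent `τ` at `x`, in the closed cap of radius `r`. -/
structure RegAt (E : Set (Euc n)) (x τ : Euc n) (r : ℝ) : Prop where
  nx : ‖x‖ = 1
  nt : ‖τ‖ = 1
  orth : ⟪x, τ⟫_ℝ = 0
  sub : ∀ v ∈ KK E, ang x v ≤ r → ∃ t ∈ Icc (-r) r, v = gc x τ t
  mem : ∀ t ∈ Icc (-r) r, gc x τ t ∈ KK E

/-- Quantitative Pythagoras on the sphere: the distance `d` to a point at height `s` above a plane
exceeds the angle `α` to its projection by at least a multiple of `s²`. -/
theorem angle_gap {d α s r : ℝ} (hα : 0 ≤ α) (hαπ : α ≤ Real.pi) (hd0 : 0 ≤ d) (hd : d ≤ 2 * r)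
    (hr : 0 < r) (hr1 : r ≤ 1 / 10000) {c : ℝ} (hc0 : 0 ≤ c) (hc : c ^ 2 = 1 - s ^ 2)
    (h : Real.cos d ≤ c * Real.cos α) : α ≤ d ∧ s ^ 2 ≤ 8 * r * (d - α) := by
  have hcd : 1 / 2 ≤ Real.cos d := by
    have := Real.one_sub_sq_div_two_le_cos (x := d)
    nlinarith
  have hc1 : c ≤ 1 - s ^ 2 / 2 := by nlinarith [sq_nonneg (c - 1)]
  have hcα : 0 < Real.cos α := by
    by_contra hneg
    push Not at hneg
    nlinarith
  have hc2 : c ≤ 1 := by nlinarith [sq_nonneg s]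
  have h1 : Real.cos d ≤ Real.cos α := by nlinarith
  have hαd : α ≤ d := by
    by_contra hlt
    push Not at hlt
    have := Real.cos_lt_cos_of_nonneg_of_le_pi hd0 hαπ hlt
    linarith
  refine ⟨hαd, ?_⟩
  have h2 : Real.cos α - Real.cos d ≥ s ^ 2 / 2 * Real.cos α := by nlinarith
  have h3 : Real.cos α - Real.cos d = 2 * Real.sin ((d + α) / 2) * Real.sin ((d - α) / 2) := by
    rw [Real.cos_sub_cos, show (α + d) / 2 = (d + α) / 2 by ring,
      show (α - d) / 2 = -((d - α) / 2) by ring, Real.sin_neg]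
    ring
  have h4 : Real.sin ((d + α) / 2) ≤ (d + α) / 2 := Real.sin_le (by linarith)
  have h5 : Real.sin ((d - α) / 2) ≤ (d - α) / 2 := Real.sin_le (by linarith)
  have h6 : 0 ≤ Real.sin ((d - α) / 2) :=
    Real.sin_nonneg_of_nonneg_of_le_pi (by linarith)
      (by linarith [Real.pi_gt_three])
  have h7 : Real.sin ((d + α) / 2) * Real.sin ((d - α) / 2) ≤ (d + α) / 2 * ((d - α) / 2) :=
    mul_le_mul h4 h5 h6 (by linarith)
  have h8 : (d + α) * (d - α) ≤ 4 * r * (d - α) :=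
    mul_le_mul_of_nonneg_right (by linarith) (by linarith)
  have h9 : s ^ 2 / 4 ≤ s ^ 2 / 2 * Real.cos α := by nlinarith [sq_nonneg s]
  nlinarith

theorem rigid_arith {G L θ θ' r s : ℝ} (hr : 0 < r) (hr1 : r ≤ 1 / 10000) (hs : 0 < s)
    (hsr : s ≤ 2 * r) (hup : G * (1 - 48 * s ^ 2) ≤ θ') (hlow : L ≤ G) (hθ : θ' ≤ θ)
    (hL : L ≤ 4 * r) (hgap : 2 * s ^ 2 ≤ 8 * r * (L - θ)) : False := by
  have hs48 : 0 ≤ 1 - 48 * s ^ 2 := by nlinarith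
  have h3 : L * (1 - 48 * s ^ 2) ≤ θ := by
    have := mul_le_mul_of_nonneg_right hlow hs48
    linarith
  have h4 : L - θ ≤ 192 * r * s ^ 2 := by nlinarith [sq_nonneg s]
  have h6 : 8 * r * (L - θ) ≤ 8 * r * (192 * r * s ^ 2) :=
    mul_le_mul_of_nonneg_left h4 (by linarith)
  have h7 : r * r ≤ 1 / 10000 * (1 / 10000) := mul_le_mul hr1 hr1 hr.le (by norm_num)
  nlinarith [mul_pos hs hs]

set_option maxHeartbeats 1000000 in
/-- Rigidity: if a small sphere about `x` meets the link in only two points, then the link is a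
geodesic arc inside that sphere. -/
theorem rigid (hE : IsMC n E) {x : Euc n} (hx : x ∈ KK E) {r q : ℝ} (hr : 0 < r)
    (hr1 : r ≤ 1 / 10000) (hg : GoodRad E x r q)
    (h2 : (KK E ∩ {z | ang x z = r}).ncard = 2) : ∃ τ, RegAt E x τ r := by
  have hx1 := norm_of_mem_KK hx
  have hpi := Real.pi_gt_three
  obtain ⟨a, b, hab, hSe⟩ := ncard_eq_two.1 h2
  have ha : a ∈ KK E ∩ {z | ang x z = r} := by rw [hSe]; simp
  have hb : b ∈ KK E ∩ {z | ang x z = r} := by rw [hSe]; simp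
  have hS : ∀ z ∈ KK E, ang x z = r → z = a ∨ z = b := fun z hz hzr => by
    have : z ∈ KK E ∩ {z | ang x z = r} := ⟨hz, hzr⟩
    rw [hSe] at this; simpa using this
  have ha1 := norm_of_mem_KK ha.1
  have hb1 := norm_of_mem_KK hb.1
  have hxa : ang x a = r := ha.2
  have hxb : ang x b = r := hb.2
  have hθ0 := ang_pos ha1 hb1 hab
  have hθ2 : ang a b ≤ 2 * r := by
    have := ang_triangle ha1 hx1 hb1
    rw [ang_comm a x] at this; linarith
  obtain ⟨e, f, he, hf, hef, hae, hbe⟩ := mid_frame ha1 hb1 hab (by linarith)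
  set h := ang a b / 2 with hh
  have hfe : ⟪f, e⟫_ℝ = 0 := by rw [real_inner_comm]; exact hef
  have hch : 0 ≤ Real.cos h := Real.cos_nonneg_of_neg_pi_div_two_le_of_le (by linarith) (by linarith)
  have hsh : 0 < Real.sin h := Real.sin_pos_of_pos_of_lt_pi (by linarith) (by linarith)
  obtain ⟨P, hP⟩ := exists_proj e f hch
  have haQ : a ∈ Qc e f h := by
    have : a = Real.cos h • e + (-Real.sin h) • f := by rw [hae]; module
    rw [this]
    refine mem_Qc he hf hef ?_
    rw [abs_neg, abs_of_pos hsh, mul_comm]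
  have hbQ : b ∈ Qc e f h := by
    rw [hbe]
    refine mem_Qc he hf hef ?_
    rw [abs_of_pos hsh, mul_comm]
  have hPc : Continuous P := by
    have : LipschitzWith 1 P := LipschitzWith.of_dist_le_mul fun v w => by
      rw [dist_eq_norm, dist_eq_norm, NNReal.coe_one, one_mul]; exact hP.lip v w
    exact this.continuous
  have hC : IsCompact (KK E ∩ {z | ang x z ≤ r}) :=
    hE.compactK.inter_right (isClosed_le (continuous_ang x) continuous_const)
  obtain ⟨y, hy, hmax⟩ := hC.exists_isMaxOn ⟨x, hx, by
    show ang x x ≤ r; rw [ang_self hx1]; exact hr.le⟩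
    (f := fun z => ‖z - P z‖) (by fun_prop)
  have hy1 := norm_of_mem_KK hy.1
  set s := ‖y - P y‖ with hs
  have hs0 : 0 ≤ s := norm_nonneg _
  have hall : ∀ z ∈ KK E, ang x z ≤ r → ‖z - P z‖ ≤ s := fun z hz hzr => hmax ⟨hz, hzr⟩
  have hup := rigid_upper hE hx1 hg.der hS he hf hef (h := h) (by linarith) (by linarith) haQ hbQ hP
    hs0 (fun z hz hzr => hall z hz hzr.le)
  have hs_zero : s = 0 := by
    by_contra hne
    have hsp : 0 < s := lt_of_le_of_ne hs0 (Ne.symm hne)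
    have hyr : ang x y < r := by
      refine lt_of_le_of_ne hy.2 fun heq => ?_
      rcases hS y hy.1 heq with h1 | h1
      · rw [hs, h1, hP.fix haQ] at hsp; simp at hsp
      · rw [hs, h1, hP.fix hbQ] at hsp; simp at hsp
    have hlow := rigid_lower hE hx1 hr hr1 hg.der hS hy.1 hyr ha1 hxa
    have hda : ang y a ≤ 2 * r := by
      have := ang_triangle hy1 hx1 ha1
      rw [ang_comm y x] at this; linarith
    have hdb : ang y b ≤ 2 * r := by
      have := ang_triangle hy1 hx1 hb1
      rw [ang_comm y x] at this; linarith
    have hyD : ⟪y, y - P y⟫_ℝ = s ^ 2 := by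
      have h1 := hP.orth y
      have h3 : ⟪y - P y, y - P y⟫_ℝ = s ^ 2 := real_inner_self_eq_norm_sq _
      rw [inner_sub_left] at h3
      linarith
    have hs2r : s ≤ 2 * r := by
      have h1 := hP.nonpos y a haQ
      have h3 : s ^ 2 ≤ ⟪y - a, y - P y⟫_ℝ := by rw [inner_sub_left]; linarith
      have h4 := real_inner_le_norm (y - a) (y - P y)
      rw [← hs] at h4
      have h5 := norm_sub_le_ang hy1 ha1
      have h6 : s * s ≤ ‖y - a‖ * s := by nlinarith
      have := le_of_mul_le_mul_right h6 hsp
      linarith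
    have hpy := hP.pyth y
    rw [hy1, ← hs] at hpy
    have hPpos : 0 < ‖P y‖ := by
      by_contra hneg
      have : ‖P y‖ = 0 := le_antisymm (not_lt.1 hneg) (norm_nonneg _)
      rw [this] at hpy; nlinarith
    set c := ‖P y‖ with hc
    set p := c⁻¹ • P y with hp
    have hp1 : ‖p‖ = 1 := by
      rw [hp, norm_smul, Real.norm_of_nonneg (inv_nonneg.2 hPpos.le), ← hc]
      exact inv_mul_cancel₀ hPpos.ne'
    have hPp : P y = c • p := by rw [hp, smul_inv_smul₀ hPpos.ne']
    have hgap : ∀ v, ‖v‖ = 1 → v ∈ Qc e f h → ang y v ≤ 2 * r →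
        ang p v ≤ ang y v ∧ s ^ 2 ≤ 8 * r * (ang y v - ang p v) := by
      intro v hv hvQ hyv
      refine angle_gap (ang_nonneg _ _) (ang_le_pi _ _) (ang_nonneg _ _) hyv hr hr1 hPpos.le
        (by linarith) ?_
      rw [cos_ang hy1 hv, cos_ang hp1 hv]
      have h1 := hP.nonpos y v hvQ
      rw [inner_sub_right, hPp, inner_smul_right] at h1
      rw [real_inner_comm v y, real_inner_comm v p] 
      linarith
    obtain ⟨g1, g2⟩ := hgap a ha1 haQ hda
    obtain ⟨g3, g4⟩ := hgap b hb1 hbQ hdb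
    have htri := ang_triangle ha1 hp1 hb1
    rw [ang_comm a p] at htri
    exact rigid_arith hr hr1 hsp hs2r hup hlow (θ := ang a b) (by rw [hh]; linarith)
      (by linarith) (by
        have := mul_nonneg hr.le (sub_nonneg.2 htri)
        nlinarith)
  have hQ : ∀ z ∈ KK E, ang x z ≤ r → ∃ φ ∈ Icc (-h) h, z = Real.cos φ • e + Real.sin φ • f := by
    intro z hz hzr
    have h1 := hall z hz hzr
    rw [hs_zero] at h1
    have h3 : z = P z := sub_eq_zero.1 (norm_le_zero_iff.1 h1)
    refine Qc_unit he hf hef (by linarith) (by linarith) ?_ (norm_of_mem_KK hz)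
    rw [h3]; exact hP.mem z
  obtain ⟨φ, hφ, hxφ⟩ := hQ x hx (by rw [ang_self hx1]; exact hr.le)
  have hin : ∀ A B : ℝ, ⟪x, A • e + B • f⟫_ℝ = Real.cos φ * A + Real.sin φ * B := by
    intro A B
    rw [hxφ]
    simp only [inner_add_left, inner_add_right, real_inner_smul_left, inner_smul_right,
      real_inner_self_eq_norm_sq, he, hf, hef, hfe]
    ring
  have hxa' : ⟪x, a⟫_ℝ = Real.cos r := by rw [← cos_ang hx1 ha1, hxa]
  have hxb' : ⟪x, b⟫_ℝ = Real.cos r := by rw [← cos_ang hx1 hb1, hxb]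
  rw [show a = Real.cos h • e + (-Real.sin h) • f by rw [hae]; module, hin] at hxa'
  rw [hbe, hin] at hxb'
  have hsφ : Real.sin φ = 0 := by
    have : Real.sin φ * Real.sin h = 0 := by linarith
    exact (mul_eq_zero.1 this).resolve_right hsh.ne'
  have hφ0 : φ = 0 := (Real.sin_eq_zero_iff_of_lt_of_lt (by linarith [hφ.1]) (by linarith [hφ.2])).1 hsφ
  have hxe : x = e := by rw [hxφ, hφ0]; simp
  have hhr : h = r := by
    rw [hφ0] at hxb'
    simp at hxb'
    exact Real.injOn_cos ⟨by linarith, by linarith⟩ ⟨hr.le, by linarith⟩ hxb'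
  rw [hhr, ← hxe] at hQ
  rw [← hxe] at hef
  have hsub : ∀ v ∈ KK E, ang x v ≤ r → ∃ t ∈ Icc (-r) r, v = gc x f t := hQ
  refine ⟨f, hx1, hf, hef, hsub, ?_⟩
  -- almost every radius contributes both points of the geodesic at that distance
  have hcl : IsClosed {t : ℝ | gc x f t ∈ KK E ∧ gc x f (-t) ∈ KK E} :=
    (hE.compactK.isClosed.preimage (continuous_gc x f)).inter
      (hE.compactK.isClosed.preimage ((continuous_gc x f).comp continuous_neg))
  have hae : ∀ᵐ t : ℝ, t ∈ Ioo 0 r → t ∈ {t : ℝ | gc x f t ∈ KK E ∧ gc x f (-t) ∈ KK E} := by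
    filter_upwards [goodRad_ae hE hx] with t ht htr
    obtain ⟨q', hg'⟩ := ht ⟨htr.1, by linarith [htr.2]⟩
    have hsubset : KK E ∩ {z | ang x z = t} ⊆ {gc x f t, gc x f (-t)} := by
      rintro z ⟨hz, hzt⟩
      have hzt' : ang x z = t := hzt
      obtain ⟨w, hw, rfl⟩ := hsub z hz (by rw [hzt']; exact htr.2.le)
      have h3 := ang_gc hx1 hf hef (s := 0) (t := w) (by
        rw [zero_sub, abs_neg]; exact (abs_le.2 hw).trans (by linarith))
      rw [gc_zero, hzt', zero_sub, abs_neg] at h3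
      rcases abs_choice w with h4 | h4
      · left; rw [h3, h4]
      · right; rw [h3, h4, neg_neg]; rfl
    have heq : KK E ∩ {z | ang x z = t} = {gc x f t, gc x f (-t)} :=
      eq_of_subset_of_ncard_le hsubset (((ncard_insert_le _ _).trans (by rw [ncard_singleton])).trans hg'.two)
        (Set.toFinite _)
    have m1 : gc x f t ∈ KK E ∩ {z | ang x z = t} := by rw [heq]; simp
    have m2 : gc x f (-t) ∈ KK E ∩ {z | ang x z = t} := by rw [heq]; simp
    exact ⟨m1.1, m2.1⟩
  have hIcc : Icc 0 r ⊆ {t : ℝ | gc x f t ∈ KK E ∧ gc x f (-t) ∈ KK E} := by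
    rw [← closure_Ioo hr.ne]
    refine closure_minimal (fun t ht => ?_) hcl
    by_contra hnt
    have hop : IsOpen (Ioo 0 r ∩ {t : ℝ | gc x f t ∈ KK E ∧ gc x f (-t) ∈ KK E}ᶜ) :=
      isOpen_Ioo.inter hcl.isOpen_compl
    have hpos := hop.measure_pos volume ⟨t, ht, hnt⟩
    refine hpos.ne' (measure_mono_null ?_ (ae_iff.1 hae))
    intro w hw hcon
    exact hw.2 (hcon hw.1)
  intro t ht
  rcases le_total 0 t with h0 | h0
  · exact (hIcc ⟨h0, ht.2⟩).1
  · have := (hIcc ⟨by linarith, by linarith [ht.1]⟩ : (-t) ∈ _).2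
    rwa [neg_neg] at this
end

/-! ### Singular points of the link: mass and separation -/

section
variable {n : ℕ} {E : Set (Euc n)}

/-- The singular points of the link: those near which it is not a geodesic arc. -/
def VV (E : Set (Euc n)) : Set (Euc n) := {x ∈ KK E | ¬∃ τ r, 0 < r ∧ RegAt E x τ r}

theorem three_of_sing (hE : IsMC n E) {x : Euc n} (hx : x ∈ VV E) {ρ q : ℝ} (h0 : 0 < ρ)
    (h1 : ρ ≤ 1 / 10000) (hg : GoodRad E x ρ q) : 3 ≤ (KK E ∩ {z | ang x z = ρ}).ncard := by
  by_contra hcon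
  have h2 := hg.two
  obtain ⟨τ, hτ⟩ := rigid hE hx.1 h0 h1 hg (by omega)
  exact hx.2 ⟨τ, ρ, h0, hτ⟩

theorem sing_lower (hE : IsMC n E) {x : Euc n} (hx : x ∈ VV E) {s : ℝ} (h0 : 0 < s)
    (h1 : s ≤ 1 / 10000) : 3 * s ≤ gm E x univ s := by
  have h := gm_lower hE (x := x) (U := univ) (k := 3) h0 (by
    filter_upwards [goodRad_ae hE hx.1] with ρ hρ hρ'
    obtain ⟨q, hq⟩ := hρ ⟨hρ'.1, by linarith [hρ'.2]⟩
    have hN : (3:ℝ) ≤ (KK E ∩ {z | ang x z = ρ}).ncard := by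
      exact_mod_cast three_of_sing hE hx hρ'.1 (by linarith [hρ'.2]) hq
    exact ⟨q, hq.der, hN.trans hq.le⟩)
  have : 0 ≤ gm E x univ 0 := measureReal_nonneg
  linarith

/-- Singular points have density at most `3 + ε` below a scale which depends only on the dimension,
on `ε` and on the total mass. -/
theorem sing_upper (n : ℕ) (Λ : ℝ) {ε : ℝ} (hε : 0 < ε) (hε1 : ε ≤ 1) : ∃ ρ₀ > 0, ρ₀ ≤ 1 / 10000 ∧
    ∀ E : Set (Euc n), IsMC n E → (lam E).real univ ≤ Λ → ∀ x ∈ VV E, ∀ s ∈ Ioc 0 ρ₀,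
      gm E x univ s ≤ (3 + ε) * s := by
  obtain ⟨M, hM, hgood⟩ := good_radius n Λ
  set r₂ := ε / (100000000 * (1 + M)) with hr₂
  have hr₂0 : 0 < r₂ := by positivity
  have hr₂' : r₂ * (1 + M) = ε / 100000000 := by rw [hr₂]; field_simp
  have hr₂1 : r₂ ≤ ε / 100000000 := by nlinarith
  obtain ⟨ρ₀, hρ₀, hmain⟩ := hgood r₂ hr₂0
  refine ⟨min ρ₀ (1 / 10000), lt_min hρ₀ (by norm_num), min_le_right _ _, ?_⟩
  intro E hE hΛ x hx s hs
  obtain ⟨ρ, hρ1, hρ2, q, hqM, hg, hN3⟩ := hmain E hE hΛ x hx.1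
  have hρ0 : 0 < ρ := hρ₀.trans_le hρ1
  have hst := star_plain hE (norm_of_mem_KK hx.1) hρ0 (by linarith) hg
  have hN : ((KK E ∩ {z | ang x z = ρ}).ncard : ℝ) ≤ 3 := by exact_mod_cast hN3
  set N : ℝ := ((KK E ∩ {z | ang x z = ρ}).ncard : ℝ)
  have hH0 := gm_pos hE hx.1 hρ0
  have hrat := gm_ratio hE hx.1 hs.1 (hs.2.trans ((min_le_left _ _).trans hρ1)) (by linarith)
  set H := gm E x univ ρ
  have hρε : ρ * (1 + M) ≤ ε / 100000000 := by
    rw [← hr₂']; exact mul_le_mul_of_nonneg_right hρ2 (by linarith)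
  have hH : H ≤ (3 + ε / 4) * ρ := by
    have e1 : H * (1 - 30000 * ρ) ≤ 3 * ρ + 600000 * ρ * (ρ * M) := by
      have a1 : ρ * N ≤ ρ * 3 := mul_le_mul_of_nonneg_left hN hρ0.le
      have a2 : ρ * ρ * q ≤ ρ * ρ * M := mul_le_mul_of_nonneg_left hqM (by positivity)
      nlinarith
    have e2 : 3 * ρ + 600000 * ρ * (ρ * M) ≤ (3 + ε / 4) * ρ * (1 - 30000 * ρ) := by
      have : 3 + 600000 * (ρ * M) ≤ (3 + ε / 4) * (1 - 30000 * ρ) := by nlinarith [mul_pos hρ0 hM]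
      nlinarith
    exact le_of_mul_le_mul_right (e1.trans e2) (by nlinarith)
  have hexp : Real.exp (1200000 * ρ) ≤ 1 + ε / 16 := by
    have h1 : 1200000 * ρ ≤ ε / 40 := by nlinarith
    have h2 := Real.exp_bound_div_one_sub_of_interval (x := 1200000 * ρ) (by positivity)
      (by linarith)
    refine h2.trans ?_
    rw [div_le_iff₀ (by linarith)]
    nlinarith
  have h3 : Real.exp (1200000 * ρ) * H ≤ (1 + ε / 16) * ((3 + ε / 4) * ρ) :=
    mul_le_mul hexp hH hH0.le (by linarith)
  have h4 : (1 + ε / 16) * ((3 + ε / 4) * ρ) ≤ (3 + ε) * ρ := by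
    have : (1 + ε / 16) * (3 + ε / 4) ≤ 3 + ε := by nlinarith
    nlinarith
  have h5 : gm E x univ s * ρ ≤ ((3 + ε) * s) * ρ := by
    refine hrat.trans ?_
    calc Real.exp (1200000 * ρ) * H * s ≤ (3 + ε) * ρ * s :=
          mul_le_mul_of_nonneg_right (h3.trans h4) hs.1.le
      _ = _ := by ring
  exact le_of_mul_le_mul_right h5 hρ0

/-- At a good radius about a singular point, either the mass of the ball grows at rate at least four
or any two points of the link on the sphere are seen from `x` at an angle of at least `90°`. -/
theorem sing_dicho (hE : IsMC n E) {x : Euc n} (hx : x ∈ VV E) {ρ q : ℝ} (h0 : 0 < ρ)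
    (h1 : ρ ≤ 1 / 10000000000) (hg : GoodRad E x ρ q) (hup : gm E x univ ρ ≤ 4 * ρ) : 4 ≤ q ∨
      ∀ a ∈ KK E ∩ {z | ang x z = ρ}, ∀ b ∈ KK E ∩ {z | ang x z = ρ}, a ≠ b →
        2 * (2 * Real.sin (ρ / 2)) ^ 2 ≤ ‖a - b‖ ^ 2 := by
  by_contra! hcon
  obtain ⟨hq4, a, ha, b, hb, hab, hlt⟩ := hcon
  have hx1 := norm_of_mem_KK hx.1
  have hN4 : ((KK E ∩ {z | ang x z = ρ}).ncard : ℝ) < 4 := lt_of_le_of_lt hg.le hq4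
  have hN3 : (KK E ∩ {z | ang x z = ρ}).ncard ≤ 3 := by
    have : (KK E ∩ {z | ang x z = ρ}).ncard < 4 := by exact_mod_cast hN4
    omega
  have hN : ((KK E ∩ {z | ang x z = ρ}).ncard : ℝ) ≤ 3 := by exact_mod_cast hN3
  have hin : -(2 * Real.sin (ρ / 2)) ^ 2 / 3 ≤ ⟪a - x, b - x⟫_ℝ := by
    have e : a - b = (a - x) - (b - x) := by abel
    rw [e, norm_sub_sq_real, chord_mem hx1 a ha, chord_mem hx1 b hb] at hlt
    nlinarith [sq_nonneg (2 * Real.sin (ρ / 2))]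
  have hs := star_save hE hx1 h0 (by linarith) hg ha hb hab hin
  have hl := sing_lower hE hx h0 (by linarith)
  set N : ℝ := ((KK E ∩ {z | ang x z = ρ}).ncard : ℝ)
  set H := gm E x univ ρ
  have a1 : ρ * (N - 1 / 400) ≤ ρ * (3 - 1 / 400) := mul_le_mul_of_nonneg_left (by linarith) h0.le
  have a2 : 30000 * ρ * (H + 20 * ρ * q) ≤ 30000 * ρ * (84 * ρ) :=
    mul_le_mul_of_nonneg_left (by nlinarith) (by positivity)
  nlinarith

theorem lam_real_inter_K (hE : IsMC n E) (A : Set (Euc n)) :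
    (lam E).real (A ∩ KK E) = (lam E).real A := by
  rw [measureReal_def, measureReal_def, inter_comm, lam_inter_K hE]

/-- Singular points are uniformly separated. -/
theorem sing_sep (n : ℕ) (Λ : ℝ) : ∃ ρ₀ > 0, ∀ E : Set (Euc n), IsMC n E → (lam E).real univ ≤ Λ →
    ∀ x ∈ VV E, ∀ y ∈ VV E, x ≠ y → ρ₀ ≤ ang x y := by
  obtain ⟨ρ₁, hρ₁, hρ₁', hup⟩ := sing_upper n Λ (ε := 1 / 100) (by norm_num) (by norm_num)
  refine ⟨min ρ₁ (1 / 10000000000) / 2, by positivity, ?_⟩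
  intro E hE hΛ x hx y hy hxy
  by_contra! hcon
  have hfin := lam_finite hE
  have hx1 := norm_of_mem_KK hx.1
  have hy1 := norm_of_mem_KK hy.1
  have ht0 := ang_pos hx1 hy1 hxy
  set t := ang x y with ht
  have htm : 2 * t < min ρ₁ (1 / 10000000000) := by linarith
  have ht1 : 2 * t < ρ₁ := htm.trans_le (min_le_left _ _)
  have ht2 : 2 * t < 1 / 10000000000 := htm.trans_le (min_le_right _ _)
  have hupx := hup E hE hΛ x hx
  set W : Set (Euc n) := {z | t / 10 < ang y z} with hW
  have hWo : IsOpen W := isOpen_lt continuous_const (continuous_ang y)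
  have hlt : 9 / 10 * t < 11 / 10 * t := by linarith
  set F : ℝ → ℝ := fun ρ => gm E x W ρ + 2 * gm E x univ ρ with hF
  have hFm : Monotone F := fun s s' hs =>
    add_le_add (gm_mono hE x W hs) (mul_le_mul_of_nonneg_left (gm_mono hE x univ hs) (by norm_num))
  have key := mono_integral hFm hlt (c := fun _ => 8) (integrableOn_const (by simp)) (by
    filter_upwards [goodRad_ae hE hx.1, count_ae hE hx1 hWo] with ρ hρ hρW hρ'
    have hρ0 : 0 < ρ := by linarith [hρ'.1]
    obtain ⟨q, hg⟩ := hρ ⟨hρ0, by linarith [hρ'.2]⟩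
    obtain ⟨q', hd', hfin', hle'⟩ := hρW
    have hder : HasDerivAt F (q' + 2 * q) ρ := hd'.add (hg.der.const_mul 2)
    rw [hder.deriv]
    have hq0 := deriv_nonneg_gm hE hd'
    rcases sing_dicho hE hx hρ0 (by linarith [hρ'.2]) hg (by
      have := hupx ρ ⟨hρ0, by linarith [hρ'.2]⟩
      linarith) with h4 | hwide
    · show 8 ≤ q' + 2 * q
      linarith
    · have h3 := three_of_sing hE hx hρ0 (by linarith [hρ'.2]) hg
      obtain ⟨hb1, hb2⟩ := chord_bounds hρ0 (by linarith [hρ'.2])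
      have hq3 : (3:ℝ) ≤ q := le_trans (by exact_mod_cast h3) hg.le
      -- at most one of the three points lies near `y`
      have hnear : ((KK E ∩ {z | ang x z = ρ}) ∩ Wᶜ).ncard ≤ 1 := by
        rw [ncard_le_one (hg.fin.subset inter_subset_left)]
        intro a ha b hb
        by_contra hab
        have hw := hwide a ha.1 b hb.1 hab
        have ha2 : ang y a ≤ t / 10 := not_lt.1 ha.2
        have hb2 : ang y b ≤ t / 10 := not_lt.1 hb.2
        have ha1 := norm_of_mem_KK ha.1.1
        have hb1' := norm_of_mem_KK hb.1.1
        have h5 := norm_sub_le_ang ha1 hb1'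
        have h6 := ang_triangle ha1 hy1 hb1'
        rw [ang_comm a y] at h6
        have h7 : ‖a - b‖ ≤ t / 5 := by linarith
        have h8 : 9 / 20 * t ≤ 2 * Real.sin (ρ / 2) := by linarith [hρ'.1]
        have h9 : (9 / 20 * t) ^ 2 ≤ (2 * Real.sin (ρ / 2)) ^ 2 :=
          pow_le_pow_left₀ (by positivity) h8 2
        have h10 : ‖a - b‖ ^ 2 ≤ (t / 5) ^ 2 := pow_le_pow_left₀ (norm_nonneg _) h7 2
        nlinarith
      have hsplit : (KK E ∩ {z | ang x z = ρ}).ncard ≤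
          (KK E ∩ W ∩ {z | ang x z = ρ}).ncard + ((KK E ∩ {z | ang x z = ρ}) ∩ Wᶜ).ncard := by
        refine (ncard_le_ncard ?_ (hfin'.union (hg.fin.subset inter_subset_left))).trans
          (ncard_union_le _ _)
        intro z hz
        by_cases hzW : z ∈ W
        · left; exact ⟨⟨hz.1, hzW⟩, hz.2⟩
        · right; exact ⟨hz, hzW⟩
      have h2 : 2 ≤ (KK E ∩ W ∩ {z | ang x z = ρ}).ncard := by omega
      have : (2:ℝ) ≤ q' := le_trans (by exact_mod_cast h2) hle'
      show 8 ≤ q' + 2 * q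
      linarith)
  rw [setIntegral_const, Real.volume_real_Ioo_of_le hlt.le, smul_eq_mul] at key
  simp only [hF] at key
  have u1 := hupx (11 / 10 * t) ⟨by linarith, by linarith⟩
  have l1 := sing_lower hE hx (s := 9 / 10 * t) (by linarith) (by linarith)
  have ly := sing_lower hE hy (s := t / 10) (by linarith) (by linarith)
  have hmass : gm E x W (11 / 10 * t) - gm E x W (9 / 10 * t) + gm E y univ (t / 10) ≤
      gm E x univ (11 / 10 * t) - gm E x univ (9 / 10 * t) := by
    rw [gm_sub hE x W hlt.le, gm_sub hE x univ hlt.le, gm, univ_inter, univ_inter,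
      ← lam_real_inter_K hE {z | ang y z < t / 10}, ← measureReal_union]
    · refine measureReal_mono ?_ (measure_ne_top _ _)
      rintro z (hz | hz)
      · exact hz.2
      · have hz1 := norm_of_mem_KK hz.2
        have hz2 : ang y z < t / 10 := hz.1
        have h5 := ang_triangle hx1 hy1 hz1
        have h6 := ang_triangle hx1 hz1 hy1
        rw [ang_comm z y] at h6
        exact ⟨by linarith, by linarith⟩
    · rw [disjoint_left]
      rintro z hz hz'
      have h5 : t / 10 < ang y z := hz.1
      have h6 : ang y z < t / 10 := hz'.1
      linarith
    · exact (measurableSet_ang_lt y _).inter (measurableSet_KK hE)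
  linarith
end

/-! ### Following geodesics inside the link -/

section
variable {n : ℕ} {E : Set (Euc n)}

/-- The unit tangent of `gc x τ` at parameter `t`. -/
def gd (x τ : Euc n) (t : ℝ) : Euc n := gc x τ (t + Real.pi / 2)

theorem gd_eq (x τ : Euc n) (t : ℝ) : gd x τ t = -Real.sin t • x + Real.cos t • τ := by
  simp [gd, gc, Real.cos_add_pi_div_two, Real.sin_add_pi_div_two]

theorem gd_zero (x τ : Euc n) : gd x τ 0 = τ := by simp [gd_eq]

theorem gc_add (x τ : Euc n) (s t : ℝ) : gc (gc x τ s) (gd x τ s) t = gc x τ (s + t) := by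
  rw [gd_eq]
  simp only [gc, Real.cos_add, Real.sin_add]
  module

theorem gd_add (x τ : Euc n) (s t : ℝ) : gd (gc x τ s) (gd x τ s) t = gd x τ (s + t) := by
  rw [gd, gc_add, gd, add_assoc]

theorem gc_neg (x τ : Euc n) (t : ℝ) : gc x (-τ) t = gc x τ (-t) := by
  simp [gc]

theorem gd_neg (x τ : Euc n) (t : ℝ) : gd x (-τ) t = -gd x τ (-t) := by
  simp only [gd_eq, Real.sin_neg, Real.cos_neg]
  module

theorem gc_two_pi (x τ : Euc n) (t : ℝ) : gc x τ (t + 2 * Real.pi) = gc x τ t := by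
  simp [gc]

theorem inner_gc_gd {x τ : Euc n} (hx : ‖x‖ = 1) (hτ : ‖τ‖ = 1) (h : ⟪x, τ⟫_ℝ = 0) (t : ℝ) :
    ⟪gc x τ t, gd x τ t⟫_ℝ = 0 := by
  rw [gd, inner_gc hx hτ h]
  simp [sub_add_cancel_left]

theorem norm_gd {x τ : Euc n} (hx : ‖x‖ = 1) (hτ : ‖τ‖ = 1) (h : ⟪x, τ⟫_ℝ = 0) (t : ℝ) :
    ‖gd x τ t‖ = 1 := norm_gc hx hτ h _

/-- Near the regular point `p`, the link is a geodesic arc with tangent `±σ`. -/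
def Tan (E : Set (Euc n)) (p σ : Euc n) : Prop := ∃ r, 0 < r ∧ RegAt E p σ r

theorem Tan.neg {p σ : Euc n} (h : Tan E p σ) : Tan E p (-σ) := by
  obtain ⟨r, hr, h⟩ := h
  refine ⟨r, hr, h.nx, by rw [norm_neg, h.nt], by rw [inner_neg_right, h.orth, neg_zero],
    fun v hv hvr => ?_, fun t ht => ?_⟩
  · obtain ⟨t, ht, rfl⟩ := h.sub v hv hvr
    exact ⟨-t, ⟨by linarith [ht.2], by linarith [ht.1]⟩, by rw [gc_neg, neg_neg]⟩
  · rw [gc_neg]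
    exact h.mem _ ⟨by linarith [ht.2], by linarith [ht.1]⟩

theorem Tan.nx {p σ : Euc n} (h : Tan E p σ) : ‖p‖ = 1 := h.choose_spec.2.nx
theorem Tan.nt {p σ : Euc n} (h : Tan E p σ) : ‖σ‖ = 1 := h.choose_spec.2.nt
theorem Tan.orth {p σ : Euc n} (h : Tan E p σ) : ⟪p, σ⟫_ℝ = 0 := h.choose_spec.2.orth

theorem Tan.mem {p σ : Euc n} (h : Tan E p σ) : p ∈ KK E := by
  obtain ⟨r, hr, h⟩ := h
  have := h.mem 0 ⟨by linarith, hr.le⟩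
  rwa [gc_zero] at this

theorem exists_tan {p : Euc n} (hp : p ∈ KK E) (hV : p ∉ VV E) : ∃ τ, Tan E p τ := by
  by_contra! hcon
  refine hV ⟨hp, ?_⟩
  rintro ⟨τ, r, hr, h⟩
  exact hcon τ ⟨r, hr, h⟩

theorem tan_cases {p τ σ : Euc n} {r s : ℝ} (h : RegAt E p τ r) (hσ : ‖σ‖ = 1)
    (hp : ⟪p, σ⟫_ℝ = 0) (hs : 0 < s) (hsr : s ≤ r) (hsπ : s < Real.pi) (hm : gc p σ s ∈ KK E) :
    σ = τ ∨ σ = -τ := by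
  have ha := ang_gc h.nx hσ hp (s := 0) (t := s) (by
    rw [zero_sub, abs_neg, abs_of_pos hs]; exact hsπ.le)
  rw [gc_zero, zero_sub, abs_neg, abs_of_pos hs] at ha
  obtain ⟨t, -, ht⟩ := h.sub _ hm (by rw [ha]; exact hsr)
  have h1 := inner_gc h.nx hσ hp 0 s
  have h2 := inner_gc h.nx h.nt h.orth 0 t
  rw [gc_zero] at h1 h2
  rw [← ht, h1, zero_sub, zero_sub, Real.cos_neg, Real.cos_neg] at h2
  have hsin : 0 < Real.sin s := Real.sin_pos_of_pos_of_lt_pi hs hsπ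
  have h3 : Real.sin s • σ = Real.sin t • τ := by
    rw [gc, gc, h2] at ht
    exact add_left_cancel ht
  have h4 : Real.sin t ^ 2 = Real.sin s ^ 2 := by rw [Real.sin_sq, Real.sin_sq, h2]
  rcases sq_eq_sq_iff_eq_or_eq_neg.1 h4 with h5 | h5
  · left
    rw [h5] at h3
    exact smul_right_injective _ hsin.ne' h3
  · right
    rw [h5] at h3
    refine smul_right_injective _ hsin.ne' ?_
    show Real.sin s • σ = Real.sin s • -τ
    rw [h3, smul_neg, neg_smul]

theorem Tan.of_small {p τ σ : Euc n} (h : Tan E p τ) (hσ : ‖σ‖ = 1) (hp : ⟪p, σ⟫_ℝ = 0)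
    {δ : ℝ} (hδ : 0 < δ) (hm : ∀ s ∈ Ioc 0 δ, gc p σ s ∈ KK E) : Tan E p σ := by
  obtain ⟨r, hr, h'⟩ := h
  have hs : 0 < min δ (min r 1) := lt_min hδ (lt_min hr one_pos)
  rcases tan_cases h' hσ hp hs ((min_le_right _ _).trans (min_le_left _ _))
    (((min_le_right _ _).trans (min_le_right _ _)).trans_lt (by linarith [Real.pi_gt_three]))
    (hm _ ⟨hs, min_le_left _ _⟩) with rfl | rfl
  · exact ⟨r, hr, h'⟩
  · exact Tan.neg ⟨r, hr, h'⟩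

theorem Tan.unique {p τ σ : Euc n} (h : Tan E p τ) (h' : Tan E p σ) : σ = τ ∨ σ = -τ := by
  obtain ⟨r, hr, h1⟩ := h
  obtain ⟨r', hr', h2⟩ := h'
  have hs : 0 < min r' (min r 1) := lt_min hr' (lt_min hr one_pos)
  exact tan_cases h1 h2.nt h2.orth hs ((min_le_right _ _).trans (min_le_left _ _))
    (((min_le_right _ _).trans (min_le_right _ _)).trans_lt (by linarith [Real.pi_gt_three]))
    (h2.mem _ ⟨by linarith, min_le_left _ _⟩)

theorem tan_along {y τ : Euc n} {t : ℝ} (h0 : 0 ≤ t) (hy : ‖y‖ = 1) (hτ : ‖τ‖ = 1)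
    (ho : ⟪y, τ⟫_ℝ = 0) (hini : t = 0 → Tan E y τ)
    (hsub : ∀ u ∈ Icc 0 t, gc y τ u ∈ KK E) (hV : gc y τ t ∉ VV E) :
    Tan E (gc y τ t) (gd y τ t) := by
  rcases h0.eq_or_lt with rfl | h0
  · rw [gc_zero, gd_zero]; exact hini rfl
  · obtain ⟨σ, hσ⟩ := exists_tan (hsub t ⟨h0.le, le_rfl⟩) hV
    have h1 : Tan E (gc y τ t) (-gd y τ t) := by
      refine hσ.of_small (by rw [norm_neg]; exact norm_gd hy hτ ho t)
        (by rw [inner_neg_right, inner_gc_gd hy hτ ho, neg_zero]) h0 fun s hs => ?_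
      rw [gc_neg, gc_add]
      exact hsub _ ⟨by linarith [hs.2], by linarith [hs.1]⟩
    have := h1.neg
    rwa [neg_neg] at this

/-- A geodesic starting tangentially to the link stays in the link until it meets a singular
point. -/
theorem continuation (hE : IsMC n E) {y τ : Euc n} (hy : ‖y‖ = 1) (hτ : ‖τ‖ = 1)
    (ho : ⟪y, τ⟫_ℝ = 0) {a T : ℝ} (ha : 0 ≤ a) (hini : a = 0 → Tan E y τ)
    (hsub : ∀ u ∈ Icc 0 a, gc y τ u ∈ KK E)
    (hV : ∀ t ∈ Ico a T, gc y τ t ∈ KK E → gc y τ t ∉ VV E) :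
    ∀ t ∈ Icc 0 T, gc y τ t ∈ KK E := by
  have hcl : IsClosed {t | gc y τ t ∈ KK E} := hE.compactK.isClosed.preimage (continuous_gc y τ)
  have key : Icc a T ⊆ {t | gc y τ t ∈ KK E} := by
    refine IsClosed.Icc_subset_of_forall_mem_nhdsGT_of_Icc_subset (hcl.inter isClosed_Icc)
      (hsub a ⟨ha, le_rfl⟩) fun t ht hIcc => ?_
    have htan : Tan E (gc y τ t) (gd y τ t) := by
      refine tan_along (ha.trans ht.1) hy hτ ho (fun h => hini (le_antisymm (h ▸ ht.1) ha)) ?_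
        (hV t ht (hIcc ⟨ht.1, le_rfl⟩))
      intro u hu
      rcases le_total u a with h | h
      · exact hsub u ⟨hu.1, h⟩
      · exact hIcc ⟨h, hu.2⟩
    obtain ⟨r, hr, hreg⟩ := htan
    refine mem_nhdsGT_iff_exists_Ioc_subset.2 ⟨t + r, by simpa using hr, fun u hu => ?_⟩
    have := hreg.mem (u - t) ⟨by linarith [hu.1], by linarith [hu.2]⟩
    rw [gc_add, add_sub_cancel] at this
    exact this
  intro t ht
  rcases le_total t a with h | h
  · exact hsub t ⟨ht.1, h⟩
  · exact key ⟨h, ht.2⟩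

end

/-! ### The link near a singular point -/

section
variable {n : ℕ} {E : Set (Euc n)}

/-- Pairs `(y, σ)` with `y` on the sphere of radius `ρ` about `x` in the link, and `σ` a tangent
of the link at `y` which does not point towards `x`. -/
def Outw (E : Set (Euc n)) (x : Euc n) (ρ : ℝ) : Set (Euc n × Euc n) :=
  {p | Tan E p.1 p.2 ∧ ang x p.1 = ρ ∧ ⟪x, p.2⟫_ℝ ≤ 0}

theorem inner_x_gc (x y σ : Euc n) (t : ℝ) :
    ⟪x, gc y σ t⟫_ℝ = Real.cos t * ⟪x, y⟫_ℝ + Real.sin t * ⟪x, σ⟫_ℝ := by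
  rw [gc, inner_add_right, inner_smul_right, inner_smul_right]

theorem inner_x_gd (x y σ : Euc n) (t : ℝ) :
    ⟪x, gd y σ t⟫_ℝ = -Real.sin t * ⟪x, y⟫_ℝ + Real.cos t * ⟪x, σ⟫_ℝ := by
  rw [gd_eq, inner_add_right, inner_smul_right, inner_smul_right]

theorem outward_anti {x y σ : Euc n} (hC : 0 < ⟪x, y⟫_ℝ) (hS : ⟪x, σ⟫_ℝ ≤ 0) {s t : ℝ} (hs : 0 ≤ s)
    (hst : s < t) (ht : t ≤ Real.pi / 2) : ⟪x, gc y σ t⟫_ℝ < ⟪x, gc y σ s⟫_ℝ := by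
  have hpi := Real.pi_pos
  have h1 : Real.cos t < Real.cos s := Real.cos_lt_cos_of_nonneg_of_le_pi hs (by linarith) hst
  have h2 : Real.sin s < Real.sin t :=
    Real.sin_lt_sin_of_lt_of_le_pi_div_two (by linarith) ht hst
  rw [inner_x_gc, inner_x_gc]
  nlinarith

theorem ang_lt_iff {x y : Euc n} (hx : ‖x‖ = 1) (hy : ‖y‖ = 1) {ρ : ℝ} (h0 : 0 ≤ ρ)
    (h1 : ρ ≤ Real.pi) : ang x y < ρ ↔ Real.cos ρ < ⟪x, y⟫_ℝ := by
  rw [← cos_ang hx hy]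
  exact (Real.strictAntiOn_cos.lt_iff_gt ⟨h0, h1⟩ ⟨ang_nonneg _ _, ang_le_pi _ _⟩).symm

/-- An outgoing geodesic of the link moves away from `x` and crosses every larger sphere, as long as
no singular points are met. -/
theorem exit_pt (hE : IsMC n E) {x : Euc n} (hx : ‖x‖ = 1) {ρ ρ' ρ₀ : ℝ} (h0 : 0 < ρ)
    (h1 : ρ < ρ') (h2 : ρ' < ρ₀) (h3 : ρ₀ ≤ 1)
    (hreg : ∀ z ∈ KK E, 0 < ang x z → ang x z < ρ₀ → z ∉ VV E) {p : Euc n × Euc n}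
    (hp : p ∈ Outw E x ρ) : ∃ T ∈ Ioo 0 (Real.pi / 2), ang x (gc p.1 p.2 T) = ρ' ∧
      Tan E (gc p.1 p.2 T) (gd p.1 p.2 T) ∧ ⟪x, gd p.1 p.2 T⟫_ℝ < 0 := by
  obtain ⟨y, σ⟩ := p
  obtain ⟨ht, hy, hS⟩ := hp
  simp only at ht hy hS ⊢
  have hpi := Real.pi_gt_three
  have hy1 := ht.nx
  have hc : ∀ t, ‖gc y σ t‖ = 1 := norm_gc ht.nx ht.nt ht.orth
  have hC : ⟪x, y⟫_ℝ = Real.cos ρ := by rw [← cos_ang hx hy1, hy]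
  have hCpos : 0 < ⟪x, y⟫_ℝ := by
    rw [hC]; exact Real.cos_pos_of_mem_Ioo ⟨by linarith, by linarith⟩
  have hρ'pos : 0 < Real.cos ρ' := Real.cos_pos_of_mem_Ioo ⟨by linarith, by linarith⟩
  have hcont : Continuous fun t => ⟪x, gc y σ t⟫_ℝ := continuous_const.inner (continuous_gc y σ)
  have hivt := intermediate_value_Icc' (a := 0) (b := Real.pi / 2) (by linarith)
    hcont.continuousOn
  have hg0 : ⟪x, gc y σ 0⟫_ℝ = Real.cos ρ := by rw [gc_zero, hC]
  have hg1 : ⟪x, gc y σ (Real.pi / 2)⟫_ℝ = ⟪x, σ⟫_ℝ := by rw [inner_x_gc]; simp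
  have hlt : Real.cos ρ' < Real.cos ρ :=
    Real.cos_lt_cos_of_nonneg_of_le_pi h0.le (by linarith) h1
  obtain ⟨T, hT, hTe⟩ := hivt (show Real.cos ρ' ∈ _ from
    ⟨by simp only [hg1]; linarith, by simp only [hg0]; exact hlt.le⟩)
  simp only at hTe
  have hT0 : 0 < T := by
    refine lt_of_le_of_ne hT.1 fun h => ?_
    rw [← h, hg0] at hTe; linarith
  have hT1 : T < Real.pi / 2 := by
    refine lt_of_le_of_ne hT.2 fun h => ?_
    rw [h, hg1] at hTe; linarith
  have hang : ang x (gc y σ T) = ρ' := by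
    rw [ang, hTe, Real.arccos_cos (by linarith) (by linarith)]
  have hV : ∀ t ∈ Icc 0 T, gc y σ t ∈ KK E → gc y σ t ∉ VV E := by
    intro t ht' hm
    refine hreg _ hm (ang_pos hx (hc t) fun h => ?_) ?_
    · have : ⟪x, gc y σ t⟫_ℝ ≤ Real.cos ρ := by
        rcases ht'.1.eq_or_lt with h' | h'
        · rw [← h', hg0]
        · rw [← hg0]; exact (outward_anti hCpos hS le_rfl h' (ht'.2.trans hT.2)).le
      rw [← h, real_inner_self_eq_norm_sq, hx] at this
      have h5 := Real.cos_lt_cos_of_nonneg_of_le_pi le_rfl (by linarith) h0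
      rw [Real.cos_zero] at h5
      linarith
    · rw [ang_lt_iff hx (hc t) (by linarith) (by linarith)]
      have h5 : Real.cos ρ₀ < Real.cos ρ' :=
        Real.cos_lt_cos_of_nonneg_of_le_pi (by linarith) (by linarith) h2
      rcases ht'.2.eq_or_lt with h' | h'
      · rw [h', hTe]; exact h5
      · have := outward_anti hCpos hS ht'.1 h' hT.2
        linarith
  have hmem := continuation hE ht.nx ht.nt ht.orth le_rfl (T := T) (fun _ => ht)
    (fun u hu => by
      rw [le_antisymm hu.2 hu.1, gc_zero]; exact ht.mem)
    (fun t ht' => hV t ⟨ht'.1, ht'.2.le⟩)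
  refine ⟨T, ⟨hT0, hT1⟩, hang, tan_along hT0.le ht.nx ht.nt ht.orth (fun _ => ht) hmem
    (hV T ⟨hT0.le, le_rfl⟩ (hmem T ⟨hT0.le, le_rfl⟩)), ?_⟩
  rw [inner_x_gd]
  have s1 : 0 < Real.sin T := Real.sin_pos_of_pos_of_lt_pi hT0 (by linarith)
  have s2 : 0 < Real.cos T := Real.cos_pos_of_mem_Ioo ⟨by linarith, by linarith⟩
  nlinarith

/-- Outgoing geodesics from one sphere about `x` reach a larger sphere in distinct points. -/
theorem exit_inj (hE : IsMC n E) {x : Euc n} (hx : ‖x‖ = 1) {ρ ρ' ρ₀ : ℝ} (h0 : 0 < ρ)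
    (h1 : ρ < ρ') (h2 : ρ' < ρ₀) (h3 : ρ₀ ≤ 1)
    (hreg : ∀ z ∈ KK E, 0 < ang x z → ang x z < ρ₀ → z ∉ VV E)
    (hfin : (KK E ∩ {z | ang x z = ρ'}).Finite) :
    (Outw E x ρ).Finite ∧ (Outw E x ρ).ncard ≤ (KK E ∩ {z | ang x z = ρ'}).ncard := by
  have hpi := Real.pi_gt_three
  have hex : ∀ p : Euc n × Euc n, ∃ T, p ∈ Outw E x ρ → T ∈ Ioo 0 (Real.pi / 2) ∧
      ang x (gc p.1 p.2 T) = ρ' ∧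
      Tan E (gc p.1 p.2 T) (gd p.1 p.2 T) ∧ ⟪x, gd p.1 p.2 T⟫_ℝ < 0 := by
    intro p
    by_cases hp : p ∈ Outw E x ρ
    · obtain ⟨T, hT, hT'⟩ := exit_pt hE hx h0 h1 h2 h3 hreg hp
      exact ⟨T, fun _ => ⟨hT, hT'⟩⟩
    · exact ⟨0, fun h => absurd h hp⟩
  choose T hT using hex
  have hmaps : MapsTo (fun p => gc p.1 p.2 (T p)) (Outw E x ρ) (KK E ∩ {z | ang x z = ρ'}) :=
    fun p hp => ⟨(hT p hp).2.2.1.mem, (hT p hp).2.1⟩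
  have hinj : InjOn (fun p : Euc n × Euc n => gc p.1 p.2 (T p)) (Outw E x ρ) := by
    -- two outgoing geodesics with a common exit point are parts of the same geodesic
    have key : ∀ p ∈ Outw E x ρ, ∀ p' ∈ Outw E x ρ,
        gc p.1 p.2 (T p) = gc p'.1 p'.2 (T p') → T p ≤ T p' → p = p' := by
      intro p hp p' hp' heq hle
      obtain ⟨hT1, -, ht, hs⟩ := hT p hp
      obtain ⟨hT1', -, ht', hs'⟩ := hT p' hp'
      have hw : gd p.1 p.2 (T p) = gd p'.1 p'.2 (T p') := by
        rw [heq] at ht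
        rcases ht'.unique ht with h | h
        · exact h
        · rw [h, inner_neg_right] at hs; linarith
      have e1 : p.1 = gc p'.1 p'.2 (T p' - T p) := by
        have := gc_add p.1 p.2 (T p) (-T p)
        rw [add_neg_cancel, gc_zero, heq, hw, gc_add] at this
        rw [← this, sub_eq_add_neg]
      have e2 : p.2 = gd p'.1 p'.2 (T p' - T p) := by
        have := gd_add p.1 p.2 (T p) (-T p)
        rw [add_neg_cancel, gd_zero, heq, hw, gd_add] at this
        rw [← this, sub_eq_add_neg]
      have hC : ∀ q ∈ Outw E x ρ, ⟪x, q.1⟫_ℝ = Real.cos ρ := fun q hq => by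
        rw [← cos_ang hx hq.1.nx, hq.2.1]
      have hTT : T p' - T p = 0 := by
        by_contra hne
        have hpos : 0 < T p' - T p := lt_of_le_of_ne (by linarith) (Ne.symm hne)
        have := outward_anti (x := x) (y := p'.1) (σ := p'.2) (by
          rw [hC p' hp']; exact Real.cos_pos_of_mem_Ioo ⟨by linarith, by linarith⟩) hp'.2.2
          le_rfl hpos (by linarith [hT1.1, hT1'.2])
        rw [← e1, gc_zero, hC p hp, hC p' hp'] at this
        exact lt_irrefl _ this
      rw [hTT, gc_zero] at e1
      rw [hTT, gd_zero] at e2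
      exact Prod.ext e1 e2
    intro p hp p' hp' heq
    rcases le_total (T p) (T p') with h | h
    · exact key p hp p' hp' heq h
    · exact (key p' hp' p hp heq.symm h).symm
  exact ⟨Finite.of_injOn hmaps hinj hfin, ncard_le_ncard_of_injOn _ hmaps hinj hfin⟩

/-- The points of the link on a sphere are at most as many as the outgoing directions, and strictly
fewer if the link is somewhere tangent to the sphere: a tangency has two outgoing directions. -/
theorem outw_count {x : Euc n} {ρ ρ₀ : ℝ} (h0 : 0 < ρ)
    (h2 : ρ < ρ₀) (hreg : ∀ z ∈ KK E, 0 < ang x z → ang x z < ρ₀ → z ∉ VV E)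
    (hfin : (Outw E x ρ).Finite) :
    (KK E ∩ {z | ang x z = ρ}).Finite ∧
    (KK E ∩ {z | ang x z = ρ}).ncard ≤ (Outw E x ρ).ncard ∧
    ((∃ y σ, Tan E y σ ∧ ang x y = ρ ∧ ⟪x, σ⟫_ℝ = 0) →
      (KK E ∩ {z | ang x z = ρ}).ncard < (Outw E x ρ).ncard) := by
  have hex : ∀ y : Euc n, ∃ σ, y ∈ KK E ∩ {z | ang x z = ρ} → (y, σ) ∈ Outw E x ρ := by
    intro y
    by_cases hy : y ∈ KK E ∩ {z | ang x z = ρ}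
    · have hy2 : ang x y = ρ := hy.2
      obtain ⟨σ, hσ⟩ := exists_tan hy.1 (hreg y hy.1 (by rw [hy2]; exact h0) (by rw [hy2]; exact h2))
      rcases le_total ⟪x, σ⟫_ℝ 0 with h | h
      · exact ⟨σ, fun _ => ⟨hσ, hy2, h⟩⟩
      · exact ⟨-σ, fun _ => ⟨hσ.neg, hy2, by rw [inner_neg_right]; linarith⟩⟩
    · exact ⟨0, fun h => absurd h hy⟩
  choose s hs using hex
  have hmaps : MapsTo (fun y => (y, s y)) (KK E ∩ {z | ang x z = ρ}) (Outw E x ρ) := fun y hy => hs y hy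
  have hinj : InjOn (fun y => (y, s y)) (KK E ∩ {z | ang x z = ρ}) := fun y _ y' _ h =>
    (Prod.ext_iff.1 h).1
  refine ⟨Finite.of_injOn hmaps hinj hfin, ncard_le_ncard_of_injOn _ hmaps hinj hfin, ?_⟩
  rintro ⟨y, σ, ht, hy, hσ⟩
  have hyS : y ∈ KK E ∩ {z | ang x z = ρ} := ⟨ht.mem, hy⟩
  have hnot : -s y ≠ s y := by
    intro h
    have h1 := (hs y hyS).1.nt
    have h2 : (2:ℝ) • s y = 0 := by rw [two_smul]; nth_rewrite 1 [← h]; simp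
    have h3 : s y = 0 := (smul_eq_zero.1 h2).resolve_left (by norm_num)
    simp only at h1
    rw [h3, norm_zero] at h1
    exact zero_ne_one h1
  have hin0 : ⟪x, s y⟫_ℝ = 0 := by
    rcases ht.unique (hs y hyS).1 with h | h
    · have h' : s y = σ := h
      rw [h', hσ]
    · have h' : s y = -σ := h
      rw [h', inner_neg_right, hσ, neg_zero]
  have hm : (y, -s y) ∈ Outw E x ρ :=
    ⟨(hs y hyS).1.neg, hy, by show ⟪x, -s y⟫_ℝ ≤ 0; rw [inner_neg_right, hin0, neg_zero]⟩
  rw [← hinj.ncard_image]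
  refine ncard_lt_ncard (ssubset_iff_subset_ne.2 ⟨hmaps.image_subset, fun h => ?_⟩) hfin
  rw [← h] at hm
  obtain ⟨y', -, hy'⟩ := hm
  simp only [Prod.mk.injEq] at hy'
  obtain ⟨rfl, h⟩ := hy'
  exact hnot h.symm

/-- If the link is nowhere tangent to spheres about `x`, then it consists of radial geodesics. -/
theorem radial (hE : IsMC n E) {x : Euc n} (hx : ‖x‖ = 1) {ρ₀ : ℝ} (h3 : ρ₀ ≤ 1)
    (hreg : ∀ z ∈ KK E, 0 < ang x z → ang x z < ρ₀ → z ∉ VV E)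
    (hnt : ∀ y σ, Tan E y σ → 0 < ang x y → ang x y < ρ₀ → ⟪x, σ⟫_ℝ ≠ 0) {y : Euc n}
    (hy : y ∈ KK E) (hy0 : 0 < ang x y) (hy1 : ang x y < ρ₀) :
    ∃ τ, ‖τ‖ = 1 ∧ ⟪x, τ⟫_ℝ = 0 ∧ y = gc x τ (ang x y) ∧
      ∀ t ∈ Icc 0 (ang x y), gc x τ t ∈ KK E := by
  have hpi := Real.pi_gt_three
  obtain ⟨σ, hσ, hS⟩ : ∃ σ, Tan E y σ ∧ 0 < ⟪x, σ⟫_ℝ := by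
    obtain ⟨σ, hσ⟩ := exists_tan hy (hreg y hy hy0 hy1)
    rcases lt_or_gt_of_ne (hnt y σ hσ hy0 hy1) with h | h
    · exact ⟨-σ, hσ.neg, by rw [inner_neg_right]; linarith⟩
    · exact ⟨σ, hσ, h⟩
  have hyn := norm_of_mem_KK hy
  set C := ⟪x, y⟫_ℝ with hC
  set S := ⟪x, σ⟫_ℝ with hSd
  have hCc : C = Real.cos (ang x y) := (cos_ang hx hyn).symm
  have hC0 : 0 < C := by rw [hCc]; exact Real.cos_pos_of_mem_Ioo ⟨by linarith, by linarith⟩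
  -- polar form of the height function along the geodesic
  set R := Real.sqrt (C ^ 2 + S ^ 2) with hR
  have hRsq : R ^ 2 = C ^ 2 + S ^ 2 := Real.sq_sqrt (by positivity)
  have hR0 : 0 < R := Real.sqrt_pos.2 (by positivity)
  set t₀ := Real.arccos (C / R) with ht₀
  have hCR : C < R := by nlinarith [mul_pos hS hS]
  have hCR1 : C / R < 1 := (div_lt_one hR0).2 hCR
  have hCR0 : 0 < C / R := by positivity
  have hcos : Real.cos t₀ = C / R := Real.cos_arccos (by linarith) hCR1.le
  have hsin : Real.sin t₀ = S / R := by
    rw [ht₀, Real.sin_arccos, show 1 - (C / R) ^ 2 = (S / R) ^ 2 by field_simp; linarith]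
    exact Real.sqrt_sq (by positivity)
  have ht₀0 : 0 < t₀ := Real.arccos_pos.2 hCR1
  have ht₀1 : t₀ < Real.pi / 2 := Real.arccos_lt_pi_div_two.2 hCR0
  have hg : ∀ t, ⟪x, gc y σ t⟫_ℝ = R * Real.cos (t - t₀) := fun t => by
    rw [inner_x_gc, ← hC, ← hSd, Real.cos_sub, hcos, hsin]; field_simp
  have hc : ∀ t, ‖gc y σ t‖ = 1 := norm_gc hσ.nx hσ.nt hσ.orth
  have hmono : ∀ t ∈ Icc 0 t₀, C ≤ ⟪x, gc y σ t⟫_ℝ := by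
    intro t ht
    have h5 : Real.cos t₀ ≤ Real.cos (t - t₀) := by
      rw [← Real.cos_neg (t - t₀)]
      exact Real.cos_le_cos_of_nonneg_of_le_pi (by linarith [ht.2]) (by linarith) (by linarith [ht.1])
    rw [hg t]
    rw [hcos, div_le_iff₀ hR0] at h5
    linarith
  have hlt : ∀ t ∈ Icc 0 t₀, ang x (gc y σ t) < ρ₀ := by
    intro t ht
    rw [ang_lt_iff hx (hc t) (by linarith) (by linarith)]
    have : Real.cos ρ₀ < C := by
      rw [hCc]; exact Real.cos_lt_cos_of_nonneg_of_le_pi hy0.le (by linarith) hy1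
    linarith [hmono t ht]
  have hxe : x = gc y σ t₀ := by
    by_contra hne
    have hV : ∀ t ∈ Icc 0 t₀, gc y σ t ∈ KK E → gc y σ t ∉ VV E := by
      intro t ht hm
      refine hreg _ hm (ang_pos hx (hc t) fun h => hne ?_) (hlt t ht)
      have h5 : ⟪x, gc y σ t⟫_ℝ = 1 := by rw [← h, real_inner_self_eq_norm_sq, hx, one_pow]
      have hR1 : ⟪x, gc y σ t₀⟫_ℝ = R := by rw [hg, sub_self, Real.cos_zero, mul_one]
      have h6 : R ≤ 1 := by
        rw [← hR1]; have := real_inner_le_norm x (gc y σ t₀); rwa [hx, hc, one_mul] at this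
      have h7 := hg t
      have h8 := Real.cos_le_one (t - t₀)
      have h9 : R = 1 := by nlinarith
      rw [h9] at hR1
      exact (inner_eq_one_iff_of_norm_eq_one hx (hc t₀)).1 hR1
    have hmem := continuation hE hσ.nx hσ.nt hσ.orth le_rfl (T := t₀) (fun _ => hσ)
      (fun u hu => by
        rw [le_antisymm hu.2 hu.1, gc_zero]; exact hσ.mem)
      (fun t ht' => hV t ⟨ht'.1, ht'.2.le⟩)
    have htan := tan_along ht₀0.le hσ.nx hσ.nt hσ.orth (fun _ => hσ) hmem
      (hV t₀ ⟨ht₀0.le, le_rfl⟩ (hmem t₀ ⟨ht₀0.le, le_rfl⟩))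
    refine hnt _ _ htan (ang_pos hx (hc t₀) hne) (hlt t₀ ⟨ht₀0.le, le_rfl⟩) ?_
    rw [inner_x_gd, ← hC, ← hSd, hcos, hsin]
    field_simp
    ring
  have hang : ang x y = t₀ := by
    have := ang_gc hσ.nx hσ.nt hσ.orth (s := t₀) (t := 0) (by
      rw [sub_zero, abs_of_pos ht₀0]; linarith)
    rw [gc_zero, ← hxe, sub_zero, abs_of_pos ht₀0] at this
    exact this
  have hV : ∀ t ∈ Ico 0 t₀, gc y σ t ∈ KK E → gc y σ t ∉ VV E := by
    intro t ht hm
    refine hreg _ hm ?_ (hlt t ⟨ht.1, ht.2.le⟩)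
    have habs : |t₀ - t| = t₀ - t := abs_of_pos (by linarith [ht.2])
    have h5 := ang_gc hσ.nx hσ.nt hσ.orth (s := t₀) (t := t) (by rw [habs]; linarith [ht.1])
    rw [← hxe, habs] at h5
    rw [h5]
    linarith [ht.2]
  have hmem := continuation hE hσ.nx hσ.nt hσ.orth le_rfl (T := t₀) (fun _ => hσ)
    (fun u hu => by
      rw [le_antisymm hu.2 hu.1, gc_zero]; exact hσ.mem) hV
  have hrev : ∀ t, gc x (-gd y σ t₀) t = gc y σ (t₀ - t) := fun t => by
    rw [gc_neg]; nth_rewrite 1 [hxe]; rw [gc_add, sub_eq_add_neg]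
  refine ⟨-gd y σ t₀, by rw [norm_neg]; exact norm_gd hσ.nx hσ.nt hσ.orth _, ?_, ?_, ?_⟩
  · rw [inner_neg_right]; nth_rewrite 1 [hxe]; rw [inner_gc_gd hσ.nx hσ.nt hσ.orth, neg_zero]
  · rw [hang, hrev, sub_self, gc_zero]
  · intro t ht
    rw [hang] at ht
    rw [hrev]
    exact hmem _ ⟨by linarith [ht.2], by linarith [ht.1]⟩
end

section
variable {n : ℕ} {E : Set (Euc n)}

theorem exists_good_lt_four (hE : IsMC n E) {x : Euc n} (hx : x ∈ VV E) {r : ℝ} (h0 : 0 < r)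
    (h1 : r ≤ 1 / 10000) (hup : gm E x univ r ≤ (3 + 1 / 2) * r) :
    ∃ ρ ∈ Ioo 0 r, ∃ q, GoodRad E x ρ q ∧ q < 4 := by
  by_contra! hcon
  have h := gm_lower hE (x := x) (U := univ) (k := 4) h0 (by
    filter_upwards [goodRad_ae hE hx.1] with ρ hρ hρ'
    obtain ⟨q, hq⟩ := hρ ⟨hρ'.1, by linarith [hρ'.2]⟩
    exact ⟨q, hq.der, hcon ρ hρ' q hq⟩)
  have : 0 ≤ gm E x univ 0 := measureReal_nonneg
  linarith

/-- Near a singular point, every small sphere meets the link in three points, and transversally. -/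
theorem y_count (hE : IsMC n E) {x : Euc n} (hx : x ∈ VV E) {ρ₀ : ℝ} (h0 : 0 < ρ₀)
    (h1 : ρ₀ ≤ 1 / 10000)
    (hreg : ∀ z ∈ KK E, 0 < ang x z → ang x z < ρ₀ → z ∉ VV E)
    (hup : ∀ s ∈ Ioc 0 ρ₀, gm E x univ s ≤ (3 + 1 / 2) * s) :
    ∃ ρ₁ ∈ Ioo 0 ρ₀, (∀ ρ ∈ Ioo 0 ρ₁, (KK E ∩ {z | ang x z = ρ}).ncard = 3) ∧
      ∀ y σ, Tan E y σ → 0 < ang x y → ang x y < ρ₁ → ⟪x, σ⟫_ℝ ≠ 0 := by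
  have hx1 := norm_of_mem_KK hx.1
  have hgood : ∀ r ∈ Ioc 0 ρ₀, ∃ ρ ∈ Ioo 0 r, (KK E ∩ {z | ang x z = ρ}).Finite ∧
      (KK E ∩ {z | ang x z = ρ}).ncard = 3 := by
    intro r hr
    obtain ⟨ρ, hρ, q, hg, hq⟩ := exists_good_lt_four hE hx hr.1 (hr.2.trans h1) (hup r hr)
    refine ⟨ρ, hρ, hg.fin, le_antisymm ?_
      (three_of_sing hE hx hρ.1 (hρ.2.le.trans (hr.2.trans h1)) hg)⟩
    have : ((KK E ∩ {z | ang x z = ρ}).ncard : ℝ) < 4 := lt_of_le_of_lt hg.le hq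
    have : (KK E ∩ {z | ang x z = ρ}).ncard < 4 := by exact_mod_cast this
    omega
  obtain ⟨ρ₁, hρ₁, hf, hN⟩ := hgood ρ₀ ⟨h0, le_rfl⟩
  have key : ∀ ρ ∈ Ioo 0 ρ₁, (Outw E x ρ).Finite ∧ (KK E ∩ {z | ang x z = ρ}).ncard = 3 ∧
      (Outw E x ρ).ncard = 3 := by
    intro ρ hρ
    have hρ₀ : ρ < ρ₀ := hρ.2.trans hρ₁.2
    obtain ⟨hOf, hO⟩ := exit_inj hE hx1 hρ.1 hρ.2 hρ₁.2 (by linarith) hreg hf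
    obtain ⟨hSf, hS, -⟩ := outw_count hρ.1 hρ₀ hreg hOf
    obtain ⟨ρ', hρ', hf', hN'⟩ := hgood ρ ⟨hρ.1, hρ₀.le⟩
    obtain ⟨hOf', hO'⟩ := exit_inj hE hx1 hρ'.1 hρ'.2 hρ₀ (by linarith) hreg hSf
    obtain ⟨-, hS', -⟩ := outw_count hρ'.1 (hρ'.2.trans hρ₀) hreg hOf'
    exact ⟨hOf, by omega, by omega⟩
  refine ⟨ρ₁, hρ₁, fun ρ hρ => (key ρ hρ).2.1, fun y σ hy hy0 hy1 hin => ?_⟩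
  obtain ⟨hOf, h2, h3⟩ := key _ ⟨hy0, hy1⟩
  have := (outw_count hy0 (hy1.trans hρ₁.2) hreg hOf).2.2 ⟨y, σ, hy, rfl, hin⟩
  omega

/-- The link near `x` consists of the three geodesic segments of length `ρ` with initial
directions `τ i`. -/
structure YRays (E : Set (Euc n)) (x : Euc n) (τ : Fin 3 → Euc n) (ρ : ℝ) : Prop where
  pos : 0 < ρ
  lt_one : ρ < 1
  nx : ‖x‖ = 1
  nt : ∀ i, ‖τ i‖ = 1
  orth : ∀ i, ⟪x, τ i⟫_ℝ = 0
  inj : Function.Injective τ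
  sub : ∀ v ∈ KK E, ang x v ≤ ρ → ∃ i, ∃ t ∈ Icc 0 ρ, v = gc x (τ i) t
  mem : ∀ i, ∀ t ∈ Icc 0 ρ, gc x (τ i) t ∈ KK E

theorem ang_x_gc {x τ : Euc n} (hx : ‖x‖ = 1) (hτ : ‖τ‖ = 1) (ho : ⟪x, τ⟫_ℝ = 0) {t : ℝ}
    (h0 : 0 ≤ t) (h1 : t ≤ Real.pi) : ang x (gc x τ t) = t := by
  have h := ang_gc hx hτ ho (s := 0) (t := t) (by rw [zero_sub, abs_neg, abs_of_nonneg h0]; exact h1)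
  rwa [gc_zero, zero_sub, abs_neg, abs_of_nonneg h0] at h

theorem gc_dir_inj {x τ σ : Euc n} {t : ℝ} (h0 : 0 < t) (h1 : t < Real.pi)
    (h : gc x τ t = gc x σ t) : τ = σ := by
  have hs := (Real.sin_pos_of_pos_of_lt_pi h0 h1).ne'
  rw [gc, gc] at h
  exact smul_right_injective _ hs (add_left_cancel h)

theorem y_rays (hE : IsMC n E) {x : Euc n} (hx : x ∈ VV E) {ρ₁ : ℝ} (h0 : 0 < ρ₁) (h1 : ρ₁ ≤ 1)
    (hreg : ∀ z ∈ KK E, 0 < ang x z → ang x z < ρ₁ → z ∉ VV E)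
    (hN : ∀ ρ ∈ Ioo 0 ρ₁, (KK E ∩ {z | ang x z = ρ}).ncard = 3)
    (hnt : ∀ y σ, Tan E y σ → 0 < ang x y → ang x y < ρ₁ → ⟪x, σ⟫_ℝ ≠ 0) :
    ∃ τ ρ, YRays E x τ ρ := by
  have hx1 := norm_of_mem_KK hx.1
  have hpi := Real.pi_gt_three
  set ρ := ρ₁ / 2 with hρ
  have hρ0 : 0 < ρ := by positivity
  have hρ1 : ρ < ρ₁ := by linarith
  obtain ⟨y₁, y₂, y₃, h12, h13, h23, hS⟩ := ncard_eq_three.1 (hN ρ ⟨hρ0, hρ1⟩)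
  have hray : ∀ y ∈ KK E ∩ {z | ang x z = ρ}, ∃ τ, ‖τ‖ = 1 ∧ ⟪x, τ⟫_ℝ = 0 ∧ y = gc x τ ρ ∧
      ∀ t ∈ Icc 0 ρ, gc x τ t ∈ KK E := by
    intro y hy
    have hyρ : ang x y = ρ := hy.2
    have := radial hE hx1 h1 hreg hnt hy.1 (by rw [hyρ]; exact hρ0) (by rw [hyρ]; exact hρ1)
    rwa [hyρ] at this
  obtain ⟨τ₁, n1, o1, e1, m1⟩ := hray y₁ (by rw [hS]; simp)
  obtain ⟨τ₂, n2, o2, e2, m2⟩ := hray y₂ (by rw [hS]; simp)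
  obtain ⟨τ₃, n3, o3, e3, m3⟩ := hray y₃ (by rw [hS]; simp)
  have hends : ∀ τ, ‖τ‖ = 1 → ⟪x, τ⟫_ℝ = 0 → gc x τ ρ ∈ KK E → ∃ i, τ = ![τ₁, τ₂, τ₃] i := by
    intro τ hτ ho hm
    have : gc x τ ρ ∈ KK E ∩ {z | ang x z = ρ} := ⟨hm, ang_x_gc hx1 hτ ho hρ0.le (by linarith)⟩
    rw [hS] at this
    rcases this with h | h | h
    · exact ⟨0, gc_dir_inj hρ0 (by linarith) (h.trans e1)⟩
    · exact ⟨1, gc_dir_inj hρ0 (by linarith) (h.trans e2)⟩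
    · exact ⟨2, gc_dir_inj hρ0 (by linarith) (h.trans e3)⟩
  refine ⟨![τ₁, τ₂, τ₃], ρ, hρ0, by linarith, hx1, ?_, ?_, ?_, ?_, ?_⟩
  · intro i; fin_cases i <;> assumption
  · intro i; fin_cases i <;> assumption
  · have a12 : τ₁ ≠ τ₂ := fun h => h12 (by rw [e1, e2, h])
    have a13 : τ₁ ≠ τ₃ := fun h => h13 (by rw [e1, e3, h])
    have a23 : τ₂ ≠ τ₃ := fun h => h23 (by rw [e2, e3, h])
    intro i j hij
    fin_cases i <;> fin_cases j <;> simp_all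
  · intro v hv hvρ
    rcases (ang_nonneg x v).eq_or_lt with hv0 | hv0
    · refine ⟨0, 0, ⟨le_rfl, hρ0.le⟩, ?_⟩
      rw [gc_zero]
      exact (ang_eq_zero hx1 (norm_of_mem_KK hv) hv0.symm).symm
    · obtain ⟨τ, hτ, ho, he, hm⟩ := radial hE hx1 h1 hreg hnt hv hv0 (by linarith)
      have hc := continuation hE hx1 hτ ho hv0.le (T := ρ) (fun h => absurd h hv0.ne') hm
        (fun t ht h => by
          have ha := ang_x_gc hx1 hτ ho (t := t) (by linarith [ht.1]) (by linarith [ht.2])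
          exact hreg _ h (by rw [ha]; linarith [ht.1]) (by rw [ha]; linarith [ht.2]))
      obtain ⟨i, rfl⟩ := hends τ hτ ho (hc ρ ⟨hρ0.le, le_rfl⟩)
      exact ⟨i, ang x v, ⟨hv0.le, hvρ⟩, he⟩
  · intro i; fin_cases i <;> assumption

theorem y_arith {ρ R N g q m m₀ κ : ℝ} (hm₀ : 1 < m₀) (hm : m₀ ≤ m)
    (hκ : κ * (2 * m₀) = m₀ - 1) (_hκ0 : 0 ≤ κ) (_hκ1 : κ ≤ 1 / 2) (hρ : 0 < ρ)
    (hR : R ≤ ρ) (hR0 : 0 ≤ R) (hN : N ≤ 3)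
    (hm2 : m₀ ≤ 2) (hg : g ≤ 4 * ρ) (hq : q ≤ 4) (hg3 : 3 * ρ ≤ g)
    (h : g ≤ R * (N - κ * m * ((1 - κ) * m - 1)) + 30000 * ρ * (g + 20 * ρ * q)) :
    (m₀ - 1) ^ 2 / 4 ≤ 2520000 * ρ := by
  have h1 : (m₀ - 1) / 2 ≤ (1 - κ) * m - 1 := by nlinarith
  have h2 : (m₀ - 1) / 2 ≤ κ * m := by nlinarith
  have h3 : (m₀ - 1) ^ 2 / 4 ≤ κ * m * ((1 - κ) * m - 1) := by nlinarith
  have h4 : R * (N - κ * m * ((1 - κ) * m - 1)) ≤ R * (3 - (m₀ - 1) ^ 2 / 4) :=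
    mul_le_mul_of_nonneg_left (by linarith) hR0
  have h5 : R * (3 - (m₀ - 1) ^ 2 / 4) ≤ ρ * (3 - (m₀ - 1) ^ 2 / 4) :=
    mul_le_mul_of_nonneg_right hR (by nlinarith)
  have h6 : g + 20 * ρ * q ≤ 84 * ρ := by nlinarith
  have h7 : 30000 * ρ * (g + 20 * ρ * q) ≤ 30000 * ρ * (84 * ρ) :=
    mul_le_mul_of_nonneg_left h6 (by positivity)
  by_contra! hcon
  nlinarith

/-- Two rays making an angle less than `120°` could be joined, which would save a length
proportional to the radius. -/
theorem y_angle_le (hE : IsMC n E) {x : Euc n} (hx : x ∈ VV E) {ρ₀ : ℝ} (h0 : 0 < ρ₀)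
    (h1 : ρ₀ ≤ 1 / 10000) (hup : ∀ s ∈ Ioc 0 ρ₀, gm E x univ s ≤ (3 + 1 / 2) * s)
    {τ : Fin 3 → Euc n} {ρ : ℝ} (hY : YRays E x τ ρ) {i j : Fin 3} (hij : i ≠ j) :
    ⟪τ i, τ j⟫_ℝ ≤ -(1 / 2) := by
  by_contra! hc
  have hpi := Real.pi_gt_three
  set c := ⟪τ i, τ j⟫_ℝ with hcd
  have hc1 : c ≤ 1 := by
    have := real_inner_le_norm (τ i) (τ j); rwa [hY.nt, hY.nt, one_mul] at this
  set m₀ := Real.sqrt (2 + 2 * c) with hm₀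
  have hm₀sq : m₀ ^ 2 = 2 + 2 * c := Real.sq_sqrt (by linarith)
  have hm₀1 : 1 < m₀ := by rw [hm₀]; exact Real.lt_sqrt_of_sq_lt (by linarith)
  have hm₀2 : m₀ ≤ 2 := by nlinarith
  set r := min ρ₀ (min ρ ((m₀ - 1) ^ 2 / 4 / 2520001)) with hr
  have hr0 : 0 < r := by
    have : 0 < (m₀ - 1) ^ 2 := by have := sub_pos.2 hm₀1; positivity
    have := hY.pos
    positivity
  have hrρ₀ : r ≤ ρ₀ := min_le_left _ _
  have hrρ : r ≤ ρ := (min_le_right _ _).trans (min_le_left _ _)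
  have hrm : r ≤ (m₀ - 1) ^ 2 / 4 / 2520001 := (min_le_right _ _).trans (min_le_right _ _)
  obtain ⟨s, hs, q, hg, hq⟩ := exists_good_lt_four hE hx hr0 (hrρ₀.trans h1) (hup r ⟨hr0, hrρ₀⟩)
  have hs1 : s ≤ 1 / 10000 := by linarith [hs.2]
  have hmem : ∀ k, gc x (τ k) s ∈ KK E ∩ {z | ang x z = s} := fun k =>
    ⟨hY.mem k s ⟨hs.1.le, by linarith [hs.2]⟩,
      ang_x_gc hY.nx (hY.nt k) (hY.orth k) hs.1.le (by linarith)⟩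
  have hne : gc x (τ i) s ≠ gc x (τ j) s := fun h =>
    hij (hY.inj (gc_dir_inj hs.1 (by linarith) h))
  have hR := chord_bounds hs.1 (by linarith : s ≤ 1)
  have hR0 : 0 < 2 * Real.sin (s / 2) := by linarith [hs.1]
  set R := 2 * Real.sin (s / 2) with hRd
  set m := ‖(gc x (τ i) s - x) + (gc x (τ j) s - x)‖ / R with hmd
  have hmR : ‖(gc x (τ i) s - x) + (gc x (τ j) s - x)‖ = m * R := by
    rw [hmd, div_mul_cancel₀ _ hR0.ne']
  have hRsq : R ^ 2 = 2 * (1 - Real.cos s) := by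
    have := Real.cos_sq (s / 2)
    have h5 := Real.sin_sq_add_cos_sq (s / 2)
    rw [mul_div_cancel₀ _ (two_ne_zero)] at this
    rw [hRd]; nlinarith
  have hmm : m₀ ≤ m := by
    have hn : ‖(gc x (τ i) s - x) + (gc x (τ j) s - x)‖ ^ 2 =
        4 * (Real.cos s - 1) ^ 2 + Real.sin s ^ 2 * (2 + 2 * c) := by
      have e : (gc x (τ i) s - x) + (gc x (τ j) s - x) =
          (2 * (Real.cos s - 1)) • x + Real.sin s • (τ i + τ j) := by
        simp only [gc]; module
      have h2 : ‖τ i + τ j‖ ^ 2 = 2 + 2 * c := by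
        rw [norm_add_sq_real, hY.nt, hY.nt]; ring
      have h3 : ⟪x, τ i + τ j⟫_ℝ = 0 := by rw [inner_add_right, hY.orth, hY.orth, add_zero]
      rw [e, norm_add_sq_real, inner_smul_left, inner_smul_right, h3, norm_smul, norm_smul,
        mul_pow, mul_pow, h2, hY.nx, Real.norm_eq_abs, Real.norm_eq_abs, sq_abs, sq_abs]
      simp; ring
    rw [hmR] at hn
    have hcs : Real.cos s ≤ 1 := Real.cos_le_one s
    have hsc : Real.sin s ^ 2 = (1 - Real.cos s) * (1 + Real.cos s) := by
      rw [Real.sin_sq]; ring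
    have hRp : 0 < R ^ 2 := by positivity
    have : m₀ ^ 2 * R ^ 2 ≤ m ^ 2 * R ^ 2 := by
      rw [← mul_pow, ← mul_pow, hn, mul_pow, hm₀sq, hRsq, hsc]
      nlinarith [mul_nonneg (sq_nonneg (Real.cos s - 1)) (sub_nonneg.2 hc1)]
    exact (pow_le_pow_iff_left₀ (by linarith) (by positivity) two_ne_zero).1
      (le_of_mul_le_mul_right this hRp)
  set κ := (m₀ - 1) / (2 * m₀) with hκ
  have hκe : κ * (2 * m₀) = m₀ - 1 := div_mul_cancel₀ _ (by positivity)
  have hκ0 : 0 ≤ κ := div_nonneg (by linarith) (by linarith)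
  have hκ1 : κ ≤ 1 / 2 := by nlinarith
  have hst := star_split hE hY.nx hs.1 (by linarith) hg.der hg.fin (hmem i) (hmem j) hne hκ0 hκ1 hmR
  have hN3 : ((KK E ∩ {z | ang x z = s}).ncard : ℝ) ≤ 3 := by
    have : ((KK E ∩ {z | ang x z = s}).ncard : ℝ) < 4 := lt_of_le_of_lt hg.le hq
    have : (KK E ∩ {z | ang x z = s}).ncard < 4 := by exact_mod_cast this
    exact_mod_cast Nat.lt_succ_iff.1 this
  have hgu := hup s ⟨hs.1, by linarith [hs.2]⟩
  have := y_arith hm₀1 hmm hκe hκ0 hκ1 hs.1 hR.2 hR0.le hN3 hm₀2 (by linarith [hs.1]) hq.le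
    (sing_lower hE hx hs.1 hs1) hst
  have h9 := hs.2.le.trans hrm
  rw [le_div_iff₀ (by norm_num)] at h9
  linarith [hs.1]

/-- At a singular point the link is a tripod of geodesics making angles of `120°`. -/
theorem y_structure (hE : IsMC n E) {x : Euc n} (hx : x ∈ VV E) : ∃ τ ρ, YRays E x τ ρ ∧
    ∀ i j, i ≠ j → ⟪τ i, τ j⟫_ℝ = -(1 / 2) := by
  obtain ⟨ρa, ha0, ha1, hup⟩ :=
    sing_upper n ((lam E).real univ) (ε := 1 / 2) (by norm_num) (by norm_num)
  obtain ⟨ρb, hb0, hsep⟩ := sing_sep n ((lam E).real univ)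
  set ρ₀ := min ρa ρb with hρ₀
  have h0 : 0 < ρ₀ := lt_min ha0 hb0
  have h1 : ρ₀ ≤ 1 / 10000 := (min_le_left _ _).trans ha1
  have hup' : ∀ s ∈ Ioc 0 ρ₀, gm E x univ s ≤ (3 + 1 / 2) * s := fun s hs =>
    hup E hE le_rfl x hx s ⟨hs.1, hs.2.trans (min_le_left _ _)⟩
  have hreg : ∀ z ∈ KK E, 0 < ang x z → ang x z < ρ₀ → z ∉ VV E := by
    intro z _ hz0 hz1 hzV
    have hne : x ≠ z := by
      rintro rfl
      rw [ang_self (norm_of_mem_KK hx.1)] at hz0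
      exact lt_irrefl _ hz0
    have := hsep E hE le_rfl x hx z hzV hne
    linarith [min_le_right ρa ρb]
  obtain ⟨ρ₁, hρ₁, hN, hnt⟩ := y_count hE hx h0 h1 hreg hup'
  obtain ⟨τ, ρ, hY⟩ := y_rays hE hx hρ₁.1 (by linarith [hρ₁.2])
    (fun z hz h2 h3 => hreg z hz h2 (h3.trans hρ₁.2)) hN hnt
  refine ⟨τ, ρ, hY, ?_⟩
  have hle := fun i j (hij : i ≠ j) => y_angle_le hE hx h0 h1 hup' hY hij
  have h01 := hle 0 1 (by decide)
  have h02 := hle 0 2 (by decide)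
  have h12 := hle 1 2 (by decide)
  have hs : ‖τ 0 + τ 1 + τ 2‖ ^ 2 = 3 + 2 * (⟪τ 0, τ 1⟫_ℝ + ⟪τ 0, τ 2⟫_ℝ + ⟪τ 1, τ 2⟫_ℝ) := by
    rw [norm_add_sq_real, norm_add_sq_real, inner_add_left, hY.nt, hY.nt, hY.nt]; ring
  have hs0 := sq_nonneg ‖τ 0 + τ 1 + τ 2‖
  have e01 : ⟪τ 0, τ 1⟫_ℝ = -(1 / 2) := by linarith
  have e02 : ⟪τ 0, τ 2⟫_ℝ = -(1 / 2) := by linarith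
  have e12 : ⟪τ 1, τ 2⟫_ℝ = -(1 / 2) := by linarith
  intro i j hij
  fin_cases i <;> fin_cases j <;> first
    | exact absurd rfl hij
    | exact e01
    | exact e02
    | exact e12
    | (rw [real_inner_comm]; first | exact e01 | exact e02 | exact e12)
end

/-! ### A mass bound depending only on the dimension -/

section
variable {n : ℕ} {E : Set (Euc n)}

/-- The staircase function: it climbs by `1` with slope `m` on the window `[j, j + 1/m]` after each
integer `j`, and is constant otherwise. -/
def stair (m y : ℝ) : ℝ := ⌊y⌋ + min 1 (m * Int.fract y)

theorem stair_bounds {m : ℝ} (hm : 1 ≤ m) (y : ℝ) : y ≤ stair m y ∧ stair m y ≤ y + 1 := by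
  have h0 := Int.fract_nonneg y
  have h1 := Int.fract_lt_one y
  have h2 := Int.floor_add_fract y
  constructor
  · have : Int.fract y ≤ min 1 (m * Int.fract y) := le_min h1.le (by nlinarith)
    rw [stair]; linarith
  · have := min_le_left 1 (m * Int.fract y)
    rw [stair]; linarith

theorem stair_lip_aux {m : ℝ} (hm : 1 ≤ m) {y y' : ℝ} (h : y ≤ y') :
    |stair m y' - stair m y| ≤ m * (y' - y) := by
  have e := Int.floor_add_fract y
  have e' := Int.floor_add_fract y'
  have h0 := Int.fract_nonneg y
  have h0' := Int.fract_nonneg y'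
  rcases (Int.floor_mono h).eq_or_lt with hj | hj
  · have h1 := abs_min_sub_min_le_max 1 (m * Int.fract y') 1 (m * Int.fract y)
    rw [sub_self, abs_zero, max_eq_right (abs_nonneg _), ← mul_sub, abs_mul,
      abs_of_nonneg (by linarith : 0 ≤ m)] at h1
    have hc : (⌊y⌋ : ℝ) = ⌊y'⌋ := by rw [hj]
    have h2 : Int.fract y' - Int.fract y = y' - y := by linarith
    rw [h2, abs_of_nonneg (by linarith : 0 ≤ y' - y)] at h1
    have h3 : stair m y' - stair m y = min 1 (m * Int.fract y') - min 1 (m * Int.fract y) := by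
      rw [stair, stair, hc]; ring
    rwa [h3]
  · have hc : (⌊y⌋ : ℝ) + 1 ≤ ⌊y'⌋ := by exact_mod_cast hj
    have h1 := (stair_bounds hm y).1
    have h2 : stair m y' ≤ ⌊y'⌋ + m * Int.fract y' := by
      rw [stair]; linarith [min_le_right 1 (m * Int.fract y')]
    have h3 : (⌊y'⌋ : ℝ) ≤ stair m y' := by
      rw [stair]
      have : 0 ≤ min 1 (m * Int.fract y') := le_min zero_le_one (by positivity)
      linarith
    have h4 : stair m y ≤ ⌊y⌋ + 1 := by
      rw [stair]; linarith [min_le_left 1 (m * Int.fract y)]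
    have h5 := Int.fract_lt_one y
    rw [abs_of_nonneg (by linarith)]
    nlinarith

theorem stair_lip {m : ℝ} (hm : 1 ≤ m) (y y' : ℝ) :
    |stair m y - stair m y'| ≤ m * |y - y'| := by
  rcases le_total y y' with h | h
  · rw [abs_sub_comm, abs_sub_comm y y', abs_of_nonneg (sub_nonneg.2 h)]
    exact stair_lip_aux hm h
  · rw [abs_of_nonneg (sub_nonneg.2 h)]
    exact stair_lip_aux hm h

/-- Different shifts by multiples of `1/m` have disjoint windows. -/
theorem window_unique {m : ℕ} {y : ℝ} {k k' : Fin m}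
    (h : Int.fract (y - (k : ℕ) / m) < 1 / (m : ℝ))
    (h' : Int.fract (y - (k' : ℕ) / m) < 1 / (m : ℝ)) : k = k' := by
  have hm : 0 < (m : ℝ) := by exact_mod_cast k.pos
  have e := Int.floor_add_fract (y - (k : ℕ) / m)
  have e' := Int.floor_add_fract (y - (k' : ℕ) / m)
  set r := Int.fract (y - (k : ℕ) / m) with hr
  set r' := Int.fract (y - (k' : ℕ) / m) with hr'
  set p := ⌊y - (k : ℕ) / (m : ℝ)⌋ with hp
  set p' := ⌊y - (k' : ℕ) / (m : ℝ)⌋ with hp'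
  have hr0 : 0 ≤ r := Int.fract_nonneg _
  have hr0' : 0 ≤ r' := Int.fract_nonneg _
  rw [lt_div_iff₀ hm] at h h'
  have key : ((k' : ℕ) : ℝ) - (k : ℕ) = m * (p - p') + (r * m - r' * m) := by
    have : ((k' : ℕ) : ℝ) / m - (k : ℕ) / m = (p - p') + (r - r') := by linarith
    rw [← sub_div, div_eq_iff hm.ne'] at this
    rw [this]; ring
  have hd1 : ((((k' : ℕ) : ℤ) - (k : ℕ) - m * (p - p') : ℤ) : ℝ) < 1 := by
    push_cast; nlinarith
  have hd2 : (-1 : ℝ) < ((((k' : ℕ) : ℤ) - (k : ℕ) - m * (p - p') : ℤ) : ℝ) := by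
    push_cast; nlinarith
  have hd1' : ((k' : ℕ) : ℤ) - (k : ℕ) - m * (p - p') < 1 := by exact_mod_cast hd1
  have hd2' : -1 < ((k' : ℕ) : ℤ) - (k : ℕ) - m * (p - p') := by exact_mod_cast hd2
  have hz : ((k' : ℕ) : ℤ) - (k : ℕ) = m * (p - p') := by omega
  have hk := k.2
  have hk' := k'.2
  have hpp : p - p' = 0 := by
    by_contra hne
    rcases lt_or_gt_of_ne hne with h1 | h1
    · have : (m : ℤ) * (p - p') ≤ m * (-1) :=
        mul_le_mul_of_nonneg_left (by omega) (by positivity)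
      omega
    · have : (m : ℤ) * 1 ≤ m * (p - p') := mul_le_mul_of_nonneg_left (by omega) (by positivity)
      omega
  rw [hpp, mul_zero] at hz
  exact Fin.ext (by omega)

/-- The `i`-th coordinate of `z` lies in a window of the staircase of mesh `1/m` shifted by `k`. -/
def Win {m : ℕ} (k : Fin n → Fin m) (i : Fin n) (z : Euc n) : Prop :=
  Int.fract ((m : ℝ) * z i - (k i : ℕ) / m) < 1 / (m : ℝ)

theorem measurableSet_Win {m : ℕ} (k : Fin n → Fin m) (i : Fin n) :
    MeasurableSet {z : Euc n | Win k i z} := by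
  refine measurableSet_lt ?_ measurable_const
  refine Measurable.fract ?_
  have : Continuous fun z : Euc n => z i := by fun_prop
  exact (this.measurable.const_mul _).sub_const _

open Classical in
/-- The weight `(1 + m)` to the number of coordinates in windows. -/
def wgt {m : ℕ} (k : Fin n → Fin m) (z : Euc n) : ℝ≥0∞ :=
  ∏ i, (1 + if Win k i z then (m : ℝ≥0∞) else 0)

theorem measurable_wgt {m : ℕ} (k : Fin n → Fin m) : Measurable (wgt k : Euc n → ℝ≥0∞) := by
  classical
  refine Finset.measurable_prod _ fun i _ => ?_
  have h : Measurable fun z : Euc n => if Win k i z then (m : ℝ≥0∞) else 0 :=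
    Measurable.ite (measurableSet_Win k i) measurable_const measurable_const
  exact h.const_add 1

theorem sum_wgt_le {m : ℕ} (z : Euc n) :
    ∑ k : Fin n → Fin m, wgt k z ≤ ((2 * m : ℕ) : ℝ≥0∞) ^ n := by
  classical
  have h1 : ∑ k : Fin n → Fin m, wgt k z = ∏ i : Fin n, ∑ a : Fin m,
      (1 + if Int.fract ((m : ℝ) * z i - (a : ℕ) / m) < 1 / (m : ℝ) then (m : ℝ≥0∞) else 0) := by
    rw [Finset.prod_univ_sum, Fintype.piFinset_univ]
    exact Finset.sum_congr rfl fun k _ => Finset.prod_congr rfl fun i _ => by congr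
  rw [h1]
  refine (Finset.prod_le_prod' (g := fun _ => ((2 * m : ℕ) : ℝ≥0∞)) fun i _ => ?_).trans (by simp)
  rw [Finset.sum_add_distrib, Finset.sum_const, Finset.card_univ, Fintype.card_fin, nsmul_one,
    ← Finset.sum_filter, Finset.sum_const, nsmul_eq_mul]
  have hc : (Finset.univ.filter fun a : Fin m =>
      Int.fract ((m : ℝ) * z i - (a : ℕ) / m) < 1 / (m : ℝ)).card ≤ 1 :=
    Finset.card_le_one.2 fun a ha b hb =>
      window_unique (Finset.mem_filter.1 ha).2 (Finset.mem_filter.1 hb).2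
  have : ((Finset.univ.filter fun a : Fin m =>
      Int.fract ((m : ℝ) * z i - (a : ℕ) / m) < 1 / (m : ℝ)).card : ℝ≥0∞) ≤ 1 := by
    exact_mod_cast hc
  calc (m : ℝ≥0∞) + _ * (m : ℝ≥0∞) ≤ m + 1 * m := by gcongr
    _ = _ := by push_cast; ring

/-- Some shift is at most as bad as the average over all shifts: each coordinate lies in a window
for at most one of the `m` shifts. -/
theorem exists_shift {m : ℕ} (hm : 0 < m) (μ : Measure (Euc n)) :
    ∃ k : Fin n → Fin m, ∫⁻ z, wgt k z ∂μ ≤ 2 ^ n * μ univ := by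
  have : Nonempty (Fin n → Fin m) := ⟨fun _ => ⟨0, hm⟩⟩
  have hsum : ∑ k : Fin n → Fin m, ∫⁻ z, wgt k z ∂μ ≤
      ∑ _k : Fin n → Fin m, 2 ^ n * μ univ := by
    rw [← lintegral_finsetSum _ fun k _ => measurable_wgt k]
    refine (lintegral_mono fun z => sum_wgt_le z).trans ?_
    rw [lintegral_const, Finset.sum_const, Finset.card_univ, Fintype.card_fun, Fintype.card_fin,
      Fintype.card_fin, nsmul_eq_mul]
    push_cast
    rw [mul_pow]
    apply le_of_eq; ring
  by_contra! hcon
  exact absurd hsum (not_le.2 (ENNReal.sum_lt_sum_of_nonempty Finset.univ_nonempty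
    fun k _ => hcon k))

theorem wgt_ge_one {m : ℕ} {k : Fin n → Fin m} {z : Euc n} {i : Fin n} (hi : Win k i z) :
    (m : ℝ≥0∞) ≤ wgt k z := by
  classical
  rw [wgt, ← Finset.mul_prod_erase Finset.univ _ (Finset.mem_univ i)]
  have h1 : (1 : ℝ≥0∞) ≤ ∏ j ∈ Finset.univ.erase i, (1 + if Win k j z then (m : ℝ≥0∞) else 0) :=
    Finset.one_le_prod'' fun j => le_self_add
  rw [if_pos hi]
  calc (m : ℝ≥0∞) = m * 1 := (mul_one _).symm
    _ ≤ _ := mul_le_mul' le_add_self h1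

theorem wgt_ge_two {m : ℕ} {k : Fin n → Fin m} {z : Euc n} {i j : Fin n} (hi : Win k i z)
    (hj : Win k j z) (hij : i ≠ j) : (m : ℝ≥0∞) ^ 2 ≤ wgt k z := by
  classical
  rw [wgt, ← Finset.mul_prod_erase Finset.univ _ (Finset.mem_univ i),
    ← Finset.mul_prod_erase (Finset.univ.erase i) _
      (Finset.mem_erase.2 ⟨hij.symm, Finset.mem_univ j⟩)]
  have h1 : (1 : ℝ≥0∞) ≤ ∏ j ∈ (Finset.univ.erase i).erase j,
      (1 + if Win k j z then (m : ℝ≥0∞) else 0) :=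
    Finset.one_le_prod'' fun j => le_self_add
  rw [if_pos hi, if_pos hj]
  calc (m : ℝ≥0∞) ^ 2 = m * (m * 1) := by ring
    _ ≤ _ := mul_le_mul' le_add_self (mul_le_mul' le_add_self h1)

/-- The coordinatewise staircase map of mesh `1/m` with shifts `k`. -/
def stairs {m : ℕ} (k : Fin n → Fin m) (z : Euc n) : Euc n :=
  WithLp.toLp 2 fun i => stair m ((m : ℝ) * z i - (k i : ℕ) / m) / m

theorem norm_le_of_coord {v w : Euc n} {c : ℝ} (hc : 0 ≤ c) (h : ∀ i, |v i| ≤ c * |w i|) :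
    ‖v‖ ≤ c * ‖w‖ := by
  have : ‖v‖ ^ 2 ≤ (c * ‖w‖) ^ 2 := by
    rw [mul_pow, EuclideanSpace.norm_sq_eq, EuclideanSpace.norm_sq_eq, Finset.mul_sum]
    refine Finset.sum_le_sum fun i _ => ?_
    rw [← mul_pow]
    exact pow_le_pow_left₀ (norm_nonneg _) (h i) 2
  exact (pow_le_pow_iff_left₀ (norm_nonneg _) (by positivity) two_ne_zero).1 this

theorem norm_le_of_coord_const {v : Euc n} {c : ℝ} (hc : 0 ≤ c) (h : ∀ i, |v i| ≤ c) :
    ‖v‖ ≤ (n + 1) * c := by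
  have : ‖v‖ ^ 2 ≤ ((n + 1) * c) ^ 2 := by
    rw [EuclideanSpace.norm_sq_eq]
    calc ∑ i, ‖v i‖ ^ 2 ≤ ∑ _i : Fin n, c ^ 2 :=
          Finset.sum_le_sum fun i _ => pow_le_pow_left₀ (norm_nonneg _) (h i) 2
      _ = n * c ^ 2 := by simp
      _ ≤ _ := by
        have : (0:ℝ) ≤ n := by positivity
        rw [mul_pow]; exact mul_le_mul_of_nonneg_right (by nlinarith) (sq_nonneg c)
  exact (pow_le_pow_iff_left₀ (norm_nonneg _) (by positivity) two_ne_zero).1 this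

theorem stairs_lip {m : ℕ} (hm : 0 < m) (k : Fin n → Fin m) (z z' : Euc n) :
    ‖stairs k z - stairs k z'‖ ≤ m * ‖z - z'‖ := by
  have hm1 : (1 : ℝ) ≤ m := by exact_mod_cast hm
  refine norm_le_of_coord (by positivity) fun i => ?_
  have h := stair_lip hm1 ((m : ℝ) * z i - (k i : ℕ) / m) ((m : ℝ) * z' i - (k i : ℕ) / m)
  rw [sub_sub_sub_cancel_right, ← mul_sub, abs_mul, abs_of_pos (by linarith : (0:ℝ) < m)] at h
  show |stair m ((m : ℝ) * z i - (k i : ℕ) / m) / m - stair m ((m : ℝ) * z' i - (k i : ℕ) / m) / m|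
    ≤ m * |z i - z' i|
  rw [← sub_div, abs_div, abs_of_pos (by linarith : (0:ℝ) < m), div_le_iff₀ (by linarith)]
  linarith

theorem stairs_near {m : ℕ} (hm : 0 < m) (k : Fin n → Fin m) (z : Euc n) :
    ‖stairs k z - z‖ ≤ (n + 1) * (1 / m) := by
  have hm1 : (1 : ℝ) ≤ m := by exact_mod_cast hm
  refine norm_le_of_coord_const (by positivity) fun i => ?_
  have h := stair_bounds hm1 ((m : ℝ) * z i - (k i : ℕ) / m)
  have hk0 : (0 : ℝ) ≤ (k i : ℕ) / m := by positivity
  have hk1 : ((k i : ℕ) : ℝ) / m ≤ 1 := by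
    rw [div_le_one (by linarith)]; exact_mod_cast (k i).2.le
  show |stair m ((m : ℝ) * z i - (k i : ℕ) / m) / m - z i| ≤ 1 / m
  have e : stair m ((m : ℝ) * z i - (k i : ℕ) / m) / m - z i =
      (stair m ((m : ℝ) * z i - (k i : ℕ) / m) - m * z i) / m := by field_simp
  rw [e, abs_div, abs_of_pos (by linarith : (0:ℝ) < m)]
  refine div_le_div_of_nonneg_right (abs_le.2 ⟨by linarith [h.1], by linarith [h.2]⟩) (by linarith)

/-- The lattice point `j / m`. -/
def latt (m : ℕ) (j : Fin n → ℤ) : Euc n := WithLp.toLp 2 fun i => (j i : ℝ) / m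

/-- Away from double windows, the staircase map takes values in the edges of the lattice. -/
theorem stairs_edge {m : ℕ} (hm : 0 < m) (k : Fin n → Fin m) {z : Euc n} (hz : ‖z‖ ≤ 1)
    (h2 : ∀ i j, Win k i z → Win k j z → i = j) :
    ∃ a ∈ Fintype.piFinset fun _ : Fin n => Finset.Icc (-(m + 2) : ℤ) (m + 2),
    ∃ b ∈ Fintype.piFinset fun _ : Fin n => Finset.Icc (-(m + 2) : ℤ) (m + 2),
    ∃ t ∈ Icc (0:ℝ) 1, stairs k z = latt m a + t • (latt m b - latt m a) ∧
      ((∀ i, ¬ Win k i z) → stairs k z = latt m a) := by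
  classical
  have hm1 : (1 : ℝ) ≤ m := by exact_mod_cast hm
  have hm0 : (0 : ℝ) < m := by linarith
  set y : Fin n → ℝ := fun i => (m : ℝ) * z i - (k i : ℕ) / m with hy
  have hfl : ∀ i, -(m + 2 : ℤ) + 1 ≤ ⌊y i⌋ ∧ ⌊y i⌋ + 1 ≤ (m + 2 : ℤ) := by
    intro i
    have hzi : |z i| ≤ 1 := (PiLp.norm_apply_le z i).trans hz
    have hzi' := abs_le.1 hzi
    have hk0 : (0 : ℝ) ≤ (k i : ℕ) / m := by positivity
    have hk1 : ((k i : ℕ) : ℝ) / m ≤ 1 := by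
      rw [div_le_one (by linarith)]; exact_mod_cast (k i).2.le
    constructor
    · rw [Int.le_floor]; push_cast; simp only [hy]; nlinarith
    · have : ⌊y i⌋ < (m + 2 : ℤ) := by
        rw [Int.floor_lt]; push_cast; simp only [hy]; nlinarith
      omega
  have hwin : ∀ i, ¬ Win k i z → stair m (y i) = (⌊y i⌋ + 1 : ℤ) := by
    intro i hi
    have h3 : 1 / (m : ℝ) ≤ Int.fract (y i) := not_lt.1 hi
    rw [div_le_iff₀ hm0] at h3
    rw [stair, min_eq_left (by linarith)]; push_cast; ring
  have hmemI : ∀ c : Fin n → ℤ, (∀ i, c i = ⌊y i⌋ ∨ c i = ⌊y i⌋ + 1) →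
      c ∈ Fintype.piFinset fun _ : Fin n => Finset.Icc (-(m + 2) : ℤ) (m + 2) := by
    intro c hc
    rw [Fintype.mem_piFinset]
    intro i
    rw [Finset.mem_Icc]
    have := hfl i
    rcases hc i with h | h <;> omega
  by_cases hex : ∃ i, Win k i z
  · obtain ⟨i, hi⟩ := hex
    refine ⟨Function.update (fun l => ⌊y l⌋ + 1) i ⌊y i⌋, hmemI _ fun l => ?_,
      fun l => ⌊y l⌋ + 1, hmemI _ fun l => Or.inr rfl, min 1 (m * Int.fract (y i)),
      ⟨le_min zero_le_one (mul_nonneg hm0.le (Int.fract_nonneg _)), min_le_left _ _⟩, ?_,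
      fun h => absurd hi (h i)⟩
    · by_cases hl : l = i
      · subst hl; simp
      · simp [Function.update_of_ne hl]
    · ext l
      by_cases hl : l = i
      · subst hl
        simp only [latt, PiLp.add_apply, PiLp.smul_apply, PiLp.sub_apply, Function.update_self,
          smul_eq_mul]
        rw [show stairs k z l = stair m (y l) / m from rfl, stair]
        push_cast
        field_simp
        ring
      · have hw : ¬ Win k l z := fun h => hl (h2 l i h hi)
        have := hwin l hw
        simp only [stairs, latt, PiLp.add_apply, PiLp.smul_apply, PiLp.sub_apply,
          Function.update_of_ne hl, smul_eq_mul, sub_self, mul_zero, add_zero]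
        rw [← this]
  · push Not at hex
    have hs : stairs k z = latt m fun l => ⌊y l⌋ + 1 := by
      ext l
      simp only [stairs, latt]
      rw [← hwin l (hex l)]
    exact ⟨fun l => ⌊y l⌋ + 1, hmemI _ fun l => Or.inr rfl, fun l => ⌊y l⌋ + 1,
      hmemI _ fun l => Or.inr rfl, 0, ⟨le_rfl, zero_le_one⟩, by rw [hs]; simp, fun _ => hs⟩
end

section
variable {n : ℕ} {E : Set (Euc n)}

/-- The index set of the lattice points used for mesh `1/m`. -/
def latIdx (n m : ℕ) : Finset (Fin n → ℤ) :=
  Fintype.piFinset fun _ : Fin n => Finset.Icc (-(m + 2) : ℤ) (m + 2)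

/-- Points with a coordinate in a window. -/
def winSet {m : ℕ} (k : Fin n → Fin m) : Set (Euc n) := {z | ∃ i, Win k i z}

/-- Points with two coordinates in windows. -/
def winSet₂ {m : ℕ} (k : Fin n → Fin m) : Set (Euc n) := {z | ∃ i j, i ≠ j ∧ Win k i z ∧ Win k j z}

theorem measurableSet_winSet {m : ℕ} (k : Fin n → Fin m) : MeasurableSet (winSet k) := by
  have : winSet k = ⋃ i, {z : Euc n | Win k i z} := by ext; simp [winSet]
  rw [this]
  exact MeasurableSet.iUnion fun i => measurableSet_Win k i

theorem measurableSet_winSet₂ {m : ℕ} (k : Fin n → Fin m) : MeasurableSet (winSet₂ k) := by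
  have : winSet₂ k = ⋃ i, ⋃ j, ⋃ (_ : i ≠ j), {z : Euc n | Win k i z} ∩ {z : Euc n | Win k j z} := by
    ext z
    simp only [winSet₂, mem_ofPred_eq, mem_iUnion, mem_inter_iff, exists_prop]
  rw [this]
  exact MeasurableSet.iUnion fun i => MeasurableSet.iUnion fun j => MeasurableSet.iUnion fun _ =>
    (measurableSet_Win k i).inter (measurableSet_Win k j)

/-- Total area of the triangles spanned by pairs of lattice points. -/
def latArea (n m : ℕ) : ℝ :=
  ∑ a ∈ latIdx n m, ∑ b ∈ latIdx n m, ‖latt (n := n) m a‖ * ‖latt (n := n) m b - latt m a‖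

/-- The cone over the staircase image is covered by the triangles over lattice edges, except over the
double windows, where the map is `O(m)`-Lipschitz. -/
theorem stairs_inner_le (hE : IsMC n E) {m : ℕ} (hm : 0 < m) (k : Fin n → Fin m) :
    ar n {w | ∃ s ∈ Ioc (0:ℝ) 1, ∃ z ∈ KK E ∩ univ, w = s • stairs k z} ≤
      ENNReal.ofReal (latArea n m) +
      ENNReal.ofReal (27 * (n + 2) ^ 2 * m * 1) * lam E (winSet₂ k) := by
  have hm1 : (1 : ℝ) ≤ m := by exact_mod_cast hm
  have hsub : {w | ∃ s ∈ Ioc (0:ℝ) 1, ∃ z ∈ KK E ∩ univ, w = s • stairs k z} ⊆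
      (⋃ a ∈ latIdx n m, ⋃ b ∈ latIdx n m, Tri (latt m a) (latt m b)) ∪
      {w | ∃ s ∈ Ioc (0:ℝ) (0 + 1), ∃ z ∈ KK E ∩ winSet₂ k, w = s • stairs k z} := by
    rintro w ⟨s, hs, z, ⟨hz, -⟩, rfl⟩
    by_cases h : z ∈ winSet₂ k
    · exact Or.inr ⟨s, by rwa [zero_add], z, ⟨hz, h⟩, rfl⟩
    · left
      obtain ⟨a, ha, b, hb, t, ht, he, -⟩ := stairs_edge hm k (norm_of_mem_KK hz).le
        (fun i j hi hj => by_contra fun hij => h ⟨i, j, hij, hi, hj⟩)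
      simp only [mem_iUnion]
      refine ⟨a, ha, b, hb, s * (1 - t), s * t, mul_nonneg hs.1.le (by linarith [ht.2]),
        mul_nonneg hs.1.le ht.1, by linarith [hs.2], ?_⟩
      rw [he]; module
  refine (measure_mono hsub).trans ((measure_union_le _ _).trans (add_le_add ?_ ?_))
  · refine (measure_biUnion_finset_le _ _).trans ?_
    rw [latArea, ENNReal.ofReal_sum_of_nonneg fun a _ => by positivity]
    refine Finset.sum_le_sum fun a _ => (measure_biUnion_finset_le _ _).trans ?_
    rw [ENNReal.ofReal_sum_of_nonneg fun a _ => by positivity]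
    exact Finset.sum_le_sum fun b _ => ar_Tri_le _ _
  · refine aniso hE (measurableSet_winSet₂ k) (Φ := fun s z => s • stairs k z) (by positivity) hm1
      zero_le_one le_rfl ?_
    intro s hs s' hs' z hz z' hz'
    have e : s • stairs k z - s' • stairs k z' =
        (s - s') • stairs k z + s' • (stairs k z - stairs k z') := by module
    rw [e]
    refine (norm_add_le _ _).trans (add_le_add ?_ ?_)
    · rw [norm_smul, Real.norm_eq_abs, mul_comm]
      refine mul_le_mul_of_nonneg_right ?_ (abs_nonneg _)
      have h1 := stairs_near hm k z
      have h2 : ‖stairs k z‖ ≤ ‖stairs k z - z‖ + ‖z‖ := by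
        simpa using norm_add_le (stairs k z - z) z
      have h3 : ((n : ℝ) + 1) * (1 / m) ≤ n + 1 := by
        refine mul_le_of_le_one_right (by positivity) ?_
        rw [div_le_one (by linarith)]; exact hm1
      rw [norm_of_mem_KK hz.1] at h2
      linarith
    · have hs1 : s' ≤ 1 := by linarith [hs'.2]
      rw [norm_smul, Real.norm_eq_abs, abs_of_pos hs'.1]
      have h1 := stairs_lip hm k z z'
      calc s' * ‖stairs k z - stairs k z'‖ ≤ 1 * (m * ‖z - z'‖) :=
            mul_le_mul hs1 h1 (norm_nonneg _) zero_le_one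
        _ = 1 * (m * ‖z - z'‖) := rfl
        _ ≤ (n + 2) * (m * ‖z - z'‖) := by
            refine mul_le_mul_of_nonneg_right ?_ (by positivity)
            have : (0:ℝ) ≤ n := by positivity
            linarith
        _ = _ := by ring

/-- Area of the interpolation layer of the staircase map: the map is Lipschitz with constant of order
`m` on the windows only, and the layer has width `1/m`. -/
theorem stairs_layer_le (hE : IsMC n E) {m : ℕ} (hm : 0 < m) (k : Fin n → Fin m) :
    ar n {w | ∃ s ∈ Ioc (1:ℝ) (1 + 1 / m), ∃ z ∈ KK E ∩ univ,
        w = s • (z + chi (1 / m) s • (stairs k z - z))} ≤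
      ENNReal.ofReal (27 * (4 * (n + 1)) ^ 2 * m * (1 / m)) * lam E (winSet k) +
      ENNReal.ofReal (27 * (4 * (n + 1)) ^ 2 * 1 * (1 / m)) * lam E univ := by
  classical
  have hm1 : (1 : ℝ) ≤ m := by exact_mod_cast hm
  have hr0 : (0 : ℝ) < 1 / m := by positivity
  have hr1 : (1 : ℝ) / m ≤ 1 := by rw [div_le_one (by linarith)]; exact hm1
  have hn1 : (1 : ℝ) ≤ n + 1 := by linarith [(Nat.cast_nonneg n : (0:ℝ) ≤ n)]
  set J := (latIdx n m).image (latt (n := n) m) with hJ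
  set A : Euc n → Set (Euc n) := fun p => (winSet k)ᶜ ∩ {z | stairs k z = p} with hA
  have hcont : Continuous (stairs k : Euc n → Euc n) := by
    have : LipschitzWith (m : ℝ≥0) (stairs k : Euc n → Euc n) :=
      LipschitzWith.of_dist_le_mul fun z z' => by
        rw [dist_eq_norm, dist_eq_norm]; exact_mod_cast stairs_lip hm k z z'
    exact this.continuous
  have hAm : ∀ p, MeasurableSet (A p) := fun p =>
    (measurableSet_winSet k).compl.inter (isClosed_eq hcont continuous_const).measurableSet
  have hsub : {w | ∃ s ∈ Ioc (1:ℝ) (1 + 1 / m), ∃ z ∈ KK E ∩ univ,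
        w = s • (z + chi (1 / m) s • (stairs k z - z))} ⊆
      {w | ∃ s ∈ Ioc (1:ℝ) (1 + 1 / m), ∃ z ∈ KK E ∩ winSet k,
        w = s • (z + chi (1 / m) s • (stairs k z - z))} ∪
      ⋃ p ∈ J, {w | ∃ s ∈ Ioc (1:ℝ) (1 + 1 / m), ∃ z ∈ KK E ∩ A p,
        w = s • (z + chi (1 / m) s • (stairs k z - z))} := by
    rintro w ⟨s, hs, z, ⟨hz, -⟩, rfl⟩
    by_cases h : z ∈ winSet k
    · exact Or.inl ⟨s, hs, z, ⟨hz, h⟩, rfl⟩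
    · right
      have h' : ∀ i, ¬ Win k i z := fun i hi => h ⟨i, hi⟩
      obtain ⟨a, ha, b, hb, t, ht, -, he⟩ := stairs_edge hm k (norm_of_mem_KK hz).le
        (fun i j hi _ => absurd hi (h' i))
      simp only [mem_iUnion]
      exact ⟨latt m a, Finset.mem_image_of_mem _ ha, s, hs, z, ⟨hz, h, he h'⟩, rfl⟩
  refine (measure_mono hsub).trans ((measure_union_le _ _).trans (add_le_add ?_ ?_))
  · exact layer_le hE (measurableSet_winSet k) hr0 hr1 hn1 hm1
      (fun z _ z' _ => stairs_lip hm k z z') (fun z _ => stairs_near hm k z)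
  · refine (measure_biUnion_finset_le _ _).trans ?_
    have h1 : ∀ p ∈ J, ar n {w | ∃ s ∈ Ioc (1:ℝ) (1 + 1 / m), ∃ z ∈ KK E ∩ A p,
        w = s • (z + chi (1 / m) s • (stairs k z - z))} ≤
        ENNReal.ofReal (27 * (4 * (n + 1)) ^ 2 * 1 * (1 / m)) * lam E (A p) := fun p _ =>
      layer_le hE (hAm p) hr0 hr1 hn1 le_rfl
        (fun z hz z' hz' => by
          have e1 : stairs k z = p := hz.2.2
          have e2 : stairs k z' = p := hz'.2.2
          rw [e1, e2, sub_self, norm_zero]; positivity)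
        (fun z _ => stairs_near hm k z)
    refine (Finset.sum_le_sum h1).trans ?_
    rw [← Finset.mul_sum]
    refine mul_le_mul' le_rfl ?_
    refine sum_measure_le_measure_univ (fun p _ => (hAm p).nullMeasurableSet) ?_
    intro p _ p' _ hpp
    refine Disjoint.aedisjoint (disjoint_left.2 fun z hz hz' => hpp ?_)
    have e1 : stairs k z = p := hz.2
    have e2 : stairs k z = p' := hz'.2
    exact e1.symm.trans e2

theorem mass_arith {L T d1 d2 m α c W : ℝ} (hm : 1 ≤ m) (hL : 0 ≤ L)
    (h1 : m * d1 ≤ W * L) (h2 : m ^ 2 * d2 ≤ W * L) (hα : 0 ≤ α) (hc : 0 ≤ c)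
    (hmB : 2 * (α * W + c * W + c) ≤ m)
    (h : L ≤ T + α * m * 1 * d2 + (c * m * (1 / m) * d1 + c * 1 * (1 / m) * L)) : L ≤ 2 * T := by
  have hm0 : 0 < m := by linarith
  have e1 : c * m * (1 / m) = c := by field_simp
  rw [e1] at h
  have h' : m * L ≤ m * (T + α * m * 1 * d2 + (c * d1 + c * 1 * (1 / m) * L)) :=
    mul_le_mul_of_nonneg_left h hm0.le
  have e2 : m * (T + α * m * 1 * d2 + (c * d1 + c * 1 * (1 / m) * L)) =
      m * T + α * (m ^ 2 * d2) + c * (m * d1) + c * L := by field_simp; ring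
  rw [e2] at h'
  have h3 := mul_le_mul_of_nonneg_left h2 hα
  have h4 := mul_le_mul_of_nonneg_left h1 hc
  have h5 := mul_le_mul_of_nonneg_right hmB hL
  have : m * L ≤ m * (2 * T) := by nlinarith
  exact le_of_mul_le_mul_left this hm0

/-- The mass of the link of a reduced minimal cone is bounded in terms of the dimension only. -/
theorem mass_bound (n : ℕ) : ∃ Λ : ℝ, ∀ E : Set (Euc n), IsMC n E → (lam E).real univ ≤ Λ := by
  set α : ℝ := 27 * (n + 2) ^ 2 with hα
  set c : ℝ := 27 * (4 * (n + 1)) ^ 2 with hc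
  obtain ⟨m, hmB⟩ := exists_nat_ge (2 * (α * 2 ^ n + c * 2 ^ n + c) + 1)
  have hB0 : 0 ≤ 2 * (α * 2 ^ n + c * 2 ^ n + c) := by positivity
  have hm1 : (1 : ℝ) ≤ m := by linarith
  have hm : 0 < m := by exact_mod_cast (by linarith : (0:ℝ) < m)
  refine ⟨2 * latArea n m, fun E hE => ?_⟩
  have hfin := lam_finite hE
  obtain ⟨k, hk⟩ := exists_shift hm (lam E)
  have hmk1 : (m : ℝ≥0∞) * lam E (winSet k) ≤ 2 ^ n * lam E univ := by
    refine le_trans ?_ hk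
    refine le_trans (mul_le_mul' le_rfl (measure_mono ?_))
      (mul_meas_ge_le_lintegral (measurable_wgt k) (m : ℝ≥0∞))
    rintro z ⟨i, hi⟩
    exact wgt_ge_one hi
  have hmk2 : (m : ℝ≥0∞) ^ 2 * lam E (winSet₂ k) ≤ 2 ^ n * lam E univ := by
    refine le_trans ?_ hk
    refine le_trans (mul_le_mul' le_rfl (measure_mono ?_))
      (mul_meas_ge_le_lintegral (measurable_wgt k) ((m : ℝ≥0∞) ^ 2))
    rintro z ⟨i, j, hij, hi, hj⟩
    exact wgt_ge_two hi hj hij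
  have hr0 : (0 : ℝ) < 1 / m := by positivity
  have hcomp := cone_comp hE MeasurableSet.univ (f := stairs k) (L := m)
    (B := (n + 1) * (1 / m)) (r := 1 / m) (Lχ := (1 / (m:ℝ))⁻¹) (χ := chi (1 / m))
    (fun z _ z' _ => stairs_lip hm k z z') (fun z _ => stairs_near hm k z) (by positivity)
    (by positivity) (chi_lip hr0) (chi_01 _) hr0 (fun s hs => chi_zero hr0 hs)
    (fun s hs => chi_one hr0 hs) (fun z _ h => absurd (mem_univ z) h)
  have hall := (hcomp.trans (add_le_add (stairs_inner_le hE hm k) (stairs_layer_le hE hm k)))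
  have hle : lam E univ ≤ ENNReal.ofReal ((1 + 1 / m) ^ 2) * lam E univ := by
    refine le_mul_of_one_le_left (zero_le) ?_
    rw [ENNReal.one_le_ofReal]; nlinarith
  have hall := hle.trans hall
  have e : ∀ S, lam E S = ENNReal.ofReal ((lam E).real S) := fun S => (ofReal_measureReal).symm
  set L := (lam E).real univ with hL
  set d1 := (lam E).real (winSet k) with hd1
  set d2 := (lam E).real (winSet₂ k) with hd2
  have hL0 : 0 ≤ L := measureReal_nonneg
  have hd10 : 0 ≤ d1 := measureReal_nonneg
  have hd20 : 0 ≤ d2 := measureReal_nonneg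
  have hT0 : 0 ≤ latArea n m :=
    Finset.sum_nonneg fun a _ => Finset.sum_nonneg fun b _ => by positivity
  rw [e univ, e (winSet k), e (winSet₂ k), ← hL, ← hd1, ← hd2, ← hα, ← hc,
    ← ENNReal.ofReal_mul (by positivity), ← ENNReal.ofReal_mul (by positivity),
    ← ENNReal.ofReal_mul (by positivity), ← ENNReal.ofReal_add hT0 (by positivity),
    ← ENNReal.ofReal_add (by positivity) (by positivity),
    ← ENNReal.ofReal_add (by positivity) (by positivity),
    ENNReal.ofReal_le_ofReal_iff (by positivity)] at hall
  have h2n : (2 : ℝ≥0∞) ^ n = ENNReal.ofReal (2 ^ n) := by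
    rw [ENNReal.ofReal_pow zero_le_two]; norm_num
  have hmr : (m : ℝ≥0∞) = ENNReal.ofReal m := (ENNReal.ofReal_natCast m).symm
  rw [e univ, e (winSet k), ← hL, ← hd1, h2n, hmr, ← ENNReal.ofReal_mul (by positivity),
    ← ENNReal.ofReal_mul (by positivity), ENNReal.ofReal_le_ofReal_iff (by positivity)] at hmk1
  rw [e univ, e (winSet₂ k), ← hL, ← hd2, h2n, hmr, ← ENNReal.ofReal_pow (by positivity),
    ← ENNReal.ofReal_mul (by positivity),
    ← ENNReal.ofReal_mul (by positivity), ENNReal.ofReal_le_ofReal_iff (by positivity)] at hmk2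
  exact mass_arith hm1 hL0 hmk1 hmk2 (by positivity) (by positivity) (by linarith) hall
end

/-! ### Edges of the link -/

section
variable {n : ℕ} {E : Set (Euc n)}

theorem finite_of_locally {X α : Type*} [TopologicalSpace X] {K : Set X} (hK : IsCompact K)
    (S : Set α) (p : α → X) (hp : ∀ a ∈ S, p a ∈ K)
    (h : ∀ x ∈ K, ∃ U ∈ 𝓝 x, {a ∈ S | p a ∈ U}.Finite) : S.Finite := by
  choose! U hU hfin using h
  obtain ⟨t, ht, hcov⟩ := hK.elim_nhds_subcover U hU
  refine (t.finite_toSet.biUnion fun x hx => hfin x (ht x hx)).subset fun a ha => ?_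
  obtain ⟨x, hx, hax⟩ := mem_iUnion₂.1 (hcov (hp a ha))
  exact mem_iUnion₂.2 ⟨x, hx, ha, hax⟩

theorem finite_VV (hE : IsMC n E) : (VV E).Finite := by
  obtain ⟨ρ, hρ, hsep⟩ := sing_sep n ((lam E).real univ)
  refine finite_of_locally hE.compactK (VV E) id (fun a ha => ha.1) fun x hx => ?_
  refine ⟨ball x (ρ / 4), ball_mem_nhds _ (by positivity), ?_⟩
  refine Set.Subsingleton.finite fun a ha b hb => ?_
  by_contra hab
  have h1 := hsep E hE le_rfl a ha.1 b hb.1 hab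
  have h2 := ang_le_two_norm_sub (norm_of_mem_KK ha.1.1) (norm_of_mem_KK hb.1.1)
  have h3 : dist a x < ρ / 4 := ha.2
  have h4 : dist b x < ρ / 4 := hb.2
  have h5 := dist_triangle_right a b x
  rw [dist_eq_norm a b] at h5
  linarith

/-- `τ` is the initial direction of a geodesic segment of the link issuing from `v`. -/
structure IsDir (E : Set (Euc n)) (v τ : Euc n) : Prop where
  nx : ‖v‖ = 1
  nt : ‖τ‖ = 1
  orth : ⟪v, τ⟫_ℝ = 0
  ex : ∃ δ > 0, ∀ t ∈ Icc 0 δ, gc v τ t ∈ KK E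

theorem YRays.dir {x : Euc n} {τ : Fin 3 → Euc n} {ρ : ℝ} (h : YRays E x τ ρ) (i : Fin 3) :
    IsDir E x (τ i) := ⟨h.nx, h.nt i, h.orth i, ρ, h.pos, h.mem i⟩

theorem YRays.eq_of_dir {x σ : Euc n} {τ : Fin 3 → Euc n} {ρ : ℝ} (h : YRays E x τ ρ)
    (hσ : IsDir E x σ) : ∃ i, σ = τ i := by
  obtain ⟨δ, hδ, hm⟩ := hσ.ex
  have hs : 0 < min δ ρ := lt_min hδ h.pos
  have hπ := Real.pi_gt_three
  have hsπ : min δ ρ < Real.pi := (min_le_right _ _).trans_lt (by linarith [h.lt_one])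
  have ha := ang_x_gc hσ.nx hσ.nt hσ.orth hs.le hsπ.le
  obtain ⟨i, t, ht, he⟩ := h.sub _ (hm _ ⟨hs.le, min_le_left _ _⟩)
    (by rw [ha]; exact min_le_right _ _)
  have ha' := ang_x_gc h.nx (h.nt i) (h.orth i) ht.1 (by linarith [ht.2, h.lt_one])
  rw [← he, ha] at ha'
  exact ⟨i, gc_dir_inj (x := x) hs hsπ (by rw [he, ha'])⟩

/-- A maximal geodesic segment of the link, joining two singular points and regular inside. -/
structure IsEdge (E : Set (Euc n)) (v τ : Euc n) (T : ℝ) : Prop where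
  nx : ‖v‖ = 1
  nt : ‖τ‖ = 1
  orth : ⟪v, τ⟫_ℝ = 0
  pos : 0 < T
  lt : T < 2 * Real.pi
  hv : v ∈ VV E
  hw : gc v τ T ∈ VV E
  mem : ∀ t ∈ Icc 0 T, gc v τ t ∈ KK E
  reg : ∀ t ∈ Ioo 0 T, gc v τ t ∉ VV E

theorem IsEdge.dir {v τ : Euc n} {T : ℝ} (h : IsEdge E v τ T) : IsDir E v τ :=
  ⟨h.nx, h.nt, h.orth, T, h.pos, h.mem⟩

theorem IsEdge.uniqueT {v τ : Euc n} {T T' : ℝ} (h : IsEdge E v τ T) (h' : IsEdge E v τ T') :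
    T = T' := by
  rcases lt_trichotomy T T' with hlt | heq | hlt
  · exact absurd h.hw (h'.reg T ⟨h.pos, hlt⟩)
  · exact heq
  · exact absurd h'.hw (h.reg T' ⟨h'.pos, hlt⟩)

theorem gc_rev (v τ : Euc n) (T t : ℝ) : gc (gc v τ T) (-gd v τ T) t = gc v τ (T - t) := by
  rw [gc_neg, gc_add, sub_eq_add_neg]

theorem gd_rev (v τ : Euc n) (T t : ℝ) : gd (gc v τ T) (-gd v τ T) t = -gd v τ (T - t) := by
  rw [gd_neg, gd_add, sub_eq_add_neg]

theorem IsEdge.rev {v τ : Euc n} {T : ℝ} (h : IsEdge E v τ T) :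
    IsEdge E (gc v τ T) (-gd v τ T) T where
  nx := norm_gc h.nx h.nt h.orth T
  nt := by rw [norm_neg]; exact norm_gd h.nx h.nt h.orth T
  orth := by rw [inner_neg_right, inner_gc_gd h.nx h.nt h.orth, neg_zero]
  pos := h.pos
  lt := h.lt
  hv := h.hw
  hw := by rw [gc_rev, sub_self, gc_zero]; exact h.hv
  mem t ht := by rw [gc_rev]; exact h.mem _ ⟨by linarith [ht.2], by linarith [ht.1]⟩
  reg t ht := by rw [gc_rev]; exact h.reg _ ⟨by linarith [ht.2], by linarith [ht.1]⟩

theorem rev_image (v τ : Euc n) (T : ℝ) :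
    gc (gc v τ T) (-gd v τ T) '' Icc 0 T = gc v τ '' Icc 0 T := by
  ext y
  constructor
  · rintro ⟨t, ht, rfl⟩
    exact ⟨T - t, ⟨by linarith [ht.2], by linarith [ht.1]⟩, (gc_rev ..).symm⟩
  · rintro ⟨t, ht, rfl⟩
    exact ⟨T - t, ⟨by linarith [ht.2], by linarith [ht.1]⟩, by rw [gc_rev, sub_sub_cancel]⟩

theorem IsEdge.ne {v τ : Euc n} {T : ℝ} (h : IsEdge E v τ T) : v ≠ gc v τ T := by
  intro he
  have h1 := inner_gc h.nx h.nt h.orth 0 T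
  rw [gc_zero, ← he, real_inner_self_eq_norm_sq, h.nx, zero_sub, Real.cos_neg] at h1
  have := (Real.cos_eq_one_iff_of_lt_of_lt (by linarith [h.pos, Real.pi_pos]) h.lt).1
    (by linarith : Real.cos T = 1)
  exact h.pos.ne' this

theorem IsEdge.tan {v τ : Euc n} {T t : ℝ} (h : IsEdge E v τ T) (ht : t ∈ Ioo 0 T) :
    Tan E (gc v τ t) (gd v τ t) :=
  tan_along ht.1.le h.nx h.nt h.orth (fun h0 => absurd h0 ht.1.ne')
    (fun u hu => h.mem u ⟨hu.1, hu.2.trans ht.2.le⟩) (h.reg t ht)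

theorem IsEdge.le_of_eq {v τ v' τ' : Euc n} {T T' t t' : ℝ} (h : IsEdge E v τ T)
    (h' : IsEdge E v' τ' T') (ht : t ∈ Ioo 0 T) (ht' : t' ∈ Ioo 0 T')
    (hp : gc v τ t = gc v' τ' t') (hd : gd v τ t = gd v' τ' t') : t' ≤ t := by
  by_contra! hlt
  have e : v = gc v' τ' (t' - t) := by
    rw [sub_eq_add_neg, ← gc_add, ← hp, ← hd, gc_add, add_neg_cancel, gc_zero]
  exact h'.reg (t' - t) ⟨by linarith, by linarith [ht.1, ht'.2]⟩ (e ▸ h.hv)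

theorem IsEdge.eq_of_eq {v τ v' τ' : Euc n} {T T' t t' : ℝ} (h : IsEdge E v τ T)
    (h' : IsEdge E v' τ' T') (ht : t ∈ Ioo 0 T) (ht' : t' ∈ Ioo 0 T')
    (hp : gc v τ t = gc v' τ' t') (hd : gd v τ t = gd v' τ' t') :
    v' = v ∧ τ' = τ ∧ T' = T := by
  have e : t = t' := le_antisymm (h'.le_of_eq h ht' ht hp.symm hd.symm)
    (h.le_of_eq h' ht ht' hp hd)
  subst e
  have e1 : v = v' := by
    have := congrArg₂ (fun a b => gc a b (-t)) hp hd
    simpa only [gc_add, add_neg_cancel, gc_zero] using this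
  have e2 : τ = τ' := by
    have := congrArg₂ (fun a b => gd a b (-t)) hp hd
    simpa only [gd_add, add_neg_cancel, gd_zero] using this
  subst e1 e2
  exact ⟨rfl, rfl, h'.uniqueT h⟩

/-- Two edges sharing a regular point agree up to orientation. -/
theorem IsEdge.meet {v τ v' τ' : Euc n} {T T' t t' : ℝ} (h : IsEdge E v τ T)
    (h' : IsEdge E v' τ' T') (ht : t ∈ Icc 0 T) (ht' : t' ∈ Icc 0 T')
    (hp : gc v τ t = gc v' τ' t') (hV : gc v τ t ∉ VV E) :
    (v' = v ∧ τ' = τ ∧ T' = T) ∨ (v' = gc v τ T ∧ τ' = -gd v τ T ∧ T' = T) := by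
  have aux : ∀ {v τ : Euc n} {T t : ℝ}, IsEdge E v τ T → t ∈ Icc 0 T → gc v τ t ∉ VV E →
      t ∈ Ioo 0 T := by
    intro v τ T t h ht hV
    refine ⟨lt_of_le_of_ne ht.1 ?_, lt_of_le_of_ne ht.2 ?_⟩
    · rintro rfl; rw [gc_zero] at hV; exact hV h.hv
    · rintro rfl; exact hV h.hw
  have h1 := aux h ht hV
  have h2 := aux h' ht' (hp ▸ hV)
  have hT := h.tan h1
  have hT' := h'.tan h2
  rw [← hp] at hT'
  rcases hT.unique hT' with hd | hd
  · exact Or.inl (h.eq_of_eq h' h1 h2 hp hd.symm)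
  · right
    refine h.rev.eq_of_eq h' (t := T - t) ⟨by linarith [h1.2], by linarith [h1.1]⟩ h2 ?_ ?_
    · rw [gc_rev, sub_sub_cancel, hp]
    · rw [gd_rev, sub_sub_cancel, hd]

theorem IsEdge.image_eq {v τ v' τ' : Euc n} {T T' t t' : ℝ} (h : IsEdge E v τ T)
    (h' : IsEdge E v' τ' T') (ht : t ∈ Icc 0 T) (ht' : t' ∈ Icc 0 T')
    (hp : gc v τ t = gc v' τ' t') (hV : gc v τ t ∉ VV E) :
    gc v' τ' '' Icc 0 T' = gc v τ '' Icc 0 T := by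
  rcases h.meet h' ht ht' hp hV with ⟨rfl, rfl, rfl⟩ | ⟨rfl, rfl, rfl⟩
  · rfl
  · exact rev_image ..

/-- Following any direction of the link at a singular point one reaches another singular point
before completing a full turn. -/
theorem exists_edge (hE : IsMC n E) {v τ : Euc n} (hv : v ∈ VV E) (hd : IsDir E v τ) :
    ∃ T, IsEdge E v τ T := by
  obtain ⟨ρ, hρ, hsep⟩ := sing_sep n ((lam E).real univ)
  obtain ⟨δ, hδ, hm⟩ := hd.ex
  have hπ := Real.pi_gt_three
  set ε := min (min δ 1) (ρ / 2) with hε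
  have hε0 : 0 < ε := lt_min (lt_min hδ one_pos) (by positivity)
  have hεδ : ε ≤ δ := (min_le_left _ _).trans (min_le_left _ _)
  have hε1 : ε ≤ 1 := (min_le_left _ _).trans (min_le_right _ _)
  have hερ : ε ≤ ρ / 2 := min_le_right _ _
  have hnear : ∀ t ∈ Ioc 0 ε, gc v τ t ∉ VV E := by
    intro t ht hV
    have ha := ang_x_gc hd.nx hd.nt hd.orth ht.1.le (by linarith [ht.2])
    have hne : v ≠ gc v τ t := by
      intro he
      rw [← he, ang_self hd.nx] at ha
      exact ht.1.ne ha
    have := hsep E hE le_rfl v hv _ hV hne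
    linarith [ht.2]
  have hcpt : IsCompact {t ∈ Icc ε (2 * Real.pi) | gc v τ t ∈ VV E} :=
    isCompact_Icc.inter_right ((finite_VV hE).isClosed.preimage (continuous_gc v τ))
  have hne : {t ∈ Icc ε (2 * Real.pi) | gc v τ t ∈ VV E}.Nonempty := by
    refine ⟨2 * Real.pi, ⟨by linarith, le_rfl⟩, ?_⟩
    have := gc_two_pi v τ 0
    rw [zero_add, gc_zero] at this
    rw [this]; exact hv
  obtain ⟨T, ⟨hTI, hTV⟩, hmin⟩ := hcpt.exists_isLeast hne
  have hreg : ∀ t ∈ Ioo 0 T, gc v τ t ∉ VV E := by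
    intro t ht hV
    rcases le_or_gt t ε with h | h
    · exact hnear t ⟨ht.1, h⟩ hV
    · exact absurd (hmin ⟨⟨h.le, by linarith [ht.2, hTI.2]⟩, hV⟩) (not_le.2 ht.2)
  have hmem : ∀ t ∈ Icc 0 T, gc v τ t ∈ KK E :=
    continuation hE hd.nx hd.nt hd.orth hε0.le (fun h => absurd h hε0.ne')
      (fun u hu => hm u ⟨hu.1, hu.2.trans hεδ⟩)
      (fun t ht _ => hreg t ⟨hε0.trans_le ht.1, ht.2⟩)
  have hT0 : 0 < T := hε0.trans_le hTI.1
  refine ⟨T, hd.nx, hd.nt, hd.orth, hT0, lt_of_le_of_ne hTI.2 ?_, hv, hTV, hmem, hreg⟩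
  -- A closed loop would arrive at `v` along the direction opposite to the initial one.
  rintro rfl
  obtain ⟨σ, r, hY, h120⟩ := y_structure hE hv
  obtain ⟨i, hi⟩ := hY.eq_of_dir hd
  have hd' : IsDir E v (-τ) := by
    refine ⟨hd.nx, by rw [norm_neg, hd.nt], by rw [inner_neg_right, hd.orth, neg_zero], 1,
      one_pos, fun t ht => ?_⟩
    rw [gc_neg, ← gc_two_pi]
    exact hmem _ ⟨by linarith [ht.2], by linarith [ht.1]⟩
  obtain ⟨j, hj⟩ := hY.eq_of_dir hd'
  have hin : ⟪σ i, σ j⟫_ℝ = -1 := by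
    rw [← hi, ← hj, inner_neg_right, real_inner_self_eq_norm_sq, hd.nt]; norm_num
  by_cases hij : i = j
  · rw [hij, real_inner_self_eq_norm_sq, hY.nt] at hin
    norm_num at hin
  · rw [h120 i j hij] at hin
    norm_num at hin

theorem finite_edges (hE : IsMC n E) :
    {C | ∃ v τ T, IsEdge E v τ T ∧ C = gc v τ '' Icc 0 T}.Finite := by
  have h1 : ∀ v ∈ VV E, {C | ∃ τ T, IsEdge E v τ T ∧ C = gc v τ '' Icc 0 T}.Finite := by
    intro v hv
    obtain ⟨σ, r, hY, -⟩ := y_structure hE hv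
    have h2 : ∀ i, {C | ∃ T, IsEdge E v (σ i) T ∧ C = gc v (σ i) '' Icc 0 T}.Finite := by
      intro i
      refine Set.Subsingleton.finite ?_
      rintro C ⟨T, hT, rfl⟩ C' ⟨T', hT', rfl⟩
      rw [hT.uniqueT hT']
    refine (finite_iUnion h2).subset ?_
    rintro C ⟨τ, T, hT, rfl⟩
    obtain ⟨i, rfl⟩ := hY.eq_of_dir hT.dir
    exact mem_iUnion.2 ⟨i, T, hT, rfl⟩
  refine ((finite_VV hE).biUnion h1).subset ?_
  rintro C ⟨v, τ, T, hT, rfl⟩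
  exact mem_iUnion₂.2 ⟨v, hT.hv, τ, T, hT, rfl⟩

/-- The edges of the link, each listed once. -/
theorem exists_arcs (hE : IsMC n E) : ∃ (m : ℕ) (A : Fin m → GreatArc n),
    (∀ k, IsEdge E (A k).u (A k).w (A k).ang) ∧
    (∀ k l, (A k).carrier = (A l).carrier → k = l) ∧
    ∀ v τ T, IsEdge E v τ T → ∃ k, (A k).carrier = gc v τ '' Icc 0 T := by
  have hfin : Finite {C | ∃ v τ T, IsEdge E v τ T ∧ C = gc v τ '' Icc 0 T} := finite_edges hE
  obtain ⟨m, ⟨e⟩⟩ := Finite.exists_equiv_fin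
    {C | ∃ v τ T, IsEdge E v τ T ∧ C = gc v τ '' Icc 0 T}
  choose v τ T hedge hC using fun k : Fin m => (e.symm k).2
  refine ⟨m, fun k => ⟨v k, τ k, T k, (hedge k).nx, (hedge k).nt, (hedge k).orth, (hedge k).pos,
    (hedge k).lt⟩, hedge, fun k l hkl => ?_, fun v' τ' T' h' => ?_⟩
  · have : (e.symm k).1 = (e.symm l).1 := (hC k).trans (Eq.trans hkl (hC l).symm)
    exact e.symm.injective (Subtype.ext this)
  · refine ⟨e ⟨_, v', τ', T', h', rfl⟩, (hC _).symm.trans ?_⟩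
    rw [e.symm_apply_apply]

theorem edge_at_endpoint {A : GreatArc n} (hA : IsEdge E A.u A.w A.ang) {x : Euc n}
    (hx : A.IsEndpoint x) :
    ∃ σ, A.TangentAt x σ ∧ IsEdge E x σ A.ang ∧ A.carrier = gc x σ '' Icc 0 A.ang := by
  rcases hx with rfl | rfl
  · exact ⟨A.w, Or.inl ⟨rfl, rfl⟩, hA, rfl⟩
  · refine ⟨-gd A.u A.w A.ang, Or.inr ⟨rfl, ?_⟩, hA.rev, (rev_image ..).symm⟩
    rw [gd_eq]; module

theorem tangentAt_of_carrier {A : GreatArc n} (hA : IsEdge E A.u A.w A.ang) {v τ : Euc n} {T : ℝ}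
    (h : IsEdge E v τ T) (hC : A.carrier = gc v τ '' Icc 0 T) : A.TangentAt v τ := by
  have hT := h.pos
  have hmid : gc v τ (T / 2) ∈ A.carrier := hC ▸ ⟨T / 2, ⟨by linarith, by linarith⟩, rfl⟩
  obtain ⟨t, ht, he⟩ := hmid
  have hV := h.reg (T / 2) ⟨by linarith, by linarith⟩
  have he' : gc A.u A.w t = gc v τ (T / 2) := he
  rcases hA.meet h ht ⟨by linarith, by linarith⟩ he' (he' ▸ hV) with ⟨h1, h2, -⟩ | ⟨h1, h2, -⟩
  · exact Or.inl ⟨h1, h2⟩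
  · refine Or.inr ⟨h1, ?_⟩
    rw [h2, gd_eq]; module

theorem TangentAt.unique {A : GreatArc n} (hA : IsEdge E A.u A.w A.ang) {x σ σ' : Euc n}
    (h : A.TangentAt x σ) (h' : A.TangentAt x σ') : σ = σ' := by
  rcases h with ⟨h1, h2⟩ | ⟨h1, h2⟩ <;> rcases h' with ⟨h3, h4⟩ | ⟨h3, h4⟩
  · rw [h2, h4]
  · exact absurd (h1.symm.trans h3) hA.ne
  · exact absurd (h3.symm.trans h1) hA.ne
  · rw [h2, h4]

theorem isEndpoint_of_tangentAt {A : GreatArc n} {x σ : Euc n} (h : A.TangentAt x σ) :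
    A.IsEndpoint x := h.imp And.left And.left

theorem isEndpoint_of_mem {A : GreatArc n} (hA : IsEdge E A.u A.w A.ang) {x : Euc n}
    (hx : x ∈ A.carrier) (hV : x ∈ VV E) : A.IsEndpoint x := by
  obtain ⟨t, ht, rfl⟩ := hx
  rcases ht.1.eq_or_lt with rfl | h0
  · exact Or.inl (gc_zero _ _)
  rcases ht.2.eq_or_lt with h1 | h1
  · subst h1; exact Or.inr rfl
  · exact absurd hV (hA.reg t ⟨h0, h1⟩)

theorem three_arcs (hE : IsMC n E) {m : ℕ} {A : Fin m → GreatArc n}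
    (hA : ∀ k, IsEdge E (A k).u (A k).w (A k).ang)
    (hinj : ∀ k l, (A k).carrier = (A l).carrier → k = l)
    (hsurj : ∀ v τ T, IsEdge E v τ T → ∃ k, (A k).carrier = gc v τ '' Icc 0 T)
    (k : Fin m) (x : Euc n) (hx : (A k).IsEndpoint x) :
    ∃ k₁ k₂ k₃ : Fin m, k₁ ≠ k₂ ∧ k₁ ≠ k₃ ∧ k₂ ≠ k₃ ∧
      (A k₁).IsEndpoint x ∧ (A k₂).IsEndpoint x ∧ (A k₃).IsEndpoint x ∧
      (∀ l : Fin m, (A l).IsEndpoint x → l = k₁ ∨ l = k₂ ∨ l = k₃) ∧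
      ∃ τ₁ τ₂ τ₃ : Euc n,
        (A k₁).TangentAt x τ₁ ∧ (A k₂).TangentAt x τ₂ ∧ (A k₃).TangentAt x τ₃ ∧
        ⟪τ₁, τ₂⟫_ℝ = -(1/2) ∧ ⟪τ₁, τ₃⟫_ℝ = -(1/2) ∧ ⟪τ₂, τ₃⟫_ℝ = -(1/2) := by
  obtain ⟨_, -, hex, -⟩ := edge_at_endpoint (hA k) hx
  obtain ⟨τ, r, hY, h120⟩ := y_structure hE hex.hv
  choose T hT using fun i => exists_edge hE hex.hv (hY.dir i)
  choose κ hκ using fun i => hsurj _ _ _ (hT i)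
  have htan : ∀ i, (A (κ i)).TangentAt x (τ i) := fun i =>
    tangentAt_of_carrier (hA _) (hT i) (hκ i)
  have hne : ∀ i j, i ≠ j → κ i ≠ κ j := fun i j hij hk =>
    hij (hY.inj (TangentAt.unique (hA (κ i)) (htan i) (hk ▸ htan j)))
  have hall : ∀ l, (A l).IsEndpoint x → ∃ i, l = κ i := by
    intro l hl
    obtain ⟨σ, -, hel, hcl⟩ := edge_at_endpoint (hA l) hl
    obtain ⟨i, rfl⟩ := hY.eq_of_dir hel.dir
    exact ⟨i, hinj _ _ (by rw [hcl, hκ, hel.uniqueT (hT i)])⟩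
  refine ⟨κ 0, κ 1, κ 2, hne _ _ (by decide), hne _ _ (by decide), hne _ _ (by decide),
    isEndpoint_of_tangentAt (htan 0), isEndpoint_of_tangentAt (htan 1),
    isEndpoint_of_tangentAt (htan 2), fun l hl => ?_, τ 0, τ 1, τ 2, htan 0, htan 1, htan 2,
    h120 _ _ (by decide), h120 _ _ (by decide), h120 _ _ (by decide)⟩
  obtain ⟨i, hi⟩ := hall l hl
  fin_cases i
  · exact Or.inl hi
  · exact Or.inr (Or.inl hi)
  · exact Or.inr (Or.inr hi)

end

/-! ### Great circles of the link -/

section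
variable {n : ℕ} {E : Set (Euc n)}

/-- The plane spanned by `x` and `τ`. -/
def pl (x τ : Euc n) : Submodule ℝ (Euc n) := Submodule.span ℝ {x, τ}

theorem gc_mem_pl (x τ : Euc n) (t : ℝ) : gc x τ t ∈ pl x τ :=
  Submodule.mem_span_pair.2 ⟨_, _, rfl⟩

theorem pl_gc_le (x τ : Euc n) (t : ℝ) : pl (gc x τ t) (gd x τ t) ≤ pl x τ := by
  refine Submodule.span_le.2 ?_
  rintro y (rfl | rfl)
  · exact gc_mem_pl x τ t
  · exact gc_mem_pl x τ (t + Real.pi / 2)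

theorem pl_gc (x τ : Euc n) (t : ℝ) : pl (gc x τ t) (gd x τ t) = pl x τ := by
  refine le_antisymm (pl_gc_le x τ t) ?_
  have := pl_gc_le (gc x τ t) (gd x τ t) (-t)
  rwa [gc_add, gd_add, add_neg_cancel, gc_zero, gd_zero] at this

theorem pl_neg (x τ : Euc n) : pl x (-τ) = pl x τ := by
  have h : ∀ τ : Euc n, pl x (-τ) ≤ pl x τ := by
    intro τ
    refine Submodule.span_le.2 ?_
    rintro y (rfl | rfl)
    · exact Submodule.subset_span (by simp)
    · exact neg_mem (Submodule.subset_span (by simp))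
  refine le_antisymm (h τ) ?_
  have := h (-τ)
  rwa [neg_neg] at this

theorem finrank_pl {x τ : Euc n} (hx : ‖x‖ = 1) (hτ : ‖τ‖ = 1) (ho : ⟪x, τ⟫_ℝ = 0) :
    Module.finrank ℝ (pl x τ) = 2 := by
  have hon : Orthonormal ℝ ![x, τ] := by
    rw [orthonormal_iff_ite]
    intro i j
    fin_cases i <;> fin_cases j <;>
      simp [hx, hτ, ho, real_inner_comm]
  have h := finrank_span_eq_card hon.linearIndependent
  have hr : range ![x, τ] = {x, τ} := by
    rw [Matrix.range_cons, Matrix.range_cons, Matrix.range_empty, union_empty, singleton_union]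
  rw [hr, Fintype.card_fin] at h
  exact h

theorem sphere_inter_pl {x τ : Euc n} (hx : ‖x‖ = 1) (hτ : ‖τ‖ = 1) (ho : ⟪x, τ⟫_ℝ = 0) :
    sphere (0 : Euc n) 1 ∩ (pl x τ : Set (Euc n)) = range (gc x τ) := by
  ext y
  constructor
  · rintro ⟨h1, h2⟩
    obtain ⟨a, b, rfl⟩ := Submodule.mem_span_pair.1 h2
    rw [mem_sphere_zero_iff_norm] at h1
    have h3 : a ^ 2 + b ^ 2 = 1 := by
      have h := real_inner_self_eq_norm_sq (a • x + b • τ)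
      rw [h1] at h
      simp only [inner_add_left, inner_add_right, real_inner_smul_left, real_inner_smul_right,
        ho, real_inner_comm x τ] at h
      rw [real_inner_self_eq_norm_sq, real_inner_self_eq_norm_sq, hx, hτ] at h
      linarith
    have ha1 : -1 ≤ a := by nlinarith [sq_nonneg b]
    have ha2 : a ≤ 1 := by nlinarith [sq_nonneg b]
    have hs : Real.sin (Real.arccos a) = |b| := by
      rw [Real.sin_arccos, ← Real.sqrt_sq_eq_abs]; congr 1; linarith
    rcases abs_choice b with hb | hb
    · exact ⟨Real.arccos a, by rw [gc, Real.cos_arccos ha1 ha2, hs, hb]⟩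
    · exact ⟨-Real.arccos a, by
        rw [gc, Real.cos_neg, Real.sin_neg, Real.cos_arccos ha1 ha2, hs, hb, neg_neg]⟩
  · rintro ⟨t, rfl⟩
    exact ⟨mem_sphere_zero_iff_norm.2 (norm_gc hx hτ ho t), gc_mem_pl x τ t⟩

/-- `P` is the plane of a great circle of regular points of the link. -/
def IsCirc (E : Set (Euc n)) (P : Submodule ℝ (Euc n)) : Prop :=
  ∃ z σ, ‖z‖ = 1 ∧ ‖σ‖ = 1 ∧ ⟪z, σ⟫_ℝ = 0 ∧ P = pl z σ ∧ ∀ t, gc z σ t ∈ KK E ∧ gc z σ t ∉ VV E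

theorem IsCirc.at {P : Submodule ℝ (Euc n)} (h : IsCirc E P) {v : Euc n}
    (hv : v ∈ sphere (0 : Euc n) 1 ∩ (P : Set (Euc n))) :
    ∃ σ, P = pl v σ ∧ Tan E v σ ∧ ∀ t, gc v σ t ∈ KK E ∧ gc v σ t ∉ VV E := by
  obtain ⟨z, σ, hz, hσ, ho, rfl, hall⟩ := h
  rw [sphere_inter_pl hz hσ ho] at hv
  obtain ⟨t, rfl⟩ := hv
  have hall' : ∀ s, gc (gc z σ t) (gd z σ t) s ∈ KK E ∧ gc (gc z σ t) (gd z σ t) s ∉ VV E := by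
    intro s; rw [gc_add]; exact hall _
  refine ⟨gd z σ t, (pl_gc ..).symm, ?_, hall'⟩
  obtain ⟨σ', h'⟩ := exists_tan (hall t).1 (hall t).2
  exact h'.of_small (norm_gd hz hσ ho t) (inner_gc_gd hz hσ ho t) one_pos fun s _ => (hall' s).1

/-- A great circle of the link is determined by any half-segment of the link starting on it. -/
theorem IsCirc.eq_pl {P : Submodule ℝ (Euc n)} (h : IsCirc E P) {x τ : Euc n} (hx : ‖x‖ = 1)
    (hτ : ‖τ‖ = 1) (ho : ⟪x, τ⟫_ℝ = 0) {t δ : ℝ} (hδ : 0 < δ)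
    (hP : gc x τ t ∈ P) (hs : ∀ s ∈ Ioc 0 δ, gc x τ (t + s) ∈ KK E) : P = pl x τ := by
  obtain ⟨σ, rfl, hT, -⟩ := h.at ⟨mem_sphere_zero_iff_norm.2 (norm_gc hx hτ ho t), hP⟩
  have hT' : Tan E (gc x τ t) (gd x τ t) :=
    hT.of_small (norm_gd hx hτ ho t) (inner_gc_gd hx hτ ho t) hδ fun s hs' => by
      rw [gc_add]; exact hs s hs'
  rcases hT'.unique hT with rfl | rfl
  · exact pl_gc ..
  · rw [pl_neg]; exact pl_gc ..

theorem IsCirc.eq_pl_back {P : Submodule ℝ (Euc n)} (h : IsCirc E P) {x τ : Euc n} (hx : ‖x‖ = 1)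
    (hτ : ‖τ‖ = 1) (ho : ⟪x, τ⟫_ℝ = 0) {t δ : ℝ} (hδ : 0 < δ)
    (hP : gc x τ t ∈ P) (hs : ∀ s ∈ Ioc 0 δ, gc x τ (t - s) ∈ KK E) : P = pl x τ := by
  rw [← pl_neg]
  refine h.eq_pl hx (by rw [norm_neg, hτ]) (by rw [inner_neg_right, ho, neg_zero]) (t := -t) hδ
    (by rwa [gc_neg, neg_neg]) fun s hs' => ?_
  rw [gc_neg, neg_add, neg_neg, ← sub_eq_add_neg]
  exact hs s hs'

theorem circ_disjoint {P Q : Submodule ℝ (Euc n)} (hP : IsCirc E P) (hQ : IsCirc E Q)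
    (hne : P ≠ Q) : Disjoint (sphere (0 : Euc n) 1 ∩ (P : Set (Euc n)))
      (sphere (0 : Euc n) 1 ∩ (Q : Set (Euc n))) := by
  refine Set.disjoint_left.2 fun v hv hw => hne ?_
  obtain ⟨σ, rfl, hT, -⟩ := hP.at hv
  obtain ⟨σ', rfl, hT', -⟩ := hQ.at hw
  rcases hT'.unique hT with rfl | rfl
  · rfl
  · exact pl_neg ..

theorem circ_arc_disjoint {P : Submodule ℝ (Euc n)} (hP : IsCirc E P) {v τ : Euc n} {T : ℝ}
    (h : IsEdge E v τ T) :
    Disjoint (sphere (0 : Euc n) 1 ∩ (P : Set (Euc n))) (gc v τ '' Icc 0 T) := by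
  refine Set.disjoint_left.2 ?_
  rintro y hv ⟨t, ht, rfl⟩
  have hall : ∀ y ∈ sphere (0 : Euc n) 1 ∩ (P : Set (Euc n)), y ∉ VV E := by
    intro y hy
    obtain ⟨σ, -, -, hσ⟩ := hP.at hy
    have := (hσ 0).2
    rwa [gc_zero] at this
  have h0 : 0 < t := by
    refine lt_of_le_of_ne ht.1 ?_
    rintro rfl
    rw [gc_zero] at hv
    exact hall v hv h.hv
  have he := hP.eq_pl_back h.nx h.nt h.orth h0 hv.2 fun s hs =>
    h.mem _ ⟨by linarith [hs.2], by linarith [hs.1, ht.2]⟩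
  refine hall v ⟨mem_sphere_zero_iff_norm.2 h.nx, ?_⟩ h.hv
  have hv' := gc_mem_pl v τ 0
  rw [gc_zero] at hv'
  rw [he]
  exact hv'

/-- A regular point of the link lies on an edge or on a great circle of regular points. -/
theorem edge_or_circ (hE : IsMC n E) {z : Euc n} (hz : z ∈ KK E) (hV : z ∉ VV E) :
    (∃ v τ T, IsEdge E v τ T ∧ z ∈ gc v τ '' Icc 0 T) ∨
    ∃ P, IsCirc E P ∧ z ∈ sphere (0 : Euc n) 1 ∩ (P : Set (Euc n)) := by
  obtain ⟨σ, hσ⟩ := exists_tan hz hV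
  have hini : ∀ u ∈ Icc (0 : ℝ) 0, gc z σ u ∈ KK E := by
    intro u hu
    rw [le_antisymm hu.2 hu.1, gc_zero]; exact hz
  by_cases hex : ∃ t ∈ Icc 0 (2 * Real.pi), gc z σ t ∈ VV E
  · left
    have hcpt : IsCompact {t ∈ Icc 0 (2 * Real.pi) | gc z σ t ∈ VV E} :=
      isCompact_Icc.inter_right ((finite_VV hE).isClosed.preimage (continuous_gc z σ))
    obtain ⟨t, ht⟩ := hex
    obtain ⟨T, ⟨hTI, hTV⟩, hmin⟩ := hcpt.exists_isLeast ⟨t, ht⟩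
    have hT0 : 0 < T := by
      refine lt_of_le_of_ne hTI.1 ?_
      rintro rfl
      rw [gc_zero] at hTV
      exact hV hTV
    have hmem : ∀ t ∈ Icc 0 T, gc z σ t ∈ KK E :=
      continuation hE hσ.nx hσ.nt hσ.orth le_rfl (fun _ => hσ) hini fun t ht _ hcon =>
        absurd (hmin ⟨⟨ht.1, ht.2.le.trans hTI.2⟩, hcon⟩) (not_le.2 ht.2)
    have hd : IsDir E (gc z σ T) (-gd z σ T) := by
      refine ⟨norm_gc hσ.nx hσ.nt hσ.orth T, by rw [norm_neg]; exact norm_gd hσ.nx hσ.nt hσ.orth T,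
        by rw [inner_neg_right, inner_gc_gd hσ.nx hσ.nt hσ.orth, neg_zero], T, hT0, fun t ht => ?_⟩
      rw [gc_rev]
      exact hmem _ ⟨by linarith [ht.2], by linarith [ht.1]⟩
    obtain ⟨S, hS⟩ := exists_edge hE hTV hd
    have hTS : T ≤ S := by
      by_contra! hlt
      have := hS.hw
      rw [gc_rev] at this
      have h1 := hmin ⟨⟨by linarith, by linarith [hTI.2, hS.pos]⟩, this⟩
      linarith [hS.pos]
    exact ⟨_, _, S, hS, T, ⟨hT0.le, hTS⟩, by rw [gc_rev, sub_self, gc_zero]⟩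
  · right
    push Not at hex
    have hmem := continuation hE hσ.nx hσ.nt hσ.orth le_rfl (fun _ => hσ) hini
      (T := 2 * Real.pi) fun t ht _ => hex t ⟨ht.1, ht.2.le⟩
    have hz' := gc_mem_pl z σ 0
    rw [gc_zero] at hz'
    refine ⟨pl z σ, ⟨z, σ, hσ.nx, hσ.nt, hσ.orth, rfl, fun t => ?_⟩,
      mem_sphere_zero_iff_norm.2 hσ.nx, hz'⟩
    have hper : Function.Periodic (gc z σ) (2 * Real.pi) := gc_two_pi z σ
    obtain ⟨s, hs, he⟩ := hper.exists_mem_Ico₀ Real.two_pi_pos t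
    rw [he]
    exact ⟨hmem s ⟨hs.1, hs.2.le⟩, hex s ⟨hs.1, hs.2.le⟩⟩

theorem KK_eq (hE : IsMC n E) : KK E =
    (⋃ P ∈ {P | IsCirc E P}, sphere (0 : Euc n) 1 ∩ (P : Set (Euc n))) ∪
    ⋃ C ∈ {C | ∃ v τ T, IsEdge E v τ T ∧ C = gc v τ '' Icc 0 T}, C := by
  ext z
  constructor
  · intro hz
    by_cases hV : z ∈ VV E
    · right
      obtain ⟨τ, ρ, hY, -⟩ := y_structure hE hV
      obtain ⟨T, hT⟩ := exists_edge hE hV (hY.dir 0)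
      exact mem_iUnion₂.2 ⟨_, ⟨z, τ 0, T, hT, rfl⟩, 0, ⟨le_rfl, hT.pos.le⟩, gc_zero ..⟩
    · rcases edge_or_circ hE hz hV with ⟨v, τ, T, hT, hm⟩ | ⟨P, hP, hm⟩
      · exact Or.inr (mem_iUnion₂.2 ⟨_, ⟨v, τ, T, hT, rfl⟩, hm⟩)
      · exact Or.inl (mem_iUnion₂.2 ⟨P, hP, hm⟩)
  · rintro (h | h)
    · obtain ⟨P, hP, hm⟩ := mem_iUnion₂.1 h
      obtain ⟨σ, -, hT, -⟩ := IsCirc.at hP hm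
      exact hT.mem
    · obtain ⟨_, ⟨v, τ, T, hT, rfl⟩, t, ht, rfl⟩ := mem_iUnion₂.1 h
      exact hT.mem t ht

theorem finite_circ (hE : IsMC n E) : {P | IsCirc E P}.Finite := by
  choose! p hp using fun (P : Submodule ℝ (Euc n)) (h : IsCirc E P) =>
    show ∃ z, z ∈ sphere (0 : Euc n) 1 ∩ (P : Set (Euc n)) ∧ z ∈ KK E by
      obtain ⟨z, σ, hz, hσ, ho, rfl, hall⟩ := h
      have h1 := gc_mem_pl z σ 0
      have h2 := (hall 0).1
      rw [gc_zero] at h1 h2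
      exact ⟨z, ⟨mem_sphere_zero_iff_norm.2 hz, h1⟩, h2⟩
  refine finite_of_locally hE.compactK _ p (fun P hP => (hp P hP).2) fun x hx => ?_
  have hopen : ∀ r, 0 < r → {v | ang x v < r} ∈ 𝓝 x := fun r hr =>
    (isOpen_lt (continuous_ang x) continuous_const).mem_nhds
      (by rw [mem_ofPred_eq, ang_self (norm_of_mem_KK hx)]; exact hr)
  by_cases hV : x ∈ VV E
  · obtain ⟨τ, ρ, hY, -⟩ := y_structure hE hV
    refine ⟨_, hopen ρ hY.pos, (finite_range fun i => pl x (τ i)).subset ?_⟩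
    rintro P ⟨hP, hPx⟩
    have hPx' : ang x (p P) < ρ := hPx
    obtain ⟨i, t, ht, he⟩ := hY.sub _ (hp P hP).2 hPx'.le
    have hmem := (hp P hP).1
    have h0 : 0 < t := by
      refine lt_of_le_of_ne ht.1 ?_
      rintro rfl
      obtain ⟨σ, -, -, hσ⟩ := IsCirc.at hP hmem
      have := (hσ 0).2
      rw [gc_zero, he, gc_zero] at this
      exact this hV
    refine ⟨i, (IsCirc.eq_pl_back hP hY.nx (hY.nt i) (hY.orth i) h0 (he ▸ hmem.2)
      fun s hs => hY.mem i _ ⟨by linarith [hs.2], by linarith [hs.1, ht.2]⟩).symm⟩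
  · obtain ⟨τ, r, hr, hR⟩ := exists_tan hx hV
    refine ⟨_, hopen r hr, (finite_singleton (pl x τ)).subset ?_⟩
    rintro P ⟨hP, hPx⟩
    have hPx' : ang x (p P) < r := hPx
    obtain ⟨t, ht, he⟩ := hR.sub _ (hp P hP).2 hPx'.le
    have hmem := (hp P hP).1
    rw [mem_singleton_iff]
    rcases le_total t 0 with h | h
    · exact IsCirc.eq_pl hP hR.nx hR.nt hR.orth hr (he ▸ hmem.2)
        fun s hs => hR.mem _ ⟨by linarith [hs.1, ht.1], by linarith [hs.2]⟩
    · exact IsCirc.eq_pl_back hP hR.nx hR.nt hR.orth hr (he ▸ hmem.2)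
        fun s hs => hR.mem _ ⟨by linarith [hs.2], by linarith [hs.1, ht.2]⟩

/-! ### Lengths -/

theorem dist_le_hausdorff {S : Set (Euc n)} (hS : IsPreconnected S) {a b : Euc n} (ha : a ∈ S)
    (hb : b ∈ S) : ENNReal.ofReal (dist a b) ≤ μH[(1 : ℝ)] S := by
  have hL : LipschitzOnWith 1 (fun y => dist y a) S := (LipschitzWith.dist_left a).lipschitzOnWith
  have h1 := hL.hausdorffMeasure_image_le zero_le_one
  rw [ENNReal.coe_one, ENNReal.one_rpow, one_mul] at h1
  refine le_trans ?_ h1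
  have hpre : IsPreconnected ((fun y => dist y a) '' S) :=
    hS.image _ hL.continuousOn
  have hsub : Icc 0 (dist a b) ⊆ (fun y => dist y a) '' S :=
    hpre.ordConnected.out ⟨a, ha, dist_self a⟩ ⟨b, hb, dist_comm b a⟩
  refine le_trans ?_ (measure_mono hsub)
  rw [hausdorffMeasure_real, Real.volume_Icc, sub_zero]

theorem circ_length {P : Submodule ℝ (Euc n)} (h : IsCirc E P) :
    ENNReal.ofReal 2 ≤ μH[(1 : ℝ)] (sphere (0 : Euc n) 1 ∩ (P : Set (Euc n))) := by
  obtain ⟨z, σ, hz, hσ, ho, rfl, -⟩ := h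
  rw [sphere_inter_pl hz hσ ho]
  have h1 := dist_le_hausdorff (isPreconnected_range (continuous_gc z σ)) (mem_range_self 0)
    (mem_range_self Real.pi)
  have h2 : dist (gc z σ 0) (gc z σ Real.pi) = 2 := by
    rw [gc_zero, gc, Real.cos_pi, Real.sin_pi, zero_smul, add_zero, neg_smul, one_smul,
      dist_eq_norm, sub_neg_eq_add, ← two_smul ℝ z, norm_smul, hz]
    norm_num
  rwa [h2] at h1

theorem edge_length {ρ : ℝ} (hsep : ∀ x ∈ VV E, ∀ y ∈ VV E, x ≠ y → ρ ≤ ang x y) {v τ : Euc n}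
    {T : ℝ} (h : IsEdge E v τ T) :
    ENNReal.ofReal (ρ / 2) ≤ μH[(1 : ℝ)] (gc v τ '' Icc 0 T) := by
  have hpre : IsPreconnected (gc v τ '' Icc 0 T) :=
    isPreconnected_Icc.image _ (continuous_gc v τ).continuousOn
  have h1 := dist_le_hausdorff hpre (a := v) (b := gc v τ T)
    ⟨0, ⟨le_rfl, h.pos.le⟩, gc_zero ..⟩ ⟨T, ⟨h.pos.le, le_rfl⟩, rfl⟩
  refine le_trans (ENNReal.ofReal_le_ofReal ?_) h1
  have h2 := hsep v h.hv _ h.hw h.ne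
  have h3 := ang_le_two_norm_sub h.nx (norm_of_mem_KK h.hw.1)
  rw [dist_eq_norm]
  linarith
end

/-- **Proposition 14.1.** There is `l₀ > 0`, depending only on `n`, such that whenever
`E` is a nonempty reduced minimal cone of dimension 2 in `ℝⁿ` centered at the origin,
the set `K = E ∩ ∂B(0,1)` is a finite union of great circles and arcs of great circles
of length `≥ l₀`, which can only meet at common endpoints, each endpoint being shared
by exactly three arcs whose tangent half-lines make pairwise `120°` angles. -/
theorem minimal_cone_sphere_structure (n : ℕ) :
    ∃ l₀ : ℝ, 0 < l₀ ∧
    ∀ E : Set (Euc n), IsMinimalSet n 2 E → IsReducedSet n 2 E → IsConeAt0 E →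
      E.Nonempty →
    ∃ (m₁ m₂ : ℕ) (P : Fin m₁ → Submodule ℝ (Euc n)) (A : Fin m₂ → GreatArc n),
      (∀ i, Module.finrank ℝ (P i) = 2) ∧
      E ∩ sphere (0 : Euc n) 1 =
        (⋃ i, sphere (0 : Euc n) 1 ∩ (P i : Set (Euc n))) ∪
          (⋃ k, (A k).carrier) ∧
      (∀ i j : Fin m₁, i ≠ j →
        Disjoint (sphere (0 : Euc n) 1 ∩ (P i : Set (Euc n)))
          (sphere (0 : Euc n) 1 ∩ (P j : Set (Euc n)))) ∧
      (∀ (i : Fin m₁) (k : Fin m₂),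
        Disjoint (sphere (0 : Euc n) 1 ∩ (P i : Set (Euc n))) (A k).carrier) ∧
      (∀ k l : Fin m₂, k ≠ l → ∀ x ∈ (A k).carrier ∩ (A l).carrier,
        (A k).IsEndpoint x ∧ (A l).IsEndpoint x) ∧
      (∀ (k : Fin m₂) (x : Euc n), (A k).IsEndpoint x →
        ∃ k₁ k₂ k₃ : Fin m₂, k₁ ≠ k₂ ∧ k₁ ≠ k₃ ∧ k₂ ≠ k₃ ∧
          (A k₁).IsEndpoint x ∧ (A k₂).IsEndpoint x ∧ (A k₃).IsEndpoint x ∧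
          (∀ l : Fin m₂, (A l).IsEndpoint x → l = k₁ ∨ l = k₂ ∨ l = k₃) ∧
          ∃ τ₁ τ₂ τ₃ : Euc n,
            (A k₁).TangentAt x τ₁ ∧ (A k₂).TangentAt x τ₂ ∧ (A k₃).TangentAt x τ₃ ∧
            ⟪τ₁, τ₂⟫_ℝ = -(1/2) ∧ ⟪τ₁, τ₃⟫_ℝ = -(1/2) ∧ ⟪τ₂, τ₃⟫_ℝ = -(1/2)) ∧
      (∀ i : Fin m₁,
        ENNReal.ofReal l₀ ≤ μH[(1:ℝ)] (sphere (0 : Euc n) 1 ∩ (P i : Set (Euc n)))) ∧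
      (∀ k : Fin m₂, ENNReal.ofReal l₀ ≤ μH[(1:ℝ)] (A k).carrier) := by
  obtain ⟨Λ, hΛ⟩ := mass_bound n
  obtain ⟨ρ, hρ, hsep⟩ := sing_sep n Λ
  refine ⟨min (ρ / 2) 2, by positivity, fun E h1 h2 h3 _ => ?_⟩
  have hE : IsMC n E := ⟨h1, h2, h3⟩
  obtain ⟨m₂, A, hA, hinj, hsurj⟩ := exists_arcs hE
  have hfin : Finite {P | IsCirc E P} := finite_circ hE
  obtain ⟨m₁, ⟨e⟩⟩ := Finite.exists_equiv_fin {P | IsCirc E P}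
  have hP : ∀ i, IsCirc E (e.symm i).1 := fun i => (e.symm i).2
  refine ⟨m₁, m₂, fun i => (e.symm i).1, A, fun i => ?_, ?_, fun i j hij => ?_, fun i k => ?_,
    fun k l hkl x hx => ?_, three_arcs hE hA hinj hsurj, fun i => ?_, fun k => ?_⟩
  · obtain ⟨z, σ, hz, hσ, ho, hPi, -⟩ := hP i
    beta_reduce
    rw [hPi]
    exact finrank_pl hz hσ ho
  · have hK := KK_eq hE
    rw [KK] at hK
    rw [hK]
    congr 1
    · ext z
      simp only [mem_iUnion]
      constructor
      · rintro ⟨P, hP', hz⟩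
        exact ⟨e ⟨P, hP'⟩, by rw [e.symm_apply_apply]; exact hz⟩
      · rintro ⟨i, hz⟩
        exact ⟨_, hP i, hz⟩
    · ext z
      simp only [mem_iUnion]
      constructor
      · rintro ⟨_, ⟨v, τ, T, hT, rfl⟩, hz⟩
        obtain ⟨k, hk⟩ := hsurj v τ T hT
        exact ⟨k, hk ▸ hz⟩
      · rintro ⟨k, hz⟩
        exact ⟨_, ⟨_, _, _, hA k, rfl⟩, hz⟩
  · exact circ_disjoint (hP i) (hP j) fun h => hij (e.symm.injective (Subtype.ext h))
  · exact circ_arc_disjoint (hP i) (hA k)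
  · have hV : x ∈ VV E := by
      by_contra hV
      obtain ⟨⟨t, ht, hxt⟩, t', ht', hxt'⟩ := hx
      refine hkl (hinj k l ((hA k).image_eq (hA l) ht ht' (hxt.trans hxt'.symm) ?_).symm)
      have hxt₂ : gc (A k).u (A k).w t = x := hxt
      rwa [hxt₂]
    exact ⟨isEndpoint_of_mem (hA k) hx.1 hV, isEndpoint_of_mem (hA l) hx.2 hV⟩
  · exact (ENNReal.ofReal_le_ofReal (min_le_right _ _)).trans (circ_length (hP i))
  · exact (ENNReal.ofReal_le_ofReal (min_le_left _ _)).trans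
      (edge_length (hsep E hE (hΛ E hE)) (hA k))
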